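/- (Theorem 3.1, asymptotic stability of the mKdV soliton in weighted spaces.) Let c₀ > 0 and m > 1/2 be fixed, and let Q_c(ξ) = √(2c)/cosh(√c ξ) be the soliton profile. For every ε₁ > 0 there exist ε₀ > 0 and δ > 0 small such that the following holds, with weight w(x) = (1 + tanh(δx))^{1/2}. Suppose v₀ satisfies ‖v₀‖_{H¹} + ‖⟨x₊⟩^m v₀‖_{H¹} ≤ ε₀, and suppose u is a global classical solution of mKdV with u(0,·) = Q_{c₀} + v₀. Then there exist C¹ functions h, c : [0,∞) → ℝ such that, defining y = y(t,x) = x - ∫₀^t c(s)ds + h(t) and v(t,y) = u(t,x) - Q_{c(t)}(y), one has for all t ≥ 0: ‖⟨y₊⟩^m v(t)‖_{H¹} + ⟨t⟩^m ‖v(t)‖_{H¹_w} + ⟨t⟩^{2m}( |c'(t)| + |h'(t)| ) ≤ C ε₁, and moreover ∫₀^∞ ‖v(t)‖²_{H²_{w'}} dt ≤ C ε₁², for an absolute constant C. -/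

import Mathlib

/-!
A Bäcklund transformation removes the soliton. With `U = u/√2`, so that
`U_t + U_xxx + 6U²U_x = 0`, one looks for an angle `θ` and a number `a ≈ √c₀` with
`θ_x = -2q - a sin θ` and `U = q + a sin θ`. For the soliton itself `q = 0` and `θ` is the
explicit function `ang a`, for which `sin θ = sech` and `cos θ = tanh`. For a perturbed datum,
`θ(0)` and `a` come from a contraction argument (`backlund_initial`), and `q(0)` is small in the
weighted `H¹` norm (`initial_data`). An ODE in time propagates `θ` (`backlund_flow`), and `q` is
again a solution (`qJet_mjet`), now small and without soliton; `exists_track` collects this.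

Conservation of mass and energy keeps `q` small in `H¹` (`h1_small`). Since waves move to the left,
the energy of `q` seen through `1 + tanh(δ·)` along a line moving to the right almost decreases and
controls second derivatives (`energy_monotone`). Superposing translates of this weight gives the
polynomial weight, hence the decay `t^{-2m}` of the energy near the soliton (`weighted_decay`). The
balance laws need locally bounded Sobolev norms, which pointwise Schwartz regularity does not give
directly; they follow from Baire's theorem (`bounded_of_baire`) and propagation of `H³` bounds
(`h3_propagate`), the latter by comparing the solution with its time translates.

The soliton is followed by a centre `P` with `P' = a² + M`, where `M` is the moment `mom` of
`θ - ang a(· - P)` against `sech`. This choice damps `M` up to terms quadratic in `M` and `q`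
(`Track.mom_deriv`), while `θ - ang` is bounded by `M` and an exponential average of `q`
(`phase_bound`). A continuity argument (`track_closed`, `track_global`) then yields `M = O(t^{-2m})`
and the bounds for `θ`. The modulation parameters are `c = a²`, constant in time, and
`h = a²t - P`, so that `c' = 0` and `h' = -M`; `remainder_bounds` translates the estimates for `q`
and `θ` into those for `v`. The smallness of `ε₀` absorbs all constants, whence `C = 1`.
-/

noncomputable section

open MeasureTheory Real

/-- L² norm of a real-valued function. -/
def L2r (g : ℝ → ℝ) : ℝ := Real.sqrt (∫ x : ℝ, (g x) ^ 2)

/-- H¹ norm: ‖g‖² = ‖g‖_{L²}² + ‖∂g‖_{L²}². -/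
def H1r (g : ℝ → ℝ) : ℝ := Real.sqrt (L2r g ^ 2 + L2r (deriv g) ^ 2)

/-- Weighted H¹ norm: ‖g‖²_{H¹_ω} = ‖ω g‖_{L²}² + ‖ω ∂g‖_{L²}². -/
def H1w (ω g : ℝ → ℝ) : ℝ :=
  Real.sqrt (L2r (fun x => ω x * g x) ^ 2 + L2r (fun x => ω x * deriv g x) ^ 2)

/-- Square of the weighted H² norm: ‖g‖²_{H²_ω} = Σ_{k≤2} ‖ω ∂^k g‖_{L²}². -/
def H2wSq (ω g : ℝ → ℝ) : ℝ :=
  ∑ k ∈ Finset.range 3, L2r (fun x => ω x * iteratedDeriv k g x) ^ 2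

/-- The weight w(x) = (1 + tanh(δx))^{1/2}. -/
def wgt (δ : ℝ) (x : ℝ) : ℝ := Real.sqrt (1 + Real.tanh (δ * x))

/-- The weight ⟨x₊⟩^m = (1 + (max x 0)²)^{m/2}. -/
def japPlus (m x : ℝ) : ℝ := (1 + (max x 0) ^ 2) ^ (m / 2)

/-- Japanese bracket ⟨t⟩ = (1+t²)^{1/2}. -/
def jap (t : ℝ) : ℝ := Real.sqrt (1 + t ^ 2)

/-- The mKdV soliton profile Q_c(ξ) = √(2c)/cosh(√c ξ). -/
def solQ (c ξ : ℝ) : ℝ := Real.sqrt (2 * c) / Real.cosh (Real.sqrt c * ξ)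

/-- `u` is a global classical solution of the focusing mKdV equation
`∂ₜu + ∂ₓ³u + ∂ₓ(u³) = 0` on `[0,∞)`. -/
def IsMKdVGlobal (u : ℝ → ℝ → ℝ) : Prop :=
  ContDiffOn ℝ (⊤ : ℕ∞) (Function.uncurry u) (Set.Ici 0 ×ˢ Set.univ) ∧
  (∀ t ∈ Set.Ici (0:ℝ), ∃ g : SchwartzMap ℝ ℝ, ∀ x, u t x = g x) ∧
  (∀ t ∈ Set.Ici (0:ℝ), ∀ x : ℝ,
    deriv (fun t' => u t' x) t + iteratedDeriv 3 (fun y => u t y) x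
      + deriv (fun y => (u t y) ^ 3) x = 0)

open Filter Set
open intervalIntegral (integral_mono_on integral_of_le integral_eq_sub_of_hasDerivAt)

/-! ### A weighted balance law on the line -/

/-- Joint continuity of a function of time and space. -/
notation "Cont₂" f:max => Continuous fun p : ℝ × ℝ => f (Prod.fst p) (Prod.snd p)

/-- A function of time and space together with candidates for its space derivatives: `U k` is
meant to be the `k`-th one. -/
abbrev Jet := ℕ → ℝ → ℝ → ℝ

lemma mul_mono_l {a b c : ℝ} (h : b ≤ c) (ha : 0 ≤ a) : a * b ≤ a * c :=
  mul_le_mul_of_nonneg_left h ha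

lemma mul_mono_r {a b c : ℝ} (h : b ≤ c) (ha : 0 ≤ a) : b * a ≤ c * a :=
  mul_le_mul_of_nonneg_right h ha

lemma cont_of_deriv {f f' : ℝ → ℝ} (h : ∀ x, HasDerivAt f (f' x) x) : Continuous f :=
  continuous_iff_continuousAt.2 fun x => (h x).continuousAt

lemma cont_ii {f : ℝ → ℝ} {a b : ℝ} (h : Continuous f := by fun_prop) :
    IntervalIntegrable f volume a b := h.intervalIntegrable _ _

lemma cont_slice {f : ℝ → ℝ → ℝ} (h : Cont₂ f) (τ : ℝ) :
    Continuous (f τ) := h.comp (by fun_prop : Continuous fun x : ℝ => (τ, x))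

lemma cont_time {f : ℝ → ℝ → ℝ} (h : Cont₂ f) (x : ℝ) :
    Continuous fun τ => f τ x := h.comp (by fun_prop : Continuous fun τ : ℝ => (τ, x))

lemma cont_paramint {f : ℝ → ℝ → ℝ} (h : Cont₂ f) (a b : ℝ) :
    Continuous fun τ => ∫ x in a..b, f τ x :=
  intervalIntegral.continuous_parametric_intervalIntegral_of_continuous' h a b

/-- The polynomial cutoff `(1-(x/R)²)⁴`, only used on `[-R,R]`, where it vanishes to fourth order
at the end points. -/
def cutoff (R x : ℝ) : ℝ := (1 - (x / R) ^ 2) ^ 4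
/-- First derivative of `cutoff`. -/
def cutoff1 (R x : ℝ) : ℝ := -8 * (1 - (x / R) ^ 2) ^ 3 * (x / R) / R
/-- Second derivative of `cutoff`. -/
def cutoff2 (R x : ℝ) : ℝ :=
  (48 * (1 - (x / R) ^ 2) ^ 2 * (x / R) ^ 2 - 8 * (1 - (x / R) ^ 2) ^ 3) / R ^ 2
/-- Third derivative of `cutoff`. -/
def cutoff3 (R x : ℝ) : ℝ :=
  (-192 * (1 - (x / R) ^ 2) * (x / R) ^ 3 + 144 * (1 - (x / R) ^ 2) ^ 2 * (x / R)) / R ^ 3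

lemma hasDerivAt_one_sub (R x : ℝ) :
    HasDerivAt (fun x : ℝ => 1 - (x / R) ^ 2) (-(2 * (x / R) * (1 / R))) x :=
  ((((hasDerivAt_id x).div_const R).pow 2).const_sub 1).congr_deriv (by simp)

lemma hasDerivAt_cutoff (R x : ℝ) : HasDerivAt (cutoff R) (cutoff1 R x) x :=
  ((hasDerivAt_one_sub R x).pow 4).congr_deriv (by unfold cutoff1; push_cast; ring)

lemma hasDerivAt_cutoff1 (R x : ℝ) : HasDerivAt (cutoff1 R) (cutoff2 R x) x :=
  (((((hasDerivAt_one_sub R x).pow 3).const_mul (-8)).mul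
    ((hasDerivAt_id x).div_const R)).div_const R).congr_deriv (by
      unfold cutoff2; simp only [id, Pi.pow_apply]; push_cast; ring)

lemma hasDerivAt_cutoff2 (R x : ℝ) : HasDerivAt (cutoff2 R) (cutoff3 R x) x :=
  ((((((hasDerivAt_one_sub R x).pow 2).const_mul 48).mul (((hasDerivAt_id x).div_const R).pow 2)).sub
    (((hasDerivAt_one_sub R x).pow 3).const_mul 8)).div_const (R ^ 2)).congr_deriv (by
      unfold cutoff3; simp only [id, Pi.pow_apply]; push_cast; ring)

lemma continuous_cutoff3 (R : ℝ) : Continuous (cutoff3 R) := by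
  unfold cutoff3; fun_prop

lemma cutoff_bounds {R x : ℝ} (hR : 1 ≤ R) (hx : x ∈ Icc (-R) R) :
    0 ≤ cutoff R x ∧ cutoff R x ≤ 1 ∧ |cutoff1 R x| ≤ 400 / R ∧ |cutoff2 R x| ≤ 400 / R
      ∧ |cutoff3 R x| ≤ 400 / R := by
  have hR0 : 0 < R := by linarith
  obtain ⟨y, hy⟩ : ∃ y, y = x / R := ⟨_, rfl⟩
  have hy1 : |y| ≤ 1 := by
    rw [hy, abs_div, abs_of_pos hR0, div_le_one hR0, abs_le]; exact hx
  obtain ⟨z, hz⟩ : ∃ z, z = 1 - y ^ 2 := ⟨_, rfl⟩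
  have hz0 : 0 ≤ z := by linarith [(sq_le_one_iff_abs_le_one y).2 hy1]
  have hz1 : z ≤ 1 := by nlinarith [sq_nonneg y]
  have pzy : ∀ n k : ℕ, |z ^ n * y ^ k| ≤ 1 := fun n k => by
    rw [abs_mul, abs_pow, abs_pow, abs_of_nonneg hz0]
    exact mul_le_one₀ (pow_le_one₀ hz0 hz1) (by positivity) (pow_le_one₀ (abs_nonneg _) hy1)
  have inv : ∀ n : ℕ, 1 ≤ n → ∀ a : ℝ, |a| ≤ 400 → |a / R ^ n| ≤ 400 / R := by
    intro n hn a ha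
    rw [abs_div, abs_of_pos (by positivity : 0 < R ^ n)]
    have : R ≤ R ^ n := le_self_pow₀ hR (by omega)
    gcongr
  refine ⟨?_, ?_, ?_, ?_, ?_⟩
  · unfold cutoff; positivity
  · unfold cutoff; rw [← hy, ← hz]; exact pow_le_one₀ hz0 hz1
  · have := inv 1 le_rfl (-8 * (z ^ 3 * y ^ 1)) (by
      rw [abs_mul]; norm_num; have := pzy 3 1; simp at this; linarith)
    unfold cutoff1; rw [← hy, ← hz]; convert this using 2; ring
  · have := inv 2 (by norm_num) (48 * (z ^ 2 * y ^ 2) - 8 * (z ^ 3 * y ^ 0)) (by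
      have h1 := abs_le.1 (pzy 2 2); have h2 := abs_le.1 (pzy 3 0)
      rw [abs_le]; constructor <;> linarith [h1.1, h1.2, h2.1, h2.2])
    unfold cutoff2; rw [← hy, ← hz]; convert this using 2; ring
  · have := inv 3 (by norm_num) (-192 * (z ^ 1 * y ^ 3) + 144 * (z ^ 2 * y ^ 1)) (by
      have h1 := abs_le.1 (pzy 1 3); have h2 := abs_le.1 (pzy 2 1)
      rw [abs_le]; constructor <;> linarith [h1.1, h1.2, h2.1, h2.2])
    unfold cutoff3; rw [← hy, ← hz]; convert this using 2; ring

lemma cutoff_boundary {R : ℝ} (hR : 1 ≤ R) : cutoff R R = 0 ∧ cutoff R (-R) = 0 ∧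
    cutoff1 R R = 0 ∧ cutoff1 R (-R) = 0 ∧ cutoff2 R R = 0 ∧ cutoff2 R (-R) = 0 := by
  have : R ≠ 0 := by linarith
  simp [cutoff, cutoff1, cutoff2, this]

lemma tendsto_cutoff (x : ℝ) : Tendsto (fun R : ℝ => cutoff R x) atTop (nhds 1) := by
  have := (((Tendsto.const_div_atTop tendsto_id x).pow 2).const_sub 1).pow 4
  simpa [cutoff] using this

lemma cutoff_lower {R R' x : ℝ} (hR : 0 < R) (hRR : R' ≤ R) (hx : x ∈ Icc (-R') R') :
    cutoff R R' ≤ cutoff R x := by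
  have h0 : 0 ≤ R' := by linarith [hx.1.trans hx.2]
  have h1 : |x| ≤ R' := abs_le.2 hx
  have h2 : (x / R) ^ 2 ≤ (R' / R) ^ 2 := by
    rw [← sq_abs (x / R), abs_div, abs_of_pos hR]; gcongr
  have h3 : (R' / R) ^ 2 ≤ 1 := by
    have : R' / R ≤ 1 := (div_le_one hR).2 hRR
    have h4 : 0 ≤ R' / R := by positivity
    nlinarith
  unfold cutoff
  apply pow_le_pow_left₀ <;> linarith

/-- The local law `∂_τ e = -∂ₓ³e + ∂ₓF + G` on the time interval `(s, t)`. -/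
structure BalanceLaw (s t : ℝ) (e e1 e2 e3 F F1 G : ℝ → ℝ → ℝ) : Prop where
  ce : Cont₂ e
  ce3 : Cont₂ e3
  cF : Cont₂ F
  cF1 : Cont₂ F1
  cG : Cont₂ G
  he : ∀ τ x, HasDerivAt (e τ) (e1 τ x) x
  he1 : ∀ τ x, HasDerivAt (e1 τ) (e2 τ x) x
  he2 : ∀ τ x, HasDerivAt (e2 τ) (e3 τ x) x
  hF : ∀ τ x, HasDerivAt (F τ) (F1 τ x) x
  het : ∀ τ ∈ Ioo s t, ∀ x, HasDerivAt (fun τ => e τ x) (-e3 τ x + F1 τ x + G τ x) τ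

/-- A weight with its first three derivatives, bounded by `K` up to order two. -/
structure Weight (ρ ρ1 ρ2 ρ3 : ℝ → ℝ) (K : ℝ) : Prop where
  hρ : ∀ x, HasDerivAt ρ (ρ1 x) x
  hρ1 : ∀ x, HasDerivAt ρ1 (ρ2 x) x
  hρ2 : ∀ x, HasDerivAt ρ2 (ρ3 x) x
  cρ3 : Continuous ρ3
  bρ : ∀ x, |ρ x| ≤ K
  bρ1 : ∀ x, |ρ1 x| ≤ K
  bρ2 : ∀ x, |ρ2 x| ≤ K

set_option maxHeartbeats 1000000 in
/-- The space-truncated balance: after integration by parts against `ρ(x-a(τ))·cutoff`, only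
errors of size `1/R` remain besides the pointwise quantity of the hypothesis. -/
lemma balance_cutoff {s t : ℝ} (hst : s ≤ t) {e e1 e2 e3 F F1 G H : ℝ → ℝ → ℝ}
    (L : BalanceLaw s t e e1 e2 e3 F F1 G) (cH : Cont₂ H) {ρ ρ1 ρ2 ρ3 : ℝ → ℝ} {K : ℝ}
    (W : Weight ρ ρ1 ρ2 ρ3 K)
    {a a1 : ℝ → ℝ} (ca : Continuous a) (ca1 : Continuous a1)
    (ha : ∀ τ ∈ Ioo s t, HasDerivAt a (a1 τ) τ)
    (hkey : ∀ τ ∈ Ioo s t, ∀ x, -(a1 τ * ρ1 (x - a τ) * e τ x) - ρ1 (x - a τ) * F τ x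
      + ρ3 (x - a τ) * e τ x + ρ (x - a τ) * G τ x + H τ x ≤ 0)
    {B : ℝ} {R : ℝ} (hR : 1 ≤ R)
    (be : ∀ τ ∈ Ioo s t, ∫ x in (-R)..R, |e τ x| ≤ B)
    (bF : ∀ τ ∈ Ioo s t, ∫ x in (-R)..R, |F τ x| ≤ B) :
    (∫ x in (-R)..R, cutoff R x * (ρ (x - a t) * e t x))
      + (∫ τ in s..t, ∫ x in (-R)..R, cutoff R x * H τ x)
      ≤ (∫ x in (-R)..R, cutoff R x * (ρ (x - a s) * e s x)) + (t - s) * (3200 * K * B / R) := by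
  obtain ⟨ce, ce3, cF, cF1, cG, he, he1, he2, hF, het⟩ := L
  obtain ⟨hρ, hρ1, hρ2, cρ3, bρ, bρ1, bρ2⟩ := W
  have hR0 : 0 < R := by linarith
  have hK : 0 ≤ K := (abs_nonneg _).trans (bρ 0)
  have cχ := cont_of_deriv (hasDerivAt_cutoff R)
  have cχ1 := cont_of_deriv (hasDerivAt_cutoff1 R)
  have cχ2 := cont_of_deriv (hasDerivAt_cutoff2 R)
  have cχ3 := continuous_cutoff3 R
  have cρ := cont_of_deriv hρ
  have cρ1 := cont_of_deriv hρ1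
  have cρ2 := cont_of_deriv hρ2
  -- the time derivative of `cutoff * ρ(x-a) * e`
  obtain ⟨D, hD⟩ : ∃ D : ℝ → ℝ → ℝ, D = fun τ x => cutoff R x * (-(a1 τ * ρ1 (x - a τ)) * e τ x
    + ρ (x - a τ) * (-e3 τ x + F1 τ x + G τ x)) := ⟨_, rfl⟩
  have cD : Cont₂ D := by
    simp only [hD]; fun_prop
  have hFTC : ∀ x, ∫ τ in s..t, D τ x = cutoff R x * (ρ (x - a t) * e t x)
      - cutoff R x * (ρ (x - a s) * e s x) := by
    intro x
    apply intervalIntegral.integral_eq_sub_of_hasDerivAt_of_le hst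
    · apply Continuous.continuousOn
      have := cont_time ce x
      fun_prop
    · intro τ hτ
      have h1 : HasDerivAt (fun τ => ρ (x - a τ)) (ρ1 (x - a τ) * (-a1 τ)) τ :=
        (hρ (x - a τ)).comp τ ((ha τ hτ).const_sub x)
      have := (h1.mul (het τ hτ x)).const_mul (cutoff R x)
      refine this.congr_deriv ?_
      simp only [hD]; ring
    · exact cont_ii (cont_time cD x)
  have hsw : ∫ x in (-R)..R, ∫ τ in s..t, D τ x = ∫ τ in s..t, ∫ x in (-R)..R, D τ x := by
    have hc : Continuous (Function.uncurry fun x τ => D τ x) := cD.comp continuous_swap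
    exact intervalIntegral_intervalIntegral_swap
      ((hc.continuousOn.integrableOn_compact (isCompact_uIcc.prod isCompact_uIcc)).mono_set
        (prod_mono uIoc_subset_uIcc uIoc_subset_uIcc))
  have ceτ := cont_slice ce
  have cFτ := cont_slice cF
  have cGτ := cont_slice cG
  have cHτ := cont_slice cH
  have cDτ := cont_slice cD
  -- spatial integration by parts at fixed time
  have hslice : ∀ τ ∈ Ioo s t, ∫ x in (-R)..R, D τ x ≤
      -(∫ x in (-R)..R, cutoff R x * H τ x) + 3200 * K * B / R := by
    intro τ hτ
    set φ : ℝ → ℝ := fun x => cutoff R x * ρ (x - a τ)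
    set φ1 : ℝ → ℝ := fun x => cutoff1 R x * ρ (x - a τ) + cutoff R x * ρ1 (x - a τ)
    set φ2 : ℝ → ℝ := fun x => cutoff2 R x * ρ (x - a τ) + 2 * cutoff1 R x * ρ1 (x - a τ)
      + cutoff R x * ρ2 (x - a τ)
    set φ3 : ℝ → ℝ := fun x => cutoff3 R x * ρ (x - a τ) + 3 * cutoff2 R x * ρ1 (x - a τ)
      + 3 * cutoff1 R x * ρ2 (x - a τ) + cutoff R x * ρ3 (x - a τ)
    have tr : ∀ {g g1 : ℝ → ℝ}, (∀ x, HasDerivAt g (g1 x) x) → ∀ x,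
        HasDerivAt (fun x => g (x - a τ)) (g1 (x - a τ)) x := by
      intro g g1 hg x
      have := (hg (x - a τ)).comp x ((hasDerivAt_id x).sub_const (a τ))
      simpa [Function.comp_def] using this
    have hφ : ∀ x, HasDerivAt φ (φ1 x) x := fun x =>
      (hasDerivAt_cutoff R x).mul (tr hρ x)
    have hφ1 : ∀ x, HasDerivAt φ1 (φ2 x) x := fun x => by
      have := ((hasDerivAt_cutoff1 R x).mul (tr hρ x)).add
        ((hasDerivAt_cutoff R x).mul (tr hρ1 x))
      refine this.congr_deriv ?_; simp only [φ2]; ring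
    have hφ2 : ∀ x, HasDerivAt φ2 (φ3 x) x := fun x => by
      have := (((hasDerivAt_cutoff2 R x).mul (tr hρ x)).add
        (((hasDerivAt_cutoff1 R x).const_mul 2).mul (tr hρ1 x))).add
        ((hasDerivAt_cutoff R x).mul (tr hρ2 x))
      refine this.congr_deriv ?_; simp only [φ3]; ring
    have hbd := cutoff_boundary hR
    set E : ℝ → ℝ := fun x => φ3 x * e τ x - φ1 x * F τ x + φ x * G τ x
      - cutoff R x * (a1 τ * ρ1 (x - a τ)) * e τ x
    have cE : Continuous E := by
      simp only [E, φ3, φ1, φ]; fun_prop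
    have hibp : ∫ x in (-R)..R, (D τ x - E x) = 0 := by
      rw [integral_eq_sub_of_hasDerivAt
        (f := fun x => -(φ x * e2 τ x) + φ1 x * e1 τ x - φ2 x * e τ x + φ x * F τ x) _ cont_ii]
      · simp [φ, φ1, φ2, hbd]
      · intro x _
        have := (((((hφ x).mul (he2 τ x)).neg).add ((hφ1 x).mul (he1 τ x))).sub
          ((hφ2 x).mul (he τ x))).add ((hφ x).mul (hF τ x))
        refine this.congr_deriv ?_
        simp only [hD, E, φ]; ring
    rw [intervalIntegral.integral_sub cont_ii cont_ii, sub_eq_zero] at hibp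
    rw [hibp]
    have hmono : ∫ x in (-R)..R, E x ≤
        ∫ x in (-R)..R, (-(cutoff R x * H τ x) + (2800 * K / R * |e τ x| + 400 * K / R * |F τ x|)) := by
      apply integral_mono_on (by linarith)
      · exact cont_ii
      · exact cont_ii
      · intro x hx
        obtain ⟨h0, h1, hb1, hb2, hb3⟩ := cutoff_bounds hR hx
        have hk := mul_mono_l (hkey τ hτ x) h0
        have prod : ∀ {p q w : ℝ}, |p| ≤ 400 / R → |q| ≤ K → p * q * w ≤ 400 * K / R * |w| ∧
            -(p * q * w) ≤ 400 * K / R * |w| := by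
          intro p q w hp hq
          have : |p * q * w| ≤ 400 * K / R * |w| := by
            rw [abs_mul, abs_mul]
            have : |p| * |q| ≤ 400 / R * K := by gcongr
            calc |p| * |q| * |w| ≤ (400 / R * K) * |w| := by gcongr
              _ = _ := by ring
          exact ⟨(le_abs_self _).trans this, (neg_le_abs _).trans this⟩
        have p1 := (prod (w := e τ x) hb3 (bρ (x - a τ))).1
        have p2 := (prod (w := e τ x) hb2 (bρ1 (x - a τ))).1
        have p3 := (prod (w := e τ x) hb1 (bρ2 (x - a τ))).1
        have p4 := (prod (w := F τ x) hb1 (bρ (x - a τ))).2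
        have hsplit : 2800 * K / R * |e τ x| = 7 * (400 * K / R * |e τ x|) := by ring
        rw [hsplit]
        simp only [E, φ3, φ1, φ]
        nlinarith [hk, p1, p2, p3, p4]
    refine hmono.trans ?_
    rw [intervalIntegral.integral_add, intervalIntegral.integral_neg,
      intervalIntegral.integral_add, intervalIntegral.integral_const_mul,
      intervalIntegral.integral_const_mul]
    · have h1 := mul_mono_l (be τ hτ) (by positivity : 0 ≤ 2800 * K / R)
      have h2 := mul_mono_l (bF τ hτ) (by positivity : 0 ≤ 400 * K / R)
      have : 3200 * K * B / R = 2800 * K / R * B + 400 * K / R * B := by ring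
      rw [this]; linarith
    all_goals exact cont_ii
  have cHH : Continuous fun τ => ∫ x in (-R)..R, cutoff R x * H τ x :=
    cont_paramint (f := fun τ x => cutoff R x * H τ x) (by fun_prop) (-R) R
  have hint : ∫ τ in s..t, ∫ x in (-R)..R, D τ x ≤ ∫ τ in s..t,
      (-(∫ x in (-R)..R, cutoff R x * H τ x) + 3200 * K * B / R) := by
    apply intervalIntegral.integral_mono_on_of_le_Ioo hst
    · exact cont_ii (cont_paramint cD _ _)
    · exact cont_ii
    · exact hslice
  rw [← hsw] at hint
  rw [intervalIntegral.integral_add cont_ii (by simp), intervalIntegral.integral_neg, intervalIntegral.integral_const] at hint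
  simp_rw [hFTC] at hint
  rw [intervalIntegral.integral_sub] at hint
  · simp only [smul_eq_mul] at hint; linarith
  all_goals exact cont_ii

lemma integrable_of_abs_le {f g : ℝ → ℝ} (hf : Continuous f) (hg : Integrable g)
    (h : ∀ x, |f x| ≤ g x) : Integrable f ∧ ∫ x, |f x| ≤ ∫ x, g x := by
  have h1 : Integrable f := hg.mono' hf.aestronglyMeasurable (.of_forall h)
  exact ⟨h1, integral_mono h1.abs hg h⟩

/-- The density and the flux are bounded by a function with uniformly bounded integral. -/
def Dominated (s t : ℝ) (e F : ℝ → ℝ → ℝ) : Prop :=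
  ∃ (B : ℝ) (g : ℝ → ℝ → ℝ), (∀ τ ∈ Icc s t, Integrable (g τ) ∧ ∫ x, g τ x ≤ B) ∧
    ∀ τ ∈ Icc s t, ∀ x, |e τ x| ≤ g τ x ∧ |F τ x| ≤ g τ x

/-- **Balance law.** If `∂_τ e = -∂ₓ³e + ∂ₓF + G`, and the density produced by the moving weight
`ρ(x-a(τ))` is pointwise at most `-H ≤ 0`, then `∫ρ(x-a)e` decreases by at least `∫∫ H`; a time independent source `S` is allowed. -/
theorem balance_source {s t : ℝ} (hst : s ≤ t) {e e1 e2 e3 F F1 G H : ℝ → ℝ → ℝ}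
    (L : BalanceLaw s t e e1 e2 e3 F F1 G) (cH : Cont₂ H) {ρ ρ1 ρ2 ρ3 : ℝ → ℝ} {K : ℝ}
    (W : Weight ρ ρ1 ρ2 ρ3 K)
    {a a1 : ℝ → ℝ} (ca : Continuous a) (ca1 : Continuous a1)
    (ha : ∀ τ ∈ Ioo s t, HasDerivAt a (a1 τ) τ) (hH : ∀ τ x, 0 ≤ H τ x)
    {S : ℝ → ℝ} (cS : Continuous S) (hS : ∀ x, 0 ≤ S x) (iS : Integrable S)
    (hkey : ∀ τ ∈ Ioo s t, ∀ x, -(a1 τ * ρ1 (x - a τ) * e τ x) - ρ1 (x - a τ) * F τ x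
      + ρ3 (x - a τ) * e τ x + ρ (x - a τ) * G τ x + H τ x ≤ S x)
    (D : Dominated s t e F) :
    ∀ R, 0 ≤ R → (∫ x, ρ (x - a t) * e t x) + (∫ τ in s..t, ∫ x in (-R)..R, H τ x)
      ≤ (∫ x, ρ (x - a s) * e s x) + (t - s) * ∫ x, S x := by
  intro R' hR'
  obtain ⟨B, g, ig, hg⟩ := D
  have A := fun τ hτ => integrable_of_abs_le (cont_slice L.ce τ) (ig τ hτ).1 fun x => (hg τ hτ x).1
  have A' := fun τ hτ => integrable_of_abs_le (cont_slice L.cF τ) (ig τ hτ).1 fun x => (hg τ hτ x).2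
  have cρ : Continuous ρ := cont_of_deriv W.hρ
  have cχ := fun R => cont_of_deriv (hasDerivAt_cutoff R)
  have ceτ := cont_slice L.ce
  have cHτ := cont_slice cH
  have hlim : ∀ τ ∈ Icc s t, Tendsto
      (fun R : ℝ => ∫ x in (-R)..R, cutoff R x * (ρ (x - a τ) * e τ x)) atTop
      (nhds (∫ x, ρ (x - a τ) * e τ x)) := by
    intro τ hτ
    have h1 : (fun R : ℝ => ∫ x in (-R)..R, cutoff R x * (ρ (x - a τ) * e τ x)) =ᶠ[atTop]
        fun R => ∫ x, (Ioc (-R) R).indicator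
          (fun x => cutoff R x * (ρ (x - a τ) * e τ x)) x := by
      filter_upwards [eventually_ge_atTop 0] with R hR
      rw [integral_of_le (by linarith), integral_indicator measurableSet_Ioc]
    refine Tendsto.congr' h1.symm ?_
    apply tendsto_integral_filter_of_dominated_convergence (fun x => K * |e τ x|)
    · filter_upwards with R
      apply AEStronglyMeasurable.indicator _ measurableSet_Ioc
      exact Continuous.aestronglyMeasurable (by fun_prop)
    · filter_upwards [eventually_ge_atTop 1] with R hR
      filter_upwards with x
      by_cases hx : x ∈ Ioc (-R) R
      · rw [indicator_of_mem hx, norm_eq_abs, abs_mul, abs_mul]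
        obtain ⟨h0, h1, -⟩ := cutoff_bounds hR (Ioc_subset_Icc_self hx)
        rw [abs_of_nonneg h0]
        calc cutoff R x * (|ρ (x - a τ)| * |e τ x|) ≤ 1 * (K * |e τ x|) := by
              gcongr; exact W.bρ _
          _ = _ := one_mul _
      · rw [indicator_of_notMem hx, norm_zero]
        have := (abs_nonneg _).trans (W.bρ 0)
        positivity
    · exact ((A τ hτ).1.abs).const_mul K
    · filter_upwards with x
      have h2 : (fun R : ℝ => (Ioc (-R) R).indicator
          (fun x => cutoff R x * (ρ (x - a τ) * e τ x)) x) =ᶠ[atTop]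
          fun R => cutoff R x * (ρ (x - a τ) * e τ x) := by
        filter_upwards [eventually_gt_atTop |x|] with R hR
        have := abs_lt.1 hR
        exact indicator_of_mem (s := Ioc (-R) R) (mem_Ioc.2 ⟨by linarith, this.2.le⟩) _
      refine Tendsto.congr' h2.symm ?_
      simpa using (tendsto_cutoff x).mul_const (ρ (x - a τ) * e τ x)
  have hin : ∀ᶠ R : ℝ in atTop, (∫ x in (-R)..R, cutoff R x * (ρ (x - a t) * e t x))
      + cutoff R R' * (∫ τ in s..t, ∫ x in (-R')..R', H τ x)
      ≤ (∫ x in (-R)..R, cutoff R x * (ρ (x - a s) * e s x)) +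
        ((t - s) * (3200 * K * B / R) + (t - s) * ∫ x, S x) := by
    filter_upwards [eventually_ge_atTop 1, eventually_ge_atTop R'] with R hR hRR
    have hsub : ∀ g : ℝ → ℝ, Integrable g → ∫ x in (-R)..R, |g x| ≤ ∫ x, |g x| := by
      intro g hg
      rw [integral_of_le (by linarith)]
      exact setIntegral_le_integral hg.abs (.of_forall fun x => abs_nonneg _)
    have sub : ∀ τ ∈ Ioo s t, τ ∈ Icc s t := fun τ => (Ioo_subset_Icc_self ·)
    have hb := balance_cutoff (H := fun τ x => H τ x - S x) hst L (by fun_prop) W ca ca1 ha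
      (fun τ hτ x => by linarith [hkey τ hτ x]) hR
      (fun τ hτ => (hsub _ (A τ (sub τ hτ)).1).trans ((A τ (sub τ hτ)).2.trans (ig τ (sub τ hτ)).2))
      fun τ hτ => (hsub _ (A' τ (sub τ hτ)).1).trans ((A' τ (sub τ hτ)).2.trans (ig τ (sub τ hτ)).2)
    have hHS : cutoff R R' * (∫ τ in s..t, ∫ x in (-R')..R', H τ x)
        - (t - s) * ∫ x, S x ≤ ∫ τ in s..t, ∫ x in (-R)..R, cutoff R x * (H τ x - S x) := by
      have hcst : (t - s) * ∫ x, S x = ∫ _τ in s..t, ∫ x, S x := by simp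
      have cHR := cont_paramint cH (-R') R'
      rw [← intervalIntegral.integral_const_mul, hcst, ← intervalIntegral.integral_sub
        cont_ii (by simp)]
      apply integral_mono_on hst
      · exact cont_ii
      · exact cont_ii (cont_paramint (f := fun τ x => cutoff R x * (H τ x - S x)) (by fun_prop) _ _)
      · intro τ _
        rw [← intervalIntegral.integral_const_mul]
        have h1 : ∫ x in (-R')..R', cutoff R R' * H τ x
            ≤ ∫ x in (-R')..R', cutoff R x * H τ x := by
          apply integral_mono_on (by linarith)
          · exact cont_ii
          · exact cont_ii
          · intro x hx
            exact mul_mono_r (cutoff_lower (by linarith) hRR hx) (hH τ x)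
        have h2 : ∫ x in (-R')..R', cutoff R x * H τ x ≤ ∫ x in (-R)..R, cutoff R x * H τ x := by
          apply intervalIntegral.integral_mono_interval (by linarith) (by linarith) hRR
          · rw [EventuallyLE, ae_restrict_iff' measurableSet_Ioc]
            filter_upwards with x hx
            exact mul_nonneg (cutoff_bounds hR (Ioc_subset_Icc_self hx)).1 (hH τ x)
          · exact cont_ii
        have h3 : ∫ x in (-R)..R, cutoff R x * S x ≤ ∫ x, S x := by
          calc ∫ x in (-R)..R, cutoff R x * S x ≤ ∫ x in (-R)..R, S x := by
                apply integral_mono_on (by linarith)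
                · exact cont_ii
                · exact cont_ii
                · intro x hx
                  have := (cutoff_bounds hR hx).2.1
                  nlinarith [hS x]
            _ ≤ ∫ x, S x := by
                rw [integral_of_le (by linarith)]
                exact setIntegral_le_integral iS (.of_forall hS)
        have h4 : ∫ x in (-R)..R, cutoff R x * (H τ x - S x) =
            (∫ x in (-R)..R, cutoff R x * H τ x) - ∫ x in (-R)..R, cutoff R x * S x := by
          rw [← intervalIntegral.integral_sub cont_ii cont_ii]
          congr 1; funext x; ring
        rw [h4]; linarith
    linarith
  have hl2 : Tendsto (fun R : ℝ => (t - s) * (3200 * K * B / R)) atTop (nhds 0) := by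
    simpa using (Tendsto.const_div_atTop tendsto_id (3200 * K * B)).const_mul (t - s)
  have ht1 := hlim t (right_mem_Icc.2 hst)
  have hs1 := hlim s (left_mem_Icc.2 hst)
  have := le_of_tendsto_of_tendsto
    (ht1.add ((tendsto_cutoff R').mul_const (∫ τ in s..t, ∫ x in (-R')..R', H τ x))) (hs1.add (hl2.add_const ((t - s) * ∫ x, S x))) hin
  simpa using this

/-! ### Jets of a classical solution -/

/-- The closed half plane `t ≥ 0`. -/
def halfPlane : Set (ℝ × ℝ) := Ici 0 ×ˢ univ

/-- Partial derivative in `x` on the closed half plane. -/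
def dxW (g : ℝ × ℝ → ℝ) (p : ℝ × ℝ) : ℝ := fderivWithin ℝ g halfPlane p (0, 1)

lemma uniqueDiffOn_halfPlane : UniqueDiffOn ℝ halfPlane :=
  (uniqueDiffOn_Ici 0).prod uniqueDiffOn_univ

lemma contDiffOn_dxW {g : ℝ × ℝ → ℝ} (hg : ContDiffOn ℝ (⊤ : ℕ∞) g halfPlane) :
    ContDiffOn ℝ (⊤ : ℕ∞) (dxW g) halfPlane := by
  have := hg.fderivWithin (m := (⊤ : ℕ∞)) uniqueDiffOn_halfPlane (by simp)
  exact this.clm_apply contDiffOn_const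

lemma hasDerivAt_dxW {g : ℝ × ℝ → ℝ} (hg : ContDiffOn ℝ (⊤ : ℕ∞) g halfPlane) {t : ℝ} (ht : 0 ≤ t)
    (x : ℝ) : HasDerivAt (fun y => g (t, y)) (dxW g (t, x)) x := by
  have h1 : HasFDerivWithinAt g (fderivWithin ℝ g halfPlane (t, x)) halfPlane (t, x) :=
    ((hg.differentiableOn (by simp)) (t, x) ⟨ht, trivial⟩).hasFDerivWithinAt
  have h2 : HasDerivWithinAt (fun y : ℝ => (t, y)) (0, 1) univ x :=
    ((hasDerivAt_const x t).prodMk (hasDerivAt_id x)).hasDerivWithinAt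
  have := h1.comp_hasDerivWithinAt x h2 (fun y _ => ⟨ht, trivial⟩)
  exact this.hasDerivAt Filter.univ_mem

lemma halfPlane_mem_nhds {t : ℝ} (ht : 0 < t) (x : ℝ) : halfPlane ∈ nhds (t, x) :=
  prod_mem_nhds (Ici_mem_nhds ht) Filter.univ_mem

lemma hasDerivAt_dt {g : ℝ × ℝ → ℝ} (hg : ContDiffOn ℝ (⊤ : ℕ∞) g halfPlane) {t : ℝ} (ht : 0 < t)
    (x : ℝ) : HasDerivAt (fun τ => g (τ, x)) (fderiv ℝ g (t, x) (1, 0)) t := by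
  have h1 : HasFDerivAt g (fderiv ℝ g (t, x)) (t, x) :=
    (((hg.contDiffAt (halfPlane_mem_nhds ht x)).differentiableAt (by simp))).hasFDerivAt
  exact h1.comp_hasDerivAt t ((hasDerivAt_id t).prodMk (hasDerivAt_const t x))

lemma dxW_eq {g : ℝ × ℝ → ℝ} {t : ℝ} (ht : 0 < t) (x : ℝ) : dxW g (t, x) = fderiv ℝ g (t, x) (0, 1) := by
  unfold dxW; rw [fderivWithin_of_mem_nhds (halfPlane_mem_nhds ht x)]

/-- Mixed partial derivatives commute: if `∂ₜ g = k` for `t > 0` then `∂ₜ ∂ₓ g = ∂ₓ k`. -/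
lemma dt_dxW {g : ℝ × ℝ → ℝ} (hg : ContDiffOn ℝ (⊤ : ℕ∞) g halfPlane) {t : ℝ} (ht : 0 < t)
    (x : ℝ) {k : ℝ × ℝ → ℝ} (hk : ∀ t > 0, ∀ x, HasDerivAt (fun τ => g (τ, x)) (k (t, x)) t)
    {k1 : ℝ} (hk1 : HasDerivAt (fun y => k (t, y)) k1 x) :
    HasDerivAt (fun τ => dxW g (τ, x)) k1 t := by
  have hc : ContDiffAt ℝ (⊤ : ℕ∞) g (t, x) := hg.contDiffAt (halfPlane_mem_nhds ht x)
  have hsym : IsSymmSndFDerivAt ℝ g (t, x) := by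
    apply hc.isSymmSndFDerivAt
    simp only [minSmoothness_of_isRCLikeNormedField]
    exact WithTop.coe_le_coe.2 (le_top : (2 : ℕ∞) ≤ ⊤)
  have h2 : HasFDerivAt (fderiv ℝ g) (fderiv ℝ (fderiv ℝ g) (t, x)) (t, x) := by
    have : ContDiffAt ℝ (⊤ : ℕ∞) (fderiv ℝ g) (t, x) := hc.fderiv_right (by simp)
    exact (this.differentiableAt (by simp)).hasFDerivAt
  have hval : fderiv ℝ (fderiv ℝ g) (t, x) (0, 1) (1, 0) = k1 := by
    have h3 := h2.comp_hasDerivAt x ((hasDerivAt_const x t).prodMk (hasDerivAt_id x))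
    have h4 := (ContinuousLinearMap.apply ℝ ℝ ((1 : ℝ), (0 : ℝ))).hasFDerivAt.comp_hasDerivAt x h3
    have h5 : (fun y => k (t, y)) = (fun y => fderiv ℝ g (t, y) (1, 0)) := by
      funext y
      exact (hk t ht y).unique (hasDerivAt_dt hg ht y)
    rw [h5] at hk1
    exact h4.unique hk1
  have h6 := h2.comp_hasDerivAt t ((hasDerivAt_id t).prodMk (hasDerivAt_const t x))
  have h7 := (ContinuousLinearMap.apply ℝ ℝ ((0 : ℝ), (1 : ℝ))).hasFDerivAt.comp_hasDerivAt t h6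
  have h8 : HasDerivAt (fun τ => fderiv ℝ g (τ, x) (0, 1)) k1 t := by
    refine h7.congr_deriv ?_
    rw [← hval]
    exact (hsym (1, 0) (0, 1))
  refine h8.congr_of_eventuallyEq ?_
  filter_upwards [Ioi_mem_nhds ht] with τ hτ
  exact dxW_eq hτ x

/-- Jets up to order four of a solution of `U_t + U_xxx + 6U²U_x = 0`; the equations for `U` and
`U_x` are required at positive times. -/
structure MJet (U : Jet) : Prop where
  cont : ∀ k, k ≤ 4 → Cont₂ (U k)
  hx : ∀ k, k < 4 → ∀ t x, HasDerivAt (U k t) (U (k + 1) t x) x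
  ht0 : ∀ t > 0, ∀ x, HasDerivAt (fun τ => U 0 τ x) (-(U 3 t x + 6 * U 0 t x ^ 2 * U 1 t x)) t
  ht1 : ∀ t > 0, ∀ x, HasDerivAt (fun τ => U 1 τ x)
    (-(U 4 t x + 12 * U 0 t x * U 1 t x ^ 2 + 6 * U 0 t x ^ 2 * U 2 t x)) t

/-- Infinite jets of a solution with square integrable slices. -/
structure FullJet (U : Jet) : Prop where
  cont : ∀ k, Cont₂ (U k)
  hx : ∀ k, ∀ t x, HasDerivAt (U k t) (U (k + 1) t x) x
  ht0 : ∀ t > 0, ∀ x, HasDerivAt (fun τ => U 0 τ x) (-(U 3 t x + 6 * U 0 t x ^ 2 * U 1 t x)) t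
  ht1 : ∀ t > 0, ∀ x, HasDerivAt (fun τ => U 1 τ x)
    (-(U 4 t x + 12 * U 0 t x * U 1 t x ^ 2 + 6 * U 0 t x ^ 2 * U 2 t x)) t
  ht2 : ∀ t > 0, ∀ x, HasDerivAt (fun τ => U 2 τ x)
    (-(U 5 t x + 12 * U 1 t x ^ 3 + 36 * U 0 t x * U 1 t x * U 2 t x
      + 6 * U 0 t x ^ 2 * U 3 t x)) t
  l2 : ∀ k t, Integrable fun x => U k t x ^ 2

lemma FullJet.toMJet {U : Jet} (h : FullJet U) : MJet U :=
  ⟨fun k _ => h.cont k, fun k _ => h.hx k, h.ht0, h.ht1⟩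

lemma schwartz_sq_integrable (g : SchwartzMap ℝ ℝ) : Integrable fun x => g x ^ 2 := by
  have := (g.memLp 2 volume).integrable_sq
  simpa using this

/-- The jet of `u/√2`, frozen at its initial value for negative times. -/
def jetOf (u : ℝ → ℝ → ℝ) (k : ℕ) (t x : ℝ) : ℝ :=
  (dxW^[k] fun p => u p.1 p.2 / √2) (max t 0, x)

lemma jetOf_contDiffOn {u : ℝ → ℝ → ℝ} (hu : IsMKdVGlobal u) (k : ℕ) :
    ContDiffOn ℝ (⊤ : ℕ∞) (dxW^[k] fun p => u p.1 p.2 / √2) halfPlane := by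
  induction k with
  | zero => exact hu.1.div_const _
  | succ k ih => rw [Function.iterate_succ_apply']; exact contDiffOn_dxW ih

lemma jetOf_zero {u : ℝ → ℝ → ℝ} {t : ℝ} (ht : 0 ≤ t) (x : ℝ) : jetOf u 0 t x = u t x / √2 := by
  simp [jetOf, ht]

lemma jetOf_hx {u : ℝ → ℝ → ℝ} (hu : IsMKdVGlobal u) (k : ℕ) (t x : ℝ) :
    HasDerivAt (jetOf u k t) (jetOf u (k + 1) t x) x := by
  have := hasDerivAt_dxW (jetOf_contDiffOn hu k) (le_max_right t 0) x
  unfold jetOf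
  rw [Function.iterate_succ_apply']
  exact this

lemma jetOf_ht {u : ℝ → ℝ → ℝ} (hu : IsMKdVGlobal u) (k : ℕ) {f : ℝ → ℝ → ℝ}
    (h : ∀ t > 0, ∀ x, HasDerivAt (fun τ => jetOf u k τ x) (f t x) t) {t : ℝ} (ht : 0 < t) {x f1 : ℝ}
    (hf : HasDerivAt (f t) f1 x) : HasDerivAt (fun τ => jetOf u (k + 1) τ x) f1 t := by
  have key : ∀ (k : ℕ) (t : ℝ), 0 < t → ∀ x, (fun τ => jetOf u k τ x) =ᶠ[nhds t]
      fun τ => (dxW^[k] fun p => u p.1 p.2 / √2) (τ, x) := by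
    intro k t ht x
    filter_upwards [Ioi_mem_nhds ht] with τ hτ
    simp only [jetOf]
    rw [max_eq_left (le_of_lt hτ)]
  refine HasDerivAt.congr_of_eventuallyEq ?_ (key (k + 1) t ht x)
  rw [Function.iterate_succ_apply']
  refine dt_dxW (jetOf_contDiffOn hu k) ht x (k := fun p => f p.1 p.2) ?_ hf
  intro t ht x
  exact (h t ht x).congr_of_eventuallyEq (key k t ht x).symm

lemma jetOf_schwartz {u : ℝ → ℝ → ℝ} (hu : IsMKdVGlobal u) (k : ℕ) (t : ℝ) :
    ∃ g : SchwartzMap ℝ ℝ, ∀ x, jetOf u k t x = g x := by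
  induction k with
  | zero =>
    obtain ⟨g, hg⟩ := hu.2.1 (max t 0) (le_max_right t 0)
    refine ⟨(√2)⁻¹ • g, fun x => ?_⟩
    simp [jetOf, hg, div_eq_inv_mul]
  | succ k ih =>
    obtain ⟨g, hg⟩ := ih
    refine ⟨SchwartzMap.derivCLM ℝ ℝ g, fun x => ?_⟩
    rw [SchwartzMap.derivCLM_apply, ← (jetOf_hx hu k t x).deriv]
    congr 1
    funext y; exact hg y

lemma jetOf_fullJet {u : ℝ → ℝ → ℝ} (hu : IsMKdVGlobal u) : FullJet (jetOf u) := by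
  have hx := jetOf_hx hu
  have ht0 : ∀ t > 0, ∀ x, HasDerivAt (fun τ => jetOf u 0 τ x)
      (-(jetOf u 3 t x + 6 * jetOf u 0 t x ^ 2 * jetOf u 1 t x)) t := by
    intro t ht x
    have h1 := hu.2.2 t (le_of_lt ht) x
    have hut : ∀ y, u t y = √2 * jetOf u 0 t y := by
      intro y; rw [jetOf_zero ht.le]; field_simp
    have hs2 : √2 ^ 2 = 2 := Real.sq_sqrt (by norm_num)
    have d0 : ∀ y, HasDerivAt (u t) (√2 * jetOf u 1 t y) y := by
      intro y
      rw [show u t = fun y => √2 * jetOf u 0 t y from funext hut]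
      exact (hx 0 t y).const_mul _
    have d1 : ∀ y, HasDerivAt (fun y => √2 * jetOf u 1 t y) (√2 * jetOf u 2 t y) y :=
      fun y => (hx 1 t y).const_mul _
    have d2 : ∀ y, HasDerivAt (fun y => √2 * jetOf u 2 t y) (√2 * jetOf u 3 t y) y :=
      fun y => (hx 2 t y).const_mul _
    have e3 : iteratedDeriv 3 (fun y => u t y) x = √2 * jetOf u 3 t x := by
      rw [iteratedDeriv_succ, iteratedDeriv_succ, iteratedDeriv_one]
      have a1 : deriv (fun y => u t y) = fun y => √2 * jetOf u 1 t y := funext fun y => (d0 y).deriv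
      rw [a1]
      have a2 : deriv (fun y => √2 * jetOf u 1 t y) = fun y => √2 * jetOf u 2 t y :=
        funext fun y => (d1 y).deriv
      rw [a2, (d2 x).deriv]
    have e4 : deriv (fun y => u t y ^ 3) x = 3 * u t x ^ 2 * (√2 * jetOf u 1 t x) := by
      exact (((d0 x).pow 3).congr_deriv (by push_cast; ring)).deriv
    rw [e3, e4, hut] at h1
    have hd := hasDerivAt_dt (jetOf_contDiffOn hu 0) ht x
    have hd' : HasDerivAt (fun τ => jetOf u 0 τ x) (deriv (fun τ => jetOf u 0 τ x) t) t := by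
      have : (fun τ => jetOf u 0 τ x) =ᶠ[nhds t]
          fun τ => (dxW^[0] fun p => u p.1 p.2 / √2) (τ, x) := by
        filter_upwards [Ioi_mem_nhds ht] with τ hτ
        simp only [jetOf]
        rw [max_eq_left (le_of_lt hτ)]
      exact (hd.congr_of_eventuallyEq this).differentiableAt.hasDerivAt
    have hd2 : deriv (fun τ => u τ x) t = √2 * deriv (fun τ => jetOf u 0 τ x) t := by
      have : (fun τ => u τ x) =ᶠ[nhds t] fun τ => √2 * jetOf u 0 τ x := by
        filter_upwards [Ioi_mem_nhds ht] with τ hτ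
        rw [jetOf_zero (le_of_lt hτ)]; field_simp
      rw [this.deriv_eq]
      exact (hd'.const_mul _).deriv
    refine hd'.congr_deriv ?_
    have hs0 : √2 ≠ 0 := by positivity
    apply mul_left_cancel₀ hs0
    rw [hd2] at h1
    linear_combination h1 - 3 * √2 * jetOf u 0 t x ^ 2 * jetOf u 1 t x * hs2
  have ht1 : ∀ t > 0, ∀ x, HasDerivAt (fun τ => jetOf u 1 τ x)
      (-(jetOf u 4 t x + 12 * jetOf u 0 t x * jetOf u 1 t x ^ 2
        + 6 * jetOf u 0 t x ^ 2 * jetOf u 2 t x)) t := by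
    intro t ht x
    refine jetOf_ht hu 0 ht0 ht ?_
    have := ((hx 3 t x).add ((((hx 0 t x).pow 2).const_mul 6).mul (hx 1 t x))).neg
    refine this.congr_deriv ?_
    simp only [Pi.pow_apply]; push_cast; ring
  refine ⟨fun k => ?_, hx, ht0, ht1, ?_, ?_⟩
  · have := (jetOf_contDiffOn hu k).continuousOn
    have h2 := this.comp_continuous (f := fun p : ℝ × ℝ => ((max p.1 0 : ℝ), p.2)) (by fun_prop)
      (fun p => ⟨Set.mem_Ici.2 (le_max_right _ _), trivial⟩)
    exact h2
  · intro t ht x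
    refine jetOf_ht hu 1 ht1 ht ?_
    have := (((hx 4 t x).add (((hx 0 t x).const_mul 12).mul ((hx 1 t x).pow 2))).add
      ((((hx 0 t x).pow 2).const_mul 6).mul (hx 2 t x))).neg
    refine this.congr_deriv ?_
    simp only [Pi.pow_apply]; push_cast; ring
  · intro k t
    obtain ⟨g, hg⟩ := jetOf_schwartz hu k t
    simp_rw [hg]
    exact schwartz_sq_integrable g

/-! ### Conservation laws -/

/-- One dimensional Sobolev inequality with a free parameter. -/
lemma sup_sq {f f' : ℝ → ℝ} (hf : ∀ x, HasDerivAt f (f' x) x) (cf' : Continuous f')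
    (i0 : Integrable fun x => f x ^ 2) (i1 : Integrable fun x => f' x ^ 2) {l : ℝ} (hl : 0 < l)
    (x : ℝ) : f x ^ 2 ≤ l * (∫ x, f x ^ 2) + l⁻¹ * ∫ x, f' x ^ 2 := by
  have cf : Continuous f := cont_of_deriv hf
  have hd : ∀ x, HasDerivAt (fun x => f x ^ 2) (2 * f x * f' x) x := fun x =>
    ((hf x).pow 2).congr_deriv (by push_cast; ring)
  have ig : Integrable fun x => l * f x ^ 2 + l⁻¹ * f' x ^ 2 := (i0.const_mul l).add (i1.const_mul _)
  have hle : ∀ x, |2 * f x * f' x| ≤ l * f x ^ 2 + l⁻¹ * f' x ^ 2 := by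
    intro x
    have e1 : l * l⁻¹ = 1 := mul_inv_cancel₀ hl.ne'
    have hli : 0 < l⁻¹ := inv_pos.2 hl
    rw [abs_le]
    constructor
    · nlinarith [mul_nonneg hli.le (sq_nonneg (l * f x + f' x))]
    · nlinarith [mul_nonneg hli.le (sq_nonneg (l * f x - f' x))]
  obtain ⟨i2, -⟩ := integrable_of_abs_le (f := fun x => 2 * f x * f' x) (by fun_prop) ig hle
  have ht : Tendsto (fun x => f x ^ 2) atBot (nhds 0) :=
    tendsto_zero_of_hasDerivAt_of_integrableOn_Iic (a := x) (fun y _ => hd y) i2.integrableOn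
      i0.integrableOn
  have h3 := integral_Iic_of_hasDerivAt_of_tendsto' (a := x) (fun y _ => hd y) i2.integrableOn ht
  rw [sub_zero] at h3
  rw [← h3]
  calc ∫ y in Iic x, 2 * f y * f' y ≤ ∫ y in Iic x, (l * f y ^ 2 + l⁻¹ * f' y ^ 2) :=
        integral_mono i2.integrableOn ig.integrableOn fun y => (le_abs_self _).trans (hle y)
    _ ≤ ∫ y, (l * f y ^ 2 + l⁻¹ * f' y ^ 2) :=
        setIntegral_le_integral ig (.of_forall fun y => (abs_nonneg _).trans (hle y))
    _ = _ := by
        rw [integral_add (i0.const_mul l) (i1.const_mul _), integral_const_mul, integral_const_mul]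

/-- The balance law without weight. -/
theorem balance_one {s t : ℝ} (hst : s ≤ t) {e e1 e2 e3 F F1 G : ℝ → ℝ → ℝ}
    (L : BalanceLaw s t e e1 e2 e3 F F1 G)
    {S : ℝ → ℝ} (cS : Continuous S) (hS : ∀ x, 0 ≤ S x) (iS : Integrable S)
    (hkey : ∀ τ ∈ Ioo s t, ∀ x, G τ x ≤ S x) (D : Dominated s t e F) :
    ∫ x, e t x ≤ (∫ x, e s x) + (t - s) * ∫ x, S x := by
  have d : ∀ k x : ℝ, HasDerivAt (fun _ => k) 0 x := fun k x => hasDerivAt_const x k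
  have := balance_source hst L (H := fun _ _ => 0) continuous_const (ρ := fun _ => 1)
    (ρ1 := fun _ => 0) (ρ2 := fun _ => 0) (ρ3 := fun _ => 0) (K := 1)
    ⟨d 1, d 0, d 0, continuous_const, by simp, by simp, by simp⟩ (a := fun _ => 0)
    (a1 := fun _ => 0) continuous_const continuous_const (fun τ _ => d 0 τ) (fun _ _ => le_rfl) cS
    hS iS (fun τ hτ x => by simpa using hkey τ hτ x) D 0 le_rfl
  simpa using this

/-- A conservation law `∂ₜe = -∂ₓ³e + ∂ₓF` with dominated density and flux. -/
def ConsLaw (s t : ℝ) (e F : ℝ → ℝ → ℝ) : Prop :=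
  (∃ e1 e2 e3 F1, BalanceLaw s t e e1 e2 e3 F F1 fun _ _ => 0) ∧ Dominated s t e F

lemma integral_le_add {f g : ℝ → ℝ} {A B : ℝ} (hf : Integrable f ∧ ∫ x, f x ≤ A)
    (hg : Integrable g ∧ ∫ x, g x ≤ B) :
    Integrable (fun x => f x + g x) ∧ ∫ x, (f x + g x) ≤ A + B :=
  ⟨hf.1.add hg.1, by rw [integral_add hf.1 hg.1]; exact add_le_add hf.2 hg.2⟩

lemma integral_le_mul {f : ℝ → ℝ} {A c : ℝ} (hc : 0 ≤ c) (hf : Integrable f ∧ ∫ x, f x ≤ A) :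
    Integrable (fun x => c * f x) ∧ ∫ x, c * f x ≤ c * A :=
  ⟨hf.1.const_mul c, by rw [integral_const_mul]; exact mul_mono_l hf.2 hc⟩

lemma ConsLaw.add {s t : ℝ} {e F f P : ℝ → ℝ → ℝ} (h : ConsLaw s t e F) (k : ConsLaw s t f P) :
    ConsLaw s t (fun τ x => e τ x + f τ x) fun τ x => F τ x + P τ x := by
  obtain ⟨⟨_, _, _, _, L⟩, B, g, ig, hg⟩ := h
  obtain ⟨⟨_, _, _, _, M⟩, C, k, ik, hk⟩ := k
  exact ⟨⟨_, _, _, _, L.ce.add M.ce, L.ce3.add M.ce3, L.cF.add M.cF, L.cF1.add M.cF1,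
    continuous_const, fun τ x => (L.he τ x).add (M.he τ x), fun τ x => (L.he1 τ x).add (M.he1 τ x),
    fun τ x => (L.he2 τ x).add (M.he2 τ x), fun τ x => (L.hF τ x).add (M.hF τ x),
    fun τ hτ x => ((L.het τ hτ x).add (M.het τ hτ x)).congr_deriv (by ring)⟩,
    B + C, _, fun τ hτ => integral_le_add (ig τ hτ) (ik τ hτ), fun τ hτ x =>
    ⟨(abs_add_le _ _).trans (add_le_add (hg τ hτ x).1 (hk τ hτ x).1),
      (abs_add_le _ _).trans (add_le_add (hg τ hτ x).2 (hk τ hτ x).2)⟩⟩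

lemma ConsLaw.neg {s t : ℝ} {e F : ℝ → ℝ → ℝ} (h : ConsLaw s t e F) :
    ConsLaw s t (fun τ x => -e τ x) fun τ x => -F τ x := by
  obtain ⟨⟨_, _, _, _, L⟩, B, g, ig, hg⟩ := h
  exact ⟨⟨_, _, _, _, L.ce.neg, L.ce3.neg, L.cF.neg, L.cF1.neg, continuous_const,
    fun τ x => (L.he τ x).neg, fun τ x => (L.he1 τ x).neg, fun τ x => (L.he2 τ x).neg,
    fun τ x => (L.hF τ x).neg, fun τ hτ x => (L.het τ hτ x).neg.congr_deriv (by ring)⟩,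
    B, g, ig, fun τ hτ x => by simpa only [abs_neg] using hg τ hτ x⟩

theorem ConsLaw.conserved {s t : ℝ} (hst : s ≤ t) {e F : ℝ → ℝ → ℝ} (h : ConsLaw s t e F) :
    ∫ x, e t x = ∫ x, e s x := by
  have key := fun {f P} (k : ConsLaw s t f P) => balance_one hst k.1.choose_spec.choose_spec.choose_spec.choose_spec
    (S := fun _ => 0) continuous_const (fun _ => le_rfl) (integrable_zero _ _ _) (fun _ _ _ => le_rfl) k.2
  have h1 := key h
  have h2 := key h.neg
  simp only [integral_neg, integral_zero, mul_zero, add_zero] at h1 h2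
  linarith

/-- Square integrability of the first `K` derivatives, bounded by `N` on a time interval. -/
def BddOn (U : Jet) (K : ℕ) (N s t : ℝ) : Prop :=
  ∀ τ ∈ Icc s t, ∀ k ≤ K, (Integrable fun x => U k τ x ^ 2) ∧ ∫ x, U k τ x ^ 2 ≤ N

lemma BddOn.mono {U : Jet} {K K' : ℕ} {N s t s' t' : ℝ} (h : BddOn U K N s t)
    (hK : K' ≤ K) (hs : s ≤ s') (ht : t' ≤ t) : BddOn U K' N s' t' :=
  fun τ hτ k hk => h τ ⟨hs.trans hτ.1, hτ.2.trans ht⟩ k (hk.trans hK)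

lemma BddOn.sup {U : Jet} (hU : MJet U) {K : ℕ} {N s t : ℝ} (h : BddOn U K N s t)
    {τ : ℝ} (hτ : τ ∈ Icc s t) {k : ℕ} (hk : k + 1 ≤ K) (hk4 : k + 1 ≤ 4) (x : ℝ) :
    U k τ x ^ 2 ≤ 2 * N := by
  have a := h τ hτ k (by omega)
  have b := h τ hτ (k + 1) hk
  have := sup_sq (fun x => hU.hx k (by omega) τ x) (cont_slice (hU.cont (k + 1) hk4) τ) a.1 b.1
    one_pos x
  simp only [inv_one, one_mul] at this
  linarith [a.2, b.2]

lemma BddOn.nonneg {U : Jet} {K : ℕ} {N s t : ℝ} (hb : BddOn U K N s t) (hst : s ≤ t) : 0 ≤ N :=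
  (integral_nonneg fun _ => sq_nonneg _).trans (hb s ⟨le_rfl, hst⟩ 0 K.zero_le).2

lemma MJet.conts {U : Jet} (hU : MJet U) :
    Cont₂ (U 0) ∧ Cont₂ (U 1) ∧ Cont₂ (U 2) ∧ Cont₂ (U 3) ∧ Cont₂ (U 4) :=
  ⟨hU.cont 0 (by norm_num), hU.cont 1 (by norm_num), hU.cont 2 (by norm_num),
    hU.cont 3 (by norm_num), hU.cont 4 le_rfl⟩

lemma MJet.derivs {U : Jet} (hU : MJet U) :
    (∀ t x, HasDerivAt (fun x => U 0 t x) (U 1 t x) x) ∧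
    (∀ t x, HasDerivAt (fun x => U 1 t x) (U 2 t x) x) ∧
    (∀ t x, HasDerivAt (fun x => U 2 t x) (U 3 t x) x) ∧
    ∀ t x, HasDerivAt (fun x => U 3 t x) (U 4 t x) x :=
  ⟨hU.hx 0 (by norm_num), hU.hx 1 (by norm_num), hU.hx 2 (by norm_num), hU.hx 3 (by norm_num)⟩

/-- Conservation of mass, with density `U²`. -/
theorem mass_law {U : Jet} (hU : MJet U) {s t N : ℝ} (hs : 0 ≤ s) (hst : s ≤ t)
    (hb : BddOn U 1 N s t) : ConsLaw s t (fun τ x => U 0 τ x ^ 2)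
      fun τ x => 3 * U 1 τ x ^ 2 - 3 * U 0 τ x ^ 4 := by
  obtain ⟨c0, c1, c2, c3, -⟩ := hU.conts
  obtain ⟨d0, d1, d2, -⟩ := hU.derivs
  have hN := hb.nonneg hst
  refine ⟨⟨fun τ x => 2 * U 0 τ x * U 1 τ x, fun τ x => 2 * U 1 τ x ^ 2 + 2 * U 0 τ x * U 2 τ x,
    fun τ x => 6 * U 1 τ x * U 2 τ x + 2 * U 0 τ x * U 3 τ x,
    fun τ x => 6 * U 1 τ x * U 2 τ x - 12 * U 0 τ x ^ 3 * U 1 τ x,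
    by fun_prop, by fun_prop, by fun_prop, by fun_prop, continuous_const,
    fun τ x => ((d0 τ x).fun_pow 2).congr_deriv ?_,
    fun τ x => (((d0 τ x).const_mul 2).fun_mul (d1 τ x)).congr_deriv ?_,
    fun τ x => ((((d1 τ x).fun_pow 2).const_mul 2).fun_add
      (((d0 τ x).const_mul 2).fun_mul (d2 τ x))).congr_deriv ?_,
    fun τ x => ((((d1 τ x).fun_pow 2).const_mul 3).fun_sub
      (((d0 τ x).fun_pow 4).const_mul 3)).congr_deriv ?_,
    fun τ hτ x => ((hU.ht0 τ (hs.trans_lt hτ.1) x).fun_pow 2).congr_deriv ?_⟩,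
    _, fun τ x => (1 + 6 * N) * U 0 τ x ^ 2 + 3 * U 1 τ x ^ 2, fun τ hτ =>
      integral_le_add (integral_le_mul (by positivity) (hb τ hτ 0 (by norm_num)))
        (integral_le_mul (by norm_num) (hb τ hτ 1 le_rfl)), fun τ hτ x => ?_⟩
  iterate 5 (push_cast; ring)
  have h0 := hb.sup hU hτ (k := 0) le_rfl (by norm_num) x
  rw [abs_le, abs_le]
  refine ⟨⟨?_, ?_⟩, ?_, ?_⟩ <;> nlinarith [sq_nonneg (U 0 τ x), sq_nonneg (U 1 τ x),
    mul_mono_r h0 (sq_nonneg (U 0 τ x))]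

lemma integral_lin3 {f g h : ℝ → ℝ} (hf : Integrable f) (hg : Integrable g) (hh : Integrable h)
    {a b c : ℝ} : ∫ x, (a * f x + b * g x + c * h x)
      = a * (∫ x, f x) + b * (∫ x, g x) + c * ∫ x, h x := by
  have h1 : Integrable fun x => a * f x + b * g x := (hf.const_mul a).add (hg.const_mul b)
  rw [integral_add h1 (hh.const_mul c), integral_add (hf.const_mul a) (hg.const_mul b)]
  simp only [integral_const_mul]

lemma integral_lin4 {f g h k : ℝ → ℝ} (hf : Integrable f) (hg : Integrable g) (hh : Integrable h)
    (hk : Integrable k) {a b c d : ℝ} : ∫ x, (a * f x + b * g x + c * h x + d * k x)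
      = a * (∫ x, f x) + b * (∫ x, g x) + c * (∫ x, h x) + d * ∫ x, k x := by
  have h1 : Integrable fun x => a * f x + b * g x + c * h x :=
    ((hf.const_mul a).add (hg.const_mul b)).add (hh.const_mul c)
  rw [integral_add h1 (hk.const_mul d), integral_lin3 hf hg hh, integral_const_mul]

/-- Conservation of energy, with density `U_x² - U⁴`. -/
theorem energy_law {U : Jet} (hU : MJet U) {s t N : ℝ} (hs : 0 ≤ s) (hst : s ≤ t)
    (hb : BddOn U 2 N s t) : ConsLaw s t (fun τ x => U 1 τ x ^ 2 - U 0 τ x ^ 4)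
      fun τ x => 3 * U 2 τ x ^ 2 - 24 * U 0 τ x ^ 2 * U 1 τ x ^ 2 + 4 * U 0 τ x ^ 6 := by
  obtain ⟨c0, c1, c2, c3, c4⟩ := hU.conts
  obtain ⟨d0, d1, d2, d3⟩ := hU.derivs
  have hN := hb.nonneg hst
  refine ⟨⟨fun τ x => 2 * U 1 τ x * U 2 τ x - 4 * U 0 τ x ^ 3 * U 1 τ x,
    fun τ x => 2 * U 2 τ x ^ 2 + 2 * U 1 τ x * U 3 τ x - 12 * U 0 τ x ^ 2 * U 1 τ x ^ 2
      - 4 * U 0 τ x ^ 3 * U 2 τ x,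
    fun τ x => 6 * U 2 τ x * U 3 τ x + 2 * U 1 τ x * U 4 τ x - 24 * U 0 τ x * U 1 τ x ^ 3
      - 36 * U 0 τ x ^ 2 * U 1 τ x * U 2 τ x - 4 * U 0 τ x ^ 3 * U 3 τ x,
    fun τ x => 6 * U 2 τ x * U 3 τ x - 48 * U 0 τ x * U 1 τ x ^ 3
      - 48 * U 0 τ x ^ 2 * U 1 τ x * U 2 τ x + 24 * U 0 τ x ^ 5 * U 1 τ x,
    by fun_prop, by fun_prop, by fun_prop, by fun_prop, continuous_const,
    fun τ x => ?_, fun τ x => ?_, fun τ x => ?_, fun τ x => ?_, fun τ hτ x => (((hU.ht1 τ (hs.trans_lt hτ.1) x).fun_pow 2).fun_sub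
      ((hU.ht0 τ (hs.trans_lt hτ.1) x).fun_pow 4)).congr_deriv ?_⟩,
    _, fun τ x => (2 * N + 16 * N ^ 2) * U 0 τ x ^ 2 + (1 + 48 * N) * U 1 τ x ^ 2 + 3 * U 2 τ x ^ 2,
    fun τ hτ => integral_le_add (integral_le_add
      (integral_le_mul (by positivity) (hb τ hτ 0 (by norm_num)))
      (integral_le_mul (by positivity) (hb τ hτ 1 (by norm_num))))
      (integral_le_mul (by norm_num) (hb τ hτ 2 le_rfl)), fun τ hτ x => ?_⟩
  on_goal 6 =>
    beta_reduce
    have h0 := hb.sup hU hτ (k := 0) (by norm_num) (by norm_num) x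
    generalize U 0 τ x = u at *
    generalize U 1 τ x = v at *
    generalize U 2 τ x = w at *
    have i1 : u ^ 2 * v ^ 2 ≤ 2 * N * v ^ 2 := by nlinarith [sq_nonneg v]
    have i2 : 0 ≤ u ^ 2 * v ^ 2 := by positivity
    have i3 : u ^ 4 ≤ 2 * N * u ^ 2 := by nlinarith [sq_nonneg u]
    have i4 : u ^ 6 ≤ 4 * N ^ 2 * u ^ 2 := by nlinarith [sq_nonneg u]
    have i5 : 0 ≤ u ^ 6 := by positivity
    have i6 : 0 ≤ N * u ^ 2 := by positivity
    have i7 : 0 ≤ N * v ^ 2 := by positivity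
    have i8 : 0 ≤ N ^ 2 * u ^ 2 := by positivity
    have i9 : 0 ≤ u ^ 4 := by positivity
    rw [abs_le, abs_le]
    refine ⟨⟨?_, ?_⟩, ?_, ?_⟩ <;> linarith [sq_nonneg u, sq_nonneg v, sq_nonneg w]
  on_goal 5 => push_cast; ring
  all_goals
    apply HasDerivAt.congr_deriv
    · repeat' first
      | exact d0 _ _ | exact d1 _ _ | exact d2 _ _ | exact d3 _ _
      | apply HasDerivAt.const_mul | apply HasDerivAt.fun_pow | apply HasDerivAt.fun_mul
      | apply HasDerivAt.fun_sub | apply HasDerivAt.fun_add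
    · push_cast; ring

set_option maxHeartbeats 1000000 in
/-- The third conservation law, for the density `U_xx² - 10U²U_x² + 2U⁶`. -/
theorem energy2_conserved {U : Jet} (hU : FullJet U) {s t N : ℝ} (hs : 0 ≤ s)
    (hst : s ≤ t) (hb : BddOn U 3 N s t) :
    ∫ x, (U 2 t x ^ 2 - 10 * U 0 t x ^ 2 * U 1 t x ^ 2 + 2 * U 0 t x ^ 6)
      = ∫ x, (U 2 s x ^ 2 - 10 * U 0 s x ^ 2 * U 1 s x ^ 2 + 2 * U 0 s x ^ 6) := by
  obtain ⟨c0, c1, c2, c3, c4⟩ := hU.toMJet.conts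
  obtain ⟨d0, d1, d2, d3⟩ := hU.toMJet.derivs
  have c5 := hU.cont 5
  have d4 := hU.hx 4
  have hN := hb.nonneg hst
  refine ConsLaw.conserved hst
    (e := fun τ x => U 2 τ x ^ 2 - 10 * U 0 τ x ^ 2 * U 1 τ x ^ 2 + 2 * U 0 τ x ^ 6)
    (F := fun τ x => 3 * U 3 τ x ^ 2 - 36 * U 0 τ x ^ 2 * U 2 τ x ^ 2
      - 120 * U 0 τ x * U 1 τ x ^ 2 * U 2 τ x - 21 * U 1 τ x ^ 4 + 150 * U 0 τ x ^ 4 * U 1 τ x ^ 2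
      - 9 * U 0 τ x ^ 8)
    ⟨⟨fun τ x => 2 * U 2 τ x * U 3 τ x - 20 * U 0 τ x * U 1 τ x ^ 3
      - 20 * U 0 τ x ^ 2 * U 1 τ x * U 2 τ x + 12 * U 0 τ x ^ 5 * U 1 τ x,
    fun τ x => 2 * U 3 τ x ^ 2 + 2 * U 2 τ x * U 4 τ x - 20 * U 1 τ x ^ 4
      - 100 * U 0 τ x * U 1 τ x ^ 2 * U 2 τ x - 20 * U 0 τ x ^ 2 * U 2 τ x ^ 2
      - 20 * U 0 τ x ^ 2 * U 1 τ x * U 3 τ x + 60 * U 0 τ x ^ 4 * U 1 τ x ^ 2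
      + 12 * U 0 τ x ^ 5 * U 2 τ x,
    fun τ x => 6 * U 3 τ x * U 4 τ x + 2 * U 2 τ x * U 5 τ x - 180 * U 1 τ x ^ 3 * U 2 τ x
      - 240 * U 0 τ x * U 1 τ x * U 2 τ x ^ 2 - 140 * U 0 τ x * U 1 τ x ^ 2 * U 3 τ x
      - 60 * U 0 τ x ^ 2 * U 2 τ x * U 3 τ x - 20 * U 0 τ x ^ 2 * U 1 τ x * U 4 τ x
      + 240 * U 0 τ x ^ 3 * U 1 τ x ^ 3 + 180 * U 0 τ x ^ 4 * U 1 τ x * U 2 τ x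
      + 12 * U 0 τ x ^ 5 * U 3 τ x,
    fun τ x => 6 * U 3 τ x * U 4 τ x - 312 * U 0 τ x * U 1 τ x * U 2 τ x ^ 2
      - 72 * U 0 τ x ^ 2 * U 2 τ x * U 3 τ x - 204 * U 1 τ x ^ 3 * U 2 τ x
      - 120 * U 0 τ x * U 1 τ x ^ 2 * U 3 τ x + 600 * U 0 τ x ^ 3 * U 1 τ x ^ 3
      + 300 * U 0 τ x ^ 4 * U 1 τ x * U 2 τ x - 72 * U 0 τ x ^ 7 * U 1 τ x,
    by fun_prop, by fun_prop, by fun_prop, by fun_prop, continuous_const,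
    fun τ x => ?_, fun τ x => ?_, fun τ x => ?_, fun τ x => ?_, fun τ hτ x => by
      have p := hs.trans_lt hτ.1
      refine ((((hU.ht2 τ p x).fun_pow 2).fun_sub ((((hU.ht0 τ p x).fun_pow 2).const_mul 10).fun_mul
        ((hU.ht1 τ p x).fun_pow 2))).fun_add (((hU.ht0 τ p x).fun_pow 6).const_mul 2)).congr_deriv ?_
      push_cast; ring⟩,
    _, fun τ x => (8 * N ^ 2 + 72 * N ^ 3) * U 0 τ x ^ 2 + (262 * N + 600 * N ^ 2) * U 1 τ x ^ 2
      + (1 + 200 * N) * U 2 τ x ^ 2 + 3 * U 3 τ x ^ 2,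
    fun τ hτ => integral_le_add (integral_le_add (integral_le_add
      (integral_le_mul (by positivity) (hb τ hτ 0 (by norm_num)))
      (integral_le_mul (by positivity) (hb τ hτ 1 (by norm_num))))
      (integral_le_mul (by positivity) (hb τ hτ 2 (by norm_num))))
      (integral_le_mul (by norm_num) (hb τ hτ 3 le_rfl)), fun τ hτ x => ?_⟩
  on_goal 5 =>
    beta_reduce
    have h0 := hb.sup hU.toMJet hτ (k := 0) (by norm_num) (by norm_num) x
    have h1 := hb.sup hU.toMJet hτ (k := 1) (by norm_num) (by norm_num) x
    generalize U 0 τ x = u at *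
    generalize U 1 τ x = v at *
    generalize U 2 τ x = w at *
    generalize U 3 τ x = z at *
    have i1 : u ^ 2 * v ^ 2 ≤ 2 * N * v ^ 2 := by nlinarith [sq_nonneg v]
    have i2 : 0 ≤ u ^ 2 * v ^ 2 := by positivity
    have i3 : u ^ 4 ≤ 2 * N * u ^ 2 := by nlinarith [sq_nonneg u]
    have i4 : u ^ 6 ≤ 4 * N ^ 2 * u ^ 2 := by nlinarith [sq_nonneg u]
    have i5 : 0 ≤ u ^ 6 := by positivity
    have i7 : 0 ≤ N ^ 2 * v ^ 2 := by positivity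
    have i8 : 0 ≤ N ^ 3 * u ^ 2 := by positivity
    have j1 : u ^ 2 * w ^ 2 ≤ 2 * N * w ^ 2 := by nlinarith [sq_nonneg w]
    have j1' : 0 ≤ u ^ 2 * w ^ 2 := by positivity
    have j2 : v ^ 4 ≤ 2 * N * v ^ 2 := by nlinarith [sq_nonneg v]
    have j2' : 0 ≤ v ^ 4 := by positivity
    have j3 : u ^ 4 * v ^ 2 ≤ 4 * N ^ 2 * v ^ 2 := by
      have : u ^ 4 ≤ 4 * N ^ 2 := by nlinarith [sq_nonneg u]
      nlinarith [sq_nonneg v]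
    have j3' : 0 ≤ u ^ 4 * v ^ 2 := by positivity
    have j4 : u ^ 8 ≤ 8 * N ^ 3 * u ^ 2 := by
      have : (u ^ 2) ^ 3 ≤ (2 * N) ^ 3 := by gcongr
      nlinarith [sq_nonneg u]
    have j4' : 0 ≤ u ^ 8 := by positivity
    have j5 := sq_nonneg (u * w - v ^ 2)
    have j6 := sq_nonneg (u * w + v ^ 2)
    have k1 : 0 ≤ N ^ 2 * u ^ 2 := by positivity
    have k2 : 0 ≤ N * v ^ 2 := by positivity
    have k3 : 0 ≤ N * w ^ 2 := by positivity
    rw [abs_le, abs_le]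
    refine ⟨⟨?_, ?_⟩, ?_, ?_⟩ <;> linarith [sq_nonneg u, sq_nonneg v, sq_nonneg w, sq_nonneg z]
  all_goals
    apply HasDerivAt.congr_deriv
    · repeat' first
      | exact d0 _ _ | exact d1 _ _ | exact d2 _ _ | exact d3 _ _ | exact d4 _ _
      | apply HasDerivAt.const_mul | apply HasDerivAt.fun_pow | apply HasDerivAt.fun_mul
      | apply HasDerivAt.fun_sub | apply HasDerivAt.fun_add
    · push_cast; ring

/-! ### Continuous dependence in L² -/

/-- A solution `U` and an approximate solution `V` with error `r` on `[s, t]`, with the bounds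
entering the `L²` estimate of their difference. -/
structure DiffData (s t : ℝ) (U V : Jet) (r : ℝ → ℝ) (L B : ℝ) : Prop where
  cU : ∀ k, Cont₂ (U k)
  cV : ∀ k, Cont₂ (V k)
  dU : ∀ k τ x, HasDerivAt (U k τ) (U (k + 1) τ x) x
  dV : ∀ k τ x, HasDerivAt (V k τ) (V (k + 1) τ x) x
  tU : ∀ τ ∈ Ioo s t, ∀ x, HasDerivAt (fun τ => U 0 τ x)
    (-(U 3 τ x + 6 * U 0 τ x ^ 2 * U 1 τ x)) τ
  tV : ∀ τ ∈ Ioo s t, ∀ x, HasDerivAt (fun τ => V 0 τ x)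
    (-(V 3 τ x + 6 * V 0 τ x ^ 2 * V 1 τ x) + r x) τ
  cr : Continuous r
  ir : Integrable fun x => r x ^ 2
  hA : ∀ τ ∈ Icc s t, ∀ x, U 0 τ x ^ 2 + U 0 τ x * V 0 τ x + V 0 τ x ^ 2 ≤ L
  hA1 : ∀ τ ∈ Icc s t, ∀ x, 2 * |2 * U 0 τ x * U 1 τ x + U 1 τ x * V 0 τ x
    + U 0 τ x * V 1 τ x + 2 * V 0 τ x * V 1 τ x| ≤ L
  hZ : ∀ τ ∈ Icc s t, ∀ k ≤ 1, (Integrable fun x => (U k τ x - V k τ x) ^ 2) ∧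
    ∫ x, (U k τ x - V k τ x) ^ 2 ≤ B

/-- Growth of the `L²` norm of the difference `Z = U - V`. The exponential factor `E` and the sign
`g = ±1` serve to treat both time directions at once. -/
lemma diff_aux {s t : ℝ} (hst : s ≤ t) {U V : Jet} {r E : ℝ → ℝ} {L B σ g l : ℝ}
    (D : DiffData s t U V r L B) (hg : g ^ 2 = 1) (hE : ∀ τ, HasDerivAt E (-(g * l) * E τ) τ)
    (hE0 : ∀ τ ∈ Icc s t, 0 ≤ E τ ∧ E τ ≤ 1) (hσ : 0 < σ) (hl : L + σ ≤ l) :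
    g * E t * (∫ x, (U 0 t x - V 0 t x) ^ 2)
      ≤ g * E s * (∫ x, (U 0 s x - V 0 s x) ^ 2) + (t - s) * (σ⁻¹ * ∫ x, r x ^ 2) := by
  obtain ⟨cU, cV, dU, dV, tU, tV, cr, ir, hA, hA1, hZ⟩ := D
  have cE : Continuous E := cont_of_deriv hE
  have hg1 : |g| = 1 := by
    have : |g| ^ 2 = 1 := by rw [sq_abs]; exact hg
    nlinarith [abs_nonneg g]
  obtain ⟨Z, eZ⟩ : ∃ Z : Jet, ∀ k τ x, Z k τ x = U k τ x - V k τ x := ⟨_, fun _ _ _ => rfl⟩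
  obtain ⟨A, eA⟩ : ∃ A : ℝ → ℝ → ℝ, ∀ τ x, A τ x =
    U 0 τ x ^ 2 + U 0 τ x * V 0 τ x + V 0 τ x ^ 2 := ⟨_, fun _ _ => rfl⟩
  obtain ⟨A1, eA1⟩ : ∃ A1 : ℝ → ℝ → ℝ, ∀ τ x, A1 τ x = 2 * U 0 τ x * U 1 τ x
    + U 1 τ x * V 0 τ x + U 0 τ x * V 1 τ x + 2 * V 0 τ x * V 1 τ x := ⟨_, fun _ _ => rfl⟩
  have cZ : ∀ k, Cont₂ (Z k) := fun k => by simp only [eZ]; fun_prop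
  have cA : Cont₂ A := by simp only [eA]; fun_prop
  have cA1 : Cont₂ A1 := by simp only [eA1]; fun_prop
  have dZ : ∀ k τ x, HasDerivAt (fun x => Z k τ x) (Z (k + 1) τ x) x := fun k τ x => by
    simp only [eZ]; exact (dU k τ x).fun_sub (dV k τ x)
  have dA : ∀ τ x, HasDerivAt (fun x => A τ x) (A1 τ x) x := fun τ x => by
    simp only [eA, eA1]
    exact (((dU 0 τ x).fun_pow 2).fun_add ((dU 0 τ x).fun_mul (dV 0 τ x))).fun_add
      ((dV 0 τ x).fun_pow 2) |>.congr_deriv (by push_cast; ring)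
  simp only [← eZ, ← eA, ← eA1] at hA hA1 hZ ⊢
  have d0 := dZ 0
  have d1 := dZ 1
  have d2 := dZ 2
  have key := balance_one hst
    (e := fun τ x => g * E τ * Z 0 τ x ^ 2)
    (F := fun τ x => g * E τ * (3 * Z 1 τ x ^ 2 - 2 * A τ x * Z 0 τ x ^ 2))
    (e1 := fun τ x => g * E τ * (2 * Z 0 τ x * Z 1 τ x))
    (e2 := fun τ x => g * E τ * (2 * Z 1 τ x ^ 2 + 2 * Z 0 τ x * Z 2 τ x))
    (e3 := fun τ x => g * E τ * (6 * Z 1 τ x * Z 2 τ x + 2 * Z 0 τ x * Z 3 τ x))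
    (F1 := fun τ x => g * E τ * (6 * Z 1 τ x * Z 2 τ x
      - 2 * A1 τ x * Z 0 τ x ^ 2 - 4 * A τ x * Z 0 τ x * Z 1 τ x))
    (G := fun τ x => E τ * (-l * Z 0 τ x ^ 2 - 2 * g * A1 τ x * Z 0 τ x ^ 2
      - 2 * g * Z 0 τ x * r x))
    ⟨by fun_prop, by fun_prop, by fun_prop, by fun_prop, by fun_prop,
    fun τ x => (((d0 τ x).fun_pow 2).const_mul (g * E τ)).congr_deriv (by push_cast; ring),
    fun τ x => ((((d0 τ x).const_mul 2).fun_mul (d1 τ x)).const_mul (g * E τ)).congr_deriv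
      (by push_cast; ring),
    fun τ x => (((((d1 τ x).fun_pow 2).const_mul 2).fun_add
      (((d0 τ x).const_mul 2).fun_mul (d2 τ x))).const_mul (g * E τ)).congr_deriv
      (by push_cast; ring),
    fun τ x => (((((d1 τ x).fun_pow 2).const_mul 3).fun_sub (((dA τ x).const_mul 2).fun_mul
        ((d0 τ x).fun_pow 2))).const_mul (g * E τ)).congr_deriv (by push_cast; ring),
    fun τ hτ x => by
      have h := ((hE τ).const_mul g).fun_mul (((tU τ hτ x).fun_sub (tV τ hτ x)).fun_pow 2)
      simp only [← eZ] at h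
      refine h.congr_deriv ?_
      simp only [eZ, eA, eA1]
      push_cast
      linear_combination (-l * E τ * (U 0 τ x - V 0 τ x) ^ 2) * hg⟩
    (S := fun x => σ⁻¹ * r x ^ 2) (by fun_prop) (fun x => by positivity) (ir.const_mul _)
    (by
      intro τ hτ x
      have hτ' := Ioo_subset_Icc_self hτ
      obtain ⟨e0, e1⟩ := hE0 τ hτ'
      have a1 := hA1 τ hτ' x
      generalize A1 τ x = A at *
      generalize Z 0 τ x = z at *
      generalize r x = q at *
      have hz := sq_nonneg z
      have i1 : -(2 * g * A * z ^ 2) ≤ L * z ^ 2 := by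
        have : |g * A| = |A| := by rw [abs_mul, hg1, one_mul]
        nlinarith [neg_abs_le (g * A)]
      have i2 : -(2 * g * z * q) ≤ σ * z ^ 2 + σ⁻¹ * q ^ 2 := by
        have e : σ * σ⁻¹ = 1 := mul_inv_cancel₀ hσ.ne'
        have := mul_nonneg (inv_pos.2 hσ).le (sq_nonneg (σ * z + g * q))
        linear_combination this + (σ * z ^ 2 + 2 * g * z * q) * e + σ⁻¹ * q ^ 2 * hg
      have i4 : (L + σ) * z ^ 2 ≤ l * z ^ 2 := mul_mono_r hl hz
      calc E τ * (-l * z ^ 2 - 2 * g * A * z ^ 2 - 2 * g * z * q)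
          ≤ E τ * (σ⁻¹ * q ^ 2) := mul_mono_l (by linarith) e0
        _ ≤ 1 * (σ⁻¹ * q ^ 2) := by gcongr
        _ = _ := one_mul _)
    ⟨_, fun τ x => (2 * |L| + 1) * Z 0 τ x ^ 2 + 3 * Z 1 τ x ^ 2, fun τ hτ =>
      integral_le_add (integral_le_mul (by positivity) (hZ τ hτ 0 (by norm_num)))
        (integral_le_mul (by norm_num) (hZ τ hτ 1 le_rfl)), fun τ hτ x => by
      obtain ⟨e0, e1⟩ := hE0 τ hτ
      have hgE : |g * E τ| ≤ 1 := by rw [abs_mul, hg1, abs_of_nonneg e0]; linarith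
      have h0 : 0 ≤ A τ x := by
        rw [eA]; nlinarith [sq_nonneg (U 0 τ x + V 0 τ x), sq_nonneg (U 0 τ x), sq_nonneg (V 0 τ x)]
      have h1 := sq_nonneg (Z 0 τ x)
      have h2 := sq_nonneg (Z 1 τ x)
      have h3 := mul_mono_r ((hA τ hτ x).trans (le_abs_self L)) h1
      have h4 := mul_nonneg h0 h1
      beta_reduce
      rw [abs_mul, abs_mul _ (_ - _)]
      refine ⟨(mul_mono_r hgE (abs_nonneg _)).trans ?_,
        (mul_mono_r hgE (abs_nonneg _)).trans ?_⟩ <;>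
      · rw [one_mul, abs_le]
        constructor <;> nlinarith⟩
  simpa only [integral_const_mul] using key

/-- Two sided version of `diff_aux`: `p` and `q` in either order. -/
lemma diff_bound {p q : ℝ} {U V : Jet} {r : ℝ → ℝ} {L B σ : ℝ}
    (D : DiffData (min p q) (max p q) U V r L B) (hσ : 0 < σ) :
    ∫ x, (U 0 p x - V 0 p x) ^ 2 ≤ exp ((L + σ) * |p - q|)
      * ((∫ x, (U 0 q x - V 0 q x) ^ 2) + |p - q| * (σ⁻¹ * ∫ x, r x ^ 2)) := by
  have hL : 0 ≤ L := (by positivity : (0:ℝ) ≤ 2 * |_|).trans (D.hA1 p ⟨min_le_left _ _, le_max_left _ _⟩ 0)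
  have mulexp : ∀ {a X Y : ℝ}, exp (-a) * X ≤ Y → X ≤ exp a * Y := by
    intro a X Y h
    calc X = exp a * (exp (-a) * X) := by rw [← mul_assoc, ← exp_add]; simp
      _ ≤ _ := by gcongr
  have dE : ∀ k τ : ℝ, HasDerivAt (fun τ => exp (k * (τ - q))) (k * exp (k * (τ - q))) τ :=
    fun k τ => ((((hasDerivAt_id τ).sub_const q).const_mul k).exp).congr_deriv (by simp; ring)
  apply mulexp
  rcases le_total p q with h | h
  · rw [min_eq_left h, max_eq_right h] at D
    have := diff_aux h (g := -1) (l := L + σ) (E := fun τ => exp ((L + σ) * (τ - q))) D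
      (by norm_num) (fun τ => (dE _ τ).congr_deriv (by ring))
      (fun τ hτ => ⟨(exp_pos _).le, exp_le_one_iff.2 (mul_nonpos_of_nonneg_of_nonpos (by positivity)
        (by linarith [hτ.2]))⟩) hσ le_rfl
    rw [abs_of_nonpos (by linarith), mul_neg, neg_neg]
    simp only [sub_self, mul_zero, exp_zero] at this
    linarith
  · rw [min_eq_right h, max_eq_left h] at D
    have := diff_aux h (g := 1) (l := L + σ) (E := fun τ => exp (-(L + σ) * (τ - q))) D
      (by norm_num) (fun τ => (dE _ τ).congr_deriv (by ring))
      (fun τ hτ => ⟨(exp_pos _).le, exp_le_one_iff.2 (mul_nonpos_of_nonpos_of_nonneg (by linarith)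
        (by linarith [hτ.1]))⟩) hσ le_rfl
    rw [abs_of_nonneg (by linarith), ← neg_mul]
    simp only [sub_self, mul_zero, exp_zero] at this
    linarith

/-! ### Propagation of H³ bounds -/

lemma fatou_sq {f : ℕ → ℝ → ℝ} {g : ℝ → ℝ} (hf : ∀ n, Continuous (f n))
    (hlim : ∀ x, Tendsto (fun n => f n x) atTop (nhds (g x))) {K : ℝ}
    (hi : ∀ n, Integrable fun x => f n x ^ 2) (hK : ∀ n, ∫ x, f n x ^ 2 ≤ K)
    (hg : Integrable fun x => g x ^ 2) : ∫ x, g x ^ 2 ≤ K := by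
  have hK0 : 0 ≤ K := (integral_nonneg fun x => sq_nonneg _).trans (hK 0)
  rw [← ENNReal.ofReal_le_ofReal_iff hK0,
    ofReal_integral_eq_lintegral_ofReal hg (.of_forall fun x => sq_nonneg _)]
  calc ∫⁻ x, ENNReal.ofReal (g x ^ 2)
      = ∫⁻ x, liminf (fun n => ENNReal.ofReal (f n x ^ 2)) atTop := by
        apply lintegral_congr
        intro x
        exact (((ENNReal.continuous_ofReal.tendsto _).comp ((hlim x).pow 2)).liminf_eq).symm
    _ ≤ liminf (fun n => ∫⁻ x, ENNReal.ofReal (f n x ^ 2)) atTop :=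
        lintegral_liminf_le fun n => by have := hf n; fun_prop
    _ ≤ ENNReal.ofReal K := by
        refine liminf_le_of_frequently_le' ?_
        refine Frequently.of_forall fun n => ?_
        rw [← ofReal_integral_eq_lintegral_ofReal (hi n)
          (.of_forall fun x => sq_nonneg _)]
        exact ENNReal.ofReal_le_ofReal (hK n)

/-- Mean value theorem for difference quotients with a signed increment. -/
lemma slope_mem {f f' : ℝ → ℝ} (cf : Continuous f) {t h : ℝ} (hh : h ≠ 0)
    (hf : ∀ τ ∈ uIoo t (t + h), HasDerivAt f (f' τ) τ) :
    ∃ ξ ∈ uIoo t (t + h), (f (t + h) - f t) / h = f' ξ := by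
  rcases lt_or_gt_of_ne hh with h0 | h0
  · rw [uIoo_of_ge (by linarith)] at *
    obtain ⟨c, hc, e⟩ := exists_hasDerivAt_eq_slope f f' (a := t + h) (b := t) (by linarith)
      cf.continuousOn hf
    refine ⟨c, hc, ?_⟩
    rw [e, show t - (t + h) = -h by ring, ← neg_sub, neg_div, div_neg]
  · rw [uIoo_of_le (by linarith)] at *
    obtain ⟨c, hc, e⟩ := exists_hasDerivAt_eq_slope f f' (a := t) (b := t + h) (by linarith)
      cf.continuousOn hf
    refine ⟨c, hc, ?_⟩
    rw [e, show t + h - t = h by ring]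

lemma BddOn.single {U : Jet} (hU : FullJet U) {N t : ℝ} {K : ℕ}
    (h : ∀ k ≤ K, ∫ x, U k t x ^ 2 ≤ N) : BddOn U K N t t := by
  intro τ hτ j hj
  obtain rfl : τ = t := le_antisymm hτ.2 hτ.1
  exact ⟨hU.l2 j τ, h j hj⟩

/-- The first three conservation laws control the `H²` norm. -/
lemma h2_bound {U : Jet} (hU : FullJet U) {N : ℝ} (hN0 : 0 ≤ N) :
    ∃ M, 0 ≤ M ∧ ∀ t1 t2, 0 ≤ t1 → 0 ≤ t2 → (∃ M, BddOn U 3 M (min t1 t2) (max t1 t2)) →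
      (∀ k ≤ 3, ∫ x, U k t2 x ^ 2 ≤ N) → ∀ k ≤ 2, ∫ x, U k t1 x ^ 2 ≤ M := by
  obtain ⟨N1, hN1⟩ : ∃ N1, N1 = 2 * (N + (2 * N + 1) * N ^ 2) := ⟨_, rfl⟩
  have hN10 : 0 ≤ N1 := by rw [hN1]; positivity
  refine ⟨N + N1 + (N + 8 * N ^ 3 + 10 * (N + N1) * N1), by positivity, ?_⟩
  rintro t1 t2 h1 h2 ⟨M, hM⟩ hN
  have sym : ∀ Φ : ℝ → ℝ, (∀ s t, 0 ≤ s → s ≤ t → BddOn U 3 M s t → Φ t = Φ s) → Φ t1 = Φ t2 := by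
    intro Φ hΦ
    rcases le_total t1 t2 with h | h
    · rw [min_eq_left h, max_eq_right h] at hM
      exact (hΦ _ _ h1 h hM).symm
    · rw [min_eq_right h, max_eq_left h] at hM
      exact hΦ _ _ h2 h hM
  have E0 := sym _ fun s t h h' hb => (mass_law hU.toMJet h h'
    (hb.mono (by norm_num) le_rfl le_rfl)).conserved h'
  have E1 := sym _ fun s t h h' hb => (energy_law hU.toMJet h h'
    (hb.mono (by norm_num) le_rfl le_rfl)).conserved h'
  have E2 := sym _ fun s t h h' hb => energy2_conserved hU h h' hb
  have hB2 : BddOn U 3 N t2 t2 := BddOn.single hU hN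
  have hx := hU.hx
  have cs : ∀ k t, Continuous (U k t) := fun k t => cont_slice (hU.cont k) t
  have l2 := hU.l2
  -- integrability of products, given a pointwise bound on `U`
  have dom : ∀ {f : ℝ → ℝ} {k t c}, Continuous f → (∀ x, 0 ≤ f x ∧ f x ≤ c * U k t x ^ 2) →
      Integrable f ∧ ∫ x, f x ≤ c * ∫ x, U k t x ^ 2 := by
    intro f k t c hf h
    have := integrable_of_abs_le hf ((l2 k t).const_mul c) fun x => by
      rw [abs_of_nonneg (h x).1]; exact (h x).2
    rw [← integral_const_mul]
    exact ⟨this.1, integral_mono this.1 ((l2 k t).const_mul c) fun x => (h x).2⟩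
  have int4 : ∀ t, ∀ a, (∀ x, U 0 t x ^ 2 ≤ a) → (Integrable fun x => U 0 t x ^ 4) ∧
      ∫ x, U 0 t x ^ 4 ≤ a * ∫ x, U 0 t x ^ 2 := fun t a ha =>
    dom ((cs 0 t).pow 4) fun x => ⟨by positivity, by nlinarith [ha x, sq_nonneg (U 0 t x)]⟩
  have int6 : ∀ t, ∀ a, 0 ≤ a → (∀ x, U 0 t x ^ 2 ≤ a) → (Integrable fun x => U 0 t x ^ 6) ∧
      ∫ x, U 0 t x ^ 6 ≤ a ^ 2 * ∫ x, U 0 t x ^ 2 := fun t a ha0 ha =>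
    dom ((cs 0 t).pow 6) fun x => ⟨by positivity, by
      have : (U 0 t x ^ 2) ^ 2 ≤ a ^ 2 := by have := ha x; gcongr
      nlinarith [sq_nonneg (U 0 t x)]⟩
  have int22 : ∀ t, ∀ a, (∀ x, U 0 t x ^ 2 ≤ a) →
      (Integrable fun x => 10 * U 0 t x ^ 2 * U 1 t x ^ 2) ∧
      ∫ x, 10 * U 0 t x ^ 2 * U 1 t x ^ 2 ≤ 10 * a * ∫ x, U 1 t x ^ 2 := fun t a ha =>
    dom (by have := cs 0 t; have := cs 1 t; fun_prop) fun x =>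
      ⟨by positivity, by have := ha x; gcongr⟩
  have n0 : ∫ x, U 0 t1 x ^ 2 ≤ N := E0.trans_le (hN 0 (by norm_num))
  have n1nn : 0 ≤ ∫ x, U 1 t1 x ^ 2 := integral_nonneg fun x => sq_nonneg _
  have n0nn : 0 ≤ ∫ x, U 0 t1 x ^ 2 := integral_nonneg fun x => sq_nonneg _
  have n1 : ∫ x, U 1 t1 x ^ 2 ≤ N1 := by
    obtain ⟨A, hA⟩ : ∃ A, A = ∫ x, U 1 t1 x ^ 2 := ⟨_, rfl⟩
    have hs : ∀ x, U 0 t1 x ^ 2 ≤ (2 * N + 1) * N + (2 * N + 1)⁻¹ * A := by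
      intro x
      have := sup_sq (fun x => hx 0 t1 x) (cs 1 t1) (l2 0 t1) (l2 1 t1)
        (by positivity : 0 < 2 * N + 1) x
      rw [zero_add, ← hA] at this
      nlinarith [mul_mono_l n0 (by positivity : 0 ≤ 2 * N + 1)]
    obtain ⟨i4, b4⟩ := int4 t1 _ hs
    obtain ⟨j4, -⟩ := int4 t2 (2 * N) (fun x => hB2.sup hU.toMJet ⟨le_rfl, le_rfl⟩
      (k := 0) (by norm_num) (by norm_num) x)
    beta_reduce at E1
    rw [integral_sub (l2 1 t1) i4, integral_sub (l2 1 t2) j4] at E1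
    have p4 : 0 ≤ ∫ x, U 0 t2 x ^ 4 := integral_nonneg fun x => by positivity
    have q1 := hN 1 (by norm_num)
    have hinv : (2 * N + 1)⁻¹ * A * N ≤ A / 2 := by
      rw [inv_mul_eq_div, div_mul_eq_mul_div, div_le_div_iff₀ (by positivity) (by norm_num)]
      nlinarith [hA ▸ n1nn]
    have b4' : ((2 * N + 1) * N + (2 * N + 1)⁻¹ * A) * (∫ x, U 0 t1 x ^ 2)
        ≤ ((2 * N + 1) * N + (2 * N + 1)⁻¹ * A) * N :=
      mul_mono_l n0 ((sq_nonneg _).trans (hs 0))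
    rw [← hA] at E1 ⊢
    nlinarith
  have s1 : ∀ x, U 0 t1 x ^ 2 ≤ N + N1 := by
    intro x
    have := sup_sq (fun x => hx 0 t1 x) (cs 1 t1) (l2 0 t1) (l2 1 t1) one_pos x
    simp only [inv_one, one_mul, zero_add] at this
    linarith
  have n2 : ∫ x, U 2 t1 x ^ 2 ≤ N + 8 * N ^ 3 + 10 * (N + N1) * N1 := by
    have s2 : ∀ x, U 0 t2 x ^ 2 ≤ 2 * N := fun x => hB2.sup hU.toMJet ⟨le_rfl, le_rfl⟩
      (k := 0) (by norm_num) (by norm_num) x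
    obtain ⟨i6, -⟩ := int6 t1 _ (by positivity) s1
    obtain ⟨j6, b6⟩ := int6 t2 _ (by positivity) s2
    obtain ⟨i22, b22⟩ := int22 t1 _ s1
    obtain ⟨j22, -⟩ := int22 t2 _ s2
    have sp : ∀ t, (Integrable fun x => U 0 t x ^ 6) →
        (Integrable fun x => 10 * U 0 t x ^ 2 * U 1 t x ^ 2) →
        ∫ x, (U 2 t x ^ 2 - 10 * U 0 t x ^ 2 * U 1 t x ^ 2 + 2 * U 0 t x ^ 6)
        = (∫ x, U 2 t x ^ 2) - (∫ x, 10 * U 0 t x ^ 2 * U 1 t x ^ 2) + 2 * ∫ x, U 0 t x ^ 6 := by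
      intro t a b
      have c : Integrable fun x => U 2 t x ^ 2 - 10 * U 0 t x ^ 2 * U 1 t x ^ 2 := (l2 2 t).sub b
      rw [integral_add c (a.const_mul 2), integral_sub (l2 2 t) b, integral_const_mul]
    beta_reduce at E2
    rw [sp t1 i6 i22, sp t2 j6 j22] at E2
    have p6 : 0 ≤ ∫ x, U 0 t1 x ^ 6 := integral_nonneg fun x => by positivity
    have p22 : 0 ≤ ∫ x, 10 * U 0 t2 x ^ 2 * U 1 t2 x ^ 2 := integral_nonneg fun x => by positivity
    have q2 := hN 2 (by norm_num)
    have q0 := hN 0 (by norm_num)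
    have b6' : (2 * N) ^ 2 * (∫ x, U 0 t2 x ^ 2) ≤ (2 * N) ^ 2 * N := by gcongr
    have b22' : 10 * (N + N1) * (∫ x, U 1 t1 x ^ 2) ≤ 10 * (N + N1) * N1 := by gcongr
    nlinarith
  have : 0 ≤ N + 8 * N ^ 3 + 10 * (N + N1) * N1 := by positivity
  intro k hk
  interval_cases k <;> linarith

lemma integral_sq_add_le {f g w : ℝ → ℝ} (cw : Continuous w) (hf : Integrable fun x => f x ^ 2)
    (hg : Integrable fun x => g x ^ 2) {a : ℝ} (h : ∀ x, |w x| ≤ |f x| + a * |g x|) :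
    (Integrable fun x => w x ^ 2) ∧
      ∫ x, w x ^ 2 ≤ 2 * (∫ x, f x ^ 2) + 2 * a ^ 2 * ∫ x, g x ^ 2 := by
  have i : Integrable fun x => 2 * f x ^ 2 + 2 * a ^ 2 * g x ^ 2 :=
    (hf.const_mul 2).add (hg.const_mul _)
  have := integrable_of_abs_le (f := fun x => w x ^ 2) (by fun_prop) i (fun x => by
    rw [abs_of_nonneg (sq_nonneg _), ← sq_abs (w x), ← sq_abs (f x), ← sq_abs (g x)]
    have h1 := h x
    have h2 := abs_nonneg (w x)
    nlinarith [sq_nonneg (|f x| - a * |g x|)])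
  refine ⟨this.1, ?_⟩
  rw [integral_add (hf.const_mul 2) (hg.const_mul _), integral_const_mul, integral_const_mul] at this
  exact (integral_mono this.1 this.1.abs fun x => le_abs_self _).trans this.2

/-- `H³` bounds propagate over a unit of time, with a constant depending only on the bound, through
any interval on which the `H³` norm is known to be finite in a uniform way. The third derivative is
controlled by comparing the solution with its time translates. -/
theorem h3_propagate {U : Jet} (hU : FullJet U) {N : ℝ} (hN0 : 0 ≤ N) :
    ∃ Ψ, ∀ t1 t2, 0 ≤ t1 → 0 ≤ t2 → |t1 - t2| ≤ 1 →
      (∃ M, BddOn U 3 M (min t1 t2) (max t1 t2)) →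
      (∀ k ≤ 3, ∫ x, U k t2 x ^ 2 ≤ N) → ∀ k ≤ 3, ∫ x, U k t1 x ^ 2 ≤ Ψ := by
  obtain ⟨M, hM0, hM⟩ := h2_bound hU hN0
  have cs : ∀ k t, Continuous (U k t) := fun k t => cont_slice (hU.cont k) t
  obtain ⟨L, hL⟩ : ∃ L, L = 24 * M := ⟨_, rfl⟩
  obtain ⟨W, hW⟩ : ∃ W : ℝ → ℝ → ℝ, W = fun t x => U 3 t x + 6 * U 0 t x ^ 2 * U 1 t x := ⟨_, rfl⟩
  have cW : Cont₂ W := by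
    have := hU.cont 0; have := hU.cont 1; have := hU.cont 3
    rw [hW]; fun_prop
  obtain ⟨KW, hKW⟩ : ∃ KW, KW = 2 * N + 2 * (12 * M) ^ 2 * M := ⟨_, rfl⟩
  obtain ⟨K, hK⟩ : ∃ K, K = exp (L + 1) * (exp (L + 1) * KW) := ⟨_, rfl⟩
  refine ⟨N + M + (2 * K + 2 * (12 * M) ^ 2 * M), ?_⟩
  rintro t1 t2 h1 h2 h12 ⟨Mq, hMq⟩ hN
  -- uniform `H²` bounds between `t1` and `t2`
  have hb : ∀ τ ∈ uIcc t1 t2, ∀ k ≤ 2, ∫ x, U k τ x ^ 2 ≤ M := by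
    intro τ hτ
    have hτ0 : 0 ≤ τ := (le_min h1 h2).trans hτ.1
    refine hM τ t2 hτ0 h2 ⟨Mq, hMq.mono le_rfl ?_ ?_⟩ hN
    · exact le_min hτ.1 (min_le_right _ _)
    · exact max_le hτ.2 (le_max_right _ _)
  have hs : ∀ τ ∈ uIcc t1 t2, ∀ x, U 0 τ x ^ 2 ≤ 2 * M ∧ U 1 τ x ^ 2 ≤ 2 * M := by
    intro τ hτ x
    have hB : BddOn U 2 M τ τ := .single hU (hb τ hτ)
    exact ⟨hB.sup hU.toMJet ⟨le_rfl, le_rfl⟩ (k := 0) (by norm_num) (by norm_num) x,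
      hB.sup hU.toMJet ⟨le_rfl, le_rfl⟩ (k := 1) (by norm_num) (by norm_num) x⟩
  have hWb : ∀ τ ∈ uIcc t1 t2, (Integrable fun x => W τ x ^ 2) ∧
      ∫ x, W τ x ^ 2 ≤ 2 * (∫ x, U 3 τ x ^ 2) + 2 * (12 * M) ^ 2 * M := by
    intro τ hτ
    have := integral_sq_add_le (w := W τ) (cont_slice cW τ) (hU.l2 3 τ) (hU.l2 1 τ) (a := 12 * M)
      (fun x => by
        rw [hW]
        refine (abs_add_le _ _).trans ?_
        rw [abs_mul, abs_of_nonneg (by positivity : 0 ≤ 6 * U 0 τ x ^ 2)]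
        have h6 : 6 * U 0 τ x ^ 2 ≤ 12 * M := by linarith [(hs τ hτ x).1]
        linarith [mul_mono_r h6 (abs_nonneg (U 1 τ x))])
    refine ⟨this.1, this.2.trans ?_⟩
    have := hb τ hτ 1 (by norm_num)
    gcongr
  have hU3 : ∀ τ ∈ uIcc t1 t2,
      ∫ x, U 3 τ x ^ 2 ≤ 2 * (∫ x, W τ x ^ 2) + 2 * (12 * M) ^ 2 * M := by
    intro τ hτ
    have := integral_sq_add_le (w := U 3 τ) (cs 3 τ) (hWb τ hτ).1 (hU.l2 1 τ) (a := 12 * M)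
      (fun x => by
        have e : U 3 τ x = W τ x - 6 * U 0 τ x ^ 2 * U 1 τ x := by rw [hW]; ring
        rw [e]
        refine (abs_sub _ _).trans ?_
        rw [abs_mul (6 * U 0 τ x ^ 2), abs_of_nonneg (by positivity : 0 ≤ 6 * U 0 τ x ^ 2)]
        have h6 : 6 * U 0 τ x ^ 2 ≤ 12 * M := by linarith [(hs τ hτ x).1]
        linarith [mul_mono_r h6 (abs_nonneg (U 1 τ x))])
    refine this.2.trans ?_
    have := hb τ hτ 1 (by norm_num)
    gcongr
  have hA : ∀ τ ∈ uIcc t1 t2, ∀ τ' ∈ uIcc t1 t2, ∀ x,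
      U 0 τ x ^ 2 + U 0 τ x * U 0 τ' x + U 0 τ' x ^ 2 ≤ L := by
    intro τ hτ τ' hτ' x
    have a := (hs τ hτ x).1
    have b := (hs τ' hτ' x).1
    rw [hL]
    nlinarith [sq_nonneg (U 0 τ x - U 0 τ' x)]
  have hA1 : ∀ τ ∈ uIcc t1 t2, ∀ τ' ∈ uIcc t1 t2, ∀ x,
      2 * |2 * U 0 τ x * U 1 τ x + U 1 τ x * U 0 τ' x + U 0 τ x * U 1 τ' x
        + 2 * U 0 τ' x * U 1 τ' x| ≤ L := by
    intro τ hτ τ' hτ' x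
    obtain ⟨a, a'⟩ := hs τ hτ x
    obtain ⟨b, b'⟩ := hs τ' hτ' x
    generalize U 0 τ x = p at *
    generalize U 0 τ' x = q at *
    generalize U 1 τ x = p1 at *
    generalize U 1 τ' x = q1 at *
    have : |2 * p * p1 + p1 * q + p * q1 + 2 * q * q1| ≤ 12 * M := by
      rw [abs_le]
      constructor
      · nlinarith [sq_nonneg (p + p1), sq_nonneg (p1 + q), sq_nonneg (p + q1), sq_nonneg (q + q1)]
      · nlinarith [sq_nonneg (p - p1), sq_nonneg (p1 - q), sq_nonneg (p - q1), sq_nonneg (q - q1)]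
    linarith
  have hZ : ∀ τ ∈ uIcc t1 t2, ∀ τ' ∈ uIcc t1 t2, ∀ k ≤ 1,
      (Integrable fun x => (U k τ x - U k τ' x) ^ 2) ∧
      ∫ x, (U k τ x - U k τ' x) ^ 2 ≤ 4 * M := by
    intro τ hτ τ' hτ' k hk
    have := integral_sq_add_le (w := fun x => U k τ x - U k τ' x)
      (by have := cs k τ; have := cs k τ'; fun_prop) (hU.l2 k τ) (hU.l2 k τ') (a := 1)
      (fun x => by rw [one_mul]; exact abs_sub _ _)
    refine ⟨this.1, this.2.trans ?_⟩
    linarith [hb τ hτ k (by omega), hb τ' hτ' k (by omega)]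
  have pos_of : ∀ τ, min t1 t2 < τ → 0 < τ := fun τ h => (le_min h1 h2).trans_lt h
  have hL0 : 0 ≤ L := by rw [hL]; positivity
  suffices h : ∫ x, W t1 x ^ 2 ≤ K by
    intro k hk
    have h0 : 0 ≤ ∫ x, W t1 x ^ 2 := integral_nonneg fun x => sq_nonneg _
    have p : 0 ≤ 2 * (12 * M) ^ 2 * M := by positivity
    rcases Nat.lt_or_ge k 3 with hk3 | hk3
    · linarith [hb t1 left_mem_uIcc k (by omega)]
    · obtain rfl : k = 3 := by omega
      linarith [hU3 t1 left_mem_uIcc]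
  have hW2 : ∫ x, W t2 x ^ 2 ≤ KW := by
    have := (hWb t2 right_mem_uIcc).2
    rw [hKW]
    linarith [hN 3 le_rfl]
  have hW2nn : 0 ≤ ∫ x, W t2 x ^ 2 := integral_nonneg fun x => sq_nonneg _
  rcases eq_or_ne t1 t2 with rfl | hne
  · refine hW2.trans ?_
    have : 1 ≤ exp (L + 1) := one_le_exp (by linarith)
    rw [hK]
    nlinarith [hW2nn.trans hW2, mul_nonneg (hW2nn.trans hW2) (sub_nonneg.2 this)]
  -- signed increments towards `t2`
  obtain ⟨η, hη⟩ : ∃ η : ℕ → ℝ, η = fun n : ℕ => (t2 - t1) * (1 / ((n : ℝ) + 1)) := ⟨_, rfl⟩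
  have hη0 : ∀ n, η n ≠ 0 := fun n => by
    rw [hη]; exact mul_ne_zero (sub_ne_zero.2 hne.symm) (by positivity)
  have hθ : ∀ n : ℕ, 0 < 1 / ((n : ℝ) + 1) ∧ 1 / ((n : ℝ) + 1) ≤ 1 := fun n => by
    refine ⟨by positivity, ?_⟩
    rw [div_le_one (by positivity)]; linarith [(Nat.cast_nonneg n : (0:ℝ) ≤ n)]
  have hηlim : Tendsto η atTop (nhds 0) := by
    rw [hη]; simpa using (tendsto_one_div_add_atTop_nhds_zero_nat (𝕜 := ℝ)).const_mul (t2 - t1)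
  have hηabs : ∀ n, |η n| ≤ 1 := by
    intro n
    rw [hη]
    simp only [abs_mul, abs_of_pos (hθ n).1]
    rw [abs_sub_comm]
    nlinarith [(hθ n).1, (hθ n).2, abs_nonneg (t1 - t2)]
  have mem : ∀ n, t1 + η n ∈ uIcc t1 t2 ∧ t2 - η n ∈ uIcc t1 t2 := by
    intro n
    obtain ⟨a, b⟩ := hθ n
    rw [mem_uIcc, mem_uIcc, hη]
    constructor <;> rcases le_total t1 t2 with h | h
    any_goals left; constructor <;> nlinarith
    all_goals right; constructor <;> nlinarith
  have mem1 := fun n => (mem n).1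
  have mem2 := fun n => (mem n).2
  have mem3 : ∀ n, ∀ τ ∈ uIcc t1 (t2 - η n), τ + η n ∈ uIcc t1 t2 := by
    intro n τ hτ
    have a : τ + η n ∈ uIcc (t1 + η n) t2 := by
      rw [mem_uIcc] at *
      rcases hτ with ⟨p, q⟩ | ⟨p, q⟩
      · left; constructor <;> linarith
      · right; constructor <;> linarith
    exact uIcc_subset_uIcc_right (mem1 n) a
  have mem4 := fun n => uIcc_subset_uIcc_left (mem2 n)
  have mem5 := fun n => uIcc_subset_uIcc_right (mem2 n)
  -- translation by `η n` over the final stretch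
  have step1 : ∀ n, ∫ x, (U 0 (t2 - η n) x - U 0 t2 x) ^ 2 ≤ exp (L + 1) * (η n ^ 2 * KW) := by
    intro n
    have h := diff_bound (p := t2 - η n) (q := t2) (U := U) (V := fun k _ x => U k t2 x) (r := W t2)
      (L := L) (B := 4 * M) (σ := |η n|⁻¹) ⟨hU.cont, fun k => (cs k t2).comp continuous_snd, hU.hx,
      fun k _ => hU.hx k t2,
      fun τ hτ => hU.ht0 τ (pos_of τ ((le_min (mem2 n).1 (min_le_right _ _)).trans_lt hτ.1)),
      fun τ _ x => (hasDerivAt_const τ _).congr_deriv (by rw [hW]; ring),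
      cont_slice cW t2, (hWb t2 right_mem_uIcc).1, fun τ hτ => hA τ (mem5 n hτ) t2 right_mem_uIcc,
      fun τ hτ => hA1 τ (mem5 n hτ) t2 right_mem_uIcc,
      fun τ hτ => hZ τ (mem5 n hτ) t2 right_mem_uIcc⟩ (inv_pos.2 (abs_pos.2 (hη0 n)))
    have e1 : |t2 - η n - t2| = |η n| := by rw [sub_sub_cancel_left, abs_neg]
    rw [e1] at h
    refine h.trans ?_
    simp only [sub_self, ne_eq, OfNat.ofNat_ne_zero, not_false_eq_true, zero_pow, integral_zero,
      zero_add, inv_inv]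
    have e2 : (L + |η n|⁻¹) * |η n| ≤ L + 1 := by
      rw [add_mul, inv_mul_cancel₀ (abs_pos.2 (hη0 n)).ne']
      nlinarith [hηabs n]
    have e3 : |η n| * (|η n| * ∫ x, W t2 x ^ 2) ≤ η n ^ 2 * KW := by
      rw [← mul_assoc, ← sq, sq_abs]; gcongr
    have e4 : 0 ≤ |η n| * (|η n| * ∫ x, W t2 x ^ 2) := by positivity
    gcongr
  have step2 : ∀ n, ∫ x, (U 0 (t1 + η n) x - U 0 t1 x) ^ 2 ≤ η n ^ 2 * K := by
    intro n
    have h := diff_bound (p := t1) (q := t2 - η n) (U := U) (V := fun k τ x => U k (τ + η n) x)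
      (r := fun _ => 0) (L := L) (B := 4 * M) (σ := 1) ⟨hU.cont,
      fun k => (hU.cont k).comp (by fun_prop : Continuous fun p : ℝ × ℝ => (p.1 + η n, p.2)), hU.hx,
      fun k τ => hU.hx k (τ + η n),
      fun τ hτ => hU.ht0 τ (pos_of τ ((le_min (min_le_left _ _) (mem2 n).1).trans_lt hτ.1)),
      fun τ hτ x => by
        have a : min (t1 + η n) t2 < τ + η n := by
          rw [← sub_lt_iff_lt_add, ← min_sub_sub_right, add_sub_cancel_right]; exact hτ.1
        have := (hU.ht0 (τ + η n) (pos_of _ ((le_min (mem1 n).1 (min_le_right _ _)).trans_lt a))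
          x).comp_add_const τ (η n)
        exact this.congr_deriv (by ring),
      continuous_const, by simp, fun τ hτ => hA τ (mem4 n hτ) _ (mem3 n τ hτ),
      fun τ hτ => hA1 τ (mem4 n hτ) _ (mem3 n τ hτ),
      fun τ hτ => hZ τ (mem4 n hτ) _ (mem3 n τ hτ)⟩ one_pos
    simp only [sub_add_cancel, ne_eq, OfNat.ofNat_ne_zero, not_false_eq_true, zero_pow,
      integral_zero, mul_zero, add_zero] at h
    have e0 : (fun x => (U 0 (t1 + η n) x - U 0 t1 x) ^ 2)
        = fun x => (U 0 t1 x - U 0 (t1 + η n) x) ^ 2 := by funext x; ring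
    rw [e0]
    refine h.trans ?_
    have e1 : |t1 - (t2 - η n)| ≤ 1 := by
      refine le_trans ?_ h12
      have := abs_sub_left_of_mem_uIcc (mem2 n)
      rw [abs_sub_comm, abs_sub_comm t1 t2]; exact this
    have e2 : (L + 1) * |t1 - (t2 - η n)| ≤ L + 1 := by nlinarith
    have e3 : exp ((L + 1) * |t1 - (t2 - η n)|) ≤ exp (L + 1) := exp_le_exp.2 e2
    calc _ ≤ exp (L + 1) * (exp (L + 1) * (η n ^ 2 * KW)) := by
          refine mul_le_mul e3 (step1 n) (integral_nonneg fun x => sq_nonneg _) (exp_pos _).le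
      _ = _ := by rw [hK]; ring
  -- Fatou's lemma for the difference quotients
  have := fatou_sq (f := fun n x => (U 0 (t1 + η n) x - U 0 t1 x) / η n) (g := fun x => -W t1 x)
    (K := K) (fun n => by have := cs 0 (t1 + η n); have := cs 0 t1; fun_prop)
    (fun x => by
      have hc : Continuous fun τ => -W τ x := (cont_time cW x).neg
      have ex : ∀ n, ∃ ξ ∈ uIoo t1 (t1 + η n), (U 0 (t1 + η n) x - U 0 t1 x) / η n = -W ξ x := by
        intro n
        refine slope_mem (f := fun τ => U 0 τ x) (f' := fun τ => -W τ x)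
          (cont_time (hU.cont 0) x) (hη0 n) (fun τ hτ => ?_)
        rw [hW]
        exact hU.ht0 τ (pos_of τ ((le_min (min_le_left _ _) (mem1 n).1).trans_lt hτ.1)) x
      choose ξ hξ hξe using ex
      simp only [hξe]
      refine (hc.tendsto t1).comp ?_
      rw [tendsto_iff_dist_tendsto_zero]
      refine squeeze_zero (fun n => dist_nonneg) (g := fun n => |η n|) (fun n => ?_)
        (by simpa using hηlim.abs)
      have := abs_sub_left_of_mem_uIcc (uIoo_subset_uIcc_self (hξ n))
      rw [Real.dist_eq]
      simpa using this)
    (fun n => by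
      have := (hZ _ (mem1 n) t1 left_mem_uIcc 0 (by norm_num)).1.div_const (η n ^ 2)
      simpa only [div_pow] using this)
    (fun n => by
      simp only [div_pow]
      rw [integral_div, div_le_iff₀ (by have := hη0 n; positivity), mul_comm]
      exact step2 n)
    (by simpa only [neg_sq] using (hWb t1 left_mem_uIcc).1)
  simpa only [neg_sq] using this

/-! ### Local boundedness of the `H³` norm, by Baire's theorem -/

/-- A function with closed sublevel sets whose boundedness propagates in a controlled way is bounded
on compact intervals: by Baire's theorem the set of bad points cannot be nonempty. -/
theorem bounded_of_baire {n : ℝ → ℝ} (hcl : ∀ N : ℕ, IsClosed {t | n t ≤ N})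
    (hp : ∀ N : ℝ, ∃ Ψ : ℝ, ∀ t1 t2, |t1 - t2| ≤ 1 → (∃ M, ∀ τ ∈ uIcc t1 t2, n τ ≤ M) →
      n t2 ≤ N → n t1 ≤ Ψ) (a b : ℝ) : ∃ M, ∀ τ ∈ Icc a b, n τ ≤ M := by
  obtain ⟨G, hG⟩ : ∃ G : Set ℝ, G = {t | ∃ r > 0, ∃ M, ∀ τ ∈ Metric.ball t r, n τ ≤ M} := ⟨_, rfl⟩
  have hGo : IsOpen G := by
    rw [Metric.isOpen_iff]
    intro t ht
    rw [hG] at ht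
    obtain ⟨r, hr, M, hM⟩ := ht
    refine ⟨r, hr, fun s hs => ?_⟩
    rw [hG]
    obtain ⟨r', hr', h⟩ := Metric.isOpen_iff.1 Metric.isOpen_ball s hs
    exact ⟨r', hr', M, fun τ hτ => hM τ (h hτ)⟩
  have hK : ∀ K : Set ℝ, IsCompact K → K ⊆ G → ∃ M, ∀ τ ∈ K, n τ ≤ M := by
    intro K hK hKG
    refine hK.induction_on (p := fun s => ∃ M, ∀ τ ∈ s, n τ ≤ M) ⟨0, by simp⟩ ?_ ?_ ?_
    · rintro s t hst ⟨M, hM⟩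
      exact ⟨M, fun τ hτ => hM τ (hst hτ)⟩
    · rintro s t ⟨M, hM⟩ ⟨M', hM'⟩
      refine ⟨max M M', ?_⟩
      rintro τ (h | h)
      · exact (hM τ h).trans (le_max_left _ _)
      · exact (hM' τ h).trans (le_max_right _ _)
    · intro x hx
      have := hKG hx
      rw [hG] at this
      obtain ⟨r, hr, M, hM⟩ := this
      exact ⟨Metric.ball x r, mem_nhdsWithin_of_mem_nhds (Metric.ball_mem_nhds x hr), M, hM⟩
  suffices hF : Gᶜ = ∅ by
    exact hK _ isCompact_Icc (by rw [Set.compl_empty_iff.1 hF]; exact Set.subset_univ _)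
  by_contra hne
  rw [← ne_eq, ← Set.nonempty_iff_ne_empty] at hne
  have hFc : IsClosed Gᶜ := hGo.isClosed_compl
  have : Nonempty (Gᶜ : Set ℝ) := hne.to_subtype
  have : CompleteSpace (Gᶜ : Set ℝ) := hFc.completeSpace_coe
  obtain ⟨N, ⟨⟨t0, ht0⟩, hi⟩⟩ := nonempty_interior_of_iUnion_of_closed
    (f := fun N : ℕ => {t : (Gᶜ : Set ℝ) | n t ≤ N})
    (fun N => (hcl N).preimage continuous_subtype_val)
    (Set.eq_univ_of_forall fun t => by
      obtain ⟨N, hN⟩ := exists_nat_ge (n t)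
      exact Set.mem_iUnion.2 ⟨N, hN⟩)
  rw [mem_interior_iff_mem_nhds, Metric.mem_nhds_iff] at hi
  obtain ⟨r, hr, hrN⟩ := hi
  have hr' : ∀ t ∈ Gᶜ, |t - t0| < r → n t ≤ N := by
    intro t ht h
    exact hrN (show (⟨t, ht⟩ : (Gᶜ : Set ℝ)) ∈ Metric.ball _ _ from h)
  obtain ⟨Ψ, hΨ⟩ := hp N
  apply ht0
  rw [hG]
  refine ⟨min r 1, lt_min hr one_pos, max N Ψ, fun t ht => ?_⟩
  rw [Metric.mem_ball, Real.dist_eq] at ht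
  have htr := ht.trans_le (min_le_left _ _)
  have ht1 := ht.trans_le (min_le_right _ _)
  by_cases htG : t ∈ Gᶜ
  · exact (hr' t htG htr).trans (le_max_left _ _)
  refine le_trans ?_ (le_max_right _ _)
  -- the bad point between `t` and `t0` closest to `t`
  obtain ⟨b, ⟨hbG, hbu⟩, hbmin⟩ := (isCompact_uIcc (a := t) (b := t0)).inter_left hFc
    |>.exists_isMinOn ⟨t0, ht0, right_mem_uIcc⟩
      (f := fun s => |s - t|) (by fun_prop)
  have hbd : |t - b| ≤ |t - t0| := by
    have := abs_sub_left_of_mem_uIcc hbu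
    rwa [abs_sub_comm, abs_sub_comm t t0]
  have hb0 : |b - t0| < r := by
    have := Set.abs_sub_right_of_mem_uIcc hbu
    rw [abs_sub_comm] at this
    rw [abs_sub_comm t t0] at htr
    exact lt_of_le_of_lt (by simpa [abs_sub_comm] using this) htr
  have hbN : n b ≤ N := hr' b hbG hb0
  have hgood : ∀ x ∈ uIcc t b, x ≠ b → x ∈ G := by
    intro x hx hxb
    by_contra hxG
    have h1 := hbmin (show x ∈ Gᶜ ∩ uIcc t t0 from ⟨hxG, uIcc_subset_uIcc_left hbu hx⟩)
    simp only [Set.mem_ofPred_eq] at h1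
    apply hxb
    rw [Set.mem_uIcc] at hx
    rcases hx with ⟨p, q⟩ | ⟨p, q⟩
    · rw [abs_of_nonneg (by linarith), abs_of_nonneg (by linarith)] at h1; linarith
    · rw [abs_of_nonpos (by linarith), abs_of_nonpos (by linarith)] at h1; linarith
  obtain ⟨Ψ', hΨ'⟩ := hp (n t)
  refine hΨ t b (hbd.trans ht1.le) ⟨max N Ψ', fun x hx => ?_⟩ hbN
  by_cases hxb : x = b
  · rw [hxb]; exact hbN.trans (le_max_left _ _)
  refine le_trans ?_ (le_max_right _ _)
  refine hΨ' x t ?_ ?_ le_rfl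
  · have := abs_sub_left_of_mem_uIcc hx
    rw [abs_sub_comm b t] at this
    exact this.trans (hbd.trans ht1.le)
  · refine hK _ isCompact_uIcc fun y hy => hgood y ?_ ?_
    · rw [uIcc_comm] at hy; exact uIcc_subset_uIcc_left hx hy
    · rintro rfl
      apply hxb
      rw [Set.mem_uIcc] at hx hy
      rcases hx with ⟨p, q⟩ | ⟨p, q⟩ <;> rcases hy with ⟨p', q'⟩ | ⟨p', q'⟩ <;> linarith

theorem h3_locally_bounded {U : Jet} (hU : FullJet U) (T : ℝ) :
    ∃ M, BddOn U 3 M 0 T := by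
  obtain ⟨f, hf⟩ : ∃ f : ℝ → ℝ → ℝ, f = fun t x => U 0 (max t 0) x ^ 2 + U 1 (max t 0) x ^ 2
    + U 2 (max t 0) x ^ 2 + U 3 (max t 0) x ^ 2 := ⟨_, rfl⟩
  have cf : Cont₂ f := by
    have e : Continuous fun p : ℝ × ℝ => (max p.1 0, p.2) := by fun_prop
    have h0 := (hU.cont 0).comp e; have h1 := (hU.cont 1).comp e
    have h2 := (hU.cont 2).comp e; have h3 := (hU.cont 3).comp e
    simp only [Function.comp_def] at h0 h1 h2 h3
    rw [hf]
    exact (((h0.pow 2).add (h1.pow 2)).add (h2.pow 2)).add (h3.pow 2)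
  have intf : ∀ t, Integrable (f t) := fun t => by
    rw [hf]
    exact (((hU.l2 0 _).add (hU.l2 1 _)).add (hU.l2 2 _)).add (hU.l2 3 _)
  have fnn : ∀ t x, 0 ≤ f t x := fun t x => by rw [hf]; positivity
  have fval : ∀ t, ∫ x, f t x = (∫ x, U 0 (max t 0) x ^ 2) + (∫ x, U 1 (max t 0) x ^ 2)
      + (∫ x, U 2 (max t 0) x ^ 2) + ∫ x, U 3 (max t 0) x ^ 2 := by
    intro t
    have := integral_lin4 (hU.l2 0 (max t 0)) (hU.l2 1 (max t 0)) (hU.l2 2 (max t 0))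
      (hU.l2 3 (max t 0)) (a := 1) (b := 1) (c := 1) (d := 1)
    simp only [one_mul] at this
    rw [hf]; exact this
  have nn : ∀ k t, 0 ≤ ∫ x, U k t x ^ 2 := fun k t => integral_nonneg fun x => sq_nonneg _
  have single : ∀ k ≤ 3, ∀ t, ∫ x, U k (max t 0) x ^ 2 ≤ ∫ x, f t x := by
    intro k hk t
    rw [fval]
    have h0 := nn 0 (max t 0); have h1 := nn 1 (max t 0)
    have h2 := nn 2 (max t 0); have h3 := nn 3 (max t 0)
    interval_cases k <;> linarith
  have main := bounded_of_baire (n := fun t => ∫ x, f t x) ?_ ?_ 0 T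
  · obtain ⟨M, hM⟩ := main
    refine ⟨M, fun τ hτ k hk => ⟨hU.l2 k τ, ?_⟩⟩
    have := single k hk τ
    rw [max_eq_left hτ.1] at this
    exact this.trans (hM τ hτ)
  · intro N
    have : {t | ∫ x, f t x ≤ N} = ⋂ R : ℕ, {t | ∫ x in (-(R:ℝ))..R, f t x ≤ N} := by
      ext t
      simp only [Set.mem_ofPred_eq, Set.mem_iInter]
      constructor
      · intro h R
        refine le_trans ?_ h
        rw [integral_of_le (by linarith [(Nat.cast_nonneg R : (0:ℝ) ≤ R)])]
        exact setIntegral_le_integral (intf t) (.of_forall (fnn t))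
      · intro h
        refine le_of_tendsto (intervalIntegral_tendsto_integral (intf t)
          (tendsto_neg_atTop_atBot.comp tendsto_natCast_atTop_atTop)
          (tendsto_natCast_atTop_atTop)) (.of_forall h)
    rw [this]
    exact isClosed_iInter fun R => isClosed_le (cont_paramint cf _ _) continuous_const
  · intro N
    obtain ⟨Ψ, hΨ⟩ := h3_propagate hU (le_max_right N 0)
    refine ⟨4 * Ψ, fun t1 t2 h12 hM hN => ?_⟩
    obtain ⟨M, hM⟩ := hM
    have hab : |max t1 0 - max t2 0| ≤ 1 := (abs_max_sub_max_le_abs t1 t2 0).trans h12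
    have := hΨ (max t1 0) (max t2 0) (le_max_right _ _) (le_max_right _ _) hab ?_ ?_
    · simp only [fval]
      linarith [this 0 (by norm_num), this 1 (by norm_num), this 2 (by norm_num),
        this 3 (by norm_num)]
    · refine ⟨M, fun τ hτ k hk => ⟨hU.l2 k τ, ?_⟩⟩
      have hτ0 : 0 ≤ τ := le_trans (le_min (le_max_right _ _) (le_max_right _ _)) hτ.1
      have ms : ∃ s ∈ uIcc t1 t2, max s 0 = τ := by
        have hc : ContinuousOn (fun s : ℝ => max s 0) (uIcc t1 t2) := by fun_prop
        have := intermediate_value_uIcc hc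
        obtain ⟨s, hs, e⟩ := this (show τ ∈ uIcc (max t1 0) (max t2 0) from hτ)
        exact ⟨s, hs, e⟩
      obtain ⟨s, hs, rfl⟩ := ms
      exact (single k hk s).trans (hM s hs)
    · intro k hk
      exact ((single k hk t2).trans hN).trans (le_max_left _ _)

/-! ### The soliton angle and exponential kernels -/

/-- Hyperbolic secant. -/
def sech (x : ℝ) : ℝ := (cosh x)⁻¹

lemma sech_pos (x : ℝ) : 0 < sech x := inv_pos.2 (cosh_pos x)

lemma sech_le_one (x : ℝ) : sech x ≤ 1 := inv_le_one_of_one_le₀ (one_le_cosh x)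

lemma sech_mul_cosh (x : ℝ) : sech x * cosh x = 1 := inv_mul_cancel₀ (cosh_pos x).ne'

lemma cosh_le_exp_abs (x : ℝ) : cosh x ≤ exp |x| := by
  rw [← cosh_abs, cosh_eq]
  have := exp_le_exp.2 (by linarith [abs_nonneg x] : -|x| ≤ |x|)
  linarith

lemma sech_le (x : ℝ) : sech x ≤ 2 * exp (-|x|) := by
  rw [sech, ← cosh_abs, cosh_eq, exp_neg]
  rw [inv_le_comm₀ (by positivity) (by positivity), mul_inv, inv_inv]
  have : 0 < (exp |x|)⁻¹ := by positivity
  linarith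

lemma tanh_eq_sinh_mul_sech (x : ℝ) : tanh x = sinh x * sech x := by
  rw [Real.tanh_eq_sinh_div_cosh, sech, div_eq_mul_inv]

lemma sech_sq_add_tanh_sq (x : ℝ) : sech x ^ 2 + tanh x ^ 2 = 1 := by
  rw [tanh_eq_sinh_mul_sech, mul_pow, sinh_sq, ← one_add_mul, add_sub_cancel, ← mul_pow, mul_comm,
    sech_mul_cosh, one_pow]

lemma abs_tanh_le_one (x : ℝ) : |tanh x| ≤ 1 := by
  rw [abs_le]
  have := sech_sq_add_tanh_sq x
  constructor <;> nlinarith [sq_nonneg (sech x)]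

lemma hasDerivAt_sech (x : ℝ) : HasDerivAt sech (-(sech x * tanh x)) x := by
  have := (hasDerivAt_cosh x).inv (cosh_pos x).ne'
  refine this.congr_deriv ?_
  rw [tanh_eq_sinh_mul_sech, sech, neg_div, div_eq_mul_inv]; ring

lemma hasDerivAt_tanh (x : ℝ) : HasDerivAt tanh (sech x ^ 2) x := by
  have h : tanh = fun x => sinh x * sech x := funext tanh_eq_sinh_mul_sech
  rw [h]
  refine ((hasDerivAt_sinh x).fun_mul (hasDerivAt_sech x)).congr_deriv ?_
  have := sech_sq_add_tanh_sq x
  have h2 := sech_mul_cosh x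
  have h3 := tanh_eq_sinh_mul_sech x
  linear_combination h2 + tanh x * h3 - this

lemma continuous_sech : Continuous sech :=
  cont_of_deriv hasDerivAt_sech

lemma continuous_tanh' : Continuous tanh :=
  cont_of_deriv hasDerivAt_tanh

/-- The angle `Θ` of the soliton: `sin Θ = sech (a x)`, `cos Θ = tanh (a x)`. -/
def ang (a x : ℝ) : ℝ := 2 * arctan (exp (-(a * x)))

lemma sin_ang (a x : ℝ) : sin (ang a x) = sech (a * x) := by
  have h : 0 < 1 + exp (-(a * x)) ^ 2 := by positivity
  rw [ang, sin_two_mul, sin_arctan, cos_arctan]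
  have hs : √(1 + exp (-(a * x)) ^ 2) ^ 2 = 1 + exp (-(a * x)) ^ 2 := sq_sqrt h.le
  have e : 2 * (exp (-(a * x)) / √(1 + exp (-(a * x)) ^ 2)) * (1 / √(1 + exp (-(a * x)) ^ 2))
      = 2 * exp (-(a * x)) / √(1 + exp (-(a * x)) ^ 2) ^ 2 := by
    field_simp
  rw [e, hs, sech, cosh_eq, exp_neg]
  field_simp

lemma cos_ang (a x : ℝ) : cos (ang a x) = tanh (a * x) := by
  have h : 0 < 1 + exp (-(a * x)) ^ 2 := by positivity
  rw [ang, cos_two_mul, cos_sq_arctan, Real.tanh_eq_sinh_div_cosh, cosh_eq, sinh_eq, exp_neg]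
  field_simp
  ring

lemma hasDerivAt_ang (a x : ℝ) : HasDerivAt (ang a) (-(a * sech (a * x))) x := by
  have h1 : HasDerivAt (fun x : ℝ => -(a * x)) (-a) x := by
    exact (((hasDerivAt_id x).const_mul a).fun_neg).congr_deriv (by simp)
  have h2 := (h1.exp.arctan).const_mul 2
  refine h2.congr_deriv ?_
  rw [sech, cosh_eq, exp_neg]
  field_simp

lemma continuous_ang (a : ℝ) : Continuous (ang a) :=
  cont_of_deriv (hasDerivAt_ang a)

lemma ang_bounds (a x : ℝ) : 0 ≤ ang a x ∧ ang a x ≤ π := by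
  have h1 := arctan_pos.2 (exp_pos (-(a * x)))
  have h2 := arctan_lt_pi_div_two (exp (-(a * x)))
  unfold ang
  constructor <;> linarith

lemma integrable_exp_abs {b : ℝ} (hb : 0 < b) (x : ℝ) :
    Integrable (fun s : ℝ => exp (-(b * |x - s|))) := by
  have h0 : Integrable (fun s : ℝ => exp (-(b * |s|))) := by
    have h1 : IntegrableOn (fun s : ℝ => exp (-(b * |s|))) (Iic 0) :=
      (integrableOn_exp_mul_Iic hb 0).congr_fun
        (fun s hs => by simp only; rw [abs_of_nonpos hs]; ring_nf) measurableSet_Iic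
    have h2 : IntegrableOn (fun s : ℝ => exp (-(b * |s|))) (Ioi 0) :=
      (integrableOn_exp_mul_Ioi (neg_lt_zero.2 hb) 0).congr_fun
        (fun s hs => by simp only; rw [abs_of_pos hs]; ring_nf) measurableSet_Ioi
    have := h1.union h2
    rwa [Iic_union_Ioi, integrableOn_univ] at this
  exact h0.comp_sub_left x

lemma integral_exp_abs {b : ℝ} (hb : 0 < b) (x : ℝ) :
    ∫ s : ℝ, exp (-(b * |x - s|)) = 2 / b := by
  rw [integral_sub_left_eq_self (fun s => exp (-(b * |s|))) volume x,
    integral_comp_abs (f := fun s => exp (-(b * s)))]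
  have := integral_exp_mul_Ioi (neg_lt_zero.2 hb) 0
  simp only [neg_mul, mul_zero, exp_zero] at this
  rw [this]
  field_simp

/-- Exponentially weighted averages of bounded continuous functions converge. -/
lemma integrable_exp_mul {b : ℝ} (hb : 0 < b) (x : ℝ) {h : ℝ → ℝ} (ch : Continuous h) {S : ℝ}
    (hS : ∀ s, |h s| ≤ S) : Integrable fun s => exp (-(b * |x - s|)) * h s := by
  refine ((integrable_exp_abs hb x).mul_const S).mono' (by fun_prop) (.of_forall ?_)
  intro s
  rw [norm_mul, norm_of_nonneg (exp_pos _).le, norm_eq_abs]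
  exact mul_mono_l (hS s) (exp_pos _).le

lemma exp_abs_le {b : ℝ} (hb : 0 ≤ b) (x y z : ℝ) :
    exp (-(b * |x - y|)) * exp (-(b * |y - z|)) ≤ exp (-(b * |x - z|)) := by
  rw [← exp_add]
  apply exp_le_exp.2
  have := mul_mono_l (abs_sub_le x y z) hb
  linarith

/-- A bounded function controlled by an exponential average of a source plus a small multiple of
itself is controlled by an exponential average of the source alone. -/
theorem absorb {b C1 r B S H : ℝ} (hb : 0 < b) (hC : 0 ≤ C1) (hr : 0 ≤ r) (hB : 0 ≤ B)
    {η h : ℝ → ℝ} (cη : Continuous η) (ch : Continuous h) (hη : ∀ y, |η y| ≤ S)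
    (hh : ∀ y, |h y| ≤ H) (h0 : ∀ y, 0 ≤ h y)
    (hyp : ∀ y, |η y| ≤ B * exp (-(b * |y|))
      + C1 * ∫ s, exp (-(b * |y - s|)) * (h s + r * |η s|))
    (small : C1 * r * (4 / b) ≤ 1 / 2) (x : ℝ) :
    |η x| ≤ 2 * (B * exp (-(b / 2 * |x|)) + C1 * ∫ s, exp (-(b / 2 * |x - s|)) * h s) := by
  have hb2 : 0 < b / 2 := by positivity
  obtain ⟨A, hA⟩ : ∃ A, A = ⨆ y, exp (-(b / 2 * |x - y|)) * |η y| := ⟨_, rfl⟩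
  have bdd : BddAbove (Set.range fun y => exp (-(b / 2 * |x - y|)) * |η y|) := by
    refine ⟨S, ?_⟩
    rintro _ ⟨y, rfl⟩
    have h1 : exp (-(b / 2 * |x - y|)) ≤ 1 := exp_le_one_iff.2 (by
      have := mul_nonneg hb2.le (abs_nonneg (x - y)); linarith)
    calc _ ≤ 1 * |η y| := mul_mono_r h1 (abs_nonneg _)
      _ ≤ S := by rw [one_mul]; exact hη y
  have hle : ∀ y, exp (-(b / 2 * |x - y|)) * |η y| ≤ A := fun y => by
    rw [hA]; exact le_ciSup bdd y
  have hA0 : 0 ≤ A := le_trans (by positivity) (hle x)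
  obtain ⟨X, hX⟩ : ∃ X, X = B * exp (-(b / 2 * |x|)) + C1 * ∫ s, exp (-(b / 2 * |x - s|)) * h s :=
    ⟨_, rfl⟩
  have key : ∀ y, exp (-(b / 2 * |x - y|)) * |η y| ≤ X + A / 2 := by
    intro y
    have split : ∀ s, exp (-(b * |y - s|)) = exp (-(b / 2 * |y - s|)) * exp (-(b / 2 * |y - s|)) :=
      fun s => by rw [← exp_add]; ring_nf
    have i1 := integrable_exp_mul hb2 x ch hh
    have i2 := (integrable_exp_abs hb2 y).mul_const (r * A)
    have cη' : Continuous fun s => h s + r * |η s| := by fun_prop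
    have i3 : Integrable fun s => exp (-(b * |y - s|)) * (h s + r * |η s|) :=
      integrable_exp_mul hb y cη' (S := H + r * S) (fun s => by
        refine (abs_add_le _ _).trans (add_le_add (hh s) ?_)
        rw [abs_mul, abs_abs, abs_of_nonneg hr]
        exact mul_mono_l (hη s) hr)
    have e1 : exp (-(b / 2 * |x - y|)) * exp (-(b * |y|)) ≤ exp (-(b / 2 * |x|)) := by
      have h1 := exp_abs_le hb2.le x y 0
      simp only [sub_zero] at h1
      refine le_trans (mul_mono_l ?_ (exp_pos _).le) h1
      apply exp_le_exp.2
      have := mul_nonneg hb2.le (abs_nonneg y)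
      linarith
    have e2 : exp (-(b / 2 * |x - y|)) * ∫ s, exp (-(b * |y - s|)) * (h s + r * |η s|)
        ≤ (∫ s, exp (-(b / 2 * |x - s|)) * h s) + r * A * (4 / b) := by
      have e3 : r * A * (4 / b) = ∫ s, exp (-(b / 2 * |y - s|)) * (r * A) := by
        rw [integral_mul_const, integral_exp_abs hb2]; field_simp; norm_num
      rw [e3, ← integral_add i1 i2, ← integral_const_mul]
      refine integral_mono (i3.const_mul _) (i1.add i2) fun s => ?_
      simp only
      have t1 := exp_abs_le hb2.le x y s
      have t2 : exp (-(b / 2 * |y - s|)) ≤ 1 := exp_le_one_iff.2 (by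
        have := mul_nonneg hb2.le (abs_nonneg (y - s)); linarith)
      have p1 := exp_pos (-(b / 2 * |x - y|))
      have p2 := exp_pos (-(b / 2 * |y - s|))
      rw [split s]
      generalize exp (-(b / 2 * |x - y|)) = E1 at *
      generalize exp (-(b / 2 * |y - s|)) = E2 at *
      have t3 := hle s
      have p3 := exp_pos (-(b / 2 * |x - s|))
      generalize exp (-(b / 2 * |x - s|)) = E3 at *
      have q1 : E1 * E2 * (E2 * h s) ≤ E3 * h s := by
        have : E2 * h s ≤ h s := mul_le_of_le_one_left (h0 s) t2
        exact mul_le_mul t1 this (mul_nonneg p2.le (h0 s)) p3.le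
      have q2 : E2 * (r * (E1 * E2 * |η s|)) ≤ E2 * (r * A) := by
        refine mul_mono_l (mul_mono_l ?_ hr) p2.le
        exact (mul_mono_r t1 (abs_nonneg _)).trans t3
      nlinarith
    have := mul_mono_l (hyp y) (exp_pos (-(b / 2 * |x - y|))).le
    have f1 := mul_mono_l e1 hB
    have f2 := mul_mono_l e2 hC
    have f3 := mul_mono_r small hA0
    rw [hX]
    nlinarith
  have : A ≤ X + A / 2 := by
    rw [hA] at key ⊢; exact ciSup_le key
  have h2 := hle x
  simp only [sub_self, abs_zero, mul_zero, neg_zero, exp_zero, one_mul] at h2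
  rw [← hX]; linarith

/-- Cauchy–Schwarz for exponential averages. -/
lemma exp_avg_sq {b : ℝ} (hb : 0 < b) {h : ℝ → ℝ} (ch : Continuous h) {H : ℝ}
    (hH : ∀ y, |h y| ≤ H) (x : ℝ) :
    (∫ s, exp (-(b * |x - s|)) * h s) ^ 2 ≤ 2 / b * ∫ s, exp (-(b * |x - s|)) * h s ^ 2 := by
  obtain ⟨k, hk⟩ : ∃ k, k = ∫ s, exp (-(b * |x - s|)) * h s := ⟨_, rfl⟩
  have i1 := integrable_exp_mul hb x ch hH
  have i2 : Integrable fun s => exp (-(b * |x - s|)) * h s ^ 2 :=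
    integrable_exp_mul hb x (ch.pow 2) (S := H ^ 2) (fun s => by
      rw [abs_of_nonneg (sq_nonneg _), ← sq_abs]
      exact pow_le_pow_left₀ (abs_nonneg _) (hH s) 2)
  have i3 := integrable_exp_abs hb x
  -- the variance of `h` for the probability `(b/2) exp (-b|x-s|) ds` is nonnegative
  have h1 : 0 ≤ ∫ s, exp (-(b * |x - s|)) * (h s - k * b / 2) ^ 2 :=
    integral_nonneg fun s => by positivity
  have h2 : ∀ s, exp (-(b * |x - s|)) * (h s - k * b / 2) ^ 2
      = 1 * (exp (-(b * |x - s|)) * h s ^ 2) + (-(k * b)) * (exp (-(b * |x - s|)) * h s)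
        + (k * b / 2) ^ 2 * exp (-(b * |x - s|)) := fun s => by ring
  simp only [h2] at h1
  rw [integral_lin3 i2 i1 i3, integral_exp_abs hb, ← hk] at h1
  rw [← hk]
  have h3 : 1 * (∫ s, exp (-(b * |x - s|)) * h s ^ 2) + -(k * b) * k + (k * b / 2) ^ 2 * (2 / b)
      = (∫ s, exp (-(b * |x - s|)) * h s ^ 2) - b / 2 * k ^ 2 := by field_simp; ring
  rw [h3] at h1
  rw [div_mul_eq_mul_div, le_div_iff₀ hb]
  linarith

/-! ### The Bäcklund angle of the initial datum -/

lemma integrable_sech_mul {a : ℝ} (ha : 0 < a) {g : ℝ → ℝ} (cg : Continuous g) {S : ℝ}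
    (hS : ∀ x, |g x| ≤ S) : Integrable fun s => sech (a * s) * g s := by
  have h1 := (integrable_exp_mul ha 0 cg hS).norm.const_mul 2
  refine h1.mono' ((continuous_sech.comp (continuous_const.mul continuous_id)).mul
    cg).aestronglyMeasurable (.of_forall fun s => ?_)
  have h2 := sech_le (a * s)
  rw [abs_mul, abs_of_pos ha] at h2
  simp only [zero_sub, abs_neg, norm_mul, norm_eq_abs, abs_of_pos (sech_pos _), abs_exp]
  have := mul_mono_r h2 (abs_nonneg (g s))
  linarith

lemma integrable_sech {a : ℝ} (ha : 0 < a) : Integrable fun s => sech (a * s) := by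
  simpa using integrable_sech_mul ha (g := fun _ => 1) continuous_const (S := 1) (by simp)

lemma integrable_sech_sq {a : ℝ} (ha : 0 < a) : Integrable fun s => sech (a * s) ^ 2 := by
  have := integrable_sech_mul ha (g := fun s => sech (a * s))
    (continuous_sech.comp (continuous_const.mul continuous_id)) (S := 1)
    (fun x => by rw [abs_of_pos (sech_pos _)]; exact sech_le_one _)
  simpa [pow_two] using this

lemma integral_sech_sq_pos {a : ℝ} (ha : 0 < a) : 0 < ∫ s, sech (a * s) ^ 2 := by
  rw [integral_pos_iff_support_of_nonneg (fun s => sq_nonneg _) (integrable_sech_sq ha)]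
  have : Function.support (fun s => sech (a * s) ^ 2) = univ := by
    ext s; simp [(sech_pos (a * s)).ne']
  simp [this]

/-- Bounded right inverse of `d/dx - a tanh (a x)` on functions orthogonal to `sech (a x)`. -/
def green (a : ℝ) (g : ℝ → ℝ) (x : ℝ) : ℝ :=
  cosh (a * x) * ∫ s in Iic x, sech (a * s) * g s

lemma hasDerivAt_green {a : ℝ} (ha : 0 < a) {g : ℝ → ℝ} (cg : Continuous g) {S : ℝ}
    (hS : ∀ x, |g x| ≤ S) (x : ℝ) :
    HasDerivAt (green a g) (a * tanh (a * x) * green a g x + g x) x := by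
  have hi := integrable_sech_mul ha cg hS
  have cc : Continuous fun s => sech (a * s) * g s :=
    (continuous_sech.comp (continuous_const.mul continuous_id)).mul cg
  have h1 : ∀ y, ∫ s in Iic y, sech (a * s) * g s
      = (∫ s in Iic (0:ℝ), sech (a * s) * g s) + ∫ s in (0:ℝ)..y, sech (a * s) * g s := by
    intro y
    rw [← intervalIntegral.integral_Iic_sub_Iic hi.integrableOn hi.integrableOn]; ring
  have h2 : HasDerivAt (fun y => ∫ s in Iic y, sech (a * s) * g s) (sech (a * x) * g x) x := by
    have := (intervalIntegral.integral_hasDerivAt_right (cc.intervalIntegrable 0 x)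
      (cc.stronglyMeasurableAtFilter _ _) cc.continuousAt).const_add
        (∫ s in Iic (0:ℝ), sech (a * s) * g s)
    exact this.congr_of_eventuallyEq (.of_forall h1)
  have h3 : HasDerivAt (fun y => cosh (a * y)) (sinh (a * x) * (a * 1)) x :=
    (hasDerivAt_cosh _).comp x ((hasDerivAt_id x).const_mul a)
  refine (h3.fun_mul h2).congr_deriv ?_
  have h4 := sech_mul_cosh (a * x)
  simp only [green, tanh_eq_sinh_mul_sech]
  linear_combination (g x - a * sinh (a * x) * ∫ s in Iic x, sech (a * s) * g s) * h4

lemma cosh_mul_sech_le {a : ℝ} (ha : 0 < a) {x s : ℝ}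
    (h' : |x - s| = |s| - |x|) : cosh (a * x) * sech (a * s) ≤ 2 * exp (-(a * |x - s|)) := by
  have h1 := cosh_le_exp_abs (a * x)
  have h2 := sech_le (a * s)
  rw [abs_mul, abs_of_pos ha] at h1 h2
  calc cosh (a * x) * sech (a * s) ≤ exp (a * |x|) * (2 * exp (-(a * |s|))) :=
        mul_le_mul h1 h2 (sech_pos _).le (exp_pos _).le
    _ = 2 * exp (-(a * |x - s|)) := by
        rw [h', mul_left_comm, ← exp_add]; ring_nf

lemma abs_green_le {a : ℝ} (ha : 0 < a) {g : ℝ → ℝ} (cg : Continuous g) {S : ℝ}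
    (hS : ∀ x, |g x| ≤ S) (h0 : ∫ s, sech (a * s) * g s = 0) (x : ℝ) :
    |green a g x| ≤ 2 * ∫ s, exp (-(a * |x - s|)) * |g s| := by
  have hi := integrable_sech_mul ha cg hS
  have hE : Integrable fun s => exp (-(a * |x - s|)) * |g s| :=
    integrable_exp_mul ha x cg.abs (S := S) (fun y => by simpa using hS y)
  have main : ∀ A : Set ℝ, MeasurableSet A →
      (∀ s ∈ A, cosh (a * x) * sech (a * s) ≤ 2 * exp (-(a * |x - s|))) →
      |cosh (a * x) * ∫ s in A, sech (a * s) * g s| ≤ 2 * ∫ s, exp (-(a * |x - s|)) * |g s| := by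
    intro A mA hA
    calc |cosh (a * x) * ∫ s in A, sech (a * s) * g s|
        = |∫ s in A, cosh (a * x) * (sech (a * s) * g s)| := by rw [integral_const_mul]
      _ ≤ ∫ s in A, |cosh (a * x) * (sech (a * s) * g s)| := abs_integral_le_integral_abs
      _ ≤ ∫ s in A, 2 * (exp (-(a * |x - s|)) * |g s|) := by
          refine setIntegral_mono_on (hi.const_mul _).abs.integrableOn
            (hE.const_mul 2).integrableOn mA fun s hs => ?_
          rw [← mul_assoc, abs_mul, abs_of_pos (mul_pos (cosh_pos _) (sech_pos _)), ← mul_assoc]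
          exact mul_mono_r (hA s hs) (abs_nonneg _)
      _ ≤ ∫ s, 2 * (exp (-(a * |x - s|)) * |g s|) :=
          setIntegral_le_integral (hE.const_mul 2) (.of_forall fun s => by positivity)
      _ = _ := integral_const_mul _ _
  rcases le_total x 0 with hx | hx
  · refine main _ measurableSet_Iic fun s hs => ?_
    have hs : s ≤ x := hs
    refine cosh_mul_sech_le ha ?_
    rw [abs_of_nonpos hx, abs_of_nonpos (hs.trans hx), abs_of_nonneg (by linarith)]; ring
  · have h1 : ∫ s in Iic x, sech (a * s) * g s = -∫ s in Ioi x, sech (a * s) * g s := by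
      have := integral_add_compl (measurableSet_Iic (a := x)) hi
      rw [h0, Set.compl_Iic] at this; linarith
    rw [green, h1, mul_neg, abs_neg]
    refine main _ measurableSet_Ioi fun s hs => ?_
    have hs : x < s := hs
    refine cosh_mul_sech_le ha ?_
    rw [abs_of_nonneg hx, abs_of_nonneg (by linarith : 0 ≤ s), abs_of_nonpos (by linarith)]; ring

lemma abs_sin_add_sub (T x y : ℝ) : |sin (T + x) - sin (T + y)| ≤ |x - y| := by
  have := abs_sin_sub_sin_le (T + x) (T + y)
  simpa using this

/-- The sine has small quadratic remainder near any base point. -/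
lemma abs_sin_remainder {T x y r : ℝ} (hx : |x| ≤ r) (hy : |y| ≤ r) :
    |sin (T + x) - sin (T + y) - cos T * (x - y)| ≤ r * |x - y| := by
  have h := Convex.norm_image_sub_le_of_norm_hasDerivWithin_le (f := fun z => sin (T + z) - cos T * z)
    (f' := fun z => cos (T + z) - cos T) (s := Icc (-r) r) (C := r) (x := y) (y := x)
    (fun z _ => ?_) (fun z hz => ?_) (convex_Icc _ _) (abs_le.1 hy) (abs_le.1 hx)
  · simp only [norm_eq_abs] at h
    convert h using 2; ring
  · have h1 : HasDerivAt (fun z => sin (T + z)) (cos (T + z) * 1) z :=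
      (hasDerivAt_sin _).comp z ((hasDerivAt_id z).const_add T)
    have := h1.fun_sub ((hasDerivAt_id z).const_mul (cos T))
    exact (this.congr_deriv (by ring)).hasDerivWithinAt
  · have := abs_cos_sub_cos_le (T + z) T
    simp only [norm_eq_abs]
    refine this.trans ?_
    simpa using abs_le.2 hz

/-- The multiplier that makes `f + 2 ν sech` orthogonal to `sech`. -/
def nuOf (a : ℝ) (f : ℝ → ℝ) : ℝ := -(∫ s, sech (a * s) * f s) / (2 * ∫ s, sech (a * s) ^ 2)

/-- The source `f` corrected to be orthogonal to `sech`. -/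
def srcOf (a : ℝ) (f : ℝ → ℝ) (s : ℝ) : ℝ := f s + 2 * nuOf a f * sech (a * s)

lemma continuous_srcOf (a : ℝ) {f : ℝ → ℝ} (cf : Continuous f) : Continuous (srcOf a f) :=
  cf.add (continuous_const.mul (continuous_sech.comp (continuous_const.mul continuous_id)))

lemma srcOf_orth {a : ℝ} (ha : 0 < a) {f : ℝ → ℝ} (cf : Continuous f) {S : ℝ}
    (hS : ∀ x, |f x| ≤ S) : ∫ s, sech (a * s) * srcOf a f s = 0 := by
  have h1 : ∀ s, sech (a * s) * srcOf a f s
      = sech (a * s) * f s + 2 * nuOf a f * sech (a * s) ^ 2 := fun s => by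
    simp only [srcOf]; ring
  simp_rw [h1]
  rw [integral_add (integrable_sech_mul ha cf hS) ((integrable_sech_sq ha).const_mul _),
    integral_const_mul, nuOf]
  have := integral_sech_sq_pos ha
  field_simp
  ring

lemma abs_srcOf_le {a : ℝ} {f : ℝ → ℝ} {S : ℝ} (hS : ∀ x, |f x| ≤ S) (s : ℝ) :
    |srcOf a f s| ≤ S + 2 * |nuOf a f| := by
  refine (abs_add_le _ _).trans (add_le_add (hS s) ?_)
  rw [abs_mul, abs_mul, abs_two, abs_of_pos (sech_pos _)]
  exact mul_le_of_le_one_right (by positivity) (sech_le_one _)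

lemma lin_bound {a : ℝ} (ha : 0 < a) : ∃ K : ℝ, 1 ≤ K ∧ ∀ (f : ℝ → ℝ) (S : ℝ), Continuous f →
    (∀ x, |f x| ≤ S) → |nuOf a f| ≤ K * S ∧ ∀ x, |green a (srcOf a f) x| ≤ K * S := by
  have hn := integral_sech_sq_pos ha
  obtain ⟨n, hn'⟩ : ∃ n, n = ∫ s, sech (a * s) ^ 2 := ⟨_, rfl⟩
  obtain ⟨I, hI⟩ : ∃ I, I = ∫ s, sech (a * s) := ⟨_, rfl⟩
  have I0 : 0 ≤ I := hI ▸ integral_nonneg fun s => (sech_pos _).le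
  rw [← hn'] at hn
  have q0 : 0 ≤ I / (2 * n) := by positivity
  refine ⟨1 + I / (2 * n) + 2 * ((1 + 2 * (I / (2 * n))) * (2 / a)), ?_, fun f S cf hS => ?_⟩
  · have : 0 ≤ 2 * ((1 + 2 * (I / (2 * n))) * (2 / a)) := by positivity
    linarith
  have S0 : 0 ≤ S := (abs_nonneg _).trans (hS 0)
  have h1 : |nuOf a f| ≤ I / (2 * n) * S := by
    rw [nuOf, ← hn', abs_div, abs_neg, abs_of_pos (by positivity : 0 < 2 * n), div_mul_eq_mul_div]
    refine div_le_div_of_nonneg_right ?_ (by positivity)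
    refine abs_integral_le_integral_abs.trans ?_
    rw [hI, ← integral_mul_const]
    refine integral_mono (integrable_sech_mul ha cf hS).abs ((integrable_sech ha).mul_const S)
      fun s => ?_
    simp only [abs_mul, abs_of_pos (sech_pos _)]
    exact mul_mono_l (hS s) (sech_pos _).le
  have h2 : ∀ s, |srcOf a f s| ≤ (1 + 2 * (I / (2 * n))) * S := fun s =>
    (abs_srcOf_le hS s).trans (by linarith)
  have p1 : 0 ≤ 2 * ((1 + 2 * (I / (2 * n))) * (2 / a)) := by positivity
  constructor
  · nlinarith
  · intro x
    have h3 := abs_green_le ha (continuous_srcOf a cf) h2 (srcOf_orth ha cf hS) x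
    have h4 : ∫ s, exp (-(a * |x - s|)) * |srcOf a f s|
        ≤ ∫ s, exp (-(a * |x - s|)) * ((1 + 2 * (I / (2 * n))) * S) :=
      integral_mono (integrable_exp_mul ha x (continuous_srcOf a cf).abs
        (fun y => by simpa using h2 y)) ((integrable_exp_abs ha x).mul_const _)
        fun s => mul_mono_l (h2 s) (exp_pos _).le
    rw [integral_mul_const, integral_exp_abs ha] at h4
    have : 0 ≤ (1 + I / (2 * n)) * S := by positivity
    linarith

lemma nuOf_sub {a : ℝ} (ha : 0 < a) {f g : ℝ → ℝ} (cf : Continuous f) (cg : Continuous g)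
    {S S' : ℝ} (hS : ∀ x, |f x| ≤ S) (hS' : ∀ x, |g x| ≤ S') :
    nuOf a (fun x => f x - g x) = nuOf a f - nuOf a g := by
  simp only [nuOf, mul_sub]
  rw [integral_sub (integrable_sech_mul ha cf hS) (integrable_sech_mul ha cg hS')]
  ring

lemma green_srcOf_sub {a : ℝ} (ha : 0 < a) {f g : ℝ → ℝ} (cf : Continuous f) (cg : Continuous g)
    {S S' : ℝ} (hS : ∀ x, |f x| ≤ S) (hS' : ∀ x, |g x| ≤ S') (x : ℝ) :
    green a (srcOf a fun x => f x - g x) x = green a (srcOf a f) x - green a (srcOf a g) x := by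
  have h1 : ∀ s, sech (a * s) * srcOf a (fun x => f x - g x) s
      = sech (a * s) * srcOf a f s - sech (a * s) * srcOf a g s := fun s => by
    simp only [srcOf, nuOf_sub ha cf cg hS hS']; ring
  simp only [green, h1]
  rw [integral_sub (integrable_sech_mul ha (continuous_srcOf a cf) (abs_srcOf_le hS)).integrableOn
    (integrable_sech_mul ha (continuous_srcOf a cg) (abs_srcOf_le hS')).integrableOn]
  ring

/-! ### Fixed point construction of the initial angle -/

/-- Nonlinear part of the equation for the correction `η` of the angle and the shift `μ` of the
spectral parameter. -/
def nonlin (a : ℝ) (v η : ℝ → ℝ) (μ x : ℝ) : ℝ :=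
  -2 * v x + 2 * μ * (sin (ang a x + η x) - sin (ang a x))
    + a * (sin (ang a x + η x) - sin (ang a x) - cos (ang a x) * η x)

lemma continuous_nonlin (a : ℝ) {v η : ℝ → ℝ} (cv : Continuous v) (cη : Continuous η) (μ : ℝ) :
    Continuous (nonlin a v η μ) := by
  have := continuous_ang a
  unfold nonlin
  fun_prop

lemma abs_nonlin_sub_le {a r : ℝ} (ha : 0 < a) {v η ξ : ℝ → ℝ} {μ ν : ℝ} {x : ℝ} {d : ℝ}
    (hη : |η x| ≤ r) (hξ : |ξ x| ≤ r) (hμ : |μ| ≤ r) (hd : |η x - ξ x| ≤ d)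
    (hd' : |μ - ν| ≤ d) :
    |nonlin a v η μ x - nonlin a v ξ ν x| ≤ (4 + a) * r * d := by
  have r0 : 0 ≤ r := (abs_nonneg _).trans hη
  have d0 : 0 ≤ d := (abs_nonneg _).trans hd
  have h1 := (abs_sin_add_sub (ang a x) (η x) (ξ x)).trans hd
  have h2 := (abs_sin_add_sub (ang a x) (ξ x) 0)
  have h3 := (abs_sin_remainder (T := ang a x) hη hξ).trans (mul_mono_l hd r0)
  simp only [add_zero, sub_zero] at h2
  have e : nonlin a v η μ x - nonlin a v ξ ν x
      = 2 * (μ * (sin (ang a x + η x) - sin (ang a x + ξ x)))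
        + 2 * ((μ - ν) * (sin (ang a x + ξ x) - sin (ang a x)))
        + a * (sin (ang a x + η x) - sin (ang a x + ξ x) - cos (ang a x) * (η x - ξ x)) := by
    simp only [nonlin]; ring
  rw [e]
  have e1 : |μ * (sin (ang a x + η x) - sin (ang a x + ξ x))| ≤ r * d := by
    rw [abs_mul]; exact mul_le_mul hμ h1 (abs_nonneg _) r0
  have e2 : |(μ - ν) * (sin (ang a x + ξ x) - sin (ang a x))| ≤ d * r := by
    rw [abs_mul]; exact mul_le_mul hd' (h2.trans hξ) (abs_nonneg _) d0
  have t1 := abs_add_three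
    (2 * (μ * (sin (ang a x + η x) - sin (ang a x + ξ x))))
    (2 * ((μ - ν) * (sin (ang a x + ξ x) - sin (ang a x))))
    (a * (sin (ang a x + η x) - sin (ang a x + ξ x) - cos (ang a x) * (η x - ξ x)))
  rw [abs_mul 2, abs_mul 2, abs_mul a, abs_two, abs_of_pos ha] at t1
  have := mul_mono_l h3 ha.le
  linarith

open BoundedContinuousFunction in
/-- Fixed point argument in `C_b × ℝ`. -/
theorem backlund_fixed {a K0 ε : ℝ} (ha : 0 < a) (hK : 1 ≤ K0)
    (hP : ∀ (f : ℝ → ℝ) (S : ℝ), Continuous f →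
      (∀ x, |f x| ≤ S) → |nuOf a f| ≤ K0 * S ∧ ∀ x, |green a (srcOf a f) x| ≤ K0 * S)
    {v : ℝ → ℝ} (cv : Continuous v) (hv : ∀ x, |v x| ≤ ε)
    (small : K0 * ((4 + a) * (4 * K0 * ε)) ≤ 1 / 2) :
    ∃ (η : ℝ → ℝ) (μ : ℝ), Continuous η ∧ |μ| ≤ 4 * K0 * ε ∧ (∀ x, |η x| ≤ 4 * K0 * ε) ∧
      η = green a (srcOf a (nonlin a v η μ)) ∧ μ = nuOf a (nonlin a v η μ) := by
  have ε0 : 0 ≤ ε := (abs_nonneg _).trans (hv 0)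
  obtain ⟨r, hr⟩ : ∃ r, r = 4 * K0 * ε := ⟨_, rfl⟩
  have r0 : 0 ≤ r := by rw [hr]; positivity
  rw [← hr] at small ⊢
  -- a crude bound on the nonlinearity, valid for every bounded `η`
  have hb : ∀ (η : ℝ →ᵇ ℝ) (μ x : ℝ),
      |nonlin a v η μ x| ≤ 2 * ε + (4 + a) * (max ‖η‖ |μ|) * max ‖η‖ |μ| := by
    intro η μ x
    have h1 := abs_nonlin_sub_le (a := a) (r := max ‖η‖ |μ|) ha (v := v) (η := η)
      (ξ := fun _ => 0) (μ := μ) (ν := 0) (x := x) (d := max ‖η‖ |μ|)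
      ((η.norm_coe_le_norm x).trans (le_max_left _ _)) (by simp)
      (le_max_right _ _)
      (by simpa using Or.inl (η.norm_coe_le_norm x)) (by simp)
    have h2 : nonlin a v (fun _ => 0) 0 x = -2 * v x := by simp [nonlin]
    rw [h2] at h1
    have h3 := abs_add_le (nonlin a v η μ x - -2 * v x) (-2 * v x)
    rw [sub_add_cancel, abs_mul] at h3
    norm_num at h3 h1
    have := hv x
    linarith
  have cN : ∀ (η : ℝ →ᵇ ℝ) (μ : ℝ), Continuous (nonlin a v η μ) := fun η μ =>
    continuous_nonlin a cv η.continuous μ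
  have cG : ∀ (η : ℝ →ᵇ ℝ) (μ : ℝ), Continuous (green a (srcOf a (nonlin a v η μ))) := by
    intro η μ
    refine continuous_iff_continuousAt.2 fun x => ?_
    exact (hasDerivAt_green ha (continuous_srcOf a (cN η μ)) (abs_srcOf_le (hb η μ)) x).continuousAt
  obtain ⟨T, hT1, hT2⟩ : ∃ T : ((ℝ →ᵇ ℝ) × ℝ) → (ℝ →ᵇ ℝ) × ℝ,
      (∀ z x, (T z).1 x = green a (srcOf a (nonlin a v z.1 z.2)) x) ∧
      ∀ z, (T z).2 = nuOf a (nonlin a v z.1 z.2) :=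
    ⟨fun z => (BoundedContinuousFunction.ofNormedAddCommGroup _ (cG z.1 z.2) _
      (fun x => (hP _ _ (cN z.1 z.2) (hb z.1 z.2)).2 x), nuOf a (nonlin a v z.1 z.2)),
      fun z x => rfl, fun z => rfl⟩
  have hL : ∀ z ∈ Metric.closedBall (0 : (ℝ →ᵇ ℝ) × ℝ) r,
      ∀ z' ∈ Metric.closedBall (0 : (ℝ →ᵇ ℝ) × ℝ) r, ‖T z - T z'‖ ≤ 1 / 2 * ‖z - z'‖ := by
    intro z hz z' hz'
    rw [mem_closedBall_zero_iff] at hz hz'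
    have h1 : ∀ x, |nonlin a v z.1 z.2 x - nonlin a v z'.1 z'.2 x| ≤ (4 + a) * r * ‖z - z'‖ :=
      fun x => abs_nonlin_sub_le ha
        ((z.1.norm_coe_le_norm x).trans ((norm_fst_le z).trans hz))
        ((z'.1.norm_coe_le_norm x).trans ((norm_fst_le z').trans hz'))
        ((norm_snd_le z).trans hz)
        (((z.1 - z'.1).norm_coe_le_norm x).trans (norm_fst_le (z - z')))
        (norm_snd_le (z - z'))
    obtain ⟨h2, h3⟩ := hP (fun x => nonlin a v z.1 z.2 x - nonlin a v z'.1 z'.2 x) _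
      ((cN z.1 z.2).sub (cN z'.1 z'.2)) h1
    have h4 : K0 * ((4 + a) * r * ‖z - z'‖) ≤ 1 / 2 * ‖z - z'‖ := by
      have := mul_mono_r small (norm_nonneg (z - z'))
      linarith
    refine norm_prod_le_iff.2 ⟨?_, ?_⟩
    · refine (BoundedContinuousFunction.norm_le (by positivity)).2 fun x => ?_
      have := (h3 x).trans h4
      rw [green_srcOf_sub ha (cN z.1 z.2) (cN z'.1 z'.2) (hb _ _) (hb _ _), ← hT1, ← hT1] at this
      exact this
    · have := h2.trans h4
      rw [nuOf_sub ha (cN z.1 z.2) (cN z'.1 z'.2) (hb _ _) (hb _ _), ← hT2, ← hT2] at this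
      exact this
  have h0 : ‖T 0‖ ≤ r / 2 := by
    have e0 : nonlin a v ((0 : (ℝ →ᵇ ℝ) × ℝ).1) ((0 : (ℝ →ᵇ ℝ) × ℝ).2) = fun x => -2 * v x := by
      funext x; simp [nonlin]
    obtain ⟨h2, h3⟩ := hP (nonlin a v ((0 : (ℝ →ᵇ ℝ) × ℝ).1) ((0 : (ℝ →ᵇ ℝ) × ℝ).2)) (2 * ε)
      (cN _ _) (fun x => by rw [e0]; simp only [abs_mul]; norm_num; exact hv x)
    have h4 : K0 * (2 * ε) ≤ r / 2 := by rw [hr]; linarith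
    refine norm_prod_le_iff.2 ⟨?_, ?_⟩
    · refine (BoundedContinuousFunction.norm_le (by positivity)).2 fun x => ?_
      rw [hT1]; exact (h3 x).trans h4
    · rw [hT2]; exact h2.trans h4
  have hmap : MapsTo T (Metric.closedBall 0 r) (Metric.closedBall 0 r) := by
    intro z hz
    have h1 := hL z hz 0 (by simpa using r0)
    rw [mem_closedBall_zero_iff] at hz ⊢
    have h2 := norm_add_le (T z - T 0) (T 0)
    rw [sub_add_cancel] at h2
    rw [sub_zero] at h1
    linarith
  have hc : ContractingWith (1 / 2) (hmap.restrict T _ _) := by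
    refine ⟨by rw [← NNReal.coe_lt_coe]; norm_num, LipschitzWith.of_dist_le_mul fun z z' => ?_⟩
    have := hL z z.2 z' z'.2
    rw [Subtype.dist_eq, Subtype.dist_eq, dist_eq_norm, dist_eq_norm]
    simpa using this
  obtain ⟨z, hz, hfix, -⟩ := hc.exists_fixedPoint' (s := Metric.closedBall 0 r)
    (Metric.isClosed_closedBall.isComplete) hmap (x := 0) (by simpa using r0) (edist_ne_top _ _)
  rw [mem_closedBall_zero_iff] at hz
  refine ⟨z.1, z.2, z.1.continuous, (norm_snd_le z).trans hz,
    fun x => (z.1.norm_coe_le_norm x).trans ((norm_fst_le z).trans hz), ?_, ?_⟩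
  · funext x; rw [← hT1, hfix]
  · rw [← hT2, hfix]

/-- Existence of the angle and of the spectral parameter for a perturbation of the soliton. -/
theorem backlund_initial {a : ℝ} (ha : 0 < a) : ∃ K : ℝ, 0 < K ∧ ∀ (v : ℝ → ℝ) (ε : ℝ),
    Continuous v → (∀ x, |v x| ≤ ε) → K * ε ≤ 1 → ∃ (η : ℝ → ℝ) (μ : ℝ), Continuous η ∧
      |μ| ≤ K * ε ∧ (∀ x, |η x| ≤ K * ε) ∧
      (∀ x, HasDerivAt η (a * (sin (ang a x + η x) - sin (ang a x)) - 2 * v x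
        + 2 * μ * sin (ang a x + η x)) x) ∧
      ∀ x, |η x| ≤ 8 * ∫ s, exp (-(a / 2 * |x - s|)) * (|v s| + |μ| * sech (a * s)) := by
  obtain ⟨K0, hK, hP⟩ := lin_bound ha
  have K0p : 0 < K0 := by linarith
  obtain ⟨K, hKd⟩ : ∃ K, K = 4 * K0 + 8 * K0 ^ 2 * (4 + a) + 64 * K0 * ((2 + a) / a) := ⟨_, rfl⟩
  have k1 : 0 < 8 * K0 ^ 2 * (4 + a) := by positivity
  have k2 : 0 < 64 * K0 * ((2 + a) / a) := by positivity
  refine ⟨K, by rw [hKd]; positivity, fun v ε cv hv hs => ?_⟩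
  have ε0 : 0 ≤ ε := (abs_nonneg _).trans (hv 0)
  have s1 : 8 * K0 ^ 2 * (4 + a) * ε ≤ 1 := by
    refine le_trans (mul_mono_r ?_ ε0) hs
    linarith
  have s2 : 64 * K0 * ((2 + a) / a) * ε ≤ 1 := by
    refine le_trans (mul_mono_r ?_ ε0) hs
    linarith
  have s3 : 4 * K0 * ε ≤ K * ε := mul_mono_r (by linarith) ε0
  have small : K0 * ((4 + a) * (4 * K0 * ε)) ≤ 1 / 2 := by nlinarith
  obtain ⟨η, μ, cη, hμ, hη, e1, e2⟩ := backlund_fixed ha hK hP cv hv small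
  obtain ⟨r, hr⟩ : ∃ r, r = 4 * K0 * ε := ⟨_, rfl⟩
  have r0 : 0 ≤ r := by rw [hr]; positivity
  rw [← hr] at hμ hη s3
  have cN := continuous_nonlin a cv cη μ
  have bN' : ∀ x, |nonlin a v η μ x| ≤ 2 * |v x| + (2 + a) * r * |η x| := by
    intro x
    have h1 := abs_sin_add_sub (ang a x) (η x) 0
    have h2 := abs_sin_remainder (T := ang a x) (hη x) (y := 0) (by simpa using r0)
    simp only [add_zero, sub_zero] at h1 h2
    have t := abs_add_three (-2 * v x) (2 * μ * (sin (ang a x + η x) - sin (ang a x)))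
      (a * (sin (ang a x + η x) - sin (ang a x) - cos (ang a x) * η x))
    rw [abs_mul, abs_mul, abs_mul, abs_mul a, abs_of_pos ha] at t
    have h3 := mul_le_mul hμ h1 (abs_nonneg _) r0
    have h4 := mul_mono_l h2 ha.le
    norm_num at t
    simp only [nonlin]
    norm_num
    nlinarith
  have bN : ∀ x, |nonlin a v η μ x| ≤ 2 * ε + (2 + a) * r * r := fun x =>
    (bN' x).trans (by
      have := mul_mono_l (hη x) (by positivity : 0 ≤ (2 + a) * r)
      linarith [hv x])
  have src : ∀ s, |srcOf a (nonlin a v η μ) s|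
      ≤ 2 * (|v s| + |μ| * sech (a * s)) + (2 + a) * r * |η s| := by
    intro s
    refine (abs_add_le _ _).trans ?_
    rw [← e2, abs_mul, abs_mul, abs_two, abs_of_pos (sech_pos _)]
    linarith [bN' s]
  have ch : Continuous fun s => 2 * (|v s| + |μ| * sech (a * s)) :=
    continuous_const.mul (cv.abs.add (continuous_const.mul
      (continuous_sech.comp (continuous_const.mul continuous_id))))
  have h0 : ∀ s, 0 ≤ 2 * (|v s| + |μ| * sech (a * s)) := fun s => by
    have := (sech_pos (a * s)).le
    positivity
  have hH : ∀ s, |2 * (|v s| + |μ| * sech (a * s))| ≤ 2 * (ε + r) := fun s => by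
    rw [abs_of_nonneg (h0 s)]
    have := mul_le_mul hμ (sech_le_one (a * s)) (sech_pos _).le r0
    linarith [hv s]
  refine ⟨η, μ, cη, hμ.trans s3, fun x => (hη x).trans s3, fun x => ?_, fun x => ?_⟩
  · have h := hasDerivAt_green ha (continuous_srcOf a cN) (abs_srcOf_le bN) x
    rw [← e1] at h
    refine h.congr_deriv ?_
    simp only [srcOf, ← e2, nonlin, ← cos_ang, ← sin_ang]
    ring
  · have := absorb (b := a) (C1 := 2) (r := (2 + a) * r) (B := 0) ha (by norm_num) (by positivity)
      le_rfl cη ch hη hH h0 (fun y => ?_) ?_ x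
    · simp only [zero_mul, zero_add] at this
      have e : ∀ s, exp (-(a / 2 * |x - s|)) * (2 * (|v s| + |μ| * sech (a * s)))
        = 2 * (exp (-(a / 2 * |x - s|)) * (|v s| + |μ| * sech (a * s))) := fun s => by ring
      simp only [e] at this
      rw [integral_const_mul] at this
      linarith
    · have h := abs_green_le ha (continuous_srcOf a cN) (abs_srcOf_le bN) (srcOf_orth ha cN bN) y
      rw [← e1] at h
      refine h.trans ?_
      rw [zero_mul, zero_add]
      refine mul_mono_l ?_ (by norm_num)
      refine integral_mono (integrable_exp_mul ha y (continuous_srcOf a cN).abs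
        (fun z => by simpa using abs_srcOf_le bN z)) (integrable_exp_mul ha y (ch.add
          (continuous_const.mul cη.abs)) (S := 2 * (ε + r) + (2 + a) * r * r) (fun z => ?_))
        fun s => mul_mono_l (src s) (exp_pos _).le
      refine (abs_add_le _ _).trans (add_le_add (hH z) ?_)
      rw [abs_of_nonneg (by positivity)]
      exact mul_mono_l (hη z) (by positivity)
    · have : 2 * ((2 + a) * r) * (4 / a) = 1 / 2 * (64 * K0 * ((2 + a) / a) * ε) := by
        rw [hr]; field_simp; ring
      rw [this]; linarith

/-! ### Weights -/

/-- The square of the weight `japPlus m`. -/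
def jw (m x : ℝ) : ℝ := (1 + (max x 0) ^ 2) ^ m

/-- The square of the weight `wgt δ`. -/
def rho (δ x : ℝ) : ℝ := 1 + tanh (δ * x)

lemma japPlus_sq (m x : ℝ) : japPlus m x ^ 2 = jw m x := by
  rw [japPlus, jw, ← rpow_natCast, ← rpow_mul (by positivity)]
  congr 1; push_cast; ring

lemma jw_pos (m x : ℝ) : 0 < jw m x := rpow_pos_of_pos (by positivity) _

lemma one_le_jw {m : ℝ} (hm : 0 ≤ m) (x : ℝ) : 1 ≤ jw m x :=
  one_le_rpow (by nlinarith [sq_nonneg (max x 0)]) hm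

lemma continuous_jw (m : ℝ) : Continuous (jw m) :=
  Continuous.rpow_const (by fun_prop) fun x => Or.inl (by positivity)

lemma jw_mono {m : ℝ} (hm : 0 ≤ m) : Monotone (jw m) := fun x y h => by
  refine rpow_le_rpow (by positivity) ?_ hm
  have := max_le_max_right 0 h
  have h0 : 0 ≤ max x 0 := le_max_right _ _
  nlinarith

lemma one_add_sq_le {γ : ℝ} (hγ : 0 < γ) {s : ℝ} (hs : 0 ≤ s) :
    1 + s ^ 2 ≤ (1 + 2 / γ ^ 2) * exp (γ * s) := by
  have h := quadratic_le_exp_of_nonneg (mul_nonneg hγ.le hs)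
  have h1 : 0 < 2 / γ ^ 2 := by positivity
  have h2 : 2 / γ ^ 2 * ((γ * s) ^ 2 / 2) = s ^ 2 := by field_simp
  have h3 : 0 ≤ γ * s := by positivity
  have h4 : (1 + 2 / γ ^ 2) * (1 + γ * s + (γ * s) ^ 2 / 2) ≤ (1 + 2 / γ ^ 2) * exp (γ * s) :=
    mul_mono_l h (by positivity)
  nlinarith [sq_nonneg (γ * s), mul_nonneg h1.le h3]

lemma rpow_one_add_sq_le {m β : ℝ} (hm : 0 < m) (hβ : 0 < β) : ∃ C : ℝ, 0 < C ∧
    ∀ s : ℝ, 0 ≤ s → (1 + s ^ 2) ^ m ≤ C * exp (β * s) := by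
  refine ⟨(1 + 2 / (β / m) ^ 2) ^ m, by positivity, fun s hs => ?_⟩
  have := rpow_le_rpow (by positivity) (one_add_sq_le (div_pos hβ hm) hs) hm.le
  refine this.trans (le_of_eq ?_)
  rw [mul_rpow (by positivity) (exp_pos _).le, ← exp_mul]
  congr 2
  field_simp

/-- Peetre's inequality with an exponential loss. -/
lemma peetre {m β : ℝ} (hm : 0 < m) (hβ : 0 < β) : ∃ C : ℝ, 0 < C ∧
    ∀ x y : ℝ, (1 + x ^ 2) ^ m ≤ C * exp (β * |x - y|) * (1 + y ^ 2) ^ m := by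
  obtain ⟨C, hC, h⟩ := rpow_one_add_sq_le hm hβ
  refine ⟨2 ^ m * C, by positivity, fun x y => ?_⟩
  have h1 : 1 + x ^ 2 ≤ 2 * (1 + |x - y| ^ 2) * (1 + y ^ 2) := by
    rw [sq_abs]
    nlinarith [sq_nonneg (x - 2 * y), sq_nonneg ((x - y) * y)]
  have h2 := rpow_le_rpow (by positivity) h1 hm.le
  rw [mul_rpow (by positivity) (by positivity), mul_rpow (by positivity) (by positivity)] at h2
  refine h2.trans (mul_mono_r ?_ (by positivity))
  rw [mul_assoc]
  exact mul_mono_l (h _ (abs_nonneg _)) (by positivity)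

lemma jw_moderate {m β : ℝ} (hm : 0 < m) (hβ : 0 < β) : ∃ C : ℝ, 0 < C ∧
    ∀ x y : ℝ, jw m x ≤ C * exp (β * |x - y|) * jw m y := by
  obtain ⟨C, hC, h⟩ := peetre hm hβ
  refine ⟨C, hC, fun x y => (h _ _).trans (mul_mono_r ?_ (jw_pos m y).le)⟩
  refine mul_mono_l (exp_le_exp.2 (mul_mono_l ?_ hβ.le)) hC.le
  exact abs_max_sub_max_le_abs x y 0

lemma tanh_eq_exp (z : ℝ) : 1 + tanh z = 2 * exp (2 * z) / (1 + exp (2 * z)) := by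
  rw [Real.tanh_eq_sinh_div_cosh, sinh_eq, cosh_eq]
  have h1 : exp (2 * z) = exp z * exp z := by rw [← exp_add]; ring_nf
  have h2 : exp (-z) * exp z = 1 := by rw [← exp_add]; simp
  have h3 := exp_pos z
  have h4 := exp_pos (-z)
  rw [h1]
  field_simp
  linear_combination -2 * exp z * h2

lemma rho_pos (δ x : ℝ) : 0 < rho δ x := by
  rw [rho, tanh_eq_exp]; positivity

lemma rho_le_two (δ x : ℝ) : rho δ x ≤ 2 := by
  rw [rho]; linarith [(abs_le.1 (abs_tanh_le_one (δ * x))).2]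

lemma rho_le_exp (δ x : ℝ) : rho δ x ≤ 2 * exp (2 * (δ * x)) := by
  rw [rho, tanh_eq_exp, div_le_iff₀ (by positivity)]
  nlinarith [exp_pos (2 * (δ * x)), mul_pos (exp_pos (2 * (δ * x))) (exp_pos (2 * (δ * x)))]

lemma continuous_rho (δ : ℝ) : Continuous (rho δ) :=
  continuous_const.add (continuous_tanh'.comp (continuous_const.mul continuous_id))

lemma rho_mono {δ : ℝ} (hδ : 0 ≤ δ) : Monotone (rho δ) := fun x y h => by
  have h1 : exp (2 * (δ * x)) ≤ exp (2 * (δ * y)) :=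
    exp_le_exp.2 (by linarith [mul_mono_l h hδ])
  rw [rho, rho, tanh_eq_exp, tanh_eq_exp, div_le_div_iff₀ (by positivity) (by positivity)]
  nlinarith

lemma one_le_rho {δ : ℝ} (hδ : 0 ≤ δ) {x : ℝ} (hx : 0 ≤ x) : 1 ≤ rho δ x := by
  have := rho_mono hδ hx
  simpa [rho] using this

lemma rho_moderate {δ : ℝ} (hδ : 0 ≤ δ) (x y : ℝ) :
    rho δ x ≤ 1 * exp (2 * δ * |x - y|) * rho δ y := by
  have h1 : exp (2 * (δ * x)) ≤ exp (2 * δ * |x - y|) * exp (2 * (δ * y)) := by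
    rw [← exp_add]; refine exp_le_exp.2 ?_
    nlinarith [le_abs_self (x - y)]
  have h2 : 1 ≤ exp (2 * δ * |x - y|) := one_le_exp (by positivity)
  rw [one_mul, rho, rho, tanh_eq_exp, tanh_eq_exp, ← mul_div_assoc,
    div_le_div_iff₀ (by positivity) (by positivity)]
  have h3 := mul_nonneg (exp_pos (2 * (δ * x))).le (exp_pos (2 * (δ * y))).le
  nlinarith [exp_pos (2 * (δ * x))]

lemma rho_shift {m δ : ℝ} (hm : 0 < m) (hδ : 0 < δ) : ∃ C : ℝ, 0 < C ∧
    ∀ s x : ℝ, 0 ≤ s → (1 + s ^ 2) ^ m * rho δ (x - s) ≤ C * jw m x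
      * exp (-(δ * max (s - max x 0) 0)) := by
  obtain ⟨C, hC, h⟩ := peetre hm hδ
  refine ⟨2 * C + 2, by positivity, fun s x hs => ?_⟩
  have j := jw_pos m x
  rcases le_total s (max x 0) with h1 | h1
  · rw [max_eq_right (by linarith), mul_zero, neg_zero, exp_zero, mul_one]
    have h2 : (1 + s ^ 2) ^ m ≤ jw m x :=
      rpow_le_rpow (by positivity) (by nlinarith) hm.le
    have h3 := rho_le_two δ (x - s)
    have := mul_le_mul h2 h3 (rho_pos _ _).le j.le
    nlinarith
  · rw [max_eq_left (by linarith)]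
    have h2 := h s (max x 0)
    rw [abs_of_nonneg (by linarith)] at h2
    have h3 : rho δ (x - s) ≤ 2 * exp (-(2 * (δ * (s - max x 0)))) := by
      refine (rho_le_exp δ _).trans (mul_mono_l (exp_le_exp.2 ?_) (by norm_num))
      nlinarith [le_max_left x 0]
    have h4 := mul_le_mul h2 h3 (rho_pos _ _).le (by positivity)
    refine h4.trans ?_
    have e : exp (δ * (s - max x 0)) * exp (-(2 * (δ * (s - max x 0))))
        = exp (-(δ * (s - max x 0))) := by rw [← exp_add]; ring_nf
    have e2 : C * exp (δ * (s - max x 0)) * (1 + max x 0 ^ 2) ^ m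
        * (2 * exp (-(2 * (δ * (s - max x 0)))))
        = 2 * C * jw m x * exp (-(δ * (s - max x 0))) := by
      rw [← e, jw]; ring
    rw [e2]
    refine mul_mono_r ?_ (exp_pos _).le
    nlinarith

/-- Exponential averages are bounded on `L¹` with respect to a moderate weight. -/
theorem weighted_avg {b β C A S : ℝ} (hβ : β < b) (hb : 0 < b) (hA : 0 ≤ A)
    {g f F : ℝ → ℝ} (cg : Continuous g)
    (g0 : ∀ x, 0 ≤ g x) (hg : ∀ x y, g x ≤ C * exp (β * |x - y|) * g y) (cf : Continuous f)
    (f0 : ∀ x, 0 ≤ f x) (hS : ∀ x, |f x| ≤ S) (hi : Integrable fun x => g x * f x)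
    (cF : Continuous F) (F0 : ∀ x, 0 ≤ F x)
    (hF : ∀ x, F x ≤ A * ∫ s, exp (-(b * |x - s|)) * f s) :
    Integrable (fun x => g x * F x) ∧
      ∫ x, g x * F x ≤ A * C * (2 / (b - β)) * ∫ x, g x * f x := by
  have hbβ : 0 < b - β := by linarith
  obtain ⟨e, he⟩ : ∃ e : ℝ → ℝ, e = fun z => exp (-((b - β) * |z|)) := ⟨_, rfl⟩
  have ie : Integrable e := by
    have := integrable_exp_abs hbβ 0
    simpa [he] using this
  have Ie : ∫ z, e z = 2 / (b - β) := by
    have := integral_exp_abs hbβ 0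
    simpa [he] using this
  have ic := hi.integrable_convolution (ContinuousLinearMap.mul ℝ ℝ) ie
  have Ic := integral_convolution (ContinuousLinearMap.mul ℝ ℝ) hi ie
  have icx : ∀ x, Integrable fun s => g s * f s * e (x - s) := by
    intro x
    refine hi.mul_bdd (c := 1) ?_ (.of_forall fun s => ?_)
    · rw [he]; exact (by fun_prop : Continuous fun s => exp (-((b - β) * |x - s|))).aestronglyMeasurable
    · rw [he, norm_eq_abs, abs_exp]; exact exp_le_one_iff.2 (by nlinarith [abs_nonneg (x - s)])
  have key : ∀ x, g x * F x ≤ A * C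
      * (convolution (fun x => g x * f x) e (ContinuousLinearMap.mul ℝ ℝ) volume) x := by
    intro x
    calc g x * F x ≤ g x * (A * ∫ s, exp (-(b * |x - s|)) * f s) :=
          mul_mono_l (hF x) (g0 x)
      _ = A * ∫ s, g x * (exp (-(b * |x - s|)) * f s) := by rw [integral_const_mul]; ring
      _ ≤ A * ∫ s, C * (g s * f s * e (x - s)) := by
          refine mul_mono_l ?_ hA
          refine integral_mono ((integrable_exp_mul hb x cf hS).const_mul _)
            ((icx x).const_mul C) fun s => ?_
          have h1 := mul_mono_r (hg x s)
            (mul_nonneg (exp_pos (-(b * |x - s|))).le (f0 s))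
          have h2 : exp (β * |x - s|) * exp (-(b * |x - s|)) = e (x - s) := by
            rw [he, ← exp_add]; ring_nf
          refine h1.trans (le_of_eq ?_)
          rw [← h2]; ring
      _ = _ := by
          rw [integral_const_mul, convolution_def]; simp only [ContinuousLinearMap.mul_apply']; ring
  have hint : Integrable (fun x => g x * F x) := by
    refine (ic.const_mul (A * C)).mono' (cg.mul cF).aestronglyMeasurable (.of_forall fun x => ?_)
    rw [norm_eq_abs, abs_of_nonneg (mul_nonneg (g0 x) (F0 x))]; exact key x
  refine ⟨hint, (integral_mono hint (ic.const_mul (A * C)) key).trans ?_⟩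
  rw [integral_const_mul, Ic, Ie, ContinuousLinearMap.mul_apply']
  exact le_of_eq (by ring)

/-! ### Smallness of the transformed initial datum -/

lemma continuous_sech_mul (a : ℝ) : Continuous fun s => sech (a * s) :=
  continuous_sech.comp (continuous_const.mul continuous_id)

lemma integrable_jw_sech {m a : ℝ} (hm : 0 < m) (ha : 0 < a) :
    Integrable fun x => jw m x * sech (a * x) ^ 2 := by
  obtain ⟨C, hC, h⟩ := jw_moderate hm ha
  have := (integrable_exp_abs ha 0).const_mul (4 * C)
  refine this.mono' ((continuous_jw m).mul ((continuous_sech_mul a).pow 2)).aestronglyMeasurable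
    (.of_forall fun x => ?_)
  have h1 := h x 0
  have j0 : jw m 0 = 1 := by simp [jw]
  have h2 := sech_le (a * x)
  rw [abs_mul, abs_of_pos ha] at h2
  have h3 := pow_le_pow_left₀ (sech_pos _).le h2 2
  rw [j0, sub_zero, mul_one] at h1
  rw [norm_eq_abs, abs_of_nonneg (mul_nonneg (jw_pos m x).le (sq_nonneg _)), zero_sub, abs_neg]
  refine (mul_le_mul h1 h3 (sq_nonneg _) (by positivity)).trans (le_of_eq ?_)
  have e : exp (a * |x|) * exp (-(a * |x|)) = 1 := by rw [← exp_add]; simp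
  linear_combination 4 * C * exp (-(a * |x|)) * e

lemma abs_sin_mul_cos_sub (x y : ℝ) : |sin x * cos x - sin y * cos y| ≤ |x - y| := by
  have h := abs_sin_sub_sin_le (2 * x) (2 * y)
  rw [sin_two_mul, sin_two_mul] at h
  have e1 : 2 * sin x * cos x - 2 * sin y * cos y = 2 * (sin x * cos x - sin y * cos y) := by ring
  have e2 : 2 * x - 2 * y = 2 * (x - y) := by ring
  rw [e1, e2, abs_mul, abs_mul, abs_two] at h
  linarith

lemma abs_ang_sub_le {a b : ℝ} (hb : 0 < b) (hab : b / 2 ≤ a) (x : ℝ) :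
    |ang a x - ang b x| ≤ 4 / b * |a - b| := by
  have hd : ∀ c, HasDerivAt (fun c => ang c x) (-(x * sech (c * x))) c := by
    intro c
    have h := hasDerivAt_ang x c
    have e : (fun c => ang c x) = ang x := by funext c; simp only [ang, mul_comm c x]
    rw [e, mul_comm c x]; exact h
  have h := Convex.norm_image_sub_le_of_norm_hasDerivWithin_le (f := fun c => ang c x)
    (f' := fun c => -(x * sech (c * x))) (s := Ici (b / 2)) (C := 4 / b) (x := b) (y := a)
    (fun c _ => (hd c).hasDerivWithinAt) (fun c hc => ?_) (convex_Ici _)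
    (by simp only [Set.mem_Ici]; linarith) hab
  · exact h
  · have hc : b / 2 ≤ c := hc
    have hc0 : 0 < c := by linarith
    rw [norm_eq_abs, abs_neg, abs_mul, abs_of_pos (sech_pos _)]
    have h1 := sech_le (c * x)
    rw [abs_mul, abs_of_pos hc0] at h1
    have h2 : b / 2 * |x| ≤ c * |x| := mul_mono_r hc (abs_nonneg x)
    have h3 : exp (-(c * |x|)) ≤ exp (-(b / 2 * |x|)) := exp_le_exp.2 (by linarith)
    have h4 : b / 2 * |x| * exp (-(b / 2 * |x|)) ≤ 1 := by
      have := add_one_le_exp (b / 2 * |x|)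
      rw [exp_neg, ← div_eq_mul_inv, div_le_one (exp_pos _)]; linarith
    rw [le_div_iff₀ hb]
    have h5 := mul_mono_l (h1.trans (by linarith : _ ≤ 2 * exp (-(b / 2 * |x|))))
      (abs_nonneg x)
    nlinarith

/-- Pointwise control of the transformed datum and its derivative. -/
lemma transformed_pointwise {a μ T η v v1 s : ℝ} (ha : 0 < a) (hμ : |μ| ≤ 1)
    (hs : sin T = s) (s0 : 0 ≤ s) {q : ℝ}
    (hq : q = a * sin T + v - (a + 2 * μ) * sin (T + η)) :
    |q| ≤ 8 * (a + 2) ^ 2 * (|v| + |v1| + |η| + |μ| * s) ∧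
    |v1 - a ^ 2 * (sin T * cos T) + 2 * (a + 2 * μ) * q * cos (T + η)
      + (a + 2 * μ) ^ 2 * (sin (T + η) * cos (T + η))|
      ≤ 8 * (a + 2) ^ 2 * (|v| + |v1| + |η| + |μ| * s) := by
  have hμ' := abs_le.1 hμ
  have h1 := abs_sin_add_sub T η 0
  simp only [add_zero, sub_zero] at h1
  have h2 : |sin (T + η)| ≤ s + |η| := by
    have := abs_add_le (sin (T + η) - sin T) (sin T)
    rw [sub_add_cancel, hs, abs_of_nonneg s0] at this
    rw [hs] at h1; linarith
  have h3 : |μ| * |sin (T + η)| ≤ |μ| * s + |η| := by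
    have := mul_mono_l h2 (abs_nonneg μ)
    nlinarith [abs_nonneg η, abs_nonneg μ]
  have hq1 : |q| ≤ |v| + (a + 2) * |η| + 2 * (|μ| * s) := by
    have e : q = v - a * (sin (T + η) - sin T) - 2 * (μ * sin (T + η)) := by rw [hq]; ring
    have t1 := abs_sub (v - a * (sin (T + η) - sin T)) (2 * (μ * sin (T + η)))
    have t2 := abs_sub v (a * (sin (T + η) - sin T))
    rw [← e, abs_mul 2, abs_mul μ, abs_two] at t1
    rw [abs_mul a, abs_of_pos ha] at t2
    have := mul_mono_l h1 ha.le
    linarith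
  have p1 := abs_nonneg v
  have p2 := abs_nonneg v1
  have p3 := abs_nonneg η
  have p4 : 0 ≤ |μ| * s := by positivity
  have a2 : 0 ≤ a ^ 2 := sq_nonneg a
  refine ⟨hq1.trans ?_, ?_⟩
  · nlinarith [mul_nonneg ha.le p1, mul_nonneg ha.le p2, mul_nonneg ha.le p3, mul_nonneg ha.le p4,
      mul_nonneg a2 p1, mul_nonneg a2 p2, mul_nonneg a2 p3, mul_nonneg a2 p4]
  · have h4 := abs_sin_mul_cos_sub (T + η) T
    rw [add_sub_cancel_left] at h4
    have e : v1 - a ^ 2 * (sin T * cos T) + 2 * (a + 2 * μ) * q * cos (T + η)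
      + (a + 2 * μ) ^ 2 * (sin (T + η) * cos (T + η))
      = v1 + a ^ 2 * (sin (T + η) * cos (T + η) - sin T * cos T)
        + (2 * (a + 2 * μ)) * (q * cos (T + η))
        + 4 * (a + μ) * (μ * sin (T + η) * cos (T + η)) := by ring
    rw [e]
    have t1 := abs_add_le (v1 + a ^ 2 * (sin (T + η) * cos (T + η) - sin T * cos T)
        + (2 * (a + 2 * μ)) * (q * cos (T + η))) (4 * (a + μ) * (μ * sin (T + η) * cos (T + η)))
    have t2 := abs_add_three v1 (a ^ 2 * (sin (T + η) * cos (T + η) - sin T * cos T))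
        ((2 * (a + 2 * μ)) * (q * cos (T + η)))
    have c1 := abs_cos_le_one (T + η)
    have t3 : |a ^ 2 * (sin (T + η) * cos (T + η) - sin T * cos T)| ≤ a ^ 2 * |η| := by
      rw [abs_mul, abs_of_nonneg a2]; exact mul_mono_l h4 a2
    have t4 : |(2 * (a + 2 * μ)) * (q * cos (T + η))| ≤ 2 * (a + 2) * |q| := by
      rw [abs_mul, abs_mul q]
      refine mul_le_mul ?_ (mul_le_of_le_one_right (abs_nonneg _) c1) (by positivity) (by positivity)
      rw [abs_le]; constructor <;> linarith
    have t5 : |4 * (a + μ) * (μ * sin (T + η) * cos (T + η))| ≤ 4 * (a + 1) * (|μ| * s + |η|) := by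
      rw [abs_mul, abs_mul (μ * _), abs_mul μ]
      refine mul_le_mul ?_ ((mul_le_of_le_one_right (by positivity) c1).trans h3) (by positivity)
        (by positivity)
      rw [abs_le]; constructor <;> linarith
    have t6 := mul_mono_l hq1 (by positivity : 0 ≤ 2 * (a + 2))
    nlinarith [mul_nonneg ha.le p1, mul_nonneg ha.le p2, mul_nonneg ha.le p3, mul_nonneg ha.le p4,
      mul_nonneg a2 p1, mul_nonneg a2 p2, mul_nonneg a2 p3, mul_nonneg a2 p4]

lemma sq_le_four_sq {x L p q r s : ℝ} (h : |x| ≤ L * (p + q + r + s)) :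
    x ^ 2 ≤ 4 * L ^ 2 * (p ^ 2 + q ^ 2 + r ^ 2 + s ^ 2) := by
  have h1 : x ^ 2 ≤ (L * (p + q + r + s)) ^ 2 := sq_le_sq.2 (h.trans (le_abs_self _))
  have h2 : (p + q + r + s) ^ 2 ≤ 4 * (p ^ 2 + q ^ 2 + r ^ 2 + s ^ 2) := by
    nlinarith [sq_nonneg (p - q), sq_nonneg (p - r), sq_nonneg (p - s), sq_nonneg (q - r),
      sq_nonneg (q - s), sq_nonneg (r - s)]
  calc x ^ 2 ≤ (L * (p + q + r + s)) ^ 2 := h1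
    _ = L ^ 2 * (p + q + r + s) ^ 2 := by ring
    _ ≤ L ^ 2 * (4 * (p ^ 2 + q ^ 2 + r ^ 2 + s ^ 2)) := mul_mono_l h2 (sq_nonneg L)
    _ = _ := by ring

/-- A weighted-small perturbation of the soliton has a Bäcklund transform that is small in the same
weighted `H¹` norm. -/
theorem initial_data {a m : ℝ} (ha : 0 < a) (hm : 0 < m) : ∃ K : ℝ, 1 ≤ K ∧
    ∀ (v v1 : ℝ → ℝ) (ε : ℝ), 0 ≤ ε → (∀ x, HasDerivAt v (v1 x) x) → Continuous v1 →
      (Integrable fun x => jw m x * v x ^ 2) → (Integrable fun x => jw m x * v1 x ^ 2) →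
      ∫ x, jw m x * v x ^ 2 ≤ ε ^ 2 → ∫ x, jw m x * v1 x ^ 2 ≤ ε ^ 2 → K * ε ≤ 1 →
      ∃ (θ : ℝ → ℝ) (κ : ℝ), |2 * κ - a| ≤ K * ε ∧ a / 2 ≤ 2 * κ ∧ 2 * κ ≤ 2 * a ∧
        (∀ x, |θ x - ang (2 * κ) x| ≤ K * ε) ∧
        (∀ x, HasDerivAt θ (-2 * (a * sech (a * x) + v x) + 2 * κ * sin (θ x)) x) ∧
        ∀ q q1 : ℝ → ℝ, (∀ x, q x = a * sech (a * x) + v x - 2 * κ * sin (θ x)) →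
          (∀ x, HasDerivAt q (q1 x) x) → Continuous q1 →
          (Integrable fun x => jw m x * q x ^ 2) ∧ (Integrable fun x => jw m x * q1 x ^ 2) ∧
          ∫ x, jw m x * q x ^ 2 ≤ K * ε ^ 2 ∧ ∫ x, jw m x * q1 x ^ 2 ≤ K * ε ^ 2 := by
  obtain ⟨K1, hK1, hB⟩ := backlund_initial ha
  obtain ⟨Cj, hCj, hj⟩ := jw_moderate hm (by positivity : 0 < a / 4)
  have is2 := integrable_jw_sech hm ha
  obtain ⟨Is, hIs⟩ : ∃ Is, Is = ∫ x, jw m x * sech (a * x) ^ 2 := ⟨_, rfl⟩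
  have Is0 : 0 ≤ Is := by
    rw [hIs]; exact integral_nonneg fun x => mul_nonneg (jw_pos m x).le (sq_nonneg _)
  obtain ⟨A, hA⟩ : ∃ A, A = 64 * (2 / (a / 2)) := ⟨_, rfl⟩
  have A0 : 0 ≤ A := by rw [hA]; positivity
  obtain ⟨D, hD⟩ : ∃ D, D = A * Cj * (2 / (a / 2 - a / 4)) := ⟨_, rfl⟩
  have D0 : 0 ≤ D := by
    rw [hD]; have : 0 < a / 2 - a / 4 := by linarith
    positivity
  obtain ⟨G, hG⟩ : ∃ G, G = 2 + D * (2 + 8 * K1 ^ 2 * Is) + 4 * K1 ^ 2 * Is := ⟨_, rfl⟩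
  have G0 : 0 ≤ G := by rw [hG]; positivity
  obtain ⟨L, hL⟩ : ∃ L, L = 8 * (a + 2) ^ 2 := ⟨_, rfl⟩
  refine ⟨1 + 4 * K1 + 4 * K1 * (4 / a) + 8 * K1 / a + 4 * L ^ 2 * G, ?_,
    fun v v1 ε ε0 hv cv1 iv iv1 bv bv1 small => ?_⟩
  · have : 0 ≤ 4 * K1 + 4 * K1 * (4 / a) + 8 * K1 / a + 4 * L ^ 2 * G := by positivity
    linarith
  obtain ⟨K, hK⟩ : ∃ K, K = 1 + 4 * K1 + 4 * K1 * (4 / a) + 8 * K1 / a + 4 * L ^ 2 * G := ⟨_, rfl⟩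
  have k1 : 0 ≤ 4 * K1 * (4 / a) := by positivity
  have k2 : 0 ≤ 8 * K1 / a := by positivity
  have k3 : 0 ≤ 4 * L ^ 2 * G := by positivity
  rw [← hK] at small ⊢
  have cv : Continuous v := cont_of_deriv hv
  have unw : ∀ f : ℝ → ℝ, Continuous f → (Integrable fun x => jw m x * f x ^ 2) →
      (Integrable fun x => f x ^ 2) ∧ ∫ x, f x ^ 2 ≤ ∫ x, jw m x * f x ^ 2 := by
    intro f cf hf
    have hle : ∀ x, f x ^ 2 ≤ jw m x * f x ^ 2 := fun x =>
      le_mul_of_one_le_left (sq_nonneg _) (one_le_jw hm.le x)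
    have hi : Integrable fun x => f x ^ 2 := hf.mono' (cf.pow 2).aestronglyMeasurable
      (.of_forall fun x => by rw [norm_eq_abs, abs_of_nonneg (sq_nonneg _)]; exact hle x)
    exact ⟨hi, integral_mono hi hf hle⟩
  obtain ⟨i0, b0⟩ := unw v cv iv
  obtain ⟨i1, b1⟩ := unw v1 cv1 iv1
  have sup : ∀ x, |v x| ≤ 2 * ε := fun x => by
    have h := sup_sq hv cv1 i0 i1 one_pos x
    refine abs_le_of_sq_le_sq ?_ (by positivity)
    rw [inv_one] at h
    nlinarith
  obtain ⟨η, μ, cη, hμ, hη, hη', hη2⟩ := hB v (2 * ε) cv sup (le_trans (by nlinarith) small)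
  have hμ1 : |μ| ≤ 2 * K1 * ε := by linarith
  have hK1ε : (4 * K1) * ε ≤ 1 := (mul_mono_r (by linarith) ε0).trans small
  have hμ2 : |μ| ≤ 1 := by linarith [mul_nonneg hK1.le ε0]
  have hμa : |2 * μ| ≤ a / 2 := by
    rw [abs_mul, abs_two]
    have : 8 * K1 / a * ε ≤ 1 := (mul_mono_r (by linarith) ε0).trans small
    rw [div_mul_eq_mul_div, div_le_one ha] at this
    linarith
  have hμa' := abs_le.1 hμa
  refine ⟨fun x => ang a x + η x, (a + 2 * μ) / 2, ?_, by linarith, by linarith, fun x => ?_,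
    fun x => ?_, fun q q1 hq hq1 cq1 => ?_⟩
  · have e : 2 * ((a + 2 * μ) / 2) - a = 2 * μ := by ring
    rw [e, abs_mul, abs_two]
    have := mul_mono_r (by linarith : 4 * K1 ≤ K) ε0
    linarith
  · have e : 2 * ((a + 2 * μ) / 2) = a + 2 * μ := by ring
    rw [e]
    have h1 := abs_ang_sub_le (a := a + 2 * μ) ha (by linarith) x
    have h2 := abs_sub (η x) (ang (a + 2 * μ) x - ang a x)
    have e2 : η x - (ang (a + 2 * μ) x - ang a x) = ang a x + η x - ang (a + 2 * μ) x := by ring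
    rw [e2] at h2
    rw [add_sub_cancel_left, abs_mul, abs_two] at h1
    have h3 := mul_mono_l hμ1 (by positivity : 0 ≤ 4 / a * 2)
    have h4 := hη x
    have := mul_mono_r (by linarith : 2 * K1 + 4 * K1 * (4 / a) ≤ K) ε0
    linarith
  · refine ((hasDerivAt_ang a x).fun_add (hη' x)).congr_deriv ?_
    rw [sin_ang]; ring
  -- the weighted norm of the angle correction
  have cs := continuous_sech_mul a
  have cf : Continuous fun s => |v s| + |μ| * sech (a * s) := cv.abs.add (continuous_const.mul cs)
  have f0 : ∀ s, 0 ≤ |v s| + |μ| * sech (a * s) := fun s => by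
    have := (sech_pos (a * s)).le; positivity
  have fS : ∀ s, |(|v s| + |μ| * sech (a * s))| ≤ 2 * ε + 1 := fun s => by
    rw [abs_of_nonneg (f0 s)]
    have := mul_le_mul hμ2 (sech_le_one (a * s)) (sech_pos _).le zero_le_one
    linarith [sup s]
  have ηsq : ∀ x, η x ^ 2 ≤ A * ∫ s, exp (-(a / 2 * |x - s|)) * (|v s| + |μ| * sech (a * s)) ^ 2 := by
    intro x
    have h1 := exp_avg_sq (by positivity : 0 < a / 2) cf fS x
    have h2 := pow_le_pow_left₀ (abs_nonneg _) (hη2 x) 2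
    rw [sq_abs, mul_pow] at h2
    rw [hA]; linarith
  have hsum : ∀ x, jw m x * (|v x| + |μ| * sech (a * x)) ^ 2
      ≤ 2 * (jw m x * v x ^ 2) + 2 * μ ^ 2 * (jw m x * sech (a * x) ^ 2) := fun x => by
    have h1 : (|v x| + |μ| * sech (a * x)) ^ 2 ≤ 2 * v x ^ 2 + 2 * μ ^ 2 * sech (a * x) ^ 2 := by
      rw [← sq_abs (v x), ← sq_abs μ]
      nlinarith [sq_nonneg (|v x| - |μ| * sech (a * x))]
    have := mul_mono_l h1 (jw_pos m x).le
    linarith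
  have isum := (iv.const_mul 2).add (is2.const_mul (2 * μ ^ 2))
  have if2 : Integrable fun x => jw m x * (|v x| + |μ| * sech (a * x)) ^ 2 := by
    refine isum.mono' ((continuous_jw m).mul (cf.pow 2)).aestronglyMeasurable
      (.of_forall fun x => ?_)
    rw [norm_eq_abs, abs_of_nonneg (mul_nonneg (jw_pos m x).le (sq_nonneg _))]; exact hsum x
  have μsq : μ ^ 2 ≤ 4 * K1 ^ 2 * ε ^ 2 := by
    have := pow_le_pow_left₀ (abs_nonneg μ) hμ1 2
    rw [sq_abs] at this; linarith
  have bf2 : ∫ x, jw m x * (|v x| + |μ| * sech (a * x)) ^ 2 ≤ (2 + 8 * K1 ^ 2 * Is) * ε ^ 2 := by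
    have h1 := integral_mono if2 isum hsum
    rw [integral_add' (iv.const_mul 2) (is2.const_mul (2 * μ ^ 2)), integral_const_mul,
      integral_const_mul, ← hIs] at h1
    have := mul_mono_r μsq Is0
    linarith
  obtain ⟨iη, bη⟩ := weighted_avg (b := a / 2) (β := a / 4) (C := Cj) (A := A)
    (S := (2 * ε + 1) ^ 2) (f := fun s => (|v s| + |μ| * sech (a * s)) ^ 2)
    (F := fun s => η s ^ 2) (by linarith) (by positivity) A0 (continuous_jw m)
    (fun x => (jw_pos m x).le) hj (cf.pow 2) (fun x => sq_nonneg _)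
    (fun x => by rw [abs_pow]; exact pow_le_pow_left₀ (abs_nonneg _) (fS x) 2) if2 (cη.pow 2)
    (fun x => sq_nonneg _) ηsq
  rw [← hD] at bη
  have bη' : ∫ x, jw m x * η x ^ 2 ≤ D * (2 + 8 * K1 ^ 2 * Is) * ε ^ 2 := by
    refine bη.trans ?_
    have := mul_mono_l bf2 D0
    linarith
  have fin : ∀ f : ℝ → ℝ, Continuous f →
      (∀ x, |f x| ≤ L * (|v x| + |v1 x| + |η x| + |μ| * sech (a * x))) →
      (Integrable fun x => jw m x * f x ^ 2) ∧ ∫ x, jw m x * f x ^ 2 ≤ K * ε ^ 2 := by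
    intro f cf' hf
    have i4 := (((iv.add iv1).add iη).add (is2.const_mul (μ ^ 2))).const_mul (4 * L ^ 2)
    have hle : ∀ x, jw m x * f x ^ 2 ≤ 4 * L ^ 2 * (jw m x * v x ^ 2 + jw m x * v1 x ^ 2
        + jw m x * η x ^ 2 + μ ^ 2 * (jw m x * sech (a * x) ^ 2)) := fun x => by
      have h1 := mul_mono_l (sq_le_four_sq (hf x)) (jw_pos m x).le
      rw [sq_abs, sq_abs, sq_abs, mul_pow, sq_abs] at h1
      linarith
    have hi : Integrable fun x => jw m x * f x ^ 2 := by
      refine i4.mono' ((continuous_jw m).mul (cf'.pow 2)).aestronglyMeasurable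
        (.of_forall fun x => ?_)
      rw [norm_eq_abs, abs_of_nonneg (mul_nonneg (jw_pos m x).le (sq_nonneg _))]; exact hle x
    refine ⟨hi, ?_⟩
    have h1 := integral_mono hi i4 hle
    rw [integral_const_mul, integral_add' ((iv.add iv1).add iη) (is2.const_mul (μ ^ 2)),
      integral_add' (iv.add iv1) iη, integral_add' iv iv1, integral_const_mul, ← hIs] at h1
    have h2 := mul_mono_r μsq Is0
    have h3 : 4 * L ^ 2 * (∫ x, jw m x * v x ^ 2) + 0 ≤ 4 * L ^ 2 * ε ^ 2 := by
      rw [add_zero]; exact mul_mono_l bv (by positivity)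
    have h4 : (∫ x, jw m x * v x ^ 2) + (∫ x, jw m x * v1 x ^ 2) + (∫ x, jw m x * η x ^ 2)
        + μ ^ 2 * Is ≤ G * ε ^ 2 := by rw [hG]; linarith
    have h5 := mul_mono_l h4 (by positivity : 0 ≤ 4 * L ^ 2)
    have h6 := mul_mono_r (by linarith : 4 * L ^ 2 * G ≤ K) (sq_nonneg ε)
    refine h1.trans (h5.trans ?_)
    linarith
  have pw : ∀ x, _ := fun x => transformed_pointwise (a := a) (μ := μ) (T := ang a x) (η := η x)
    (v := v x) (v1 := v1 x) (s := sech (a * x)) (q := q x) ha hμ2 (sin_ang a x) (sech_pos _).le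
    (by rw [hq, sin_ang]; ring)
  have cq : Continuous q := cont_of_deriv hq1
  have hq1' : ∀ x, q1 x = v1 x - a ^ 2 * (sin (ang a x) * cos (ang a x))
      + 2 * (a + 2 * μ) * q x * cos (ang a x + η x)
      + (a + 2 * μ) ^ 2 * (sin (ang a x + η x) * cos (ang a x + η x)) := by
    intro x
    have d1 : HasDerivAt (fun x => sech (a * x)) (-(sech (a * x) * tanh (a * x)) * (a * 1)) x :=
      (hasDerivAt_sech _).comp x ((hasDerivAt_id x).const_mul a)
    have d2 := ((hasDerivAt_ang a x).fun_add (hη' x)).sin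
    have d3 := ((d1.const_mul a).fun_add (hv x)).fun_sub (d2.const_mul (2 * ((a + 2 * μ) / 2)))
    have d4 : HasDerivAt q _ x := d3.congr_of_eventuallyEq (.of_forall hq)
    rw [(hq1 x).unique d4, hq x, sin_ang, cos_ang]
    ring
  obtain ⟨r1, r2⟩ := fin q cq fun x => by rw [hL]; exact (pw x).1
  obtain ⟨r3, r4⟩ := fin q1 cq1 fun x => by rw [hL, hq1' x]; exact (pw x).2
  exact ⟨r1, r3, r2, r4⟩

/-! ### Ordinary differential equations depending on a parameter -/

/-- Global solvability for a field that is bounded and Lipschitz, locally uniformly in time. -/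
theorem ode_global {f : ℝ → ℝ → ℝ} (cf : Cont₂ f)
    (hb : ∀ T : ℝ, ∃ B : ℝ, ∀ t z, |t| ≤ T → |f t z| ≤ B)
    (hl : ∀ T : ℝ, ∃ L : ℝ, ∀ t z z', |t| ≤ T → |f t z - f t z'| ≤ L * |z - z'|) (z0 : ℝ) :
    ∃ φ : ℝ → ℝ, φ 0 = z0 ∧ ∀ t, HasDerivAt φ (f t (φ t)) t := by
  have lip : ∀ T : ℝ, ∃ L : NNReal, ∀ t, |t| ≤ T → LipschitzWith L (f t) := by
    intro T
    obtain ⟨L, hL⟩ := hl T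
    refine ⟨(max L 0).toNNReal, fun t ht => LipschitzWith.of_dist_le_mul fun z z' => ?_⟩
    rw [dist_eq_norm, dist_eq_norm, coe_toNNReal _ (le_max_right _ _)]
    exact (hL t z z' ht).trans (mul_mono_r (le_max_left _ _) (abs_nonneg _))
  have loc : ∀ n : ℕ, ∃ φ : ℝ → ℝ, φ 0 = z0 ∧
      ∀ t ∈ Icc (-(n + 1 : ℝ)) (n + 1), HasDerivWithinAt φ (f t (φ t)) (Icc (-(n + 1 : ℝ)) (n + 1)) t := by
    intro n
    obtain ⟨B, hB⟩ := hb (n + 1)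
    obtain ⟨L, hL⟩ := lip (n + 1)
    have n0 : (0:ℝ) ≤ n := Nat.cast_nonneg n
    have B0 : 0 ≤ B := (abs_nonneg _).trans (hB 0 0 (by simp; positivity))
    have hPL : IsPicardLindelof f (tmin := -(n + 1 : ℝ)) (tmax := n + 1)
        ⟨0, by constructor <;> linarith⟩ z0 (B * (n + 1)).toNNReal 0 B.toNNReal L := by
      refine ⟨fun t ht => (hL t (abs_le.2 ht)).lipschitzOnWith, fun z _ => ?_, fun t ht z _ => ?_, ?_⟩
      · exact (cf.comp (continuous_id.prodMk continuous_const)).continuousOn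
      · rw [coe_toNNReal _ B0]; exact hB t z (abs_le.2 ht)
      · rw [coe_toNNReal _ B0, coe_toNNReal _ (by positivity)]
        simp
    obtain ⟨φ, h1, h2⟩ := hPL.exists_eq_forall_mem_Icc_hasDerivWithinAt₀
    exact ⟨φ, h1, h2⟩
  choose φ h0 hφ using loc
  have hd : ∀ n : ℕ, ∀ t ∈ Ioo (-(n + 1 : ℝ)) (n + 1), HasDerivAt (φ n) (f t (φ n t)) t :=
    fun n t ht => (hφ n t (Ioo_subset_Icc_self ht)).hasDerivAt (Icc_mem_nhds ht.1 ht.2)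
  have agree : ∀ n k : ℕ, n ≤ k → EqOn (φ n) (φ k) (Ioo (-(n + 1 : ℝ)) (n + 1)) := by
    intro n k hnk
    obtain ⟨L, hL⟩ := lip (n + 1)
    have hnk' : (n : ℝ) ≤ k := Nat.cast_le.2 hnk
    have n0 : (0:ℝ) ≤ n := Nat.cast_nonneg n
    refine ODE_solution_unique_of_mem_Ioo (v := f) (s := fun _ => univ) (K := L) (t₀ := 0)
      (fun t ht => (hL t (abs_le.2 (Ioo_subset_Icc_self ht))).lipschitzOnWith)
      ⟨by linarith, by linarith⟩ (fun t ht => ⟨hd n t ht, trivial⟩)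
      (fun t ht => ⟨hd k t ⟨by linarith [ht.1], by linarith [ht.2]⟩, trivial⟩) ?_
    rw [h0, h0]
  refine ⟨fun t => φ ⌈|t|⌉₊ t, h0 _, fun t => ?_⟩
  obtain ⟨N, hN⟩ : ∃ N, N = ⌈|t|⌉₊ + 1 := ⟨_, rfl⟩
  have hmem : ∀ s : ℝ, |s| < ⌈|s|⌉₊ + 1 := fun s => (Nat.le_ceil |s|).trans_lt (by linarith)
  have ev : (fun s => φ ⌈|s|⌉₊ s) =ᶠ[nhds t] φ N := by
    have : ∀ᶠ s : ℝ in nhds t, |s| < (⌈|t|⌉₊ : ℝ) + 1 := by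
      have c : ContinuousAt (fun s : ℝ => |s|) t := continuous_abs.continuousAt
      exact c.eventually_lt continuousAt_const (hmem t)
    filter_upwards [this] with s hs
    refine agree _ _ ?_ ?_
    · rw [hN]; exact Nat.ceil_le.2 (by push_cast; exact hs.le)
    · exact abs_lt.1 (hmem s)
  have hN' : (N : ℝ) = ⌈|t|⌉₊ + 1 := by rw [hN]; push_cast; ring
  have hder := hd N t (abs_lt.1 (by rw [hN']; linarith [hmem t]))
  have e : φ ⌈|t|⌉₊ t = φ N t := ev.eq_of_nhds
  show HasDerivAt _ (f t (φ ⌈|t|⌉₊ t)) t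
  rw [e]
  exact hder.congr_of_eventuallyEq ev

/-- Gronwall's inequality for functions differentiable in the open interval only. -/
lemma gronwall_open {f f' : ℝ → ℝ} {K ε T : ℝ} (hK : 0 < K) (hε : 0 ≤ ε)
    (cf : ContinuousOn f (Icc 0 T)) (hf : ∀ t ∈ Ioo 0 T, HasDerivAt f (f' t) t)
    (hb : ∀ t ∈ Ioo 0 T, |f' t| ≤ K * |f t| + ε) :
    ∀ t ∈ Icc 0 T, |f t| ≤ (|f 0| + ε / K) * exp (K * T) := by
  intro t ht
  have ht0 : 0 ≤ t := ht.1
  have hT : 0 ≤ T := ht.1.trans ht.2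
  have hexp : 1 ≤ exp (K * T) := one_le_exp (by positivity)
  have hεK : 0 ≤ ε / K := by positivity
  have main : ∀ s ∈ Ioo 0 t, ∀ r ∈ Ico s t, |f r| ≤ (|f s| + ε / K) * exp (K * T) := by
    intro s hs r hr
    have hr' : r < T := hr.2.trans_le ht.2
    have h := norm_le_gronwallBound_of_norm_deriv_right_le (f := f) (f' := f') (δ := |f s|) (K := K)
      (ε := ε) (a := s) (b := r) (cf.mono (Icc_subset_Icc hs.1.le hr'.le))
      (fun x hx => (hf x ⟨hs.1.trans_le hx.1, hx.2.trans hr'⟩).hasDerivWithinAt) le_rfl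
      (fun x hx => hb x ⟨hs.1.trans_le hx.1, hx.2.trans hr'⟩) r ⟨hr.1, le_rfl⟩
    rw [gronwallBound_of_K_ne_0 hK.ne'] at h
    have h1 : exp (K * (r - s)) ≤ exp (K * T) := exp_le_exp.2 (by nlinarith [hs.1])
    rw [norm_eq_abs] at h
    have := mul_mono_l h1 (add_nonneg (abs_nonneg (f s)) hεK)
    linarith
  rcases eq_or_lt_of_le ht0 with h | h
  · rw [← h]
    nlinarith [abs_nonneg (f 0)]
  have c0 : Tendsto f (nhdsWithin 0 (Ioo 0 t)) (nhds (f 0)) :=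
    (cf 0 ⟨le_rfl, hT⟩).mono_left (nhdsWithin_mono _ fun x hx => ⟨hx.1.le, hx.2.le.trans ht.2⟩)
  have c1 : Tendsto f (nhdsWithin t (Ioo 0 t)) (nhds (f t)) :=
    (cf t ht).mono_left (nhdsWithin_mono _ fun x hx => ⟨hx.1.le, hx.2.le.trans ht.2⟩)
  have n0 : (nhdsWithin (0:ℝ) (Ioo 0 t)).NeBot := left_nhdsWithin_Ioo_neBot h
  have n1 : (nhdsWithin t (Ioo 0 t)).NeBot := right_nhdsWithin_Ioo_neBot h
  have step : ∀ s ∈ Ioo 0 t, |f t| ≤ (|f s| + ε / K) * exp (K * T) := by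
    intro s hs
    refine le_of_tendsto c1.abs ?_
    have : ∀ᶠ r in nhdsWithin t (Ioo 0 t), s < r :=
      nhdsWithin_le_nhds (lt_mem_nhds hs.2)
    filter_upwards [this, self_mem_nhdsWithin] with r h1 h2
    exact main s hs r ⟨h1.le, h2.2⟩
  refine ge_of_tendsto ((c0.abs.add_const _).mul_const _) ?_
  filter_upwards [self_mem_nhdsWithin] with s hs using step s hs

/-- Second order Taylor estimate. -/
lemma taylor_two {A B C : ℝ → ℝ} {M x y : ℝ} (hA : ∀ x, HasDerivAt A (B x) x)
    (hB : ∀ x, HasDerivAt B (C x) x) (hM : ∀ z ∈ uIcc x y, |C z| ≤ M) :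
    |A y - A x - B x * (y - x)| ≤ M * (y - x) ^ 2 := by
  have h1 : ∀ z ∈ uIcc x y, |B z - B x| ≤ M * |y - x| := by
    intro z hz
    have h := Convex.norm_image_sub_le_of_norm_hasDerivWithin_le (f := B) (f' := C)
      (s := uIcc x y) (C := M) (fun w _ => (hB w).hasDerivWithinAt) hM (convex_uIcc x y)
      left_mem_uIcc hz
    refine h.trans (mul_mono_l ?_ ((abs_nonneg _).trans (hM x left_mem_uIcc)))
    exact abs_sub_left_of_mem_uIcc hz
  have h := Convex.norm_image_sub_le_of_norm_hasDerivWithin_le (f := fun z => A z - B x * z)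
    (f' := fun z => B z - B x) (s := uIcc x y) (C := M * |y - x|)
    (fun w _ => (((hA w).fun_sub ((hasDerivAt_id w).const_mul (B x))).congr_deriv
      (by ring)).hasDerivWithinAt) h1 (convex_uIcc x y) left_mem_uIcc right_mem_uIcc
  simp only [norm_eq_abs] at h
  rw [mul_assoc, ← pow_two, sq_abs] at h
  convert h using 2
  ring

/-! ### Propagation of the Bäcklund angle in time -/

lemma taylor_sin (x y : ℝ) : |sin y - sin x - cos x * (y - x)| ≤ (y - x) ^ 2 := by
  have := taylor_two (A := sin) (B := cos) (C := fun z => -sin z) (M := 1) (x := x) (y := y)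
    hasDerivAt_sin hasDerivAt_cos (fun z _ => by rw [abs_neg]; exact abs_sin_le_one z)
  linarith

lemma taylor_cos (x y : ℝ) : |cos y - cos x + sin x * (y - x)| ≤ (y - x) ^ 2 := by
  have := taylor_two (A := cos) (B := fun z => -sin z) (C := fun z => -cos z) (M := 1) (x := x)
    (y := y) hasDerivAt_cos (fun z => (hasDerivAt_sin z).neg)
    (fun z _ => by rw [abs_neg]; exact abs_cos_le_one z)
  rw [show cos y - cos x + sin x * (y - x) = cos y - cos x - -sin x * (y - x) by ring]
  linarith

lemma abs_cos_sub_le (x y : ℝ) : |cos y - cos x| ≤ |y - x| := by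
  have := abs_sin_add_sub (π / 2) y x
  rwa [add_comm (π / 2) y, add_comm (π / 2) x, sin_add_pi_div_two, sin_add_pi_div_two] at this

lemma abs_sin_sub_le (x y : ℝ) : |sin y - sin x| ≤ |y - x| := by
  have := abs_sin_add_sub 0 y x
  rwa [zero_add, zero_add] at this

lemma term_lip {a a' s s' M h d : ℝ} (h1 : |a' - a| ≤ M * h) (h2 : |a| ≤ M) (h3 : |s'| ≤ 1)
    (h4 : |s' - s| ≤ d) : |a' * s' - a * s| ≤ M * h + M * d := by
  rw [show a' * s' - a * s = (a' - a) * s' + a * (s' - s) by ring]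
  refine (abs_add_le _ _).trans (add_le_add ?_ ?_)
  · rw [abs_mul]
    nlinarith [abs_nonneg (a' - a), abs_nonneg s']
  · rw [abs_mul]
    exact mul_le_mul h2 h4 (abs_nonneg _) ((abs_nonneg _).trans h2)

lemma term_taylor {a a' b s s' σ M h d : ℝ} (h1 : |a' - a - b * h| ≤ M * h ^ 2) (h2 : |a| ≤ M)
    (hb : |b| ≤ M) (h3 : |s'| ≤ 1) (h4 : |s' - s| ≤ |d|) (h5 : |s' - s - σ * d| ≤ d ^ 2) :
    |a' * s' - a * s - b * s * h - a * σ * d| ≤ M * (h ^ 2 + |h| * |d| + d ^ 2) := by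
  rw [show a' * s' - a * s - b * s * h - a * σ * d =
    (a' - a - b * h) * s' + (b * h) * (s' - s) + a * (s' - s - σ * d) by ring]
  have M0 : 0 ≤ M := (abs_nonneg _).trans h2
  have e1 : |(a' - a - b * h) * s'| ≤ M * h ^ 2 := by
    rw [abs_mul]
    nlinarith [abs_nonneg (a' - a - b * h), abs_nonneg s']
  have e2 : |(b * h) * (s' - s)| ≤ M * |h| * |d| := by
    rw [abs_mul, abs_mul]
    exact mul_le_mul (mul_mono_r hb (abs_nonneg _)) h4 (abs_nonneg _) (by positivity)
  have e3 : |a * (s' - s - σ * d)| ≤ M * d ^ 2 := by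
    rw [abs_mul]
    exact mul_le_mul h2 h5 (abs_nonneg _) M0
  have := abs_add_three ((a' - a - b * h) * s') ((b * h) * (s' - s)) (a * (s' - s - σ * d))
  linarith

lemma box_bound {f : ℝ → ℝ → ℝ} (h : Cont₂ f) (T R : ℝ) :
    ∃ M, 0 ≤ M ∧ ∀ t x, |t| ≤ T → |x| ≤ R → |f t x| ≤ M := by
  obtain ⟨M, hM⟩ := ((isCompact_Icc (a := -T) (b := T)).prod
    (isCompact_Icc (a := -R) (b := R))).exists_bound_of_continuousOn h.continuousOn
  refine ⟨max M 0, le_max_right _ _, fun t x ht hx => (hM (t, x) ⟨abs_le.1 ht, abs_le.1 hx⟩).trans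
    (le_max_left _ _)⟩

lemma lip_of_deriv {A B : ℝ → ℝ} {M x y : ℝ} (hA : ∀ x, HasDerivAt A (B x) x)
    (hM : ∀ z ∈ uIcc x y, |B z| ≤ M) : |A y - A x| ≤ M * |y - x| :=
  Convex.norm_image_sub_le_of_norm_hasDerivWithin_le (f := A) (f' := B)
    (s := uIcc x y) (C := M) (fun w _ => (hA w).hasDerivWithinAt) hM (convex_uIcc x y)
    left_mem_uIcc right_mem_uIcc

/-- An overdetermined system `θ_x = p + k sin θ`, `θ_t = A0 + A1 cos θ + A2 sin θ` whose
compatibility condition holds has a solution with any initial datum satisfying the first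
equation. -/
theorem overdetermined_flow {A0 A1 A2 B0 B1 B2 C0 C1 C2 p pt : ℝ → ℝ → ℝ} {k : ℝ}
    (cA0 : Cont₂ A0) (cA1 : Cont₂ A1) (cA2 : Cont₂ A2) (cB0 : Cont₂ B0) (cB1 : Cont₂ B1)
    (cB2 : Cont₂ B2) (cC0 : Cont₂ C0) (cC1 : Cont₂ C1) (cC2 : Cont₂ C2) (cp : Cont₂ p)
    (hA0 : ∀ t x, HasDerivAt (A0 t) (B0 t x) x) (hA1 : ∀ t x, HasDerivAt (A1 t) (B1 t x) x)
    (hA2 : ∀ t x, HasDerivAt (A2 t) (B2 t x) x) (hB0 : ∀ t x, HasDerivAt (B0 t) (C0 t x) x)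
    (hB1 : ∀ t x, HasDerivAt (B1 t) (C1 t x) x) (hB2 : ∀ t x, HasDerivAt (B2 t) (C2 t x) x)
    (hp : ∀ t > 0, ∀ x, HasDerivAt (fun τ => p τ x) (pt t x) t)
    (hc : ∀ t > 0, ∀ x z, pt t x + k * cos z * (A0 t x + A1 t x * cos z + A2 t x * sin z) =
      B0 t x + B1 t x * cos z + B2 t x * sin z
        + (-(A1 t x) * sin z + A2 t x * cos z) * (p t x + k * sin z))
    (θ0 : ℝ → ℝ) (h0 : ∀ x, HasDerivAt θ0 (p 0 x + k * sin (θ0 x)) x) :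
    ∃ θ : ℝ → ℝ → ℝ, (∀ x, θ 0 x = θ0 x) ∧
      (Continuous fun q : ℝ × ℝ => θ (max q.1 0) q.2) ∧
      (∀ t, 0 ≤ t → ∀ x, HasDerivAt (θ t) (p t x + k * sin (θ t x)) x) ∧
      ∀ t x, HasDerivAt (fun τ => θ τ x)
        (A0 t x + A1 t x * cos (θ t x) + A2 t x * sin (θ t x)) t := by
  have ode : ∀ x, ∃ φ : ℝ → ℝ, φ 0 = θ0 x ∧ ∀ t, HasDerivAt φ
      (A0 t x + A1 t x * cos (φ t) + A2 t x * sin (φ t)) t := by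
    intro x
    refine ode_global (f := fun t z => A0 t x + A1 t x * cos z + A2 t x * sin z) ?_ ?_ ?_ (θ0 x)
    · have c0 := cont_time cA0 x
      have c1 := cont_time cA1 x
      have c2 := cont_time cA2 x
      fun_prop
    · intro T
      obtain ⟨M0, _, h0⟩ := box_bound cA0 T |x|
      obtain ⟨M1, m1, h1⟩ := box_bound cA1 T |x|
      obtain ⟨M2, m2, h2⟩ := box_bound cA2 T |x|
      refine ⟨M0 + M1 + M2, fun t z ht => (abs_add_three _ _ _).trans ?_⟩
      rw [abs_mul, abs_mul]
      have a := mul_le_mul (h1 t x ht le_rfl) (abs_cos_le_one z) (abs_nonneg _) m1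
      have b := mul_le_mul (h2 t x ht le_rfl) (abs_sin_le_one z) (abs_nonneg _) m2
      linarith [h0 t x ht le_rfl]
    · intro T
      obtain ⟨M1, m1, h1⟩ := box_bound cA1 T |x|
      obtain ⟨M2, m2, h2⟩ := box_bound cA2 T |x|
      refine ⟨M1 + M2, fun t z z' ht => ?_⟩
      rw [show A0 t x + A1 t x * cos z + A2 t x * sin z - (A0 t x + A1 t x * cos z' + A2 t x * sin z')
        = A1 t x * (cos z - cos z') + A2 t x * (sin z - sin z') by ring]
      refine (abs_add_le _ _).trans ?_
      rw [abs_mul, abs_mul, add_mul]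
      exact add_le_add (mul_le_mul (h1 t x ht le_rfl) (abs_cos_sub_le _ _) (abs_nonneg _) m1)
        (mul_le_mul (h2 t x ht le_rfl) (abs_sin_sub_le _ _) (abs_nonneg _) m2)
  choose φ φ0 hφ using ode
  have cφ := fun x => cont_of_deriv (hφ x)
  -- uniform bounds on a box
  have bounds : ∀ T R : ℝ, ∃ M, 0 < M ∧ ∀ t x, |t| ≤ T → |x| ≤ R → |A0 t x| ≤ M ∧ |A1 t x| ≤ M ∧
      |A2 t x| ≤ M ∧ |B0 t x| ≤ M ∧ |B1 t x| ≤ M ∧ |B2 t x| ≤ M ∧ |C0 t x| ≤ M ∧ |C1 t x| ≤ M ∧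
      |C2 t x| ≤ M ∧ |p t x| ≤ M := by
    intro T R
    obtain ⟨M, M0, hM⟩ := box_bound (f := fun t x => |A0 t x| + |A1 t x| + |A2 t x| + |B0 t x|
      + |B1 t x| + |B2 t x| + |C0 t x| + |C1 t x| + |C2 t x| + |p t x|) (by fun_prop) T R
    refine ⟨1 + M, by positivity, fun t x ht hx => ?_⟩
    have := (le_abs_self _).trans (hM t x ht hx)
    have h := fun f : ℝ → ℝ → ℝ => abs_nonneg (f t x)
    refine ⟨?_, ?_, ?_, ?_, ?_, ?_, ?_, ?_, ?_, ?_⟩ <;>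
      linarith [h A0, h A1, h A2, h B0, h B1, h B2, h C0, h C1, h C2, h p]
  have seg : ∀ {x h z : ℝ}, |h| ≤ 1 → z ∈ uIcc x (x + h) → |z| ≤ |x| + 1 := by
    intro x h z hh hz
    have := abs_sub_left_of_mem_uIcc hz
    rw [add_sub_cancel_left] at this
    have h2 := abs_add_le (z - x) x
    rw [sub_add_cancel] at h2
    linarith
  -- Lipschitz dependence on the parameter
  have lip : ∀ T x : ℝ, 0 ≤ T → ∃ L, 0 ≤ L ∧ ∀ t ∈ Icc 0 T, ∀ h, |h| ≤ 1 →
      |φ (x + h) t - φ x t| ≤ L * |h| := by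
    intro T x hT
    obtain ⟨M, M0, hM⟩ := bounds T (|x| + 1)
    refine ⟨(M + |k| + 3 / 2) * exp (2 * M * T), by positivity, fun t ht h hh => ?_⟩
    have xR : |x| ≤ |x| + 1 := by linarith
    have hT' : |(0:ℝ)| ≤ T := by rwa [abs_zero]
    have i0 : |θ0 (x + h) - θ0 x| ≤ (M + |k|) * |h| := by
      have := lip_of_deriv (M := M + |k|) (x := x) (y := x + h) h0 (fun z hz => by
        refine (abs_add_le _ _).trans (add_le_add (hM 0 z hT' (seg hh hz)).2.2.2.2.2.2.2.2.2 ?_)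
        rw [abs_mul]
        exact mul_le_of_le_one_right (abs_nonneg _) (abs_sin_le_one _))
      rwa [add_sub_cancel_left] at this
    have g := gronwall_open (f := fun t => φ (x + h) t - φ x t) (K := 2 * M) (ε := 3 * M * |h|) (T := T)
      (by positivity) (by positivity) (by fun_prop)
      (fun t _ => (hφ (x + h) t).fun_sub (hφ x t)) (fun t ht => ?_) t ht
    · refine g.trans ?_
      rw [φ0, φ0, show 3 * M * |h| / (2 * M) = 3 / 2 * |h| by field_simp,
        mul_right_comm (M + |k| + 3 / 2)]
      refine mul_mono_r ?_ (exp_pos _).le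
      linarith
    · have htT : |t| ≤ T := by rw [abs_of_pos ht.1]; exact ht.2.le
      obtain ⟨b0, b1, b2, _⟩ := hM t x htT xR
      have l0 := lip_of_deriv (x := x) (y := x + h) (hA0 t) (fun z hz =>
        (hM t z htT (seg hh hz)).2.2.2.1)
      have l1 := lip_of_deriv (x := x) (y := x + h) (hA1 t) (fun z hz =>
        (hM t z htT (seg hh hz)).2.2.2.2.1)
      have l2 := lip_of_deriv (x := x) (y := x + h) (hA2 t) (fun z hz =>
        (hM t z htT (seg hh hz)).2.2.2.2.2.1)
      rw [add_sub_cancel_left] at l0 l1 l2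
      have e1 := term_lip l1 b1 (abs_cos_le_one (φ (x + h) t)) (abs_cos_sub_le (φ x t) (φ (x + h) t))
      have e2 := term_lip l2 b2 (abs_sin_le_one (φ (x + h) t)) (abs_sin_sub_le (φ x t) (φ (x + h) t))
      have := abs_add_three (A0 t (x + h) - A0 t x)
        (A1 t (x + h) * cos (φ (x + h) t) - A1 t x * cos (φ x t))
        (A2 t (x + h) * sin (φ (x + h) t) - A2 t x * sin (φ x t))
      refine le_trans (le_of_eq ?_) (this.trans ?_)
      · congr 1; ring
      · linarith
  refine ⟨fun t x => φ x t, φ0, ?_, ?_, fun t x => hφ x t⟩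
  · rw [continuous_iff_continuousAt]
    rintro ⟨t0, x0⟩
    obtain ⟨L, L0, hL⟩ := lip (|t0| + 1) x0 (by positivity)
    have h1 : Tendsto (fun q : ℝ × ℝ => φ x0 (max q.1 0)) (nhds (t0, x0))
        (nhds (φ x0 (max t0 0))) :=
      ((cφ x0).comp (continuous_fst.max continuous_const)).tendsto (t0, x0)
    have h2 : Tendsto (fun q : ℝ × ℝ => φ q.2 (max q.1 0) - φ x0 (max q.1 0)) (nhds (t0, x0))
        (nhds 0) := by
      have h3 : Tendsto (fun q : ℝ × ℝ => L * |q.2 - x0|) (nhds (t0, x0)) (nhds 0) := by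
        have : Continuous fun q : ℝ × ℝ => L * |q.2 - x0| := by fun_prop
        simpa using this.tendsto (t0, x0)
      refine squeeze_zero_norm' ?_ h3
      have lt1 : ∀ f : ℝ × ℝ → ℝ, Continuous f → f (t0, x0) = 0 → ∀ᶠ q in nhds (t0, x0), f q < 1 :=
        fun f cf h => cf.continuousAt.eventually_lt continuousAt_const (by simp [h])
      have e1 := lt1 (fun q => |q.1 - t0|) (by fun_prop) (by simp)
      have e2 := lt1 (fun q => |q.2 - x0|) (by fun_prop) (by simp)
      filter_upwards [e1, e2] with q h1 h2
      have := hL (max q.1 0) ⟨le_max_right _ _, max_le (by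
        have := abs_add_le (q.1 - t0) t0
        rw [sub_add_cancel] at this
        linarith [le_abs_self q.1]) (by positivity)⟩ (q.2 - x0) h2.le
      rwa [add_sub_cancel] at this
    have := h2.add h1
    simpa [ContinuousAt] using this
  · intro t ht x
    obtain ⟨M, M0, hM⟩ := bounds t (|x| + 1)
    obtain ⟨L, L0, hL⟩ := lip t x ht
    have xR : |x| ≤ |x| + 1 := by linarith
    obtain ⟨E, hE⟩ : ∃ E, E = 3 * M * (1 + L + L ^ 2) := ⟨_, rfl⟩
    have E0 : 0 ≤ E := by rw [hE]; positivity
    have key : ∀ h, |h| ≤ 1 → |φ (x + h) t - φ x t - h * (p t x + k * sin (φ x t))| ≤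
        (|θ0 (x + h) - θ0 x - h * (p 0 x + k * sin (θ0 x))| + E * h ^ 2 / (2 * M)) * exp (2 * M * t) := by
      intro h hh
      have g := gronwall_open (f := fun t => φ (x + h) t - φ x t - h * (p t x + k * sin (φ x t)))
        (K := 2 * M) (ε := E * h ^ 2) (T := t)
        (by positivity) (by positivity) (by have := cont_time cp x; fun_prop)
        (fun s hs => ((hφ (x + h) s).fun_sub (hφ x s)).fun_sub
          (((hp s hs.1 x).fun_add ((hφ x s).sin.const_mul k)).const_mul h)) (fun s hs => ?_) t ⟨ht, le_rfl⟩
      · simpa only [φ0] using g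
      · have htT : |s| ≤ t := by rw [abs_of_pos hs.1]; exact hs.2.le
        obtain ⟨b0, b1, b2, b3, b4, b5, _⟩ := hM s x htT xR
        have t0 := taylor_two (x := x) (y := x + h) (hA0 s) (hB0 s) (fun z hz =>
          (hM s z htT (seg hh hz)).2.2.2.2.2.2.1)
        have t1 := taylor_two (x := x) (y := x + h) (hA1 s) (hB1 s) (fun z hz =>
          (hM s z htT (seg hh hz)).2.2.2.2.2.2.2.1)
        have t2 := taylor_two (x := x) (y := x + h) (hA2 s) (hB2 s) (fun z hz =>
          (hM s z htT (seg hh hz)).2.2.2.2.2.2.2.2.1)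
        rw [add_sub_cancel_left] at t0 t1 t2
        have hΔ := hL s ⟨hs.1.le, hs.2.le⟩ h hh
        have cc := hc s hs.1 x (φ x s)
        obtain ⟨y, hy⟩ : ∃ y, y = φ (x + h) s := ⟨_, rfl⟩
        obtain ⟨z, hz⟩ : ∃ z, z = φ x s := ⟨_, rfl⟩
        rw [← hy, ← hz] at hΔ ⊢
        rw [← hz] at cc
        have e1 := term_taylor (σ := -sin z) (d := y - z) t1 b1 b4 (abs_cos_le_one y) (abs_cos_sub_le z y)
          (by have := taylor_cos z y; rwa [neg_mul, sub_neg_eq_add])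
        have e2 := term_taylor (σ := cos z) (d := y - z) t2 b2 b5 (abs_sin_le_one y)
          (abs_sin_sub_le z y) (taylor_sin z y)
        have d2 : (y - z) ^ 2 ≤ L ^ 2 * h ^ 2 := by
          rw [← sq_abs (y - z), ← sq_abs h, ← mul_pow]
          exact pow_le_pow_left₀ (abs_nonneg _) hΔ 2
        have d1 : |h| * |y - z| ≤ L * h ^ 2 := by
          have := mul_mono_l hΔ (abs_nonneg h)
          rw [← sq_abs h]; linarith
        have d3 : M * (h ^ 2 + |h| * |y - z| + (y - z) ^ 2) ≤ M * ((1 + L + L ^ 2) * h ^ 2) :=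
          mul_mono_l (by linarith) M0.le
        have d4 : M * h ^ 2 ≤ M * ((1 + L + L ^ 2) * h ^ 2) :=
          mul_mono_l (by nlinarith [mul_nonneg L0 (sq_nonneg h), sq_nonneg (L * h)]) M0.le
        obtain ⟨D, hD⟩ : ∃ D, D = y - z - h * (p s x + k * sin z) := ⟨_, rfl⟩
        have e3 : |(-(A1 s x) * sin z + A2 s x * cos z) * D| ≤ 2 * M * |D| := by
          rw [abs_mul]
          refine mul_mono_r ((abs_add_le _ _).trans ?_) (abs_nonneg _)
          rw [abs_mul, abs_mul, abs_neg]
          have a := mul_le_mul b1 (abs_sin_le_one z) (abs_nonneg _) M0.le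
          have b := mul_le_mul b2 (abs_cos_le_one z) (abs_nonneg _) M0.le
          linarith
        rw [← hD]
        have id : A0 s (x + h) + A1 s (x + h) * cos y + A2 s (x + h) * sin y
            - (A0 s x + A1 s x * cos z + A2 s x * sin z)
            - h * (pt s x + k * (cos z * (A0 s x + A1 s x * cos z + A2 s x * sin z)))
            = (A0 s (x + h) - A0 s x - B0 s x * h)
              + (A1 s (x + h) * cos y - A1 s x * cos z - B1 s x * cos z * h - A1 s x * -sin z * (y - z))
              + (A2 s (x + h) * sin y - A2 s x * sin z - B2 s x * sin z * h - A2 s x * cos z * (y - z))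
              + (-(A1 s x) * sin z + A2 s x * cos z) * D := by
          rw [hD]; linear_combination (-h) * cc
        rw [id]
        refine (abs_add_le _ _).trans ((add_le_add_left (abs_add_three _ _ _) _).trans ?_)
        have : E * h ^ 2 = 3 * (M * ((1 + L + L ^ 2) * h ^ 2)) := by rw [hE]; ring
        linarith
    rw [hasDerivAt_iff_isLittleO_nhds_zero]
    have z0 := hasDerivAt_iff_isLittleO_nhds_zero.1 (h0 x)
    have big : (fun h => φ (x + h) t - φ x t - h • (p t x + k * sin (φ x t))) =O[nhds 0]
        (fun h => |θ0 (x + h) - θ0 x - h • (p 0 x + k * sin (θ0 x))| + E * h ^ 2 / (2 * M)) := by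
      refine Asymptotics.IsBigO.of_bound (exp (2 * M * t)) ?_
      have : ∀ᶠ h : ℝ in nhds 0, |h| < 1 :=
        continuous_abs.continuousAt.eventually_lt continuousAt_const (by simp)
      filter_upwards [this] with h hh
      rw [norm_eq_abs, norm_eq_abs, abs_of_nonneg (by positivity : 0 ≤ _ + E * h ^ 2 / (2 * M)), mul_comm (exp _)]
      exact key h hh.le
    refine big.trans_isLittleO ((z0.norm_left).add ?_)
    simp only [mul_div_right_comm]
    exact (Asymptotics.isLittleO_pow_id (by norm_num)).const_mul_left _

/-- The Bäcklund angle of a solution `U`: given at time zero, it extends to all times `t ≥ 0` as a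
simultaneous solution of the spatial and temporal Riccati equations. -/
theorem backlund_flow {U : Jet} (hU : MJet U) (hmax : ∀ k t, U k (max t 0) = U k t)
    (κ : ℝ) (θ0 : ℝ → ℝ) (h0 : ∀ x, HasDerivAt θ0 (-2 * U 0 0 x + 2 * κ * sin (θ0 x)) x) :
    ∃ θ : ℝ → ℝ → ℝ, (∀ x, θ 0 x = θ0 x) ∧ (∀ t, θ (max t 0) = θ t) ∧
      (Continuous fun q : ℝ × ℝ => θ q.1 q.2) ∧
      (∀ t x, HasDerivAt (θ t) (-2 * U 0 t x + 2 * κ * sin (θ t x)) x) ∧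
      ∀ t > 0, ∀ x, HasDerivAt (fun τ => θ τ x)
        (2 * U 2 t x + 4 * U 0 t x ^ 3 + 8 * κ ^ 2 * U 0 t x + 4 * κ * U 1 t x * cos (θ t x)
          + -(8 * κ ^ 3 + 4 * κ * U 0 t x ^ 2) * sin (θ t x)) t := by
  obtain ⟨c0, c1, c2, c3, c4⟩ := hU.conts
  obtain ⟨d0, d1, d2, d3⟩ := hU.derivs
  obtain ⟨θ, e0, e1, e2, e3⟩ := overdetermined_flow
    (A0 := fun t x => 2 * U 2 t x + 4 * U 0 t x ^ 3 + 8 * κ ^ 2 * U 0 t x)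
    (A1 := fun t x => 4 * κ * U 1 t x)
    (A2 := fun t x => -(8 * κ ^ 3 + 4 * κ * U 0 t x ^ 2))
    (B0 := fun t x => 2 * U 3 t x + 12 * (U 0 t x ^ 2 * U 1 t x) + 8 * κ ^ 2 * U 1 t x)
    (B1 := fun t x => 4 * κ * U 2 t x)
    (B2 := fun t x => -(8 * κ) * (U 0 t x * U 1 t x))
    (C0 := fun t x => 2 * U 4 t x + 12 * (2 * U 0 t x * U 1 t x * U 1 t x + U 0 t x ^ 2 * U 2 t x)
      + 8 * κ ^ 2 * U 2 t x)
    (C1 := fun t x => 4 * κ * U 3 t x)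
    (C2 := fun t x => -(8 * κ) * (U 1 t x * U 1 t x + U 0 t x * U 2 t x))
    (p := fun t x => -2 * U 0 t x)
    (pt := fun t x => -2 * (-(U 3 t x + 6 * U 0 t x ^ 2 * U 1 t x))) (k := 2 * κ)
    (by fun_prop) (by fun_prop) (by fun_prop) (by fun_prop) (by fun_prop) (by fun_prop)
    (by fun_prop) (by fun_prop) (by fun_prop) (by fun_prop)
    (fun t x => ((((d2 t x).const_mul 2).fun_add (((d0 t x).fun_pow 3).const_mul 4)).fun_add
      ((d0 t x).const_mul (8 * κ ^ 2))).congr_deriv (by push_cast; ring))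
    (fun t x => (d1 t x).const_mul _)
    (fun t x => (((((d0 t x).fun_pow 2).const_mul (4 * κ)).const_add (8 * κ ^ 3)).fun_neg).congr_deriv
      (by push_cast; ring))
    (fun t x => ((((d3 t x).const_mul 2).fun_add ((((d0 t x).fun_pow 2).fun_mul (d1 t x)).const_mul 12)).fun_add
      ((d1 t x).const_mul (8 * κ ^ 2))).congr_deriv (by push_cast; ring))
    (fun t x => (d2 t x).const_mul _)
    (fun t x => ((d0 t x).fun_mul (d1 t x)).const_mul _)
    (fun t ht x => (hU.ht0 t ht x).const_mul (-2))
    (fun t _ x z => by linear_combination (8 * κ ^ 2 * U 1 t x) * (sin_sq_add_cos_sq z))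
    θ0 h0
  refine ⟨fun t => θ (max t 0), by simpa using e0, fun t => by simp, e1, fun t x => ?_, fun t ht x => ?_⟩
  · have := e2 (max t 0) (le_max_right _ _) x
    rw [hmax] at this
    exact this
  · have h := e3 t x
    beta_reduce
    rw [max_eq_left ht.le]
    refine h.congr_of_eventuallyEq ?_
    filter_upwards [Ioi_mem_nhds ht] with τ hτ
    rw [max_eq_left (le_of_lt hτ)]

/-! ### The transformed solution -/

/-- The first four `x`-derivatives of `sin θ`, computed from `θ_x = -2U + 2κ sin θ`. -/
def sinJet (κ : ℝ) (U : Jet) (θ : ℝ → ℝ → ℝ) (k : ℕ) (t x : ℝ) : ℝ :=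
  let S := sin (θ t x)
  let C := cos (θ t x)
  let P0 := -2 * U 0 t x + 2 * κ * S
  let P1 := -2 * U 1 t x + 2 * κ * (C * P0)
  let P2 := -2 * U 2 t x + 2 * κ * (-S * P0 ^ 2 + C * P1)
  let P3 := -2 * U 3 t x + 2 * κ * (-C * P0 ^ 3 - 3 * S * P0 * P1 + C * P2)
  match k with
  | 0 => S
  | 1 => C * P0
  | 2 => -S * P0 ^ 2 + C * P1
  | 3 => -C * P0 ^ 3 - 3 * S * P0 * P1 + C * P2
  | _ => S * P0 ^ 4 - 6 * C * P0 ^ 2 * P1 - 3 * S * P1 ^ 2 - 4 * S * P0 * P2 + C * P3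

/-- The jet of the Bäcklund transform `q = U - 2κ sin θ`. -/
def qJet (κ : ℝ) (U : Jet) (θ : ℝ → ℝ → ℝ) (k : ℕ) (t x : ℝ) : ℝ :=
  U k t x - 2 * κ * sinJet κ U θ k t x

/-- `θ` solves both Riccati equations relating `U` to its Bäcklund transform with parameter `κ`. -/
structure IsAngle (κ : ℝ) (U : Jet) (θ : ℝ → ℝ → ℝ) : Prop where
  cont : Continuous fun q : ℝ × ℝ => θ q.1 q.2
  hx : ∀ t x, HasDerivAt (θ t) (-2 * U 0 t x + 2 * κ * sin (θ t x)) x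
  ht : ∀ t > 0, ∀ x, HasDerivAt (fun τ => θ τ x)
    (2 * U 2 t x + 4 * U 0 t x ^ 3 + 8 * κ ^ 2 * U 0 t x + 4 * κ * U 1 t x * cos (θ t x)
      + -(8 * κ ^ 3 + 4 * κ * U 0 t x ^ 2) * sin (θ t x)) t

section Transform

variable {κ : ℝ} {U : Jet} {θ : ℝ → ℝ → ℝ}

lemma IsAngle.hx' (h : IsAngle κ U θ) (t x : ℝ) :
    HasDerivAt (θ t) (-2 * qJet κ U θ 0 t x - 2 * κ * sin (θ t x)) x :=
  (h.hx t x).congr_deriv (by simp only [qJet, sinJet]; ring)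

/-- The temporal equation written in terms of the transform. -/
lemma IsAngle.ht' (h : IsAngle κ U θ) {t : ℝ} (ht : 0 < t) (x : ℝ) :
    HasDerivAt (fun τ => θ τ x) (2 * qJet κ U θ 2 t x - 4 * κ * qJet κ U θ 1 t x * cos (θ t x)
      + 4 * qJet κ U θ 0 t x ^ 3 + 8 * κ ^ 2 * qJet κ U θ 0 t x
      + (8 * κ ^ 3 + 4 * κ * qJet κ U θ 0 t x ^ 2) * sin (θ t x)) t :=
  (h.ht t ht x).congr_deriv (by simp only [qJet, sinJet]; ring)

lemma sinJet_hx (hU : MJet U) (h : IsAngle κ U θ) (k : ℕ) (hk : k < 4) (t x : ℝ) :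
    HasDerivAt (sinJet κ U θ k t) (sinJet κ U θ (k + 1) t x) x := by
  have dθ := h.hx t x
  have hS := dθ.sin
  have hC := dθ.cos
  obtain ⟨d0, d1, d2, -⟩ := hU.derivs
  have p0 := ((d0 t x).const_mul (-2)).fun_add (hS.const_mul (2 * κ))
  have p1 := ((d1 t x).const_mul (-2)).fun_add ((hC.fun_mul p0).const_mul (2 * κ))
  have p2 := ((d2 t x).const_mul (-2)).fun_add
    (((hS.fun_neg.fun_mul (p0.fun_pow 2)).fun_add (hC.fun_mul p1)).const_mul (2 * κ))
  interval_cases k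
  · exact hS
  · exact (hC.fun_mul p0).congr_deriv (by simp only [sinJet]; ring)
  · exact ((hS.fun_neg.fun_mul (p0.fun_pow 2)).fun_add (hC.fun_mul p1)).congr_deriv
      (by simp only [sinJet]; push_cast; ring)
  · exact (((hC.fun_neg.fun_mul (p0.fun_pow 3)).fun_sub (((hS.const_mul 3).fun_mul p0).fun_mul p1)).fun_add
      (hC.fun_mul p2)).congr_deriv (by simp only [sinJet]; push_cast; ring)

lemma sinJet_cont (hU : MJet U) (h : IsAngle κ U θ) (k : ℕ) (hk : k ≤ 4) :
    Continuous fun p : ℝ × ℝ => sinJet κ U θ k p.1 p.2 := by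
  have cθ := h.cont
  obtain ⟨c0, c1, c2, c3, -⟩ := hU.conts
  interval_cases k <;> simp only [sinJet] <;> fun_prop

/-- The Bäcklund transform of a solution is a solution. -/
theorem qJet_mjet (hU : MJet U) (h : IsAngle κ U θ) : MJet (qJet κ U θ) := by
  refine ⟨fun k hk => (hU.cont k hk).sub (continuous_const.mul (sinJet_cont hU h k hk)),
    fun k hk t x => (hU.hx k hk t x).fun_sub ((sinJet_hx hU h k hk t x).const_mul (2 * κ)),
    fun t ht x => ?_, fun t ht x => ?_⟩
  · have d0 := hU.ht0 t ht x
    have dθ := h.ht t ht x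
    refine (d0.fun_sub (dθ.sin.const_mul (2 * κ))).congr_deriv ?_
    simp only [qJet, sinJet]
    linear_combination (16 * κ ^ 3 * cos (θ t x) * U 0 t x - 16 * κ ^ 4 * sin (θ t x) * cos (θ t x))
      * sin_sq_add_cos_sq (θ t x)
  · have d0 := hU.ht0 t ht x
    have d1 := hU.ht1 t ht x
    have dθ := h.ht t ht x
    refine (d1.fun_sub ((dθ.cos.fun_mul ((d0.const_mul (-2)).fun_add
      (dθ.sin.const_mul (2 * κ)))).const_mul (2 * κ))).congr_deriv ?_
    simp only [qJet, sinJet]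
    obtain ⟨S, hS⟩ : ∃ S, S = sin (θ t x) := ⟨_, rfl⟩
    obtain ⟨C, hC⟩ : ∃ C, C = cos (θ t x) := ⟨_, rfl⟩
    have id := sin_sq_add_cos_sq (θ t x)
    rw [← hS, ← hC] at id ⊢
    linear_combination (32 * κ ^ 3 * S * U 0 t x ^ 2 - 64 * κ ^ 4 * S ^ 2 * U 0 t x
      + 32 * κ ^ 4 * C ^ 2 * U 0 t x - 32 * κ ^ 5 * S * C ^ 2 + 32 * κ ^ 5 * S ^ 3) * id

/-- A nonnegative continuous function with bounded integrals over all intervals `[-R, R]`. -/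
lemma integrable_of_boxes {f : ℝ → ℝ} {B : ℝ} (cf : Continuous f) (f0 : ∀ x, 0 ≤ f x)
    (hB : ∀ R, 0 ≤ R → ∫ x in (-R)..R, f x ≤ B) : Integrable f ∧ ∫ x, f x ≤ B := by
  have hi : Integrable f := by
    refine integrable_of_intervalIntegral_norm_bounded (a := fun n : ℕ => -(n : ℝ)) (b := fun n : ℕ => (n : ℝ))
      (l := atTop) B (fun n => (cf.integrableOn_Icc).mono_set Ioc_subset_Icc_self)
      (tendsto_neg_atTop_atBot.comp tendsto_natCast_atTop_atTop) tendsto_natCast_atTop_atTop ?_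
    filter_upwards with n
    simp only [norm_eq_abs, abs_of_nonneg (f0 _)]
    exact hB n (Nat.cast_nonneg n)
  refine ⟨hi, le_of_tendsto (intervalIntegral_tendsto_integral (a := fun n : ℕ => -(n : ℝ))
    (b := fun n : ℕ => (n : ℝ)) hi (tendsto_neg_atTop_atBot.comp tendsto_natCast_atTop_atTop)
    tendsto_natCast_atTop_atTop) ?_⟩
  filter_upwards with n using hB n (Nat.cast_nonneg n)

/-- The spatial Riccati equation forces `sin θ` to be square integrable, since
`(cos θ)' = 2U sin θ - 2κ sin² θ`. -/
lemma sin_sq_integrable (hκ : 0 < κ) (hU : MJet U) (h : IsAngle κ U θ) {t : ℝ}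
    (i0 : Integrable fun x => U 0 t x ^ 2) : (Integrable fun x => sin (θ t x) ^ 2) ∧
      ∫ x, sin (θ t x) ^ 2 ≤ 2 / κ + (∫ x, U 0 t x ^ 2) / κ ^ 2 := by
  have cθ := cont_slice h.cont t
  have cU := cont_slice (hU.cont 0 (by norm_num)) t
  refine integrable_of_boxes (by fun_prop) (fun x => sq_nonneg _) fun R hR => ?_
  have ftc := integral_eq_sub_of_hasDerivAt (a := -R) (b := R)
    (fun x _ => (h.hx t x).cos) cont_ii
  have le1 : ∫ x in (-R)..R, κ * sin (θ t x) ^ 2 ≤ ∫ x in (-R)..R,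
      (-(-sin (θ t x) * (-2 * U 0 t x + 2 * κ * sin (θ t x))) + κ⁻¹ * U 0 t x ^ 2) := by
    refine integral_mono_on (by linarith) cont_ii
      cont_ii fun x _ => ?_
    have : 0 ≤ κ⁻¹ * (κ * sin (θ t x) - U 0 t x) ^ 2 := by positivity
    have e : κ⁻¹ * (κ * sin (θ t x) - U 0 t x) ^ 2 = κ * sin (θ t x) ^ 2 - 2 * sin (θ t x) * U 0 t x
      + κ⁻¹ * U 0 t x ^ 2 := by field_simp; ring
    linarith
  rw [intervalIntegral.integral_add cont_ii
    cont_ii, intervalIntegral.integral_neg, ftc,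
    intervalIntegral.integral_const_mul, intervalIntegral.integral_const_mul] at le1
  have le2 : ∫ x in (-R)..R, U 0 t x ^ 2 ≤ ∫ x, U 0 t x ^ 2 := by
    rw [integral_of_le (by linarith)]
    exact setIntegral_le_integral i0 (.of_forall fun x => sq_nonneg _)
  have c1 := abs_le.1 (abs_cos_le_one (θ t R))
  have c2 := abs_le.1 (abs_cos_le_one (θ t (-R)))
  have le3 := mul_mono_l le2 (inv_nonneg.2 hκ.le)
  have fin : κ * ∫ x in (-R)..R, sin (θ t x) ^ 2 ≤ 2 + κ⁻¹ * ∫ x, U 0 t x ^ 2 := by linarith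
  have := mul_mono_l fin (inv_nonneg.2 hκ.le)
  rw [inv_mul_cancel_left₀ hκ.ne'] at this
  refine this.trans (le_of_eq ?_)
  field_simp

lemma sqb_add {a b α β X : ℝ} (ha : a ^ 2 ≤ α * X) (hb : b ^ 2 ≤ β * X) :
    (a + b) ^ 2 ≤ (2 * (α + β)) * X := by nlinarith [sq_nonneg (a - b)]

lemma sqb_sub {a b α β X : ℝ} (ha : a ^ 2 ≤ α * X) (hb : b ^ 2 ≤ β * X) :
    (a - b) ^ 2 ≤ (2 * (α + β)) * X := by nlinarith [sq_nonneg (a + b)]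

lemma sqb_mul {a c α γ X : ℝ} (hc : c ^ 2 ≤ γ) (ha : a ^ 2 ≤ α * X) :
    (c * a) ^ 2 ≤ (γ * α) * X := by
  rw [mul_pow, mul_assoc]
  exact mul_le_mul hc ha (sq_nonneg _) ((sq_nonneg _).trans hc)

lemma qJet_pointwise (κ N : ℝ) : ∃ D, 0 ≤ D ∧ ∀ (U : Jet) (θ : ℝ → ℝ → ℝ) (τ x : ℝ),
    U 0 τ x ^ 2 ≤ N → ∀ k ≤ 2, qJet κ U θ k τ x ^ 2 ≤
      D * ((U 0 τ x ^ 2 + U 1 τ x ^ 2 + U 2 τ x ^ 2) + sin (θ τ x) ^ 2) := by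
  obtain ⟨A, hA⟩ : ∃ A, A = 2 * ((-2:ℝ) ^ 2 * 1 + (2 * κ) ^ 2 * 1) := ⟨_, rfl⟩
  obtain ⟨B, hB⟩ : ∃ B, B = 2 * ((-2:ℝ) ^ 2 * 1 + (2 * κ) ^ 2 * (1 * A)) := ⟨_, rfl⟩
  have A0 : 0 ≤ A := by rw [hA]; positivity
  have B0 : 0 ≤ B := by rw [hB]; positivity
  refine ⟨2 * (1 + (2 * κ) ^ 2 * 1) + 2 * (1 + (2 * κ) ^ 2 * (1 * A))
    + 2 * (1 + (2 * κ) ^ 2 * (2 * ((8 * |N| + 8 * κ ^ 2) * A + 1 * B))), by positivity,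
    fun U θ τ x h k hk => ?_⟩
  obtain ⟨X, hX⟩ : ∃ X, X = (U 0 τ x ^ 2 + U 1 τ x ^ 2 + U 2 τ x ^ 2) + sin (θ τ x) ^ 2 := ⟨_, rfl⟩
  have X0 : 0 ≤ X := by rw [hX]; positivity
  obtain ⟨b0, b1, b2, b3⟩ : U 0 τ x ^ 2 ≤ 1 * X ∧ U 1 τ x ^ 2 ≤ 1 * X ∧ U 2 τ x ^ 2 ≤ 1 * X ∧
      sin (θ τ x) ^ 2 ≤ 1 * X := by
    refine ⟨?_, ?_, ?_, ?_⟩ <;>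
      linarith [sq_nonneg (U 0 τ x), sq_nonneg (U 1 τ x), sq_nonneg (U 2 τ x), sq_nonneg (sin (θ τ x))]
  rw [← hX]
  have C1 := cos_sq_le_one (θ τ x)
  have P0 := sqb_add (sqb_mul (le_refl ((-2:ℝ) ^ 2)) b0) (sqb_mul (le_refl ((2 * κ) ^ 2)) b3)
  rw [← hA] at P0
  have P1 := sqb_add (sqb_mul (le_refl ((-2:ℝ) ^ 2)) b1)
    (sqb_mul (le_refl ((2 * κ) ^ 2)) (sqb_mul C1 P0))
  rw [← hB] at P1
  have Ps : (-sin (θ τ x) * (-2 * U 0 τ x + 2 * κ * sin (θ τ x))) ^ 2 ≤ 8 * |N| + 8 * κ ^ 2 := by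
    have S1 := sin_sq_le_one (θ τ x)
    have := mul_mono_l S1 (sq_nonneg κ)
    rw [mul_pow, neg_sq]
    refine (mul_le_of_le_one_left (sq_nonneg _) S1).trans ?_
    nlinarith [sq_nonneg (-2 * U 0 τ x - 2 * κ * sin (θ τ x)), le_abs_self N]
  have n1 : 0 ≤ 2 * (1 + (2 * κ) ^ 2 * 1) * X := by positivity
  have n2 : 0 ≤ 2 * (1 + (2 * κ) ^ 2 * (1 * A)) * X := by positivity
  have n3 : 0 ≤ 2 * (1 + (2 * κ) ^ 2 * (2 * ((8 * |N| + 8 * κ ^ 2) * A + 1 * B))) * X := by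
    positivity
  rw [add_mul, add_mul]
  interval_cases k
  · refine (sqb_sub b0 (sqb_mul (le_refl ((2 * κ) ^ 2)) b3)).trans ?_
    linarith
  · refine (sqb_sub b1 (sqb_mul (le_refl ((2 * κ) ^ 2)) (sqb_mul C1 P0))).trans ?_
    linarith
  · refine le_trans (le_of_eq ?_) ((sqb_sub b2 (sqb_mul (le_refl ((2 * κ) ^ 2))
      (sqb_add (sqb_mul Ps P0) (sqb_mul C1 P1)))).trans (le_add_of_nonneg_left (add_nonneg n1 n2)))
    simp only [qJet, sinJet]
    ring

/-- Local bounds for the transform up to two derivatives. -/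
theorem qJet_bdd (hκ : 0 < κ) (hU : MJet U) (h : IsAngle κ U θ) {N T : ℝ} (hN : BddOn U 2 N 0 T) :
    ∃ N', BddOn (qJet κ U θ) 2 N' 0 T := by
  have hQ := qJet_mjet hU h
  obtain ⟨D, D0, hD⟩ := qJet_pointwise κ (2 * N)
  refine ⟨D * (3 * N + (2 / κ + N / κ ^ 2)), fun τ hτ k hk => ?_⟩
  have s := sin_sq_integrable hκ hU h (hN τ hτ 0 (by norm_num)).1
  have s2 : ∫ x, sin (θ τ x) ^ 2 ≤ 2 / κ + N / κ ^ 2 := s.2.trans (by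
    have := div_le_div_of_nonneg_right (hN τ hτ 0 (by norm_num)).2 (sq_nonneg κ)
    linarith)
  obtain ⟨i0, j0⟩ := hN τ hτ 0 (by norm_num)
  obtain ⟨i1, j1⟩ := hN τ hτ 1 (by norm_num)
  obtain ⟨i2, j2⟩ := hN τ hτ 2 (by norm_num)
  have key := fun x => hD U θ τ x (hN.sup hU hτ (k := 0) (by norm_num) (by norm_num) x) k hk
  have iX := (((i0.add i1).add i2).add s.1).const_mul D
  have iq : Integrable fun x => qJet κ U θ k τ x ^ 2 :=
    (integrable_of_abs_le (f := fun x => qJet κ U θ k τ x ^ 2)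
      ((cont_slice (hQ.cont k (by omega)) τ).pow 2) iX (fun x => by
      rw [abs_of_nonneg (sq_nonneg _)]; exact key x)).1
  refine ⟨iq, (integral_mono iq iX key).trans ?_⟩
  rw [integral_const_mul, integral_add' ((i0.add i1).add i2) s.1, integral_add' (i0.add i1) i2,
    integral_add' i0 i1]
  exact mul_mono_l (by linarith) D0

end Transform

/-! ### Smallness and almost monotonicity of the energy of the transform -/

/-- First derivative of `rho`. -/
def rho1 (δ x : ℝ) : ℝ := δ * sech (δ * x) ^ 2
/-- Second derivative of `rho`. -/
def rho2 (δ x : ℝ) : ℝ := -2 * δ ^ 2 * (sech (δ * x) ^ 2 * tanh (δ * x))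
/-- Third derivative of `rho`. -/
def rho3 (δ x : ℝ) : ℝ :=
  δ ^ 3 * (4 * (sech (δ * x) ^ 2 * tanh (δ * x) ^ 2) - 2 * sech (δ * x) ^ 4)

lemma hasDerivAt_scaled (δ x : ℝ) : HasDerivAt (fun x : ℝ => δ * x) δ x := by
  simpa using (hasDerivAt_id x).const_mul δ

lemma hasDerivAt_tanh_scaled (δ x : ℝ) :
    HasDerivAt (fun x => tanh (δ * x)) (δ * sech (δ * x) ^ 2) x :=
  ((hasDerivAt_tanh (δ * x)).comp x (hasDerivAt_scaled δ x)).congr_deriv (by ring)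

lemma hasDerivAt_sech_scaled (δ x : ℝ) :
    HasDerivAt (fun x => sech (δ * x)) (-δ * (sech (δ * x) * tanh (δ * x))) x :=
  ((hasDerivAt_sech (δ * x)).comp x (hasDerivAt_scaled δ x)).congr_deriv (by ring)

lemma hasDerivAt_rho (δ x : ℝ) : HasDerivAt (rho δ) (rho1 δ x) x :=
  (hasDerivAt_tanh_scaled δ x).const_add 1

lemma hasDerivAt_rho1 (δ x : ℝ) : HasDerivAt (rho1 δ) (rho2 δ x) x :=
  (((hasDerivAt_sech_scaled δ x).fun_pow 2).const_mul δ).congr_deriv (by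
    unfold rho2; push_cast; ring)

lemma hasDerivAt_rho2 (δ x : ℝ) : HasDerivAt (rho2 δ) (rho3 δ x) x :=
  ((((hasDerivAt_sech_scaled δ x).fun_pow 2).fun_mul
    (hasDerivAt_tanh_scaled δ x)).const_mul (-2 * δ ^ 2)).congr_deriv (by
    unfold rho3; push_cast; ring)

lemma continuous_rho1 (δ : ℝ) : Continuous (rho1 δ) :=
  cont_of_deriv (hasDerivAt_rho1 δ)

lemma continuous_rho3 (δ : ℝ) : Continuous (rho3 δ) := by
  have c1 := continuous_sech_mul δ
  have c2 : Continuous fun x => tanh (δ * x) := continuous_tanh'.comp (continuous_const.mul continuous_id)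
  unfold rho3
  fun_prop

lemma rho1_nonneg {δ : ℝ} (hδ : 0 < δ) (x : ℝ) : 0 ≤ rho1 δ x := by unfold rho1; positivity

lemma sech_sq_le_one (x : ℝ) : sech x ^ 2 ≤ 1 := by
  linarith [sech_sq_add_tanh_sq x, sq_nonneg (tanh x)]

lemma abs_rho3_le {δ : ℝ} (hδ : 0 < δ) (x : ℝ) : |rho3 δ x| ≤ 4 * δ ^ 2 * rho1 δ x := by
  have h := sech_sq_add_tanh_sq (δ * x)
  obtain ⟨s, hs⟩ : ∃ s, s = sech (δ * x) ^ 2 := ⟨_, rfl⟩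
  obtain ⟨T, hT⟩ : ∃ T, T = tanh (δ * x) ^ 2 := ⟨_, rfl⟩
  have s0 : 0 ≤ s := by rw [hs]; positivity
  have T0 : 0 ≤ T := by rw [hT]; positivity
  have e3 : rho3 δ x = δ ^ 3 * (4 * (s * T) - 2 * (s * s)) := by unfold rho3; rw [hs, hT]; ring
  have e1 : 4 * δ ^ 2 * rho1 δ x = δ ^ 3 * (4 * s) := by unfold rho1; rw [hs]; ring
  rw [← hs, ← hT] at h
  rw [e3, e1, abs_mul, abs_of_pos (by positivity : 0 < δ ^ 3)]
  refine mul_mono_l ?_ (by positivity)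
  rw [abs_le]
  constructor <;> nlinarith

/-- Conservation of mass and energy keeps a small solution small. -/
theorem h1_small {q : Jet} (hq : MJet q) {t N E : ℝ} (ht : 0 ≤ t) (hb : BddOn q 2 N 0 t)
    (hE : 2 * E ≤ 1) (h0 : ∫ x, q 0 0 x ^ 2 ≤ E) (h1 : ∫ x, q 1 0 x ^ 2 ≤ E) :
    ∫ x, q 0 t x ^ 2 ≤ E ∧ ∫ x, q 1 t x ^ 2 ≤ 3 * E ∧ ∀ x, q 0 t x ^ 2 ≤ 4 * E := by
  have mt : t ∈ Icc 0 t := ⟨ht, le_rfl⟩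
  have m0 : (0:ℝ) ∈ Icc 0 t := ⟨le_rfl, ht⟩
  have E0 : 0 ≤ E := (integral_nonneg fun x => sq_nonneg _).trans h0
  have mass := (mass_law hq le_rfl ht (hb.mono (by norm_num : 1 ≤ 2) le_rfl le_rfl)).conserved ht
  have en := (energy_law hq le_rfl ht hb).conserved ht
  have a : ∫ x, q 0 t x ^ 2 ≤ E := mass.le.trans h0
  have i0 := (hb t mt 0 (by norm_num)).1
  have i1 := (hb t mt 1 (by norm_num)).1
  have sup : ∀ x, q 0 t x ^ 2 ≤ E + ∫ x, q 1 t x ^ 2 := by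
    intro x
    have := sup_sq (fun x => hq.hx 0 (by norm_num) t x) (cont_slice (hq.cont 1 (by norm_num)) t) i0 i1
      one_pos x
    simp only [inv_one, one_mul] at this
    linarith
  obtain ⟨Y, hY⟩ : ∃ Y, Y = ∫ x, q 1 t x ^ 2 := ⟨_, rfl⟩
  rw [← hY] at sup ⊢
  have q4 : ∀ τ ∈ Icc 0 t, Integrable fun x => q 0 τ x ^ 4 := by
    intro τ hτ
    refine (integrable_of_abs_le ((cont_slice (hq.cont 0 (by norm_num)) τ).pow 4)
      ((hb τ hτ 0 (by norm_num)).1.const_mul (2 * N)) fun x => ?_).1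
    have := hb.sup hq hτ (k := 0) (by norm_num) (by norm_num) x
    show |q 0 τ x ^ 4| ≤ 2 * N * q 0 τ x ^ 2
    rw [abs_of_nonneg (by positivity)]
    nlinarith [sq_nonneg (q 0 τ x)]
  rw [integral_sub i1 (q4 t mt), integral_sub (hb 0 m0 1 (by norm_num)).1 (q4 0 m0)] at en
  have n4 : 0 ≤ ∫ x, q 0 0 x ^ 4 := integral_nonneg fun x => by positivity
  have Y0 : 0 ≤ Y := by rw [hY]; exact integral_nonneg fun x => sq_nonneg _
  have b4 : ∫ x, q 0 t x ^ 4 ≤ (E + Y) * E := by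
    have := integral_mono (q4 t mt) (i0.const_mul (E + Y)) (fun x => by
      show q 0 t x ^ 4 ≤ (E + Y) * q 0 t x ^ 2
      nlinarith [sq_nonneg (q 0 t x), sup x])
    rw [integral_const_mul] at this
    exact this.trans (mul_mono_l a (by positivity))
  have : Y ≤ 3 * E := by nlinarith
  exact ⟨a, this, fun x => by linarith [sup x]⟩

/-- Almost monotonicity: the energy to the right of a point travelling with speed at least `γ`
essentially decreases, and controls second derivatives near that point. -/
theorem energy_monotone {q : Jet} (hq : MJet q) {s t N E δ γ : ℝ} (hs : 0 ≤ s)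
    (hst : s ≤ t) (hb : BddOn q 2 N s t) (hE : ∀ τ ∈ Icc s t, ∀ x, q 0 τ x ^ 2 ≤ 4 * E)
    (E8 : 8 * E ≤ 1) (hγ : 384 * E ≤ γ) (hδ : 0 < δ) (hδγ : 8 * δ ^ 2 ≤ γ) {a a1 : ℝ → ℝ}
    (ca : Continuous a) (ca1 : Continuous a1) (ha : ∀ τ ∈ Ioo s t, HasDerivAt a (a1 τ) τ)
    (haγ : ∀ τ ∈ Ioo s t, γ ≤ a1 τ) :
    ∀ R, 0 ≤ R → (∫ x, rho δ (x - a t) * (q 0 t x ^ 2 + q 1 t x ^ 2))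
      + 2 * (∫ τ in s..t, ∫ x in (-R)..R, rho1 δ (x - a τ) * q 2 τ x ^ 2)
      ≤ 2 * ∫ x, rho δ (x - a s) * (q 0 s x ^ 2 + q 1 s x ^ 2) := by
  intro R hR
  obtain ⟨c0, c1, c2, -, -⟩ := hq.conts
  have E0 : 0 ≤ E := by
    have := (sq_nonneg _).trans (hE s ⟨le_rfl, hst⟩ 0); linarith
  have δ2 : 0 < δ ^ 2 := by positivity
  have ce1 := continuous_rho1 δ
  have e_lo : ∀ τ ∈ Icc s t, ∀ x, q 0 τ x ^ 2 + q 1 τ x ^ 2 ≤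
      2 * (q 0 τ x ^ 2 + q 1 τ x ^ 2 - q 0 τ x ^ 4) := by
    intro τ hτ x
    nlinarith [sq_nonneg (q 0 τ x), sq_nonneg (q 1 τ x), hE τ hτ x]
  have e_hi : ∀ τ x, q 0 τ x ^ 2 + q 1 τ x ^ 2 - q 0 τ x ^ 4 ≤ q 0 τ x ^ 2 + q 1 τ x ^ 2 := by
    intro τ x
    have : 0 ≤ q 0 τ x ^ 4 := by positivity
    linarith
  have L : ConsLaw s t (fun τ x => q 0 τ x ^ 2 + q 1 τ x ^ 2 - q 0 τ x ^ 4) fun τ x =>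
      3 * q 1 τ x ^ 2 - 3 * q 0 τ x ^ 4 + 3 * q 2 τ x ^ 2 - 24 * q 0 τ x ^ 2 * q 1 τ x ^ 2
      + 4 * q 0 τ x ^ 6 := by
    convert (mass_law hq hs hst (hb.mono (by norm_num) le_rfl le_rfl)).add (energy_law hq hs hst hb)
      using 3 <;> ring
  obtain ⟨⟨_, _, _, _, L⟩, D⟩ := L
  have main := balance_source hst L (H := fun τ x => rho1 δ (x - a τ) * q 2 τ x ^ 2)
    ((ce1.comp (continuous_snd.sub (ca.comp continuous_fst))).mul (c2.pow 2))
    (K := 2 + δ + 2 * δ ^ 2) ⟨hasDerivAt_rho δ, hasDerivAt_rho1 δ, hasDerivAt_rho2 δ,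
    continuous_rho3 δ, fun x => by rw [abs_of_pos (rho_pos δ x)]; linarith [rho_le_two δ x],
    fun x => by
      rw [abs_of_nonneg (rho1_nonneg hδ x)]
      unfold rho1
      nlinarith [sech_sq_le_one (δ * x)],
    fun x => by
      unfold rho2
      rw [abs_mul, abs_mul, abs_mul, abs_of_nonneg (sq_nonneg (sech (δ * x))), abs_of_pos δ2]
      have := mul_le_mul (sech_sq_le_one (δ * x)) (abs_tanh_le_one (δ * x)) (abs_nonneg _) (by norm_num)
      norm_num
      nlinarith⟩
    ca ca1 ha (fun τ x => mul_nonneg (rho1_nonneg hδ _) (sq_nonneg _)) (S := fun _ => 0)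
    continuous_const (fun _ => le_rfl) (integrable_zero _ _ _) (fun τ hτ x => ?_) D R hR
  · have iw : ∀ τ ∈ Icc s t, ∀ b : ℝ, (Integrable fun x => rho δ (x - b) * (q 0 τ x ^ 2 + q 1 τ x ^ 2)) ∧
        Integrable fun x => rho δ (x - b) * (q 0 τ x ^ 2 + q 1 τ x ^ 2 - q 0 τ x ^ 4) := by
      intro τ hτ b
      have cr : Continuous fun x => rho δ (x - b) := (continuous_rho δ).comp (by fun_prop)
      have i := ((hb τ hτ 0 (by norm_num)).1.add (hb τ hτ 1 (by norm_num)).1).const_mul 2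
      have cn : Continuous fun x => q 0 τ x ^ 2 + q 1 τ x ^ 2 :=
        ((cont_slice c0 τ).pow 2).add ((cont_slice c1 τ).pow 2)
      have n0 : ∀ x, 0 ≤ q 0 τ x ^ 2 + q 1 τ x ^ 2 := fun x => by positivity
      refine ⟨(integrable_of_abs_le (f := fun x => rho δ (x - b) * (q 0 τ x ^ 2 + q 1 τ x ^ 2))
          (cr.mul cn) i fun x => ?_).1,
        (integrable_of_abs_le (f := fun x => rho δ (x - b) * (q 0 τ x ^ 2 + q 1 τ x ^ 2 - q 0 τ x ^ 4))
          (cr.mul (cn.sub ((cont_slice c0 τ).pow 4))) i fun x => ?_).1⟩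
      · rw [abs_of_nonneg (mul_nonneg (rho_pos _ _).le (n0 x))]
        exact mul_mono_r (rho_le_two _ _) (n0 x)
      · have h0 := e_lo τ hτ x
        rw [abs_of_nonneg (mul_nonneg (rho_pos _ _).le (by linarith [n0 x]))]
        exact mul_le_mul (rho_le_two _ _) (e_hi τ x) (by linarith [n0 x]) (by norm_num)
    have l1 : (∫ x, rho δ (x - a t) * (q 0 t x ^ 2 + q 1 t x ^ 2)) ≤
        ∫ x, 2 * (rho δ (x - a t) * (q 0 t x ^ 2 + q 1 t x ^ 2 - q 0 t x ^ 4)) :=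
      integral_mono (iw t ⟨hst, le_rfl⟩ _).1 ((iw t ⟨hst, le_rfl⟩ _).2.const_mul 2) fun x => by
        have := mul_mono_l (e_lo t ⟨hst, le_rfl⟩ x) (rho_pos δ (x - a t)).le
        show _ ≤ 2 * _
        linarith
    have l2 : (∫ x, rho δ (x - a s) * (q 0 s x ^ 2 + q 1 s x ^ 2 - q 0 s x ^ 4)) ≤
        ∫ x, rho δ (x - a s) * (q 0 s x ^ 2 + q 1 s x ^ 2) :=
      integral_mono (iw s ⟨le_rfl, hst⟩ _).2 (iw s ⟨le_rfl, hst⟩ _).1 fun x =>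
        mul_mono_l (e_hi s x) (rho_pos δ (x - a s)).le
    rw [integral_const_mul] at l1
    simp only [integral_zero, mul_zero, add_zero] at main
    linarith
  · have hτ' : τ ∈ Icc s t := ⟨hτ.1.le, hτ.2.le⟩
    have h0 := hE τ hτ' x
    have hlo := e_lo τ hτ' x
    have r0 := rho1_nonneg hδ (x - a τ)
    have r3 := (abs_le.1 (abs_rho3_le hδ (x - a τ))).2
    have hg := haγ τ hτ
    generalize rho1 δ (x - a τ) = r at *
    generalize rho3 δ (x - a τ) = r3' at *
    generalize a1 τ = g at *
    generalize q 0 τ x = u at *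
    generalize q 1 τ x = v at *
    generalize q 2 τ x = w at *
    obtain ⟨e, he⟩ : ∃ e, e = u ^ 2 + v ^ 2 - u ^ 4 := ⟨_, rfl⟩
    rw [← he] at hlo ⊢
    have e0 : 0 ≤ e := by linarith [sq_nonneg u, sq_nonneg v]
    have s1 : r3' * e ≤ r * (4 * δ ^ 2 * e) := by
      have := mul_mono_r r3 e0
      linarith
    have s2 : 4 * δ ^ 2 * e ≤ γ / 2 * e := mul_mono_r (by linarith) e0
    have s3 : γ * e ≤ g * e := mul_mono_r hg e0
    have γ0 : 0 ≤ γ := by linarith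
    have s4 : γ / 2 * (u ^ 2 + v ^ 2) ≤ γ * e := by nlinarith
    have s5 : u ^ 4 ≤ 4 * E * u ^ 2 := by nlinarith [sq_nonneg u]
    have s6 : u ^ 2 * v ^ 2 ≤ 4 * E * v ^ 2 := mul_mono_r h0 (sq_nonneg v)
    have s7 : 384 * E * u ^ 2 ≤ γ * u ^ 2 := mul_mono_r hγ (sq_nonneg u)
    have s8 : 384 * E * v ^ 2 ≤ γ * v ^ 2 := mul_mono_r hγ (sq_nonneg v)
    have s9 : 0 ≤ E * u ^ 2 := by positivity
    have s10 : 0 ≤ u ^ 6 := by positivity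
    have br : -(g * e) - (3 * v ^ 2 - 3 * u ^ 4 + 3 * w ^ 2 - 24 * u ^ 2 * v ^ 2 + 4 * u ^ 6)
        + 4 * δ ^ 2 * e + w ^ 2 ≤ 0 := by nlinarith [sq_nonneg v, sq_nonneg w]
    have := mul_nonpos_of_nonneg_of_nonpos r0 br
    nlinarith

/-! ### Decay of the transform to the right of slow lines -/

lemma rho1_le_exp {δ : ℝ} (hδ : 0 < δ) (x : ℝ) : rho1 δ x ≤ 4 * δ * exp (-(2 * δ * |x|)) := by
  have h := sech_le (δ * x)
  have h0 := sech_pos (δ * x)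
  have h1 : sech (δ * x) ^ 2 ≤ (2 * exp (-|δ * x|)) ^ 2 := by gcongr
  have h2 : (2 * exp (-|δ * x|)) ^ 2 = 4 * exp (-(2 * δ * |x|)) := by
    rw [mul_pow, ← exp_nat_mul, abs_mul, abs_of_pos hδ]; norm_num; ring_nf
  unfold rho1
  nlinarith

lemma rho_increment {δ : ℝ} (hδ : 0 < δ) (z : ℝ) :
    rho δ (z + 1) - rho δ z ≤ 4 * δ * exp (2 * δ) * exp (-(2 * δ * |z|)) := by
  have h := Convex.image_sub_le_mul_sub_of_deriv_le (convex_Icc z (z + 1)) (f := rho δ)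
    (continuous_rho δ).continuousOn (fun x _ => (hasDerivAt_rho δ x).differentiableAt.differentiableWithinAt)
    (C := 4 * δ * exp (2 * δ) * exp (-(2 * δ * |z|))) (fun x hx => ?_) z ⟨le_rfl, by linarith⟩ (z + 1)
    ⟨by linarith, le_rfl⟩ (by linarith)
  · linarith
  · rw [interior_Icc] at hx
    rw [(hasDerivAt_rho δ x).deriv]
    refine (rho1_le_exp hδ x).trans ?_
    rw [mul_assoc (4 * δ), ← exp_add]
    refine mul_mono_l (exp_le_exp.2 ?_) (by positivity)
    have : |z| ≤ |x| + 1 := by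
      have h1 := abs_add_le x (z - x)
      have h2 : |z - x| ≤ 1 := by rw [abs_le]; constructor <;> linarith [hx.1, hx.2]
      rw [add_sub_cancel] at h1; linarith
    nlinarith

lemma sum_exp_le {δ : ℝ} (hδ : 0 < δ) (x : ℝ) (n : ℕ) :
    ∑ k ∈ Finset.range n, exp (-(δ * |x - ((k : ℝ) + 1)|)) ≤ exp δ * (2 / δ) := by
  have ce : Continuous fun s => exp (-(δ * |x - s|)) := by fun_prop
  have h1 : ∀ k ∈ Finset.range n, exp (-(δ * |x - ((k : ℝ) + 1)|)) ≤
      exp δ * ∫ s in ((k : ℕ) : ℝ)..((k + 1 : ℕ) : ℝ), exp (-(δ * |x - s|)) := by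
    intro k _
    rw [← intervalIntegral.integral_const_mul]
    have := integral_mono_on (μ := volume) (a := ((k : ℕ) : ℝ)) (b := ((k + 1 : ℕ) : ℝ)) (by push_cast; linarith)
      (f := fun _ => exp (-(δ * |x - ((k : ℝ) + 1)|)))
      (g := fun s => exp δ * exp (-(δ * |x - s|))) cont_ii cont_ii (fun s hs => by
        rw [← exp_add]
        refine exp_le_exp.2 ?_
        have h2 := abs_add_le (x - ((k : ℝ) + 1)) ((k : ℝ) + 1 - s)
        have h3 : |(k : ℝ) + 1 - s| ≤ 1 := by
          have := hs.2; push_cast at this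
          rw [abs_le]; constructor <;> linarith [hs.1]
        rw [sub_add_sub_cancel] at h2
        nlinarith)
    simpa using this
  refine (Finset.sum_le_sum h1).trans ?_
  rw [← Finset.mul_sum, intervalIntegral.sum_integral_adjacent_intervals
    (fun k _ => ce.intervalIntegrable _ _)]
  refine mul_mono_l ?_ (exp_pos _).le
  rw [← integral_exp_abs hδ x, integral_of_le (Nat.cast_le.2 (Nat.zero_le n))]
  exact setIntegral_le_integral (integrable_exp_abs hδ x) (.of_forall fun s => (exp_pos _).le)

/-- The superposition of translates of `1 + tanh(δ·)` that resolves the polynomial weight. -/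
def layers (m δ : ℝ) (n : ℕ) (x : ℝ) : ℝ :=
  ∑ k ∈ Finset.range n, (jw m (k + 1) - jw m k) * rho δ (x - k)

lemma layers_abel (m δ : ℝ) (n : ℕ) (x : ℝ) : layers m δ n x = jw m n * rho δ (x - n) - jw m 0 * rho δ x
    + ∑ k ∈ Finset.range n, jw m (k + 1) * (rho δ (x - (k + 1) + 1) - rho δ (x - (k + 1))) := by
  induction n with
  | zero => simp [layers]
  | succ n ih =>
    rw [Finset.sum_range_succ, layers, Finset.sum_range_succ]
    rw [layers] at ih
    rw [ih]
    push_cast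
    rw [show x - ((n : ℝ) + 1) + 1 = x - n by ring]
    ring

lemma layers_le {m δ : ℝ} (hm : 0 < m) (hδ : 0 < δ) : ∃ C : ℝ, 0 < C ∧
    ∀ n x, layers m δ n x ≤ C * jw m x := by
  obtain ⟨C1, hC1, h1⟩ := rho_shift hm hδ
  obtain ⟨C2, hC2, h2⟩ := jw_moderate hm hδ
  refine ⟨C1 + C2 * (4 * δ * exp (2 * δ)) * (exp δ * (2 / δ)), by positivity, fun n x => ?_⟩
  have j0 := jw_pos m x
  have a1 : jw m n * rho δ (x - n) ≤ C1 * jw m x := by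
    have := h1 n x (by positivity)
    have e : jw m n = (1 + (n : ℝ) ^ 2) ^ m := by rw [jw, max_eq_left (by positivity)]
    rw [e]
    refine this.trans (mul_le_of_le_one_right (by positivity) ?_)
    rw [exp_le_one_iff]
    have := mul_nonneg hδ.le (le_max_right ((n : ℝ) - max x 0) 0)
    linarith
  have a2 : ∑ k ∈ Finset.range n, jw m (k + 1) * (rho δ (x - (k + 1) + 1) - rho δ (x - (k + 1))) ≤
      ∑ k ∈ Finset.range n, C2 * (4 * δ * exp (2 * δ)) * jw m x * exp (-(δ * |x - ((k : ℝ) + 1)|)) := by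
    refine Finset.sum_le_sum fun k _ => ?_
    have i1 := h2 (k + 1) x
    have i2 := rho_increment hδ (x - (k + 1))
    have i3 : 0 ≤ rho δ (x - (k + 1) + 1) - rho δ (x - (k + 1)) :=
      sub_nonneg.2 (rho_mono hδ.le (by linarith))
    refine (mul_le_mul i1 i2 i3 (by positivity)).trans (le_of_eq ?_)
    rw [abs_sub_comm ((k : ℝ) + 1) x, show (2 * δ * |x - ((k : ℝ) + 1)|)
      = δ * |x - ((k : ℝ) + 1)| + δ * |x - ((k : ℝ) + 1)| by ring, neg_add, exp_add]
    have : exp (δ * |x - ((k : ℝ) + 1)|) * exp (-(δ * |x - ((k : ℝ) + 1)|)) = 1 := by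
      rw [← exp_add]; simp
    linear_combination C2 * jw m x * (4 * δ * exp (2 * δ)) * exp (-(δ * |x - ((k : ℝ) + 1)|)) * this
  rw [← Finset.mul_sum] at a2
  have a3 := mul_mono_l (sum_exp_le hδ x n)
    (by positivity : 0 ≤ C2 * (4 * δ * exp (2 * δ)) * jw m x)
  have a4 : 0 < jw m 0 * rho δ x := mul_pos (jw_pos _ _) (rho_pos _ _)
  rw [layers_abel]
  linarith

lemma jw_step {m : ℝ} (hm : 0 < m) (k : ℕ) : 0 ≤ jw m (k + 1) - jw m k :=
  sub_nonneg.2 (jw_mono hm.le (by linarith))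

lemma jw_le_layers {m δ : ℝ} (hm : 0 < m) (hδ : 0 < δ) {n : ℕ} {x : ℝ} (hx : x < n) :
    jw m x ≤ 1 + layers m δ n x := by
  have d0 := jw_step hm
  have j0 : jw m 0 = 1 := by simp [jw]
  rcases le_or_gt x 0 with h | h
  · have : jw m x = 1 := by rw [jw, max_eq_right h]; simp
    have : 0 ≤ layers m δ n x := Finset.sum_nonneg fun k _ => mul_nonneg (d0 k) (rho_pos _ _).le
    linarith
  · obtain ⟨j, hj⟩ : ∃ j, j = ⌊x⌋₊ := ⟨_, rfl⟩
    have jx : (j : ℝ) ≤ x := by rw [hj]; exact Nat.floor_le h.le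
    have xj : x < j + 1 := by rw [hj]; exact Nat.lt_floor_add_one x
    have jn : j + 1 ≤ n := by
      have : (j : ℝ) < n := by linarith
      exact_mod_cast this
    have tel : ∑ k ∈ Finset.range (j + 1), (jw m (k + 1) - jw m k) = jw m (j + 1) - 1 := by
      have := Finset.sum_range_sub (fun k : ℕ => jw m k) (j + 1)
      push_cast at this
      rw [this, j0]
    have le1 : ∑ k ∈ Finset.range (j + 1), (jw m (k + 1) - jw m k) ≤ layers m δ n x := by
      refine (Finset.sum_le_sum fun k hk => ?_).trans (Finset.sum_le_sum_of_subset_of_nonneg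
        (Finset.range_subset_range.2 jn) fun k _ _ => mul_nonneg (d0 k) (rho_pos _ _).le)
      have : (k : ℝ) ≤ j := by exact_mod_cast Nat.lt_succ_iff.1 (Finset.mem_range.1 hk)
      exact le_mul_of_one_le_right (d0 k) (one_le_rho hδ.le (by linarith))
    have := jw_mono hm.le xj.le
    linarith

/-- A solution of the equation which is bounded in `H²` locally in time and small uniformly. -/
structure SmallSol (q : Jet) (E : ℝ) : Prop where
  jet : MJet q
  bdd : ∀ T, ∃ N, BddOn q 2 N 0 T
  sup : ∀ t, 0 ≤ t → ∀ x, q 0 t x ^ 2 ≤ 4 * E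

/-- The density of the `H¹` norm. -/
def dens (q : Jet) (t x : ℝ) : ℝ := q 0 t x ^ 2 + q 1 t x ^ 2

lemma dens_nonneg (q : Jet) (t x : ℝ) : 0 ≤ dens q t x := by unfold dens; positivity

lemma rho_dens_nonneg (δ y : ℝ) (q : Jet) (t x : ℝ) : 0 ≤ rho δ y * dens q t x :=
  mul_nonneg (rho_pos _ _).le (dens_nonneg _ _ _)

lemma SmallSol.cont_dens {q : Jet} {E : ℝ} (h : SmallSol q E) :
    Cont₂ (dens q) := by
  obtain ⟨_, _, _⟩ := h.jet.conts
  unfold dens; fun_prop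

lemma SmallSol.int_dens {q : Jet} {E t : ℝ} (h : SmallSol q E) (ht : 0 ≤ t) :
    Integrable (dens q t) := by
  obtain ⟨N, hN⟩ := h.bdd t
  exact (hN t ⟨ht, le_rfl⟩ 0 (by norm_num)).1.add (hN t ⟨ht, le_rfl⟩ 1 (by norm_num)).1

lemma SmallSol.int_rho {q : Jet} {E t : ℝ} (h : SmallSol q E) (ht : 0 ≤ t) (δ b : ℝ) :
    Integrable fun x => rho δ (x - b) * dens q t x := by
  refine (integrable_of_abs_le (f := fun x => rho δ (x - b) * dens q t x)
    (((continuous_rho δ).comp (by fun_prop)).mul (cont_slice h.cont_dens t))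
    ((h.int_dens ht).const_mul 2) fun x => ?_).1
  rw [abs_of_nonneg (rho_dens_nonneg _ _ _ _ _)]
  exact mul_mono_r (rho_le_two _ _) (dens_nonneg _ _ _)

/-- Transport along a line of speed `γ`. -/
lemma SmallSol.line {q : Jet} {E γ δ t : ℝ} (h : SmallSol q E) (E8 : 8 * E ≤ 1)
    (hγ : 384 * E ≤ γ) (hδ : 0 < δ) (hδγ : 8 * δ ^ 2 ≤ γ) (ht : 0 ≤ t) (b : ℝ) :
    ∫ x, rho δ (x - (b + γ * t)) * dens q t x ≤ 2 * ∫ x, rho δ (x - b) * dens q 0 x := by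
  obtain ⟨N, hN⟩ := h.bdd t
  have := energy_monotone h.jet le_rfl ht hN (fun τ hτ => h.sup τ hτ.1) E8 hγ hδ hδγ
    (a := fun τ => b + γ * τ) (a1 := fun _ => γ) (by fun_prop) continuous_const
    (fun τ _ => (hasDerivAt_scaled γ τ).const_add b) (fun _ _ => le_rfl) 0 le_rfl
  simpa [dens] using this

/-- Decay of the weighted energy of a small solution to the right of a moving line, obtained by
summing `energy_monotone` over the translates in `layers`. -/
theorem weighted_decay {m δ γ : ℝ} (hm : 0 < m) (hδ : 0 < δ) (hγ : 0 < γ) (hδγ : 8 * δ ^ 2 ≤ γ) :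
    ∃ C : ℝ, 0 < C ∧ ∀ (q : Jet) (E B : ℝ), SmallSol q E → 8 * E ≤ 1 → 384 * E ≤ γ →
      (Integrable fun x => jw m x * dens q 0 x) → ∫ x, jw m x * dens q 0 x ≤ B →
      ∀ t p, 0 ≤ t → 2 * γ * t ≤ p →
        (1 + t ^ 2) ^ m * (∫ x, rho δ (x - p) * dens q t x) ≤ C * B ∧
        (Integrable fun x => jw m (x - p) * dens q t x) ∧ ∫ x, jw m (x - p) * dens q t x ≤ C * B := by
  obtain ⟨C1, hC1, h1⟩ := rho_shift hm hδ
  obtain ⟨C2, hC2, h2⟩ := layers_le hm hδ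
  refine ⟨2 * C1 * (1 + (γ ^ 2)⁻¹) ^ m + 4 * (1 + C2), by positivity, ?_⟩
  intro q E B hq E8 Eγ i0 b0 t p ht hp
  have B0 : 0 ≤ B := (integral_nonneg fun x => mul_nonneg (jw_pos _ _).le (dens_nonneg _ _ _)).trans b0
  have rm : ∀ x y : ℝ, x ≤ y → rho δ x ≤ rho δ y := fun x y => @rho_mono δ hδ.le x y
  refine ⟨?_, ?_⟩
  · have l1 : ∫ x, rho δ (x - p) * dens q t x ≤ ∫ x, rho δ (x - (γ * t + γ * t)) * dens q t x :=
      integral_mono (hq.int_rho ht _ _) (hq.int_rho ht _ _) fun x =>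
        mul_mono_r (rm _ _ (by linarith)) (dens_nonneg _ _ _)
    have l2 := hq.line E8 Eγ hδ hδγ ht (γ * t)
    have l3 : (1 + (γ * t) ^ 2) ^ m * ∫ x, rho δ (x - γ * t) * dens q 0 x ≤ C1 * B := by
      rw [← integral_const_mul]
      refine le_trans ?_ (mul_mono_l b0 hC1.le)
      rw [← integral_const_mul]
      refine integral_mono ((hq.int_rho le_rfl _ _).const_mul _) (i0.const_mul _) fun x => ?_
      have hh : (1 + (γ * t) ^ 2) ^ m * rho δ (x - γ * t) ≤ C1 * jw m x := by
        refine (h1 (γ * t) x (by positivity)).trans (mul_le_of_le_one_right ?_ ?_)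
        · exact mul_nonneg hC1.le (jw_pos _ _).le
        · rw [exp_le_one_iff]
          have := mul_nonneg hδ.le (le_max_right (γ * t - max x 0) 0)
          linarith
      have := mul_mono_r hh (dens_nonneg q 0 x)
      show (1 + (γ * t) ^ 2) ^ m * (rho δ (x - γ * t) * dens q 0 x) ≤ C1 * (jw m x * dens q 0 x)
      linarith
    have l4 : (1 + t ^ 2) ^ m ≤ (1 + (γ ^ 2)⁻¹) ^ m * (1 + (γ * t) ^ 2) ^ m := by
      rw [← mul_rpow (by positivity) (by positivity)]
      refine rpow_le_rpow (by positivity) ?_ hm.le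
      have e : (γ ^ 2)⁻¹ * (γ * t) ^ 2 = t ^ 2 := by field_simp
      have : 0 < (γ ^ 2)⁻¹ := by positivity
      nlinarith [sq_nonneg (γ * t)]
    have p0 : 0 ≤ ∫ x, rho δ (x - γ * t) * dens q 0 x :=
      integral_nonneg fun x => rho_dens_nonneg _ _ _ _ _
    obtain ⟨X, hX⟩ : ∃ X, X = ∫ x, rho δ (x - γ * t) * dens q 0 x := ⟨_, rfl⟩
    rw [← hX] at l2 l3 p0
    have s1 : (1 + t ^ 2) ^ m * (∫ x, rho δ (x - p) * dens q t x) ≤ (1 + t ^ 2) ^ m * (2 * X) :=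
      mul_mono_l (l1.trans l2) (by positivity)
    have s2 : (1 + t ^ 2) ^ m * (2 * X) ≤ (1 + (γ ^ 2)⁻¹) ^ m * (1 + (γ * t) ^ 2) ^ m * (2 * X) :=
      mul_mono_r l4 (by positivity)
    have s3 : (1 + (γ ^ 2)⁻¹) ^ m * ((1 + (γ * t) ^ 2) ^ m * X) ≤ (1 + (γ ^ 2)⁻¹) ^ m * (C1 * B) :=
      mul_mono_l l3 (by positivity)
    have s4 : 0 ≤ 4 * (1 + C2) * B := by positivity
    linarith
  · have cd := cont_slice hq.cont_dens t
    have box : ∀ R, 0 ≤ R → ∫ x in (-R)..R, jw m (x - p) * dens q t x ≤ 4 * (1 + C2) * B := by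
      intro R hR
      obtain ⟨n, hn⟩ := exists_nat_gt (R + |p|)
      set S : ℝ → ℝ := fun x => rho δ (x - (-R - γ * t + γ * t)) * dens q t x
          + ∑ k ∈ Finset.range n, (jw m (k + 1) - jw m k) * (rho δ (x - (k + γ * t)) * dens q t x)
      have pw : ∀ x ∈ Icc (-R) R, jw m (x - p) * dens q t x ≤ S x := by
        intro x hx
        have hγt : 0 ≤ γ * t := by positivity
        have g1 : jw m (x - p) ≤ jw m (x - γ * t) := jw_mono hm.le (by linarith)
        have g2 : jw m (x - γ * t) ≤ 1 + layers m δ n (x - γ * t) :=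
          jw_le_layers hm hδ (by linarith [hx.2, abs_nonneg p])
        have g3 : 1 ≤ rho δ (x - (-R - γ * t + γ * t)) :=
          one_le_rho hδ.le (by linarith [hx.1])
        have g4 := mul_mono_r (g1.trans (g2.trans (add_le_add_left g3 _)))
          (dens_nonneg q t x)
        refine g4.trans (le_of_eq ?_)
        simp only [S]
        rw [add_mul, layers, Finset.sum_mul]
        congr 1
        refine Finset.sum_congr rfl fun k _ => ?_
        rw [show x - γ * t - (k : ℝ) = x - (k + γ * t) by ring]; ring
      have d0 := jw_step hm
      have iS : Integrable S :=
        (hq.int_rho ht _ _).add (integrable_finsetSum _ fun k _ => (hq.int_rho ht _ _).const_mul _)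
      have j1 : ∫ x in (-R)..R, jw m (x - p) * dens q t x ≤ ∫ x, S x := by
        refine (integral_mono_on (by linarith)
          ((((continuous_jw m).comp (by fun_prop)).mul cd).intervalIntegrable _ _) iS.intervalIntegrable pw).trans ?_
        rw [integral_of_le (by linarith)]
        exact setIntegral_le_integral iS (.of_forall fun x =>
          add_nonneg (rho_dens_nonneg _ _ _ _ _) (Finset.sum_nonneg fun k _ =>
            mul_nonneg (d0 k) (rho_dens_nonneg _ _ _ _ _)))
      refine j1.trans ?_
      rw [integral_add (hq.int_rho ht _ _) (integrable_finsetSum _ fun k _ => (hq.int_rho ht _ _).const_mul _),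
        integral_finsetSum _ fun k _ => (hq.int_rho ht _ _).const_mul _]
      have j2 : ∫ x, rho δ (x - (-R - γ * t + γ * t)) * dens q t x ≤ 4 * B := by
        refine (hq.line E8 Eγ hδ hδγ ht _).trans ?_
        have : ∫ x, rho δ (x - (-R - γ * t)) * dens q 0 x ≤ ∫ x, 2 * (jw m x * dens q 0 x) :=
          integral_mono (hq.int_rho le_rfl _ _) (i0.const_mul 2) fun x => by
            have h5 := mul_le_mul (rho_le_two δ (x - (-R - γ * t))) (one_le_jw hm.le x)
              zero_le_one (by norm_num)
            have := mul_mono_r h5 (dens_nonneg q 0 x)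
            show _ ≤ 2 * (jw m x * dens q 0 x)
            linarith
        rw [integral_const_mul] at this
        linarith
      have j3 : ∑ k ∈ Finset.range n, ∫ x, (jw m (k + 1) - jw m k) * (rho δ (x - (k + γ * t)) * dens q t x) ≤
          2 * ∫ x, layers m δ n x * dens q 0 x := by
        have e : ∫ x, layers m δ n x * dens q 0 x =
            ∑ k ∈ Finset.range n, (jw m (k + 1) - jw m k) * ∫ x, rho δ (x - k) * dens q 0 x := by
          simp_rw [← integral_const_mul]
          rw [← integral_finsetSum _ fun k _ => (hq.int_rho le_rfl _ _).const_mul _]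
          congr 1; ext x
          rw [layers, Finset.sum_mul]
          exact Finset.sum_congr rfl fun k _ => by ring
        rw [e, Finset.mul_sum]
        refine Finset.sum_le_sum fun k _ => ?_
        rw [integral_const_mul]
        have := mul_mono_l (hq.line E8 Eγ hδ hδγ ht k) (d0 k)
        linarith
      have j4 : ∫ x, layers m δ n x * dens q 0 x ≤ C2 * B := by
        refine le_trans ?_ (mul_mono_l b0 hC2.le)
        rw [← integral_const_mul]
        refine integral_mono_of_nonneg (.of_forall fun x => mul_nonneg
          (Finset.sum_nonneg fun k _ => mul_nonneg (d0 k) (rho_pos _ _).le) (dens_nonneg _ _ _))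
          (i0.const_mul _) (.of_forall fun x => ?_)
        have := mul_mono_r (h2 n x) (dens_nonneg q 0 x)
        show _ ≤ C2 * (jw m x * dens q 0 x)
        linarith
      have : 0 ≤ C2 * B := by positivity
      linarith
    obtain ⟨i, hi⟩ := integrable_of_boxes (((continuous_jw m).comp (by fun_prop : Continuous fun x => x - p)).mul cd)
      (fun x => mul_nonneg (jw_pos _ _).le (dens_nonneg _ _ _)) box
    refine ⟨i, hi.trans ?_⟩
    have : 0 ≤ 2 * C1 * (1 + (γ ^ 2)⁻¹) ^ m * B := by positivity
    linarith

/-! ### The angle relative to a soliton angle -/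

lemma integral_sech_scaled {a : ℝ} (ha : 0 < a) : ∫ s, sech (a * s) = a⁻¹ * ∫ s, sech s := by
  rw [Measure.integral_comp_mul_left sech a, abs_of_pos (inv_pos.2 ha), smul_eq_mul]

lemma integral_sech_sq_scaled {a : ℝ} (ha : 0 < a) : ∫ s, sech (a * s) ^ 2 = a⁻¹ * ∫ s, sech s ^ 2 := by
  rw [Measure.integral_comp_mul_left (fun s => sech s ^ 2) a, abs_of_pos (inv_pos.2 ha), smul_eq_mul]

lemma integral_sech_pos : 0 < ∫ s, sech s := by
  have h1 := integral_sech_sq_pos one_pos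
  simp only [one_mul] at h1
  refine h1.trans_le (integral_mono (by simpa using integrable_sech_sq one_pos)
    (by simpa using integrable_sech one_pos) fun s => ?_)
  have := sech_pos s
  have := sech_le_one s
  show sech s ^ 2 ≤ sech s
  nlinarith

lemma sech_scaled_le {a b : ℝ} (hb : 0 ≤ b) (hab : b ≤ a) (y : ℝ) :
    sech (a * y) ≤ 2 * exp (-(b * |y|)) := by
  refine (sech_le _).trans (mul_mono_l (exp_le_exp.2 ?_) (by norm_num))
  rw [abs_mul, abs_of_nonneg (hb.trans hab)]
  have := mul_mono_r hab (abs_nonneg y)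
  linarith

/-- Between `0` and `y` the quotient `cosh (as) / cosh (ay)` decays exponentially. -/
lemma sech_mul_cosh_le {a b : ℝ} (hb : 0 ≤ b) (hab : b ≤ a) {y s : ℝ} (h : |y - s| = |y| - |s|) :
    sech (a * y) * cosh (a * s) ≤ 2 * exp (-(b * |y - s|)) := by
  have h1 := cosh_le_exp_abs (a * s)
  have h2 := sech_le (a * y)
  rw [abs_mul, abs_of_nonneg (hb.trans hab)] at h1 h2
  calc sech (a * y) * cosh (a * s) ≤ (2 * exp (-(a * |y|))) * exp (a * |s|) :=
        mul_le_mul h2 h1 (cosh_pos _).le (by positivity)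
    _ = 2 * exp (-(a * |y - s|)) := by rw [h, mul_assoc, ← exp_add]; ring_nf
    _ ≤ _ := by
      have := mul_mono_r hab (abs_nonneg (y - s))
      exact mul_mono_l (exp_le_exp.2 (by linarith)) (by norm_num)

/-- Variation of constants for `η' = -a tanh(ay) η + g`. -/
lemma duhamel {a b : ℝ} (hb : 0 < b) (hab : b ≤ a) {η g : ℝ → ℝ} (cg : Continuous g) {S : ℝ}
    (hS : ∀ y, |g y| ≤ S) (hη : ∀ y, HasDerivAt η (-(a * tanh (a * y) * η y) + g y) y) (y : ℝ) :
    |η y - sech (a * y) * η 0| ≤ 2 * ∫ s, exp (-(b * |y - s|)) * |g s| := by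
  have cc : Continuous fun s => cosh (a * s) * g s := (continuous_cosh.comp (by fun_prop)).mul cg
  have hd : ∀ y, HasDerivAt (fun y => cosh (a * y) * η y) (cosh (a * y) * g y) y := fun y => by
    have h1 : HasDerivAt (fun y => cosh (a * y)) (sinh (a * y) * a) y :=
      (hasDerivAt_cosh (a * y)).comp y (hasDerivAt_scaled a y)
    refine (h1.fun_mul (hη y)).congr_deriv ?_
    have : sinh (a * y) = cosh (a * y) * tanh (a * y) := by
      rw [tanh_eq_sinh_mul_sech]
      have := sech_mul_cosh (a * y)
      linear_combination -sinh (a * y) * this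
    rw [this]; ring
  have ftc := integral_eq_sub_of_hasDerivAt (a := 0) (b := y) (fun x _ => hd x)
    (cc.intervalIntegrable _ _)
  have e : η y - sech (a * y) * η 0 = sech (a * y) * ∫ s in (0:ℝ)..y, cosh (a * s) * g s := by
    rw [ftc]
    simp only [mul_zero, cosh_zero, one_mul]
    linear_combination -η y * sech_mul_cosh (a * y)
  have hE : Integrable fun s => exp (-(b * |y - s|)) * |g s| :=
    integrable_exp_mul hb y cg.abs (S := S) (fun y => by simpa using hS y)
  rw [e, ← intervalIntegral.integral_const_mul]
  have h1 := intervalIntegral.norm_integral_le_integral_norm_uIoc (a := 0) (b := y) (μ := volume)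
    (f := fun s => sech (a * y) * (cosh (a * s) * g s))
  rw [← integral_const_mul]
  refine h1.trans ((setIntegral_mono_on ?_ (hE.const_mul 2).integrableOn measurableSet_uIoc
    fun s hs => ?_).trans (setIntegral_le_integral (hE.const_mul 2)
      (.of_forall fun s => by positivity)))
  · exact ((continuous_const.mul cc).norm.integrableOn_uIcc).mono_set uIoc_subset_uIcc
  · have hh : |y - s| = |y| - |s| := by
      rcases le_total 0 y with h | h
      · rw [Set.uIoc_of_le h] at hs
        rw [abs_of_nonneg h, abs_of_pos hs.1, abs_of_nonneg (by linarith [hs.2])]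
      · rw [Set.uIoc_of_ge h] at hs
        rw [abs_of_nonpos h, abs_of_nonpos hs.2, abs_of_nonpos (by linarith [hs.1])]; ring
    have := mul_mono_r (sech_mul_cosh_le hb.le hab hh) (abs_nonneg (g s))
    rw [norm_eq_abs, abs_mul, abs_mul, abs_of_pos (sech_pos _), abs_of_pos (cosh_pos _)]
    linarith

lemma exp_moderate {β : ℝ} (hβ : 0 ≤ β) (x y : ℝ) :
    exp (-(β * |x|)) ≤ 1 * exp (β * |x - y|) * exp (-(β * |y|)) := by
  rw [one_mul, ← exp_add]
  refine exp_le_exp.2 ?_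
  have : |y| ≤ |x| + |x - y| := by
    have := abs_add_le x (y - x)
    rw [add_sub_cancel, abs_sub_comm y x] at this; exact this
  nlinarith

/-- **Phase bound.** If `φ` solves the spatial equation of the transform with potential `q` and is
near the soliton angle, its distance to that angle is controlled locally by `q` and by the single
moment `∫ sech(as)(φ - ang)`. -/
theorem phase_bound {A0 A1 : ℝ} (hA0 : 0 < A0) (hA : A0 ≤ A1) : ∃ C r0 : ℝ, 0 < C ∧ 0 < r0 ∧
    ∀ (a : ℝ) (φ q : ℝ → ℝ) (H : ℝ), A0 ≤ a → a ≤ A1 → Continuous q → (∀ y, |q y| ≤ H) →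
      (∀ y, HasDerivAt φ (-2 * q y - a * sin (φ y)) y) → (∀ y, |φ y - ang a y| ≤ r0) → ∀ y,
      |φ y - ang a y| ≤ C * (|∫ s, sech (a * s) * (φ s - ang a s)| * exp (-(A0 / 4 * |y|))
        + ∫ s, exp (-(A0 / 4 * |y - s|)) * |q s|) := by
  obtain ⟨s2, hs2⟩ : ∃ s, s = ∫ s, sech s ^ 2 := ⟨_, rfl⟩
  have s2p : 0 < s2 := by
    have := integral_sech_sq_pos one_pos
    simpa [hs2] using this
  have A1p : 0 < A1 := hA0.trans_le hA
  -- the constants in the bounds of `η 0` and of `η`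
  obtain ⟨D, hD⟩ : ∃ D, D = A1 / s2 * (1 + 4 * (2 / (A0 - A0 / 2))) := ⟨_, rfl⟩
  have Dp : 0 < D := by
    have : 0 < A0 - A0 / 2 := by linarith
    rw [hD]; positivity
  obtain ⟨r0, hr0⟩ : ∃ r0, r0 = 1 / ((2 * D + 2) * A1 * (4 / (A0 / 2)) * 2) := ⟨_, rfl⟩
  have r0p : 0 < r0 := by rw [hr0]; positivity
  refine ⟨2 * (2 * D + 2) * 2, r0, by positivity, r0p, ?_⟩
  intro a φ q H ha0 ha1 cq hH hφ hr y
  have ap : 0 < a := hA0.trans_le ha0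
  have hA2 : 0 < A0 / 2 := by positivity
  obtain ⟨η, hη⟩ : ∃ η : ℝ → ℝ, η = fun y => φ y - ang a y := ⟨_, rfl⟩
  obtain ⟨g, hg⟩ : ∃ g : ℝ → ℝ, g = fun y => -2 * q y
      - a * (sin (ang a y + η y) - sin (ang a y + 0) - cos (ang a y) * (η y - 0)) := ⟨_, rfl⟩
  have cφ : Continuous φ := cont_of_deriv hφ
  have ca : Continuous (ang a) := continuous_ang a
  have cη : Continuous η := by rw [hη]; exact cφ.sub ca
  have cg : Continuous g := by rw [hg]; fun_prop
  have hη' : ∀ y, η y = φ y - ang a y := fun y => by rw [hη]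
  have rη : ∀ y, |η y| ≤ r0 := fun y => by rw [hη']; exact hr y
  have gle : ∀ y, |g y| ≤ 2 * |q y| + A1 * r0 * |η y| := fun y => by
    have h1 := abs_sin_remainder (T := ang a y) (rη y) (y := 0) (by simpa using r0p.le)
    rw [hg]
    refine (abs_sub _ _).trans (add_le_add (by rw [abs_mul]; norm_num) ?_)
    rw [abs_mul, abs_of_pos ap]
    rw [sub_zero] at h1 ⊢
    have := mul_le_mul ha1 h1 (abs_nonneg _) A1p.le
    linarith
  have gS : ∀ y, |g y| ≤ 2 * H + A1 * r0 * r0 := fun y => (gle y).trans (by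
    have := mul_mono_l (rη y) (by positivity : 0 ≤ A1 * r0)
    linarith [hH y])
  have dη : ∀ y, HasDerivAt η (-(a * tanh (a * y) * η y) + g y) y := fun y => by
    rw [show η = fun y => φ y - ang a y from hη]
    refine ((hφ y).fun_sub (hasDerivAt_ang a y)).congr_deriv ?_
    rw [hg]
    simp only [hη', add_zero, sub_zero, sin_ang, cos_ang, add_sub_cancel]
    ring
  have du : ∀ y, |η y - sech (a * y) * η 0| ≤ 2 * ∫ s, exp (-(A0 * |y - s|)) * |g s| :=
    duhamel hA0 ha0 cg gS dη
  obtain ⟨M, hM⟩ : ∃ M, M = ∫ s, sech (a * s) * η s := ⟨_, rfl⟩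
  -- the moment controls `η 0`
  obtain ⟨Γ, hΓ⟩ : ∃ Γ, Γ = ∫ s, exp (-(A0 / 2 * |s|)) * |g s| := ⟨_, rfl⟩
  have Γ0 : 0 ≤ Γ := by rw [hΓ]; exact integral_nonneg fun s => by positivity
  have iΓ : Integrable fun s => exp (-(A0 / 2 * |s|)) * |g s| := by
    have := integrable_exp_mul hA2 0 cg.abs (S := 2 * H + A1 * r0 * r0) (fun y => by simpa using gS y)
    simpa using this
  have csech := continuous_sech_mul a
  have η0 : |η 0| ≤ D * (|M| + Γ) := by
    obtain ⟨i5, b5⟩ := weighted_avg (b := A0) (β := A0 / 2) (C := 1) (A := 2) (by linarith) hA0 (by norm_num)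
      (g := fun x => exp (-(A0 / 2 * |x|))) (f := fun x => |g x|) (F := fun x => |η x - sech (a * x) * η 0|)
      (by fun_prop) (fun x => (exp_pos _).le) (exp_moderate hA2.le) cg.abs (fun x => abs_nonneg _)
      (S := 2 * H + A1 * r0 * r0) (fun y => by simpa using gS y) iΓ
      ((cη.sub (csech.mul continuous_const)).abs) (fun x => abs_nonneg _) du
    rw [← hΓ] at b5
    have e1 : M = η 0 * (∫ s, sech (a * s) ^ 2) + ∫ s, sech (a * s) * (η s - sech (a * s) * η 0) := by
      rw [hM, ← integral_const_mul, ← integral_add ((integrable_sech_sq ap).const_mul _)]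
      · congr 1; ext s; ring
      · refine integrable_sech_mul ap (cη.sub (csech.mul continuous_const)) (S := r0 + |η 0|) fun x => ?_
        refine (abs_sub _ _).trans (add_le_add (rη x) ?_)
        rw [abs_mul, abs_of_pos (sech_pos _)]
        exact mul_le_of_le_one_left (abs_nonneg _) (sech_le_one _)
    have e2 : |∫ s, sech (a * s) * (η s - sech (a * s) * η 0)| ≤
        2 * ∫ s, exp (-(A0 / 2 * |s|)) * |η s - sech (a * s) * η 0| := by
      rw [← integral_const_mul]
      refine abs_integral_le_integral_abs.trans (integral_mono_of_nonneg
        (.of_forall fun s => abs_nonneg _) (i5.const_mul 2)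
        (.of_forall fun s => ?_))
      have := mul_mono_r (sech_scaled_le hA2.le (by linarith : A0 / 2 ≤ a) s)
        (abs_nonneg (η s - sech (a * s) * η 0))
      show |sech (a * s) * (η s - sech (a * s) * η 0)| ≤ _
      rw [abs_mul, abs_of_pos (sech_pos _)]
      linarith
    rw [integral_sech_sq_scaled ap, ← hs2] at e1
    have e3 : |η 0| * (a⁻¹ * s2) ≤ |M| + 2 * (2 * 1 * (2 / (A0 - A0 / 2)) * Γ) := by
      have : η 0 * (a⁻¹ * s2) = M - ∫ s, sech (a * s) * (η s - sech (a * s) * η 0) := by linarith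
      have h6 : |η 0| * (a⁻¹ * s2) = |η 0 * (a⁻¹ * s2)| := by
        rw [abs_mul, abs_of_pos (by positivity : 0 < a⁻¹ * s2)]
      rw [h6, this]
      refine (abs_sub _ _).trans (add_le_add le_rfl (e2.trans ?_))
      linarith
    have e4 : |η 0| ≤ A1 / s2 * (|η 0| * (a⁻¹ * s2)) := by
      have : A1 / s2 * (|η 0| * (a⁻¹ * s2)) = |η 0| * (A1 * a⁻¹) := by field_simp
      rw [this]
      refine le_mul_of_one_le_right (abs_nonneg _) ?_
      rw [← div_eq_mul_inv, one_le_div ap]; exact ha1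
    refine e4.trans ((mul_mono_l e3 (by positivity)).trans ?_)
    rw [hD, mul_assoc (A1 / s2)]
    refine mul_mono_l ?_ (by positivity)
    have h7 : 0 < 2 / (A0 - A0 / 2) := by
      have : 0 < A0 - A0 / 2 := by linarith
      positivity
    have : 0 ≤ 2 / (A0 - A0 / 2) * |M| := by positivity
    nlinarith
  have hyp : ∀ y, |η y| ≤ 2 * D * |M| * exp (-(A0 / 2 * |y|))
      + (2 * D + 2) * ∫ s, exp (-(A0 / 2 * |y - s|)) * (2 * |q s| + A1 * r0 * |η s|) := by
    intro y
    have i6 : Integrable fun s => exp (-(A0 / 2 * |y - s|)) * |g s| :=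
      integrable_exp_mul hA2 y cg.abs (S := 2 * H + A1 * r0 * r0) (fun y => by simpa using gS y)
    have i7 : Integrable fun s => exp (-(A0 * |y - s|)) * |g s| :=
      integrable_exp_mul hA0 y cg.abs (S := 2 * H + A1 * r0 * r0) (fun y => by simpa using gS y)
    have i8 : Integrable fun s => exp (-(A0 / 2 * |y - s|)) * (2 * |q s| + A1 * r0 * |η s|) :=
      integrable_exp_mul hA2 y (by fun_prop) (S := 2 * H + A1 * r0 * r0) (fun s => by
        rw [abs_of_nonneg (by positivity)]
        have := mul_mono_l (rη s) (by positivity : 0 ≤ A1 * r0)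
        linarith [hH s])
    obtain ⟨G, hG⟩ : ∃ G, G = ∫ s, exp (-(A0 / 2 * |y - s|)) * |g s| := ⟨_, rfl⟩
    have t1 : G ≤ ∫ s, exp (-(A0 / 2 * |y - s|)) * (2 * |q s| + A1 * r0 * |η s|) := by
      rw [hG]
      exact integral_mono i6 i8 fun s => mul_mono_l (gle s) (exp_pos _).le
    have t2 : ∫ s, exp (-(A0 * |y - s|)) * |g s| ≤ G := by
      rw [hG]
      refine integral_mono i7 i6 fun s => mul_mono_r (exp_le_exp.2 ?_) (abs_nonneg _)
      have := mul_nonneg hA0.le (abs_nonneg (y - s))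
      linarith
    have t3 : exp (-(A0 / 2 * |y|)) * Γ ≤ G := by
      rw [hΓ, hG, ← integral_const_mul]
      refine integral_mono (iΓ.const_mul _) i6 fun s => ?_
      show exp (-(A0 / 2 * |y|)) * (exp (-(A0 / 2 * |s|)) * |g s|) ≤ _
      rw [← mul_assoc, ← exp_add]
      refine mul_mono_r (exp_le_exp.2 ?_) (abs_nonneg _)
      have := abs_sub y s
      nlinarith
    have t4 := sech_scaled_le hA2.le (by linarith : A0 / 2 ≤ a) y
    have t5 : |sech (a * y) * η 0| ≤ 2 * exp (-(A0 / 2 * |y|)) * (D * (|M| + Γ)) := by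
      rw [abs_mul, abs_of_pos (sech_pos _)]
      exact mul_le_mul t4 η0 (abs_nonneg _) (by positivity)
    have t6 : |η y| ≤ |η y - sech (a * y) * η 0| + |sech (a * y) * η 0| := by
      have := abs_add_le (η y - sech (a * y) * η 0) (sech (a * y) * η 0)
      rwa [sub_add_cancel] at this
    have t7 := mul_mono_l t3 (by positivity : 0 ≤ 2 * D)
    have t8 := mul_mono_l t1 (by positivity : 0 ≤ 2 * D + 2)
    have := du y
    nlinarith
  have fin := absorb hA2 (by positivity : 0 ≤ 2 * D + 2) (by positivity : 0 ≤ A1 * r0)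
    (by positivity : 0 ≤ 2 * D * |M|) cη (h := fun s => 2 * |q s|) (by fun_prop) rη (H := 2 * H) (fun y => by
      rw [abs_mul, abs_abs, abs_two]; linarith [hH y]) (fun y => by positivity) hyp (by
      rw [hr0]; apply le_of_eq; field_simp) y
  rw [← hη' y, show (fun s => sech (a * s) * (φ s - ang a s)) = fun s => sech (a * s) * η s by
    ext s; rw [hη'], ← hM]
  rw [show A0 / 2 / 2 = A0 / 4 by ring] at fin
  rw [show (fun s => exp (-(A0 / 4 * |y - s|)) * (2 * |q s|))
    = fun s => 2 * (exp (-(A0 / 4 * |y - s|)) * |q s|) by ext s; ring, integral_const_mul] at fin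
  refine fin.trans ?_
  have : 0 ≤ |M| * exp (-(A0 / 4 * |y|)) := by positivity
  have : 0 ≤ D * (|M| * exp (-(A0 / 4 * |y|))) := by positivity
  have : 0 ≤ ∫ s, exp (-(A0 / 4 * |y - s|)) * |q s| := integral_nonneg fun s => by positivity
  nlinarith

/-! ### The moving frame -/

/-- Pointwise and weighted forms of `phase_bound`. -/
theorem angle_weighted {A0 A1 : ℝ} (hA0 : 0 < A0) (hA : A0 ≤ A1) : ∃ C r0 : ℝ, 0 < C ∧ 0 < r0 ∧
    ∀ (a : ℝ) (φ q : ℝ → ℝ) (H M : ℝ), A0 ≤ a → a ≤ A1 → Continuous q → (∀ y, |q y| ≤ H) →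
      (∀ y, HasDerivAt φ (-2 * q y - a * sin (φ y)) y) → (∀ y, |φ y - ang a y| ≤ r0) →
      M = ∫ s, sech (a * s) * (φ s - ang a s) →
      (∀ y, |φ y - ang a y| ≤ C * (|M| + H)) ∧
      ∀ (g : ℝ → ℝ) (β Cg : ℝ), Continuous g → (∀ x, 0 ≤ g x) → 2 * β ≤ A0 / 4 → 0 ≤ Cg →
        (∀ x y, g x ≤ Cg * exp (β * |x - y|) * g y) → (Integrable fun x => g x * q x ^ 2) →
        (Integrable fun x => g x * exp (-(A0 / 4 * |x|))) →
        (Integrable fun x => g x * (φ x - ang a x) ^ 2) ∧ ∫ x, g x * (φ x - ang a x) ^ 2 ≤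
          C * (M ^ 2 * (∫ x, g x * exp (-(A0 / 4 * |x|))) + Cg * ∫ x, g x * q x ^ 2) := by
  obtain ⟨C, r0, Cp, r0p, hpb⟩ := phase_bound hA0 hA
  obtain ⟨b, hb⟩ : ∃ b, b = A0 / 4 := ⟨_, rfl⟩
  have bp : 0 < b := by rw [hb]; positivity
  rw [← hb] at hpb ⊢
  refine ⟨C + C * (2 / b) + 2 * C ^ 2 + 2 * C ^ 2 * (2 / b) * (4 / b), r0, by positivity, r0p, ?_⟩
  intro a φ q H M ha0 ha1 cq hH hφ hr hM
  have pw := hpb a φ q H ha0 ha1 cq hH hφ hr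
  rw [← hM] at pw
  have H0 : 0 ≤ H := (abs_nonneg _).trans (hH 0)
  have cφ : Continuous φ := cont_of_deriv hφ
  have cη : Continuous fun y => φ y - ang a y := cφ.sub (continuous_ang a)
  have K1 : 0 ≤ 2 * C ^ 2 * (2 / b) * (4 / b) := by positivity
  have iq : ∀ y, Integrable fun s => exp (-(b * |y - s|)) * |q s| := fun y =>
    integrable_exp_mul bp y cq.abs (S := H) (fun y => by simpa using hH y)
  constructor
  · intro y
    refine (pw y).trans ?_
    have h1 : |M| * exp (-(b * |y|)) ≤ |M| :=
      mul_le_of_le_one_right (abs_nonneg _) (exp_le_one_iff.2 (by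
        have := mul_nonneg bp.le (abs_nonneg y); linarith))
    have h2 : ∫ s, exp (-(b * |y - s|)) * |q s| ≤ 2 / b * H := by
      rw [← integral_exp_abs bp y, ← integral_mul_const]
      exact integral_mono (iq y) ((integrable_exp_abs bp y).mul_const _) fun s =>
        mul_mono_l (hH s) (exp_pos _).le
    have h3 := mul_mono_l (add_le_add h1 h2) Cp.le
    refine h3.trans ?_
    have e1 : 0 ≤ C * (2 / b) * |M| := by positivity
    have e2 : 0 ≤ C * H := by positivity
    have e3 : 0 ≤ (2 * C ^ 2 + 2 * C ^ 2 * (2 / b) * (4 / b)) * (|M| + H) := by positivity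
    linarith
  · intro g β Cg cg g0 hβ Cg0 hg ig ie
    have hβb : β < b := by linarith
    obtain ⟨D, hD⟩ : ∃ D, D = 2 * C ^ 2 * M ^ 2 := ⟨_, rfl⟩
    have D0 : 0 ≤ D := by rw [hD]; positivity
    obtain ⟨F, hF⟩ : ∃ F : ℝ → ℝ, F = fun y => max ((φ y - ang a y) ^ 2 - D * exp (-(b * |y|))) 0 := ⟨_, rfl⟩
    have cF : Continuous F := by rw [hF]; fun_prop
    have F0 : ∀ y, 0 ≤ F y := fun y => by rw [hF]; exact le_max_right _ _
    have hFle : ∀ y, F y ≤ 2 * C ^ 2 * (2 / b) * ∫ s, exp (-(b * |y - s|)) * q s ^ 2 := by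
      intro y
      rw [hF]
      refine max_le ?_ (mul_nonneg (by positivity) (integral_nonneg fun s => by positivity))
      have h1 := exp_avg_sq bp cq.abs (H := H) (fun y => by simpa using hH y) y
      simp only [sq_abs] at h1
      obtain ⟨J, hJ⟩ : ∃ J, J = ∫ s, exp (-(b * |y - s|)) * |q s| := ⟨_, rfl⟩
      have h2 := pw y
      rw [← hJ] at h1 h2
      obtain ⟨e, he⟩ : ∃ e, e = exp (-(b * |y|)) := ⟨_, rfl⟩
      have e0 : 0 < e := by rw [he]; exact exp_pos _
      have e1 : e ≤ 1 := by
        rw [he]; exact exp_le_one_iff.2 (by have := mul_nonneg bp.le (abs_nonneg y); linarith)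
      rw [← he] at h2 ⊢
      have h3 : (φ y - ang a y) ^ 2 ≤ (C * (|M| * e + J)) ^ 2 := by
        rw [← sq_abs (φ y - ang a y)]; exact pow_le_pow_left₀ (abs_nonneg _) h2 2
      have h4 : (C * (|M| * e + J)) ^ 2 ≤ 2 * C ^ 2 * (|M| ^ 2 * e + J ^ 2) := by
        have : (|M| * e + J) ^ 2 ≤ 2 * (|M| ^ 2 * e + J ^ 2) := by
          have : |M| ^ 2 * e ^ 2 ≤ |M| ^ 2 * e :=
            mul_mono_l (by nlinarith) (by positivity)
          nlinarith [sq_nonneg (|M| * e - J)]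
        have := mul_mono_l this (sq_nonneg C)
        linarith
      have h5 := mul_mono_l h1 (by positivity : 0 ≤ 2 * C ^ 2)
      rw [sq_abs M] at h4
      rw [hD]
      linarith
    obtain ⟨i1, b1⟩ := weighted_avg hβb bp (by positivity) cg g0 hg (cq.pow 2) (fun x => sq_nonneg (q x))
      (S := H ^ 2) (fun x => by
        rw [Pi.pow_apply, abs_of_nonneg (sq_nonneg _), ← sq_abs]
        exact pow_le_pow_left₀ (abs_nonneg _) (hH x) 2) ig cF F0 hFle
    have i2 := i1.add (ie.const_mul D)
    have le1 : ∀ x, |g x * (φ x - ang a x) ^ 2| ≤ g x * F x + D * (g x * exp (-(b * |x|))) := fun x => by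
      rw [abs_of_nonneg (mul_nonneg (g0 x) (sq_nonneg _))]
      have : (φ x - ang a x) ^ 2 ≤ F x + D * exp (-(b * |x|)) := by
        rw [hF]
        have := le_max_left ((φ x - ang a x) ^ 2 - D * exp (-(b * |x|))) 0
        show _ ≤ max ((φ x - ang a x) ^ 2 - D * exp (-(b * |x|))) 0 + _
        linarith
      have := mul_mono_l this (g0 x)
      linarith
    obtain ⟨i3, b3⟩ := integrable_of_abs_le (f := fun x => g x * (φ x - ang a x) ^ 2)
      (g := fun x => g x * F x + D * (g x * exp (-(b * |x|)))) (cg.mul (cη.pow 2)) i2 le1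
    refine ⟨i3, ?_⟩
    have b4 : ∫ x, g x * (φ x - ang a x) ^ 2 ≤ ∫ x, g x * F x + D * (g x * exp (-(b * |x|))) :=
      integral_mono i3 i2 fun x => (le_abs_self _).trans (le1 x)
    rw [integral_add i1 (ie.const_mul D), integral_const_mul] at b4
    obtain ⟨I, hI⟩ : ∃ I, I = ∫ x, g x * q x ^ 2 := ⟨_, rfl⟩
    obtain ⟨G, hG⟩ : ∃ G, G = ∫ x, g x * exp (-(b * |x|)) := ⟨_, rfl⟩
    have I0 : 0 ≤ I := by rw [hI]; exact integral_nonneg fun x => mul_nonneg (g0 x) (sq_nonneg _)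
    have G0 : 0 ≤ G := by rw [hG]; exact integral_nonneg fun x => mul_nonneg (g0 x) (exp_pos _).le
    simp only [Pi.pow_apply] at b1
    rw [← hI] at b1 ⊢
    rw [← hG] at b4 ⊢
    have h6 : 2 / (b - β) ≤ 4 / b := by
      rw [div_le_div_iff₀ (by linarith) bp]; nlinarith
    have h7 : 2 * C ^ 2 * (2 / b) * Cg * (2 / (b - β)) * I ≤ 2 * C ^ 2 * (2 / b) * Cg * (4 / b) * I :=
      mul_mono_r (mul_mono_l h6 (by positivity)) I0
    have e1 : 0 ≤ (C + C * (2 / b)) * (M ^ 2 * G + Cg * I) := by positivity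
    have e2 : 0 ≤ 2 * C ^ 2 * (Cg * I) := by positivity
    have e3 : 0 ≤ 2 * C ^ 2 * (2 / b) * (4 / b) * (M ^ 2 * G) := by positivity
    rw [hD] at b4
    linarith

/-- The time derivative of the angle, in terms of the transformed solution. -/
def angVel (a : ℝ) (q : Jet) (θ : ℝ → ℝ → ℝ) (t x : ℝ) : ℝ :=
  2 * q 2 t x - 2 * a * q 1 t x * cos (θ t x) + 4 * q 0 t x ^ 3 + 2 * a ^ 2 * q 0 t x
    + (a ^ 3 + 2 * a * q 0 t x ^ 2) * sin (θ t x)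

/-- A small solution `q` together with an angle `θ` linking it to a solution that carries a soliton
of amplitude `a`. Times `t < 0` are filled in by the constant extension. -/
structure Track (a E : ℝ) (q : Jet) (θ : ℝ → ℝ → ℝ) : Prop where
  sol : SmallSol q E
  tmax : ∀ t, θ (max t 0) = θ t
  cont : Cont₂ θ
  hx : ∀ t x, HasDerivAt (θ t) (-2 * q 0 t x - a * sin (θ t x)) x
  ht : ∀ t, 0 < t → ∀ x, HasDerivAt (fun τ => θ τ x) (angVel a q θ t x) t
  qb : ∀ T, ∃ L, ∀ t, 0 ≤ t → t ≤ T → ∀ x, |q 1 t x| ≤ L ∧ |q 2 t x| ≤ L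
  init : ∃ B, ∀ x, |θ 0 x| ≤ B

/-- The moment of the deviation from the soliton angle centred at `z`; it measures the error made
in placing the soliton at `z`. -/
def mom (a : ℝ) (θ : ℝ → ℝ → ℝ) (t z : ℝ) : ℝ := ∫ x, sech (a * (x - z)) * (θ t x - ang a (x - z))

lemma integrable_sech_shift {a : ℝ} (ha : 0 < a) (p : ℝ) {g : ℝ → ℝ} (cg : Continuous g) {S : ℝ}
    (hS : ∀ x, |g x| ≤ S) : Integrable fun x => sech (a * (x - p)) * g x := by
  have := (integrable_sech_mul ha (g := fun x => g (x + p)) (by fun_prop) (S := S) fun x => hS _).comp_sub_right p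
  simpa using this

lemma mom_eq (a : ℝ) (θ : ℝ → ℝ → ℝ) (t z : ℝ) :
    mom a θ t z = ∫ s, sech (a * s) * (θ t (s + z) - ang a s) := by
  rw [mom, ← integral_add_right_eq_self _ z]
  simp

lemma abs_le_of_sq_le {x E : ℝ} (h : x ^ 2 ≤ 4 * E) : |x| ≤ 2 * √E := by
  have := abs_le_sqrt h
  rwa [sqrt_mul (by norm_num), show (4:ℝ) = 2 ^ 2 by norm_num, sqrt_sq (by norm_num)] at this

section Tracking

variable {a E : ℝ} {q : Jet} {θ : ℝ → ℝ → ℝ}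

lemma Track.abs_q (h : Track a E q θ) {t : ℝ} (ht : 0 ≤ t) (x : ℝ) : |q 0 t x| ≤ 2 * √E :=
  abs_le_of_sq_le (h.sol.sup t ht x)

lemma Track.vel_bound (h : Track a E q θ) (ha : 0 < a) (T : ℝ) :
    ∃ L, 0 ≤ L ∧ ∀ t, 0 ≤ t → t ≤ T → ∀ x, |angVel a q θ t x| ≤ L := by
  obtain ⟨L, hL⟩ := h.qb T
  obtain ⟨H, hH⟩ : ∃ H, H = 2 * √E := ⟨_, rfl⟩
  have H0 : 0 ≤ H := by rw [hH]; positivity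
  refine ⟨2 * |L| + 2 * a * |L| + 4 * H ^ 3 + 2 * a ^ 2 * H + (a ^ 3 + 2 * a * H ^ 2), by positivity, ?_⟩
  intro t ht hT x
  obtain ⟨h1, h2⟩ := hL t ht hT x
  have h0 : |q 0 t x| ≤ H := hH ▸ h.abs_q ht x
  have h1 := h1.trans (le_abs_self L)
  have h2 := h2.trans (le_abs_self L)
  have p2 := pow_le_pow_left₀ (abs_nonneg _) h0 2
  have p3 := pow_le_pow_left₀ (abs_nonneg _) h0 3
  unfold angVel
  refine (abs_add_le _ _).trans (add_le_add ((abs_add_le _ _).trans (add_le_add ((abs_add_le _ _).trans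
    (add_le_add ((abs_sub _ _).trans (add_le_add ?_ ?_)) ?_)) ?_)) ?_)
  · rw [abs_mul, abs_two]; linarith
  · rw [abs_mul, abs_mul, abs_of_pos (by positivity : 0 < 2 * a), mul_assoc]
    have : |q 1 t x| * |cos (θ t x)| ≤ |L| * 1 :=
      mul_le_mul h1 (abs_cos_le_one _) (abs_nonneg _) (abs_nonneg _)
    have := mul_mono_l this (by positivity : 0 ≤ 2 * a)
    linarith
  · rw [abs_mul, abs_pow, abs_of_pos (by norm_num : (0:ℝ) < 4)]; linarith
  · rw [abs_mul, abs_of_pos (by positivity : 0 < 2 * a ^ 2)]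
    exact mul_mono_l h0 (by positivity)
  · rw [abs_mul]
    refine (mul_le_of_le_one_right (abs_nonneg _) (abs_sin_le_one _)).trans ?_
    rw [abs_of_pos (by positivity)]
    rw [sq_abs] at p2
    have := mul_mono_l p2 (by positivity : 0 ≤ 2 * a)
    linarith

lemma Track.lip_t (h : Track a E q θ) (ha : 0 < a) (T : ℝ) :
    ∃ L, 0 ≤ L ∧ ∀ t t', |t| ≤ T → |t'| ≤ T → ∀ x, |θ t x - θ t' x| ≤ L * |t - t'| := by
  obtain ⟨L, L0, hL⟩ := h.vel_bound ha T
  have key : ∀ s t, 0 ≤ s → s < t → t ≤ T → ∀ x, |θ t x - θ s x| ≤ L * |t - s| := by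
    intro s t hs hst hT x
    obtain ⟨c, hc, e⟩ := exists_hasDerivAt_eq_slope (fun τ => θ τ x) (fun τ => angVel a q θ τ x) hst
      (cont_time h.cont x).continuousOn (fun τ hτ => h.ht τ (by linarith [hτ.1]) x)
    have := hL c (by linarith [hc.1]) (by linarith [hc.2]) x
    rw [e, abs_div, div_le_iff₀ (abs_pos.2 (by linarith))] at this
    exact this
  have key2 : ∀ s t, 0 ≤ s → 0 ≤ t → s ≤ T → t ≤ T → ∀ x, |θ t x - θ s x| ≤ L * |t - s| := by
    intro s t hs ht hsT htT x
    rcases lt_trichotomy s t with hl | hl | hl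
    · exact key s t hs hl htT x
    · simp [hl]
    · rw [abs_sub_comm, abs_sub_comm t s]; exact key t s ht hl hsT x
  refine ⟨L, L0, fun t t' ht ht' x => ?_⟩
  have T0 := (abs_nonneg t).trans ht
  rw [← h.tmax t, ← h.tmax t']
  exact (key2 _ _ (le_max_right _ _) (le_max_right _ _) (max_le ((le_abs_self _).trans ht') T0)
    (max_le ((le_abs_self _).trans ht) T0) x).trans
    (mul_mono_l (abs_max_sub_max_le_abs _ _ _) L0)

lemma Track.lip_x (h : Track a E q θ) (ha : 0 < a) (t x y : ℝ) :
    |θ t y - θ t x| ≤ (4 * √E + a) * |y - x| := by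
  rw [← h.tmax t]
  refine lip_of_deriv (h.hx _) fun z _ => (abs_sub _ _).trans (add_le_add ?_ ?_)
  · have := h.abs_q (le_max_right t 0) z
    rw [abs_mul, abs_neg, abs_two]; linarith
  · rw [abs_mul, abs_of_pos ha]
    exact mul_le_of_le_one_right ha.le (abs_sin_le_one _)

lemma Track.bdd (h : Track a E q θ) (ha : 0 < a) (T : ℝ) :
    ∃ B, 0 ≤ B ∧ ∀ t, |t| ≤ T → ∀ x y, |θ t x - ang a y| ≤ B := by
  obtain ⟨L, L0, hL⟩ := h.lip_t ha T
  obtain ⟨B, hB⟩ := h.init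
  refine ⟨L * |T| + |B| + π, by positivity, fun t ht x y => ?_⟩
  have T0 := (abs_nonneg t).trans ht
  have h1 := hL t 0 ht (by simpa using T0) x
  have h2 := (hB x).trans (le_abs_self B)
  have h3 := ang_bounds a y
  have h4 : L * |t - 0| ≤ L * |T| :=
    mul_mono_l (by rw [sub_zero, abs_of_nonneg T0]; exact ht) L0
  rw [abs_le] at *
  constructor <;> linarith [h1.1, h1.2, h2.1, h2.2, h3.1, h3.2]

lemma Track.integrable_mom (h : Track a E q θ) (ha : 0 < a) (t z : ℝ) :
    Integrable fun s => sech (a * s) * (θ t (s + z) - ang a s) := by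
  obtain ⟨B, -, hB⟩ := h.bdd ha |t|
  have := cont_slice h.cont t
  have := continuous_ang a
  exact integrable_sech_mul ha (by fun_prop) (S := B) fun x => hB t le_rfl _ _

lemma Track.mom_lip (h : Track a E q θ) (ha : 0 < a) (T : ℝ) : ∃ L, 0 ≤ L ∧ ∀ t t' z z', |t| ≤ T →
    |t'| ≤ T → |mom a θ t z - mom a θ t' z'| ≤ L * (|t - t'| + |z - z'|) := by
  obtain ⟨L, L0, hL⟩ := h.lip_t ha T
  have k0 : 0 ≤ ∫ s, sech (a * s) := integral_nonneg fun s => (sech_pos _).le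
  refine ⟨(L + (4 * √E + a)) * ∫ s, sech (a * s), by positivity, fun t t' z z' ht ht' => ?_⟩
  rw [mom_eq, mom_eq, ← integral_sub (h.integrable_mom ha t z) (h.integrable_mom ha t' z')]
  refine abs_integral_le_integral_abs.trans ?_
  have e : (L + (4 * √E + a)) * (∫ s, sech (a * s)) * (|t - t'| + |z - z'|)
      = ∫ s, sech (a * s) * ((L + (4 * √E + a)) * (|t - t'| + |z - z'|)) := by
    rw [integral_mul_const]; ring
  rw [e]
  refine integral_mono_of_nonneg (.of_forall fun s => abs_nonneg _)
    ((integrable_sech ha).mul_const _) (.of_forall fun s => ?_)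
  show |sech (a * s) * (θ t (s + z) - ang a s) - sech (a * s) * (θ t' (s + z') - ang a s)| ≤ _
  rw [← mul_sub, abs_mul, abs_of_pos (sech_pos _)]
  refine mul_mono_l ?_ (sech_pos _).le
  have h1 := hL t t' ht ht' (s + z)
  have h2 := h.lip_x ha t' (s + z') (s + z)
  rw [add_sub_add_left_eq_sub] at h2
  have h3 := abs_add_le (θ t (s + z) - θ t' (s + z)) (θ t' (s + z) - θ t' (s + z'))
  rw [show θ t (s + z) - ang a s - (θ t' (s + z') - ang a s) =
    θ t (s + z) - θ t' (s + z) + (θ t' (s + z) - θ t' (s + z')) by ring]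
  have e1 : 0 ≤ L * |z - z'| := by positivity
  have e2 : 0 ≤ (4 * √E + a) * |t - t'| := by positivity
  linarith

lemma Track.mom_cont (h : Track a E q θ) (ha : 0 < a) :
    Continuous fun p : ℝ × ℝ => mom a θ p.1 p.2 := by
  refine continuous_iff_continuousAt.2 fun p0 => ?_
  obtain ⟨L, L0, hL⟩ := h.mom_lip ha (|p0.1| + 1)
  refine tendsto_iff_dist_tendsto_zero.2 (squeeze_zero' (.of_forall fun p => dist_nonneg)
    (g := fun p : ℝ × ℝ => L * (|p.1 - p0.1| + |p.2 - p0.2|)) ?_ ?_)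
  · have c1 : Continuous fun p : ℝ × ℝ => |p.1| := by fun_prop
    have := c1.continuousAt.eventually_lt (continuousAt_const (y := |p0.1| + 1)) (lt_add_one |p0.1|) (x₀ := p0)
    filter_upwards [this] with p hp
    exact hL _ _ _ _ hp.le (by linarith)
  · have c2 : Continuous fun p : ℝ × ℝ => L * (|p.1 - p0.1| + |p.2 - p0.2|) := by fun_prop
    have := c2.tendsto p0
    simpa using this

/-- A centre `P` moving with the soliton speed, corrected by the moment. -/
theorem Track.exists_center (h : Track a E q θ) (ha : 0 < a) : ∃ P : ℝ → ℝ, P 0 = 0 ∧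
    Continuous (fun t => mom a θ t (P t)) ∧ ∀ t, HasDerivAt P (a ^ 2 + mom a θ t (P t)) t := by
  obtain ⟨P, h0, hP⟩ := ode_global (f := fun t z => a ^ 2 + mom a θ t z)
    (continuous_const.add (h.mom_cont ha)) (fun T => by
      obtain ⟨B, B0, hB⟩ := h.bdd ha T
      refine ⟨a ^ 2 + (∫ s, sech (a * s)) * B, fun t z ht => (abs_add_le _ _).trans (add_le_add
        (by rw [abs_of_nonneg (sq_nonneg _)]) ?_)⟩
      rw [mom_eq, ← integral_mul_const]
      refine abs_integral_le_integral_abs.trans (integral_mono_of_nonneg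
        (.of_forall fun s => abs_nonneg _) ((integrable_sech ha).mul_const _)
        (.of_forall fun s => ?_))
      show |sech (a * s) * (θ t (s + z) - ang a s)| ≤ _
      rw [abs_mul, abs_of_pos (sech_pos _)]
      exact mul_mono_l (hB t ht _ _) (sech_pos _).le)
    (fun T => by
      obtain ⟨L, L0, hL⟩ := h.mom_lip ha T
      refine ⟨L, fun t z z' ht => ?_⟩
      have := hL t t z z' ht ht
      simpa using this) 0
  have cP : Continuous P := cont_of_deriv hP
  exact ⟨P, h0, (h.mom_cont ha).comp (by fun_prop : Continuous fun t => (t, P t)), hP⟩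

end Tracking

section Tracking

variable {a E : ℝ} {q : Jet} {θ : ℝ → ℝ → ℝ}

lemma hasDerivAt_sech_shift (a p x : ℝ) : HasDerivAt (fun x => sech (a * (x - p)))
    (-a * (sech (a * (x - p)) * tanh (a * (x - p)))) x :=
  (hasDerivAt_sech_scaled a (x - p)).comp_sub_const x p

/-- Derivative of the moment along the centre: the linear part is `mom` times an integral which is
negative near the soliton, and after two integrations by parts the rest is quadratic. -/
theorem Track.mom_deriv (h : Track a E q θ) (ha : 0 < a) {P : ℝ → ℝ}
    (cm : Continuous fun t => mom a θ t (P t))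
    (hP : ∀ t, HasDerivAt P (a ^ 2 + mom a θ t (P t)) t) {t : ℝ} (ht : 0 < t) :
    HasDerivAt (fun t => mom a θ t (P t))
      (mom a θ t (P t) * (∫ x, sech (a * (x - P t)) * (a * tanh (a * (x - P t)) *
        (θ t x - ang a (x - P t)) - a * sech (a * (x - P t))))
      + ∫ x, sech (a * (x - P t)) * (2 * a * (tanh (a * (x - P t)) - cos (θ t x)) * q 1 t x
        + 4 * q 0 t x ^ 3 + 2 * a * q 0 t x ^ 2 * sin (θ t x))) t := by
  have cP : Continuous P := cont_of_deriv hP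
  have c0 := h.sol.jet.cont 0 (by norm_num)
  have c1 := h.sol.jet.cont 1 (by norm_num)
  have c2 := h.sol.jet.cont 2 (by norm_num)
  have s0 := cont_slice c0 t
  have s1 := cont_slice c1 t
  have s2 := cont_slice c2 t
  have sθ := cont_slice h.cont t
  have cang := continuous_ang a
  have cs := continuous_sech
  have ct := continuous_tanh'
  obtain ⟨M, hM⟩ : ∃ M : ℝ → ℝ, M = fun t => mom a θ t (P t) := ⟨_, rfl⟩
  have hM' : ∀ t, mom a θ t (P t) = M t := fun t => by rw [hM]
  obtain ⟨G', hG'⟩ : ∃ G' : ℝ → ℝ → ℝ, G' = fun τ x => sech (a * (x - P τ)) *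
      (a * tanh (a * (x - P τ)) * (a ^ 2 + M τ) * (θ τ x - ang a (x - P τ))
        + (angVel a q θ τ x - a * sech (a * (x - P τ)) * (a ^ 2 + M τ))) := ⟨_, rfl⟩
  obtain ⟨B, B0, hB⟩ := h.bdd ha (t + 1)
  obtain ⟨V, V0, hV⟩ := h.vel_bound ha (t + 1)
  obtain ⟨R, hR⟩ := isCompact_Icc.exists_bound_of_continuousOn (s := Icc 0 (t + 1)) cP.continuousOn
  obtain ⟨N, hN⟩ := isCompact_Icc.exists_bound_of_continuousOn (s := Icc 0 (t + 1))
    (f := fun τ => a ^ 2 + M τ) (by rw [hM]; exact (continuous_const.add cm).continuousOn)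
  have N0 : 0 ≤ N := (norm_nonneg _).trans (hN t ⟨ht.le, by linarith⟩)
  have cvel : Continuous (angVel a q θ t) := by
    show Continuous fun x => angVel a q θ t x
    unfold angVel; fun_prop
  have hTh : ∀ x, |tanh x| ≤ 1 := abs_tanh_le_one
  have core : ∀ τ, 0 ≤ τ → τ ≤ t + 1 → ∀ x, |a * tanh (a * (x - P τ)) * (a ^ 2 + M τ) * (θ τ x - ang a (x - P τ))
        + (angVel a q θ τ x - a * sech (a * (x - P τ)) * (a ^ 2 + M τ))| ≤ a * N * B + (V + a * N) := by
    intro τ h0 h1 x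
    have n1 : |a ^ 2 + M τ| ≤ N := hN τ ⟨h0, h1⟩
    refine (abs_add_le _ _).trans (add_le_add ?_ ((abs_sub _ _).trans (add_le_add (hV τ h0 h1 x) ?_)))
    · rw [abs_mul, abs_mul, abs_mul, abs_of_pos ha]
      refine mul_le_mul (mul_le_mul (mul_le_of_le_one_right ha.le (hTh _)) n1 (abs_nonneg _) ha.le)
        (hB τ (by rw [abs_of_nonneg h0]; exact h1) _ _) (abs_nonneg _) (by positivity)
    · rw [abs_mul, abs_mul, abs_of_pos ha, abs_of_pos (sech_pos _)]
      exact mul_le_mul (mul_le_of_le_one_right ha.le (sech_le_one _)) n1 (abs_nonneg _) ha.le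
  have hs : Ioo 0 (t + 1) ∈ nhds t := Ioo_mem_nhds ht (by linarith)
  have htT : |t| ≤ t + 1 := by rw [abs_of_pos ht]; linarith
  obtain ⟨F, hF⟩ : ∃ F : ℝ → ℝ → ℝ, F = fun τ x => sech (a * (x - P τ)) * (θ τ x - ang a (x - P τ)) :=
    ⟨_, rfl⟩
  have hbd : ∀ x, ∀ τ ∈ Ioo 0 (t + 1), ‖G' τ x‖ ≤
      2 * exp (a * R) * exp (-(a * |x - 0|)) * (a * N * B + (V + a * N)) := by
    intro x τ hτ
    have hτ' : τ ∈ Icc 0 (t + 1) := ⟨hτ.1.le, hτ.2.le⟩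
    rw [hG', norm_mul, norm_eq_abs, norm_eq_abs, abs_of_pos (sech_pos _)]
    refine mul_le_mul ?_ (core τ hτ'.1 hτ'.2 x) (abs_nonneg _) (by positivity)
    refine (sech_scaled_le ha.le le_rfl _).trans ?_
    rw [mul_assoc, ← exp_add]
    refine mul_mono_l (exp_le_exp.2 ?_) (by norm_num)
    have e1 : |P τ| ≤ R := hR τ hτ'
    have e2 : |x| ≤ |x - P τ| + |P τ| := by
      have := abs_add_le (x - P τ) (P τ); rwa [sub_add_cancel] at this
    have := mul_mono_l (e2.trans (add_le_add le_rfl e1)) ha.le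
    rw [sub_zero]
    linarith
  have hdf : ∀ x, ∀ τ ∈ Ioo 0 (t + 1), HasDerivAt (fun τ => F τ x) (G' τ x) τ := by
    intro x τ hτ
    have dP : HasDerivAt (fun τ => x - P τ) (-(a ^ 2 + M τ)) τ := by
      rw [← hM' τ]; exact (hP τ).const_sub x
    have d1 := HasDerivAt.comp (h₂ := fun z => sech (a * z)) τ (hasDerivAt_sech_scaled a (x - P τ)) dP
    have d2 := HasDerivAt.comp (h₂ := ang a) τ (hasDerivAt_ang a (x - P τ)) dP
    simp only [Function.comp_def] at d1 d2
    rw [hF]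
    refine (d1.fun_mul ((h.ht τ hτ.1 x).fun_sub d2)).congr_deriv ?_
    rw [hG']
    ring
  have hFm : ∀ τ, Continuous (F τ) := fun τ => by
    have := cont_slice h.cont τ
    rw [hF]; fun_prop
  have hF0 : Integrable (F t) := by
    rw [hF]
    exact integrable_sech_shift ha (P t) (g := fun x => θ t x - ang a (x - P t)) (by fun_prop) (S := B)
      fun x => hB t htT _ _
  have hGm : Continuous (G' t) := by rw [hG']; fun_prop
  have hbi : Integrable fun x => 2 * exp (a * R) * exp (-(a * |x - 0|)) * (a * N * B + (V + a * N)) := by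
    have := ((integrable_exp_abs ha 0).const_mul (2 * exp (a * R))).mul_const (a * N * B + (V + a * N))
    simpa [abs_sub_comm] using this
  have dd := hasDerivAt_integral_of_dominated_loc_of_deriv_le (μ := volume) (𝕜 := ℝ) hs
    (.of_forall fun τ => (hFm τ).aestronglyMeasurable) hF0 hGm.aestronglyMeasurable
    (.of_forall hbd) hbi (.of_forall hdf)
  obtain ⟨iG, dG⟩ := dd
  rw [show (fun t => mom a θ t (P t)) = fun τ => ∫ x, F τ x by rw [hF]; rfl]
  refine dG.congr_deriv ?_
  rw [hM' t]
  -- the three pieces of `G'`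
  obtain ⟨L, hL⟩ := h.qb t
  have q0b : ∀ x, |q 0 t x| ≤ 2 * √E := fun x => h.abs_q ht.le x
  have i1 : Integrable fun x => sech (a * (x - P t)) * (a * tanh (a * (x - P t)) *
        (θ t x - ang a (x - P t)) - a * sech (a * (x - P t))) := by
    refine integrable_sech_shift ha (P t) (by fun_prop) (S := a * B + a) fun x => ?_
    refine (abs_sub _ _).trans (add_le_add ?_ ?_)
    · rw [abs_mul, abs_mul, abs_of_pos ha]
      exact mul_le_mul (mul_le_of_le_one_right ha.le (hTh _)) (hB t htT _ _) (abs_nonneg _) ha.le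
    · rw [abs_mul, abs_of_pos ha, abs_of_pos (sech_pos _)]
      exact mul_le_of_le_one_right ha.le (sech_le_one _)
  have i3 : Integrable fun x => sech (a * (x - P t)) * (2 * q 1 t x - a ^ 2 * (θ t x - ang a (x - P t))) := by
    refine integrable_sech_shift ha (P t) (by fun_prop) (S := 2 * L + a ^ 2 * B) fun x => ?_
    refine (abs_sub _ _).trans (add_le_add ?_ ?_)
    · rw [abs_mul, abs_two]; linarith [(hL t ht.le le_rfl x).1]
    · rw [abs_mul, abs_of_pos (by positivity : 0 < a ^ 2)]
      exact mul_mono_l (hB t htT _ _) (by positivity)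
  have i4 : Integrable fun x => sech (a * (x - P t)) * (-a * tanh (a * (x - P t)) *
      (2 * q 1 t x - a ^ 2 * (θ t x - ang a (x - P t)))
      + (2 * q 2 t x - a ^ 2 * (-2 * q 0 t x - a * sin (θ t x) + a * sech (a * (x - P t))))) := by
    refine integrable_sech_shift ha (P t) (by fun_prop)
      (S := a * (2 * L + a ^ 2 * B) + (2 * L + a ^ 2 * (4 * √E + a + a))) fun x => ?_
    have L1 := (hL t ht.le le_rfl x).1
    have L2 := (hL t ht.le le_rfl x).2
    refine (abs_add_le _ _).trans (add_le_add ?_ ((abs_sub _ _).trans (add_le_add ?_ ?_)))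
    · rw [abs_mul, abs_mul, abs_neg, abs_of_pos ha]
      refine mul_le_mul (mul_le_of_le_one_right ha.le (hTh _)) ((abs_sub _ _).trans (add_le_add ?_ ?_))
        (abs_nonneg _) ha.le
      · rw [abs_mul, abs_two]; linarith
      · rw [abs_mul, abs_of_pos (by positivity : 0 < a ^ 2)]
        exact mul_mono_l (hB t htT _ _) (by positivity)
    · rw [abs_mul, abs_two]; linarith
    · rw [abs_mul, abs_of_pos (by positivity : 0 < a ^ 2)]
      refine mul_mono_l ((abs_add_le _ _).trans (add_le_add ((abs_sub _ _).trans
        (add_le_add ?_ ?_)) ?_)) (by positivity)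
      · rw [abs_mul, abs_neg, abs_two]; linarith [q0b x]
      · rw [abs_mul, abs_of_pos ha]; exact mul_le_of_le_one_right ha.le (abs_sin_le_one _)
      · rw [abs_mul, abs_of_pos ha, abs_of_pos (sech_pos _)]
        exact mul_le_of_le_one_right ha.le (sech_le_one _)
  have z4 := integral_eq_zero_of_hasDerivAt_of_integrable (fun x => by
    have d1 := hasDerivAt_sech_shift a (P t) x
    have d2 : HasDerivAt (fun x => q 1 t x) (q 2 t x) x := h.sol.jet.hx 1 (by norm_num) t x
    have d3 := (hasDerivAt_ang a (x - P t)).comp_sub_const x (P t)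
    exact (d1.fun_mul ((d2.const_mul 2).fun_sub (((h.hx t x).fun_sub d3).const_mul (a ^ 2)))).congr_deriv
      (g' := sech (a * (x - P t)) * (-a * tanh (a * (x - P t)) *
      (2 * q 1 t x - a ^ 2 * (θ t x - ang a (x - P t)))
      + (2 * q 2 t x - a ^ 2 * (-2 * q 0 t x - a * sin (θ t x) + a * sech (a * (x - P t)))))) (by ring)) i4 i3
  have e : ∀ x, sech (a * (x - P t)) * (2 * a * (tanh (a * (x - P t)) - cos (θ t x)) * q 1 t x
        + 4 * q 0 t x ^ 3 + 2 * a * q 0 t x ^ 2 * sin (θ t x)) = G' t x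
      - M t * (sech (a * (x - P t)) * (a * tanh (a * (x - P t)) *
        (θ t x - ang a (x - P t)) - a * sech (a * (x - P t))))
      - sech (a * (x - P t)) * (-a * tanh (a * (x - P t)) *
      (2 * q 1 t x - a ^ 2 * (θ t x - ang a (x - P t)))
      + (2 * q 2 t x - a ^ 2 * (-2 * q 0 t x - a * sin (θ t x) + a * sech (a * (x - P t))))) := fun x => by
    simp only [hG', angVel]; ring
  simp_rw [e]
  have k1 := integral_sub (iG.sub (i1.const_mul (M t))) i4
  have k2 := integral_sub iG (i1.const_mul (M t))
  simp only [Pi.sub_apply] at k1 k2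
  rw [k1, k2, z4, integral_const_mul]
  ring

end Tracking

/-! ### Decay of the modulation -/

lemma barrier {f f' B B' : ℝ → ℝ} {T : ℝ} (cf : Continuous f) (cB : Continuous B) (h0 : f 0 < B 0)
    (df : ∀ t ∈ Ioo 0 T, HasDerivAt f (f' t) t) (dB : ∀ t ∈ Ioo 0 T, HasDerivAt B (B' t) t)
    (hb : ∀ t ∈ Ioo 0 T, f t = B t → f' t < B' t) : ∀ t ∈ Icc 0 T, f t ≤ B t := by
  obtain ⟨s, sp, hs⟩ := Metric.eventually_nhds_iff.1
    (cf.continuousAt.eventually_lt cB.continuousAt h0)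
  have near : ∀ t, 0 ≤ t → t < s → f t ≤ B t := fun t h1 h2 =>
    (hs (by rw [dist_zero_right, norm_eq_abs, abs_of_nonneg h1]; exact h2)).le
  intro t ht
  rcases lt_or_ge t s with h | h
  · exact near t ht.1 h
  · have sub : ∀ x ∈ Ico (s / 2) t, x ∈ Ioo 0 T := fun x hx =>
      ⟨by linarith [hx.1], by linarith [hx.2, ht.2]⟩
    exact image_le_of_deriv_right_lt_deriv_boundary' (a := s / 2) (b := t) cf.continuousOn
      (fun x hx => (df x (sub x hx)).hasDerivWithinAt) (near _ (by positivity) (by linarith))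
      cB.continuousOn (fun x hx => (dB x (sub x hx)).hasDerivWithinAt) (fun x hx => hb x (sub x hx))
      ⟨by linarith, le_rfl⟩

/-- A damped scalar equation transfers the polynomial decay of its forcing to its solutions. -/
lemma damped_decay {m s : ℝ} (hm : 0 < m) (hs : 0 < s) : ∃ K : ℝ, 0 < K ∧
    ∀ (M M' : ℝ → ℝ) (ε T : ℝ), 0 < ε → Continuous M → |M 0| ≤ ε →
      (∀ t ∈ Ioo 0 T, HasDerivAt M (M' t) t) →
      (∀ t ∈ Ioo 0 T, M t * M' t ≤ -s * M t ^ 2 + |M t| * (ε * ((1 + t ^ 2) ^ m)⁻¹)) →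
      ∀ t ∈ Icc 0 T, (1 + t ^ 2) ^ m * |M t| ≤ K * ε := by
  obtain ⟨L, hL⟩ : ∃ L, L = 1 + 4 * m / s := ⟨_, rfl⟩
  have L1 : 1 ≤ L := by rw [hL]; linarith [(by positivity : 0 < 4 * m / s)]
  have Lp : 0 < L := by linarith
  have Ls : 4 * m ≤ s * L := by
    rw [hL, mul_add, mul_div_cancel₀ _ hs.ne']; linarith
  obtain ⟨A, hA⟩ : ∃ A, A = (L ^ 2) ^ m := ⟨_, rfl⟩
  have Ap : 0 < A := by rw [hA]; positivity
  refine ⟨2 * A * (1 / s + 1), by positivity, ?_⟩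
  intro M M' ε T hε cM h0 dM hode
  obtain ⟨D, hD⟩ : ∃ D, D = 2 * A * (1 / s + 1) * ε := ⟨_, rfl⟩
  have Dp : 0 < D := by rw [hD]; positivity
  have DA : 2 * A * ε ≤ D := by
    rw [hD]; have : 0 < A * (1 / s) * ε := by positivity
    linarith
  have Ds : 2 * (ε * A) ≤ s * D := by
    have : s * D = 2 * A * ε + s * (2 * A * ε) := by rw [hD]; field_simp
    rw [this]; have : 0 < s * (2 * A * ε) := by positivity
    linarith
  obtain ⟨R, hR⟩ : ∃ R : ℝ → ℝ, R = fun t => (L ^ 2 + t ^ 2) ^ (-m) := ⟨_, rfl⟩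
  have Rp : ∀ t, 0 < R t := fun t => by rw [hR]; exact rpow_pos_of_pos (by positivity) _
  have dR : ∀ t, HasDerivAt R (-(2 * m * t / (L ^ 2 + t ^ 2) * R t)) t := fun t => by
    rw [hR]
    have h1 : HasDerivAt (fun t : ℝ => L ^ 2 + t ^ 2) (2 * t) t := by
      simpa using ((hasDerivAt_id t).pow 2).const_add (L ^ 2)
    refine (h1.rpow_const (p := -m) (Or.inl (by positivity))).congr_deriv ?_
    rw [rpow_sub_one (by positivity)]
    field_simp
  have cR : Continuous R := cont_of_deriv dR
  have R1 : ∀ t, R t ≤ ((1 + t ^ 2) ^ m)⁻¹ := fun t => by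
    rw [hR, ← rpow_neg (by positivity)]
    exact rpow_le_rpow_of_nonpos (by positivity) (by nlinarith) (by linarith)
  have R2 : ∀ t, ((1 + t ^ 2) ^ m)⁻¹ ≤ A * R t := fun t => by
    rw [hR, hA]
    have : (L ^ 2 + t ^ 2) ^ m ≤ (L ^ 2) ^ m * (1 + t ^ 2) ^ m := by
      rw [← mul_rpow (by positivity) (by positivity)]
      refine rpow_le_rpow (by positivity) ?_ hm.le
      have : 0 ≤ (L ^ 2 - 1) * t ^ 2 := mul_nonneg (by nlinarith) (sq_nonneg _)
      linarith
    show _ ≤ _ * (L ^ 2 + t ^ 2) ^ (-m)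
    rw [rpow_neg (by positivity), ← div_eq_mul_inv, le_div_iff₀ (by positivity), ← div_eq_inv_mul,
      div_le_iff₀ (by positivity)]
    exact this
  have main := barrier (f := fun t => M t ^ 2) (f' := fun t => 2 * M t * M' t)
    (B := fun t => (D * R t) ^ 2) (B' := fun t => 2 * (D * R t) * (D * -(2 * m * t / (L ^ 2 + t ^ 2) * R t)))
    (T := T) (cM.pow 2) ((continuous_const.mul cR).pow 2) (by
      show M 0 ^ 2 < (D * R 0) ^ 2
      rw [← sq_abs (M 0)]
      refine pow_lt_pow_left₀ (h0.trans_lt ?_) (abs_nonneg _) (by norm_num)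
      have r0 : A * R 0 = 1 := by
        rw [hR, hA]; simp only [ne_eq, OfNat.ofNat_ne_zero, not_false_eq_true, zero_pow, add_zero]
        rw [← rpow_add (by positivity)]; simp
      have : 2 * A * ε * R 0 ≤ D * R 0 := mul_mono_r DA (Rp 0).le
      have e : 2 * A * ε * R 0 = 2 * ε := by linear_combination 2 * ε * r0
      linarith)
    (fun t ht => ((dM t ht).fun_pow 2).congr_deriv (by push_cast; ring))
    (fun t ht => (((dR t).const_mul D).fun_pow 2).congr_deriv (by push_cast; ring))
    (by
      intro t ht he
      have e1 : |M t| = D * R t := by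
        have := congrArg sqrt he
        simpa [sqrt_sq_eq_abs, abs_of_pos (mul_pos Dp (Rp t))] using this
      have h1 := hode t ht
      rw [he, e1] at h1
      have RR := Rp t
      have h2 := mul_mono_l (R2 t) (by positivity : 0 ≤ D * R t * ε)
      have h3 := mul_mono_r Ds (by positivity : 0 ≤ D * R t ^ 2)
      have h4 : 2 * m * t / (L ^ 2 + t ^ 2) ≤ s / 4 := by
        rw [div_le_iff₀ (by positivity)]
        have := mul_mono_r Ls ht.1.le
        nlinarith [sq_nonneg (L - t), ht.1]
      have h5 := mul_mono_r h4 (by positivity : 0 ≤ 2 * (D * R t) ^ 2)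
      have h6 : 0 < s * (D * R t) ^ 2 := by positivity
      show 2 * M t * M' t < 2 * (D * R t) * (D * -(2 * m * t / (L ^ 2 + t ^ 2) * R t))
      linarith)
  intro t ht
  have h1 : |M t| ≤ D * R t := abs_le_of_sq_le_sq (main t ht) (mul_pos Dp (Rp t)).le
  have h2 := h1.trans (mul_mono_l (R1 t) Dp.le)
  have p : 0 < (1 + t ^ 2) ^ m := by positivity
  have h3 := mul_mono_l h2 p.le
  rw [← hD]
  refine h3.trans (le_of_eq ?_)
  field_simp

/-! ### Bootstrap for the position of the soliton -/

lemma exp_le_rho {δ : ℝ} (hδ : 0 ≤ δ) (y : ℝ) : exp (-(2 * δ * |y|)) ≤ rho δ y := by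
  have h := rho_moderate hδ 0 y
  rw [exp_neg, inv_le_iff_one_le_mul₀ (exp_pos _)]
  simpa [rho, mul_comm] using h

set_option maxHeartbeats 1000000 in
/-- Control, at a fixed time and in the frame of the soliton, of the angle deviation by its moment
`M` and the weighted size of `q`, and of the forcing term in the equation for `M`. -/
theorem static_bounds {A0 A1 m δ : ℝ} (hA0 : 0 < A0) (hA : A0 ≤ A1) (hm : 0 < m) (hδ : 0 < δ)
    (hδA : 16 * δ ≤ A0) : ∃ C r0 : ℝ, 0 < C ∧ 0 < r0 ∧
    ∀ (a : ℝ) (φ q q1 : ℝ → ℝ) (H M W : ℝ), A0 ≤ a → a ≤ A1 → Continuous q → Continuous q1 →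
      (∀ y, |q y| ≤ H) → H ≤ 1 → (∀ y, HasDerivAt φ (-2 * q y - a * sin (φ y)) y) →
      (∀ y, |φ y - ang a y| ≤ r0) → M = ∫ s, sech (a * s) * (φ s - ang a s) →
      (Integrable fun x => rho δ x * (q x ^ 2 + q1 x ^ 2)) →
      (Integrable fun x => jw m x * (q x ^ 2 + q1 x ^ 2)) →
      W = ∫ x, rho δ x * (q x ^ 2 + q1 x ^ 2) →
      (∀ y, |φ y - ang a y| ≤ C * (|M| + H)) ∧
      |∫ y, sech (a * y) * (2 * a * (tanh (a * y) - cos (φ y)) * q1 y + 4 * q y ^ 3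
        + 2 * a * q y ^ 2 * sin (φ y))| ≤ C * (M ^ 2 + W) ∧
      (Integrable fun x => rho δ x * (φ x - ang a x) ^ 2) ∧
      ∫ x, rho δ x * (φ x - ang a x) ^ 2 ≤ C * (M ^ 2 + W) ∧
      (Integrable fun x => jw m x * (φ x - ang a x) ^ 2) ∧
      ∫ x, jw m x * (φ x - ang a x) ^ 2 ≤ C * (M ^ 2 + ∫ x, jw m x * (q x ^ 2 + q1 x ^ 2)) := by
  obtain ⟨C1, r0, C1p, r0p, hw⟩ := angle_weighted hA0 hA
  obtain ⟨Cg, Cgp, hg⟩ := jw_moderate hm (by positivity : 0 < A0 / 8)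
  obtain ⟨b, hb⟩ : ∃ b, b = A0 / 4 := ⟨_, rfl⟩
  have bp : 0 < b := by rw [hb]; positivity
  have A1p : 0 < A1 := hA0.trans_le hA
  have ie := integrable_exp_abs bp 0
  have ve := integral_exp_abs bp 0
  have ie2 := integrable_exp_abs (by positivity : 0 < A0 / 8) 0
  simp only [zero_sub, abs_neg] at ie ve ie2
  have iρ : Integrable fun x => rho δ x * exp (-(b * |x|)) := by
    refine (integrable_of_abs_le (f := fun x => rho δ x * exp (-(b * |x|)))
      ((continuous_rho δ).mul (by fun_prop)) (ie.const_mul 2) fun x => ?_).1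
    rw [abs_of_pos (mul_pos (rho_pos _ _) (exp_pos _))]
    exact mul_mono_r (rho_le_two _ _) (exp_pos _).le
  have vρ : ∫ x, rho δ x * exp (-(b * |x|)) ≤ 4 / b := by
    refine (integral_mono iρ (ie.const_mul 2) fun x =>
      mul_mono_r (rho_le_two _ _) (exp_pos _).le).trans (le_of_eq ?_)
    rw [integral_const_mul, ve]; ring
  have ij : Integrable fun x => jw m x * exp (-(b * |x|)) := by
    refine (integrable_of_abs_le (f := fun x => jw m x * exp (-(b * |x|)))
      ((continuous_jw m).mul (by fun_prop)) (ie2.const_mul (Cg * jw m 0)) fun x => ?_).1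
    rw [abs_of_pos (mul_pos (jw_pos _ _) (exp_pos _))]
    have := mul_mono_r (hg x 0) (exp_pos (-(b * |x|))).le
    refine this.trans (le_of_eq ?_)
    rw [sub_zero, show -(A0 / 8 * |x|) = A0 / 8 * |x| + -(b * |x|) by rw [hb]; ring, exp_add]; ring
  obtain ⟨J, hJ⟩ : ∃ J, J = ∫ x, jw m x * exp (-(b * |x|)) := ⟨_, rfl⟩
  have J0 : 0 ≤ J := by
    rw [hJ]; exact integral_nonneg fun x => mul_nonneg (jw_pos _ _).le (exp_pos _).le
  obtain ⟨D, hD⟩ : ∃ D, D = C1 * (4 / b + 1) := ⟨_, rfl⟩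
  have Dp : 0 < D := by rw [hD]; positivity
  rw [← hb] at hw
  refine ⟨C1 + D + (2 * A1 * D + (8 + 4 * A1)) + C1 * (J + Cg), r0, by positivity, r0p, ?_⟩
  intro a φ q q1 H M W ha ha1 cq cq1 hq H1 dφ hφ hM iW iJ hW
  have ap : 0 < a := hA0.trans_le ha
  obtain ⟨hsup, hwt⟩ := hw a φ q H M ha ha1 cq hq dφ hφ hM
  have cφ : Continuous φ := cont_of_deriv dφ
  have cη : Continuous fun x => φ x - ang a x := cφ.sub (continuous_ang a)
  have iq : ∀ g : ℝ → ℝ, Continuous g → (∀ x, 0 ≤ g x) →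
      (Integrable fun x => g x * (q x ^ 2 + q1 x ^ 2)) → (Integrable fun x => g x * q x ^ 2) ∧
      ∫ x, g x * q x ^ 2 ≤ ∫ x, g x * (q x ^ 2 + q1 x ^ 2) := by
    intro g cg g0 ig
    have hle : ∀ x, g x * q x ^ 2 ≤ g x * (q x ^ 2 + q1 x ^ 2) := fun x =>
      mul_mono_l (by nlinarith [sq_nonneg (q1 x)]) (g0 x)
    have i := (integrable_of_abs_le (f := fun x => g x * q x ^ 2) (by fun_prop) ig fun x => by
      rw [abs_of_nonneg (mul_nonneg (g0 x) (sq_nonneg _))]; exact hle x).1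
    exact ⟨i, integral_mono i ig hle⟩
  have ρ0 : ∀ x, 0 ≤ rho δ x := fun x => (rho_pos δ x).le
  have j0 : ∀ x, 0 ≤ jw m x := fun x => (jw_pos m x).le
  obtain ⟨iρq, vρq⟩ := iq _ (continuous_rho δ) ρ0 iW
  obtain ⟨ijq, vjq⟩ := iq _ (continuous_jw m) j0 iJ
  obtain ⟨iη, vη⟩ := hwt (rho δ) (2 * δ) 1 (continuous_rho δ) ρ0 (by rw [hb]; linarith)
    (by norm_num) (fun x y => rho_moderate hδ.le x y) iρq iρ
  obtain ⟨iη', vη'⟩ := hwt (jw m) (A0 / 8) Cg (continuous_jw m) j0 (by rw [hb]; linarith)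
    Cgp.le hg ijq ij
  have W0 : 0 ≤ W := by
    rw [hW]; exact integral_nonneg fun x => mul_nonneg (ρ0 x) (by positivity)
  have Jd0 : 0 ≤ ∫ x, jw m x * (q x ^ 2 + q1 x ^ 2) :=
    integral_nonneg fun x => mul_nonneg (j0 x) (by positivity)
  have M0 := sq_nonneg M
  have V : ∫ x, rho δ x * (φ x - ang a x) ^ 2 ≤ D * (M ^ 2 + W) := by
    refine vη.trans ?_
    rw [hD, mul_assoc]
    refine mul_mono_l ?_ C1p.le
    have h1 := mul_mono_l vρ M0
    have : 0 ≤ 4 / b := by positivity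
    nlinarith [mul_nonneg this W0]
  have MW : 0 ≤ M ^ 2 + W := by positivity
  have e1 : 0 ≤ (2 * A1 * D + (8 + 4 * A1)) * (M ^ 2 + W) := by positivity
  have e2 : 0 ≤ C1 * (J + Cg) * (M ^ 2 + W) := by positivity
  have e3 : 0 ≤ C1 * (M ^ 2 + W) := by positivity
  have e4 : 0 ≤ D * (M ^ 2 + W) := by positivity
  refine ⟨fun y => (hsup y).trans ?_, ?_, iη, V.trans (by linarith), iη', vη'.trans ?_⟩
  · have h0 : 0 ≤ |M| + H := add_nonneg (abs_nonneg _) ((abs_nonneg _).trans (hq 0))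
    exact mul_mono_r (by
      have : 0 ≤ C1 * (J + Cg) := by positivity
      have : 0 ≤ 2 * A1 * D + (8 + 4 * A1) := by positivity
      linarith) h0
  · have ig : Integrable fun y => 2 * A1 * (rho δ y * (φ y - ang a y) ^ 2)
        + (8 + 4 * A1) * (rho δ y * (q y ^ 2 + q1 y ^ 2)) :=
      (iη.const_mul (2 * A1)).add (iW.const_mul (8 + 4 * A1))
    have hpt : ∀ y, |sech (a * y) * (2 * a * (tanh (a * y) - cos (φ y)) * q1 y
        + 4 * q y ^ 3 + 2 * a * q y ^ 2 * sin (φ y))| ≤ 2 * A1 * (rho δ y * (φ y - ang a y) ^ 2)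
        + (8 + 4 * A1) * (rho δ y * (q y ^ 2 + q1 y ^ 2)) := by
      intro y
      have s1 : sech (a * y) ≤ 2 * rho δ y := by
        refine (sech_scaled_le hA0.le ha y).trans ?_
        have := (exp_le_exp.2 (by
            have := mul_mono_r (by linarith : 2 * δ ≤ A0) (abs_nonneg y)
            linarith : -(A0 * |y|) ≤ -(2 * δ * |y|))).trans
          (exp_le_rho hδ.le y)
        linarith
      have s0 := (sech_pos (a * y)).le
      have t1 : |tanh (a * y) - cos (φ y)| ≤ |φ y - ang a y| := by
        rw [← cos_ang, abs_sub_comm]; exact abs_cos_sub_le _ _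
      have b1 : |2 * a * (tanh (a * y) - cos (φ y)) * q1 y| ≤ A1 * ((φ y - ang a y) ^ 2 + q1 y ^ 2) := by
        rw [abs_mul, abs_mul, abs_of_pos (by positivity : 0 < 2 * a)]
        have := mul_mono_r t1 (abs_nonneg (q1 y))
        have h2 : 2 * (|φ y - ang a y| * |q1 y|) ≤ (φ y - ang a y) ^ 2 + q1 y ^ 2 := by
          rw [← sq_abs (φ y - _), ← sq_abs (q1 y)]
          nlinarith [sq_nonneg (|φ y - ang a y| - |q1 y|)]
        have h3 := mul_mono_l (h2) ap.le
        have h4 := mul_mono_r ha1 (by positivity : 0 ≤ (φ y - ang a y) ^ 2 + q1 y ^ 2)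
        have h5 := mul_mono_l this (by positivity : 0 ≤ 2 * a)
        linarith
      have b2 : |4 * q y ^ 3| ≤ 4 * q y ^ 2 := by
        rw [abs_mul, abs_pow, ← sq_abs (q y), abs_of_pos (by norm_num : (0:ℝ) < 4)]
        have := mul_mono_l ((hq y).trans H1) (sq_nonneg |q y|)
        linarith
      have b3 : |2 * a * q y ^ 2 * sin (φ y)| ≤ 2 * A1 * q y ^ 2 := by
        rw [abs_mul, abs_of_nonneg (by positivity)]
        have := mul_mono_l (abs_sin_le_one (φ y)) (by positivity : 0 ≤ 2 * a * q y ^ 2)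
        have := mul_mono_r ha1 (sq_nonneg (q y))
        linarith
      rw [abs_mul, abs_of_nonneg s0]
      have b4 := ((abs_add_le _ _).trans (add_le_add (abs_add_le (2 * a * (tanh (a * y) - cos (φ y)) * q1 y)
        (4 * q y ^ 3)) (le_refl |2 * a * q y ^ 2 * sin (φ y)|))).trans
        (add_le_add (add_le_add b1 b2) b3)
      refine (mul_le_mul s1 b4 (abs_nonneg _) (by linarith)).trans ?_
      have := mul_nonneg (ρ0 y) (sq_nonneg (q1 y))
      have := mul_nonneg this A1p.le
      nlinarith
    have cf : Continuous fun y => sech (a * y) * (2 * a * (tanh (a * y) - cos (φ y)) * q1 y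
        + 4 * q y ^ 3 + 2 * a * q y ^ 2 * sin (φ y)) := by
      have := continuous_sech_mul a
      have : Continuous fun y => tanh (a * y) := continuous_tanh'.comp (by fun_prop)
      fun_prop
    have key := integrable_of_abs_le cf ig hpt
    refine (abs_integral_le_integral_abs.trans key.2).trans ?_
    have e := integral_add (iη.const_mul (2 * A1)) (iW.const_mul (8 + 4 * A1))
    simp only [integral_const_mul, ← hW] at e
    refine e.le.trans ?_
    have := mul_mono_l V (by positivity : 0 ≤ 2 * A1)
    have := mul_nonneg (by positivity : 0 ≤ 8 + 4 * A1) M0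
    nlinarith
  · rw [← hJ]
    have h1 := mul_mono_l vjq Cgp.le
    have h2 : M ^ 2 * J + Cg * ∫ x, jw m x * (q x ^ 2) ≤ (J + Cg) * (M ^ 2 + ∫ x, jw m x * (q x ^ 2 + q1 x ^ 2)) := by
      nlinarith [mul_nonneg Cgp.le M0, mul_nonneg J0 Jd0]
    have h3 := mul_mono_l h2 C1p.le
    have h4 : 0 ≤ (C1 + D + (2 * A1 * D + (8 + 4 * A1))) * (M ^ 2 + ∫ x, jw m x * (q x ^ 2 + q1 x ^ 2)) := by
      positivity
    linarith

/-- The state of the solution at time `t`, in the frame centred at `P t`: the centre has moved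
fast enough to the right, and all deviations are small in the weighted norms. -/
structure Near (m δ γ r B a : ℝ) (q : Jet) (θ : ℝ → ℝ → ℝ) (P : ℝ → ℝ) (t : ℝ) : Prop where
  far : 2 * γ * t ≤ P t
  speed : γ ≤ a ^ 2 + mom a θ t (P t)
  mom_le : (1 + t ^ 2) ^ m * |mom a θ t (P t)| ≤ B
  sup : ∀ y, |θ t (y + P t) - ang a y| ≤ r
  int_rho : Integrable fun y => rho δ y * dens q t (y + P t)
  rho_le : (1 + t ^ 2) ^ m * (∫ y, rho δ y * dens q t (y + P t)) ≤ B ^ 2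
  int_jw : Integrable fun y => jw m y * dens q t (y + P t)
  jw_le : ∫ y, jw m y * dens q t (y + P t) ≤ B ^ 2
  int_rho' : Integrable fun y => rho δ y * (θ t (y + P t) - ang a y) ^ 2
  rho_le' : (1 + t ^ 2) ^ m * (∫ y, rho δ y * (θ t (y + P t) - ang a y) ^ 2) ≤ B ^ 2
  int_jw' : Integrable fun y => jw m y * (θ t (y + P t) - ang a y) ^ 2
  jw_le' : ∫ y, jw m y * (θ t (y + P t) - ang a y) ^ 2 ≤ B ^ 2

lemma abs_mom_le {a E : ℝ} {q : Jet} {θ : ℝ → ℝ → ℝ} (h : Track a E q θ) (ha : 0 < a)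
    {t z r : ℝ} (hr : ∀ y, |θ t (y + z) - ang a y| ≤ r) : |mom a θ t z| ≤ r * (a⁻¹ * ∫ s, sech s) := by
  rw [mom_eq, ← integral_sech_scaled ha, ← integral_const_mul]
  refine abs_integral_le_integral_abs.trans (integral_mono (h.integrable_mom ha t z).abs
    ((integrable_sech ha).const_mul r) fun s => ?_)
  simp only [abs_mul, abs_of_pos (sech_pos _)]
  rw [mul_comm]
  exact mul_mono_r (hr s) (sech_pos _).le

/-- The moment is damped: moving the centre by the moment changes it at a definite rate. -/
lemma damping_rate {a : ℝ} (ha : 0 < a) {φ : ℝ → ℝ} (cφ : Continuous φ) {r : ℝ}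
    (hr : ∀ y, |φ y - ang a y| ≤ r) :
    ∫ y, sech (a * y) * (a * tanh (a * y) * (φ y - ang a y) - a * sech (a * y))
      ≤ r * (∫ s, sech s) - ∫ s, sech s ^ 2 := by
  have e : r * (∫ s, sech s) - ∫ s, sech s ^ 2
      = ∫ y, (a * r * sech (a * y) - a * sech (a * y) ^ 2) := by
    rw [integral_sub ((integrable_sech ha).const_mul _) ((integrable_sech_sq ha).const_mul _),
      integral_const_mul, integral_const_mul, integral_sech_scaled ha, integral_sech_sq_scaled ha]
    field_simp
  rw [e]
  have r0 : 0 ≤ r := (abs_nonneg _).trans (hr 0)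
  have cη : Continuous fun y => φ y - ang a y := cφ.sub (continuous_ang a)
  have ct : Continuous fun y => tanh (a * y) := continuous_tanh'.comp (by fun_prop)
  have cs := continuous_sech_mul a
  have b : ∀ y, a * tanh (a * y) * (φ y - ang a y) ≤ a * r ∧ |a * tanh (a * y) * (φ y - ang a y)| ≤ a * r := by
    intro y
    have : |a * tanh (a * y) * (φ y - ang a y)| ≤ a * r := by
      rw [abs_mul, abs_mul, abs_of_pos ha, mul_assoc]
      refine mul_mono_l ?_ ha.le
      have := mul_le_mul (abs_tanh_le_one (a * y)) (hr y) (abs_nonneg _) (by norm_num)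
      linarith
    exact ⟨(le_abs_self _).trans this, this⟩
  refine integral_mono (integrable_sech_mul ha (g := fun y => a * tanh (a * y) * (φ y - ang a y)
    - a * sech (a * y)) (by fun_prop) (S := a * r + a) fun y => (abs_sub _ _).trans
    (add_le_add (b y).2 ?_)) (((integrable_sech ha).const_mul _).sub
    ((integrable_sech_sq ha).const_mul _)) fun y => ?_
  · rw [abs_of_pos (mul_pos ha (sech_pos _))]
    have := mul_mono_l (sech_le_one (a * y)) ha.le
    linarith
  · have := mul_mono_l (b y).1 (sech_pos (a * y)).le
    show sech (a * y) * (a * tanh (a * y) * (φ y - ang a y) - a * sech (a * y)) ≤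
      a * r * sech (a * y) - a * sech (a * y) ^ 2
    linarith

set_option maxHeartbeats 1000000 in
/-- The bootstrap step: deviations of size `r` on `[0, T]` are in fact of size `r / 2` there. -/
theorem track_closed {A0 A1 m δ γ : ℝ} (hA0 : 0 < A0) (hA : A0 ≤ A1) (hm : 0 < m) (hδ : 0 < δ)
    (hδA : 16 * δ ≤ A0) (hγ : 0 < γ) (hγA : 4 * γ ≤ A0 ^ 2) (hδγ : 8 * δ ^ 2 ≤ γ) :
    ∃ r K : ℝ, 0 < r ∧ 1 ≤ K ∧ ∀ (a E : ℝ) (q : Jet) (θ : ℝ → ℝ → ℝ) (ε T : ℝ) (P : ℝ → ℝ),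
      Track a E q θ → A0 ≤ a → a ≤ A1 → 0 < ε → K * ε ≤ 1 → E ≤ ε ^ 2 →
      (Integrable fun x => jw m x * dens q 0 x) → ∫ x, jw m x * dens q 0 x ≤ ε ^ 2 →
      (∀ x, |θ 0 x - ang a x| ≤ ε) → P 0 = 0 → (Continuous fun t => mom a θ t (P t)) →
      (∀ t, HasDerivAt P (a ^ 2 + mom a θ t (P t)) t) →
      ε ≤ r / 2 ∧ ((∀ t ∈ Icc 0 T, ∀ y, |θ t (y + P t) - ang a y| ≤ r) →
      ∀ t ∈ Icc 0 T, Near m δ γ (r / 2) (K * ε) a q θ P t) := by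
  obtain ⟨C, r0, Cp, r0p, hst⟩ := static_bounds hA0 hA hm hδ hδA
  obtain ⟨D, Dp, hdec⟩ := weighted_decay hm hδ hγ hδγ
  obtain ⟨s1, hs1⟩ : ∃ s, s = ∫ x, sech x := ⟨_, rfl⟩
  obtain ⟨s2, hs2⟩ : ∃ s, s = ∫ x, sech x ^ 2 := ⟨_, rfl⟩
  have s1p : 0 < s1 := hs1 ▸ integral_sech_pos
  have s2p : 0 < s2 := by rw [hs2]; simpa using integral_sech_sq_pos (a := 1) one_pos
  obtain ⟨L, Lp, hdamp⟩ := damped_decay hm (by positivity : 0 < s2 / 4)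
  obtain ⟨r, hr⟩ : ∃ r, r = min (min r0 (s2 / (2 * s1))) (min (A0 ^ 3 / (2 * s1)) (s2 * A0 / (4 * C * s1))) := ⟨_, rfl⟩
  have rp : 0 < r := by rw [hr]; refine lt_min (lt_min r0p ?_) (lt_min ?_ ?_) <;> positivity
  have r1 : r ≤ r0 := by rw [hr]; exact (min_le_left _ _).trans (min_le_left _ _)
  have r2 : r * s1 ≤ s2 / 2 := by
    have : r ≤ s2 / (2 * s1) := by rw [hr]; exact (min_le_left _ _).trans (min_le_right _ _)
    rw [le_div_iff₀ (by positivity)] at this; linarith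
  have r3 : r * s1 / A0 ≤ A0 ^ 2 / 2 := by
    have : r ≤ A0 ^ 3 / (2 * s1) := by rw [hr]; exact (min_le_right _ _).trans (min_le_left _ _)
    rw [le_div_iff₀ (by positivity)] at this
    rw [div_le_iff₀ hA0]; linarith
  have r4 : C * (r * s1 / A0) ≤ s2 / 4 := by
    have : r ≤ s2 * A0 / (4 * C * s1) := by rw [hr]; exact (min_le_right _ _).trans (min_le_right _ _)
    rw [le_div_iff₀ (by positivity)] at this
    rw [mul_div_assoc', div_le_iff₀ hA0]; linarith
  clear hr
  obtain ⟨k, hk⟩ : ∃ k, k = L * (C * D + s1 / A0) := ⟨_, rfl⟩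
  have kp : 0 < k := by rw [hk]; positivity
  obtain ⟨K, hK⟩ : ∃ K, K = 1 + D + k + C * (k ^ 2 + D) + 2 * C * (k + 2) / r + 2 / r + 384 / γ + 8 := ⟨_, rfl⟩
  have t1 : 0 < C * (k ^ 2 + D) := by positivity
  have t2 : 0 < 2 * C * (k + 2) / r := by positivity
  have t3 : 0 < 2 / r := by positivity
  have t4 : 0 < 384 / γ := by positivity
  have K1 : 1 ≤ K := by linarith
  refine ⟨r, K, rp, K1, ?_⟩
  intro a E q θ ε T P h ha ha1 εp hKε hE i0 v0 hθ hP0 cm hP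
  have ap : 0 < a := hA0.trans_le ha
  have Kle : ∀ z, z ≤ K → z * ε ≤ K * ε := fun z hz => mul_mono_r hz εp.le
  have ε1 : ε ≤ 1 := by have := Kle 1 K1; linarith
  have εε : ε ^ 2 ≤ ε := by nlinarith
  have ε8 : 8 * ε ≤ 1 := (Kle 8 (by linarith)).trans hKε
  have εr : ε ≤ r / 2 := by
    have := (Kle (2 / r) (by linarith)).trans hKε
    rw [div_mul_eq_mul_div, div_le_one rp] at this; linarith
  refine ⟨εr, fun hsup => ?_⟩
  have E8 : 8 * E ≤ 1 := by linarith
  have Eγ : 384 * E ≤ γ := by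
    have := (Kle (384 / γ) (by linarith)).trans hKε
    rw [div_mul_eq_mul_div, div_le_one hγ] at this; linarith
  have H2 : 2 * √E ≤ 2 * ε := by
    have := sqrt_le_sqrt hE
    rw [sqrt_sq εp.le] at this; linarith
  have cP : Continuous P := cont_of_deriv hP
  have Mb : ∀ t ∈ Icc 0 T, |mom a θ t (P t)| ≤ r * s1 / A0 := by
    intro t ht
    have := abs_mom_le h ap (hsup t ht)
    rw [← hs1] at this
    refine this.trans ?_
    have := mul_mono_l ((inv_le_inv₀ ap hA0).2 ha) (mul_pos rp s1p).le
    rw [div_eq_mul_inv]; linarith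
  have spd : ∀ t ∈ Icc 0 T, 2 * γ ≤ a ^ 2 + mom a θ t (P t) := by
    intro t ht
    have := (abs_le.1 (Mb t ht)).1
    have : A0 ^ 2 ≤ a ^ 2 := pow_le_pow_left₀ hA0.le ha 2
    linarith
  have far : ∀ t ∈ Icc 0 T, 2 * γ * t ≤ P t := by
    intro t ht
    rcases ht.1.eq_or_lt with e | h0
    · rw [← e, hP0]; simp
    · obtain ⟨c, hc, hs⟩ := exists_hasDerivAt_eq_slope P _ h0 cP.continuousOn fun x _ => hP x
      have := spd c ⟨hc.1.le, hc.2.le.trans ht.2⟩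
      rw [hs, hP0, sub_zero, sub_zero, le_div_iff₀ h0] at this
      exact this
  -- the weighted bounds on `q`, moved to the frame of the soliton
  have dec : ∀ t ∈ Icc 0 T, (1 + t ^ 2) ^ m * (∫ y, rho δ y * dens q t (y + P t)) ≤ D * ε ^ 2 ∧
      (Integrable fun y => jw m y * dens q t (y + P t)) ∧
      ∫ y, jw m y * dens q t (y + P t) ≤ D * ε ^ 2 ∧
      (Integrable fun y => rho δ y * dens q t (y + P t)) := by
    intro t ht
    obtain ⟨d1, d2, d3⟩ := hdec q E _ h.sol E8 Eγ i0 v0 t (P t) ht.1 (far t ht)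
    have d4 := h.sol.int_rho ht.1 δ (P t)
    rw [← integral_add_right_eq_self _ (P t)] at d1 d3
    have d2 := d2.comp_add_right (P t)
    have d4 := d4.comp_add_right (P t)
    simp only [add_sub_cancel_right] at d1 d2 d3 d4
    exact ⟨d1, d2, d3, d4⟩
  have stat : ∀ t ∈ Icc 0 T, _ := fun t ht => hst a (fun y => θ t (y + P t)) (fun y => q 0 t (y + P t))
    (fun y => q 1 t (y + P t)) (2 * √E) (mom a θ t (P t)) _ ha ha1
    ((cont_slice (h.sol.jet.cont 0 (by norm_num)) t).comp (continuous_add_const (P t)))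
    ((cont_slice (h.sol.jet.cont 1 (by norm_num)) t).comp (continuous_add_const (P t)))
    (fun y => h.abs_q ht.1 _) (by linarith) (fun y => (h.hx t (y + P t)).comp_add_const y (P t))
    (fun y => (hsup t ht y).trans r1) (mom_eq _ _ _ _) (dec t ht).2.2.2 (dec t ht).2.1 rfl
  have main : ∀ t ∈ Icc 0 T, (1 + t ^ 2) ^ m * |mom a θ t (P t)| ≤ k * ε := by
    have := hdamp (fun t => mom a θ t (P t)) _ ((C * D + s1 / A0) * ε) T (by positivity) cm ?_
      (fun t ht => h.mom_deriv ap cm hP ht.1) ?_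
    · intro t ht; rw [hk, mul_assoc]; exact this t ht
    · have h0 := abs_mom_le h ap (t := 0) (z := P 0) (r := ε) (by rw [hP0]; simpa using hθ)
      rw [← hs1] at h0
      refine h0.trans ?_
      have := mul_mono_l ((inv_le_inv₀ ap hA0).2 ha) (mul_pos εp s1p).le
      have := mul_pos (mul_pos Cp Dp) εp
      rw [div_eq_mul_inv]; linarith
    · intro t ht
      have ht' : t ∈ Icc 0 T := ⟨ht.1.le, ht.2.le⟩
      have cθ : Continuous fun y => θ t (y + P t) := (cont_slice h.cont t).comp (continuous_add_const (P t))
      have z := damping_rate ap cθ (hsup t ht')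
      rw [← hs1, ← hs2] at z
      have n := (stat t ht').2.1
      have w := (dec t ht').1
      rw [← integral_add_right_eq_self _ (P t), ← integral_add_right_eq_self (fun x => sech (a * (x - P t)) *
        (2 * a * (tanh (a * (x - P t)) - cos (θ t x)) * q 1 t x
        + 4 * q 0 t x ^ 3 + 2 * a * q 0 t x ^ 2 * sin (θ t x))) (P t)]
      simp only [add_sub_cancel_right]
      obtain ⟨Z, hZ⟩ : ∃ Z, Z = ∫ y, sech (a * y) * (a * tanh (a * y) * (θ t (y + P t) - ang a y)
        - a * sech (a * y)) := ⟨_, rfl⟩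
      obtain ⟨N, hN⟩ : ∃ N, N = ∫ y, sech (a * y) * (2 * a * (tanh (a * y) - cos (θ t (y + P t))) * q 1 t (y + P t)
        + 4 * q 0 t (y + P t) ^ 3 + 2 * a * q 0 t (y + P t) ^ 2 * sin (θ t (y + P t))) := ⟨_, rfl⟩
      obtain ⟨W, hW⟩ : ∃ W, W = ∫ y, rho δ y * dens q t (y + P t) := ⟨_, rfl⟩
      have n' : |N| ≤ C * (mom a θ t (P t) ^ 2 + W) := by rw [hN, hW]; exact n
      have mb := Mb t ht'
      rw [← hZ] at z ⊢
      rw [← hN]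
      rw [← hW] at w
      generalize mom a θ t (P t) = M at n' mb
      have p : 0 < (1 + t ^ 2) ^ m := by positivity
      have w' : W ≤ D * ε * ((1 + t ^ 2) ^ m)⁻¹ := by
        rw [← div_eq_mul_inv, le_div_iff₀ p]
        have := mul_mono_l εε Dp.le
        linarith
      have x1 : M ^ 2 * Z ≤ M ^ 2 * -(s2 / 2) := mul_mono_l (by linarith) (sq_nonneg M)
      have x2 : M * N ≤ |M| * (C * (M ^ 2 + W)) := by
        refine (le_abs_self _).trans ?_
        rw [abs_mul]; exact mul_mono_l n' (abs_nonneg _)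
      have x3 : C * |M| * M ^ 2 ≤ s2 / 4 * M ^ 2 :=
        mul_mono_r ((mul_mono_l mb Cp.le).trans r4) (sq_nonneg M)
      have x4 := mul_mono_l w' (mul_nonneg Cp.le (abs_nonneg M))
      have x5 : 0 ≤ |M| * (s1 / A0 * ε * ((1 + t ^ 2) ^ m)⁻¹) := by positivity
      linarith
  intro t ht
  obtain ⟨d1, d2, d3, d4⟩ := dec t ht
  obtain ⟨b1, -, b3, b4, b5, b6⟩ := stat t ht
  have mn := main t ht
  have p1 : 1 ≤ (1 + t ^ 2) ^ m := one_le_rpow (by linarith [sq_nonneg t]) hm.le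
  have m1 : |mom a θ t (P t)| ≤ k * ε := by
    have := mul_mono_r p1 (abs_nonneg (mom a θ t (P t)))
    linarith
  have m2 : (1 + t ^ 2) ^ m * mom a θ t (P t) ^ 2 ≤ k ^ 2 * ε ^ 2 := by
    rw [← sq_abs (mom a θ t (P t))]
    have := mul_le_mul mn m1 (abs_nonneg _) (by positivity)
    linarith
  have m3 : mom a θ t (P t) ^ 2 ≤ k ^ 2 * ε ^ 2 := by
    have := mul_mono_r p1 (sq_nonneg (mom a θ t (P t)))
    linarith
  have Ksq : ∀ z, z ≤ K → z * ε ^ 2 ≤ (K * ε) ^ 2 := by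
    intro z hz
    rw [mul_pow]
    refine mul_mono_r (hz.trans ?_) (sq_nonneg ε)
    nlinarith
  refine ⟨far t ht, by linarith [spd t ht], mn.trans (Kle k (by linarith)), fun y => (b1 y).trans ?_, d4,
    d1.trans (Ksq D (by linarith)), d2, d3.trans (Ksq D (by linarith)), b3, ?_, b5, ?_⟩
  · have := (Kle (2 * C * (k + 2) / r) (by linarith)).trans hKε
    rw [div_mul_eq_mul_div, div_le_one rp] at this
    have := mul_mono_l (add_le_add m1 H2) Cp.le
    linarith
  · refine le_trans ?_ (Ksq (C * (k ^ 2 + D)) (by linarith))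
    have h1 := mul_mono_l b4 (zero_le_one.trans p1)
    have h2 := mul_mono_l (add_le_add m2 d1) Cp.le
    unfold dens at h2
    linarith
  · refine le_trans b6 (le_trans ?_ (Ksq (C * (k ^ 2 + D)) (by linarith)))
    have h2 := mul_mono_l (add_le_add m3 d3) Cp.le
    unfold dens at h2
    linarith

/-- The smallness of the deviations propagates to all times. -/
theorem track_global {A0 A1 m δ γ : ℝ} (hA0 : 0 < A0) (hA : A0 ≤ A1) (hm : 0 < m) (hδ : 0 < δ)
    (hδA : 16 * δ ≤ A0) (hγ : 0 < γ) (hγA : 4 * γ ≤ A0 ^ 2) (hδγ : 8 * δ ^ 2 ≤ γ) :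
    ∃ r K : ℝ, 0 < r ∧ 1 ≤ K ∧ ∀ (a E : ℝ) (q : Jet) (θ : ℝ → ℝ → ℝ) (ε : ℝ) (P : ℝ → ℝ),
      Track a E q θ → A0 ≤ a → a ≤ A1 → 0 < ε → K * ε ≤ 1 → E ≤ ε ^ 2 →
      (Integrable fun x => jw m x * dens q 0 x) → ∫ x, jw m x * dens q 0 x ≤ ε ^ 2 →
      (∀ x, |θ 0 x - ang a x| ≤ ε) → P 0 = 0 → (Continuous fun t => mom a θ t (P t)) →
      (∀ t, HasDerivAt P (a ^ 2 + mom a θ t (P t)) t) →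
      ∀ t, 0 ≤ t → Near m δ γ r (K * ε) a q θ P t := by
  obtain ⟨r, K, rp, K1, hc⟩ := track_closed hA0 hA hm hδ hδA hγ hγA hδγ
  refine ⟨r / 2, K, by positivity, K1, ?_⟩
  intro a E q θ ε P h ha ha1 εp hKε hE i0 v0 hθ hP0 cm hP T hT
  have hc := fun T => hc a E q θ ε T P h ha ha1 εp hKε hE i0 v0 hθ hP0 cm hP
  have ap : 0 < a := hA0.trans_le ha
  obtain ⟨L, L0, hL⟩ := h.lip_t ap T
  obtain ⟨B, hB⟩ := isCompact_Icc.exists_bound_of_continuousOn (s := Icc 0 T)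
    (f := fun t => a ^ 2 + mom a θ t (P t)) (continuous_const.add cm).continuousOn
  have B0 : 0 ≤ B := (norm_nonneg _).trans (hB 0 ⟨le_rfl, hT⟩)
  have lipP : ∀ s t, 0 ≤ s → s ≤ t → t ≤ T → |P t - P s| ≤ B * (t - s) := by
    intro s t hs hst ht
    rcases hst.eq_or_lt with e | hlt
    · simp [e]
    · obtain ⟨c, hcc, hsl⟩ := exists_hasDerivAt_eq_slope P _ hlt
        (cont_of_deriv hP).continuousOn fun x _ => hP x
      have := hB c ⟨hs.trans hcc.1.le, hcc.2.le.trans ht⟩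
      simp only [hsl, norm_eq_abs, abs_div, abs_of_pos (sub_pos.2 hlt)] at this
      rwa [div_le_iff₀ (sub_pos.2 hlt)] at this
  obtain ⟨Λ, hΛ⟩ : ∃ Λ, Λ = L + (4 * √E + a) * B := ⟨_, rfl⟩
  have Λ0 : 0 ≤ Λ := by rw [hΛ]; positivity
  obtain ⟨s, hs⟩ : ∃ s, s = r / (2 * (Λ + 1)) := ⟨_, rfl⟩
  have sp : 0 < s := by rw [hs]; positivity
  have sr : Λ * s ≤ r / 2 := by
    rw [hs, mul_div_assoc', div_le_iff₀ (by positivity)]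
    nlinarith
  have main : ∀ n : ℕ, ∀ t ∈ Icc 0 (min (n * s) T), ∀ y, |θ t (y + P t) - ang a y| ≤ r / 2 := by
    intro n
    induction n with
    | zero =>
      intro t ht y
      have e : t = 0 := le_antisymm (ht.2.trans (by simp)) ht.1
      rw [e, hP0, add_zero]
      exact (hθ y).trans (hc T).1
    | succ n ih =>
      intro t ht
      refine ((hc (min ((n + 1 : ℕ) * s) T)).2 ?_ t ht).sup
      intro t ht y
      have htT := ht.2.trans (min_le_right _ _)
      rcases le_total t (n * s) with hle | hle
      · linarith [ih t ⟨ht.1, le_min hle htT⟩ y]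
      · have ns : 0 ≤ n * s := by positivity
        have h0 := ih (n * s) ⟨ns, le_min le_rfl (hle.trans htT)⟩ y
        have h1 : t - n * s ≤ s := by
          have := ht.2.trans (min_le_left _ _)
          push_cast at this; linarith
        have l1 := hL t (n * s) (by rwa [abs_of_nonneg ht.1]) (by rw [abs_of_nonneg ns]; linarith) (y + P t)
        have l2 := h.lip_x ap (n * s) (y + P (n * s)) (y + P t)
        have l3 := lipP (n * s) t ns hle htT
        rw [add_sub_add_left_eq_sub] at l2
        have l4 := mul_mono_l l3 (by positivity : 0 ≤ 4 * √E + a)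
        rw [abs_of_nonneg (by linarith : 0 ≤ t - n * s)] at l1
        have l5 : |θ t (y + P t) - ang a y - (θ (n * s) (y + P (n * s)) - ang a y)| ≤ Λ * (t - n * s) := by
          have := abs_add_le (θ t (y + P t) - θ (n * s) (y + P t)) (θ (n * s) (y + P t) - θ (n * s) (y + P (n * s)))
          rw [show θ t (y + P t) - ang a y - (θ (n * s) (y + P (n * s)) - ang a y)
            = θ t (y + P t) - θ (n * s) (y + P t) + (θ (n * s) (y + P t) - θ (n * s) (y + P (n * s))) by ring, hΛ]
          linarith
        have l6 := mul_mono_l h1 Λ0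
        have := abs_sub_abs_le_abs_sub (θ t (y + P t) - ang a y) (θ (n * s) (y + P (n * s)) - ang a y)
        linarith
  obtain ⟨n, hn⟩ := exists_nat_ge (T / s)
  rw [div_le_iff₀ sp] at hn
  refine (hc T).2 (fun t ht y => ?_) T ⟨hT, le_rfl⟩
  linarith [main n t ⟨ht.1, le_min (ht.2.trans hn) ht.2⟩ y]

/-! ### The weights of the statement -/

lemma japPlus_deriv {m : ℝ} (hm : 0 < m) (x : ℝ) :
    ∃ d, HasDerivAt (japPlus m) d x ∧ |d| ≤ m * japPlus m x := by
  have h1 : HasDerivAt (fun x : ℝ => 1 + (max x 0) ^ 2) (2 * max x 0) x := by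
    refine HasDerivAt.const_add 1 ?_
    rcases lt_trichotomy x 0 with h | h | h
    · refine ((hasDerivAt_const x (0:ℝ)).congr_of_eventuallyEq ?_).congr_deriv (by rw [max_eq_right h.le]; simp)
      filter_upwards [Iio_mem_nhds h] with y hy
      rw [max_eq_right (le_of_lt hy)]; simp
    · subst h
      rw [hasDerivAt_iff_isLittleO_nhds_zero]
      simp only [zero_add, max_self, mul_zero, smul_zero, sub_zero, ne_eq, OfNat.ofNat_ne_zero,
        not_false_eq_true, zero_pow]
      refine Asymptotics.IsBigO.trans_isLittleO (g := fun h : ℝ => h ^ 2)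
        (Asymptotics.IsBigO.of_bound 1 (.of_forall fun h => ?_)) (by
          simpa using Asymptotics.isLittleO_pow_id (𝕜 := ℝ) (n := 2) (by norm_num))
      rw [one_mul, norm_pow, norm_pow, norm_eq_abs, norm_eq_abs]
      refine pow_le_pow_left₀ (abs_nonneg _) ?_ 2
      rw [abs_of_nonneg (le_max_right _ _)]
      exact max_le (le_abs_self _) (abs_nonneg _)
    · refine ((hasDerivAt_pow 2 x).congr_of_eventuallyEq ?_).congr_deriv (by rw [max_eq_left h.le]; simp)
      filter_upwards [Ioi_mem_nhds h] with y hy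
      rw [max_eq_left (le_of_lt hy)]
  have p : 0 < 1 + (max x 0) ^ 2 := by positivity
  refine ⟨_, h1.rpow_const (p := m / 2) (Or.inl p.ne'), ?_⟩
  rw [rpow_sub_one p.ne', japPlus]
  have x0 : 0 ≤ max x 0 := le_max_right _ _
  rw [abs_of_nonneg (by positivity)]
  have q : 0 ≤ (1 + (max x 0) ^ 2) ^ (m / 2) := by positivity
  have : max x 0 / (1 + (max x 0) ^ 2) ≤ 1 := by
    rw [div_le_one p]; nlinarith [sq_nonneg (max x 0 - 1)]
  have := mul_mono_l this (mul_nonneg hm.le q)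
  calc _ = m * (1 + (max x 0) ^ 2) ^ (m / 2) * (max x 0 / (1 + (max x 0) ^ 2)) := by ring
    _ ≤ _ := by linarith

lemma deriv_japPlus_mul {m : ℝ} (hm : 0 < m) {f f1 : ℝ → ℝ} (hf : ∀ x, HasDerivAt f (f1 x) x) (x : ℝ) :
    jw m x * f1 x ^ 2 ≤ 2 * deriv (fun x => japPlus m x * f x) x ^ 2 + 2 * m ^ 2 * (jw m x * f x ^ 2) ∧
    deriv (fun x => japPlus m x * f x) x ^ 2 ≤ 2 * m ^ 2 * (jw m x * f x ^ 2) + 2 * (jw m x * f1 x ^ 2) := by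
  obtain ⟨d, hd, hb⟩ := japPlus_deriv hm x
  rw [(hd.fun_mul (hf x)).deriv]
  have h1 : d ^ 2 ≤ m ^ 2 * jw m x := by
    rw [← japPlus_sq, ← mul_pow, ← sq_abs d]; exact pow_le_pow_left₀ (abs_nonneg _) hb 2
  have h2 := mul_mono_r h1 (sq_nonneg (f x))
  rw [← japPlus_sq] at h2 ⊢
  constructor
  · nlinarith [sq_nonneg (2 * (d * f x) + japPlus m x * f1 x)]
  · nlinarith [sq_nonneg (d * f x - japPlus m x * f1 x)]

lemma H1r_sq (g : ℝ → ℝ) : H1r g ^ 2 = (∫ x, g x ^ 2) + ∫ x, deriv g x ^ 2 := by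
  have h : ∀ g : ℝ → ℝ, L2r g ^ 2 = ∫ x, g x ^ 2 := fun g => sq_sqrt (integral_nonneg fun x => sq_nonneg _)
  rw [H1r, sq_sqrt (by positivity), h, h]

/-- A bound on `‖⟨x₊⟩ᵐ f‖_{H¹}` controls `f` and `f'` separately in the weighted `L²` space. -/
lemma weighted_of_H1r {m ε : ℝ} (hm : 0 < m) {f f1 : ℝ → ℝ} (hf : ∀ x, HasDerivAt f (f1 x) x)
    (i0 : Integrable fun x => jw m x * f x ^ 2) (i1 : Integrable fun x => jw m x * f1 x ^ 2)
    (hε : H1r (fun x => japPlus m x * f x) ≤ ε) :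
    ∫ x, jw m x * f x ^ 2 ≤ ε ^ 2 ∧ ∫ x, jw m x * f1 x ^ 2 ≤ (2 + 2 * m ^ 2) * ε ^ 2 := by
  have h : H1r (fun x => japPlus m x * f x) ^ 2 ≤ ε ^ 2 := pow_le_pow_left₀ (sqrt_nonneg _) hε 2
  rw [H1r_sq] at h
  simp only [mul_pow, japPlus_sq] at h
  have id : Integrable fun x => deriv (fun x => japPlus m x * f x) x ^ 2 := by
    refine ((i0.const_mul (2 * m ^ 2)).add (i1.const_mul 2)).mono'
      ((measurable_deriv _).pow_const 2).aestronglyMeasurable (.of_forall fun x => ?_)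
    rw [norm_of_nonneg (sq_nonneg _)]
    exact (deriv_japPlus_mul hm hf x).2
  have p0 : 0 ≤ ∫ x, jw m x * f x ^ 2 := integral_nonneg fun x => mul_nonneg (jw_pos _ _).le (sq_nonneg _)
  have p1 : 0 ≤ ∫ x, deriv (fun x => japPlus m x * f x) x ^ 2 := integral_nonneg fun x => sq_nonneg _
  refine ⟨by linarith, ?_⟩
  have := integral_mono i1 ((id.const_mul 2).add (i0.const_mul (2 * m ^ 2))) fun x => (deriv_japPlus_mul hm hf x).1
  have e := integral_add (id.const_mul 2) (i0.const_mul (2 * m ^ 2))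
  simp only [integral_const_mul] at e
  have h3 := mul_mono_l (by linarith : ∫ x, jw m x * f x ^ 2 ≤ ε ^ 2) (by positivity : 0 ≤ 2 * m ^ 2)
  refine (this.trans e.le).trans ?_
  linarith

lemma H1r_le {m : ℝ} (hm : 0 < m) {f f1 : ℝ → ℝ} (hf : ∀ x, HasDerivAt f (f1 x) x) {g : ℝ → ℝ} {B : ℝ}
    (ig : Integrable fun x => jw m x * g x) (hg : ∫ x, jw m x * g x ≤ B) (h0 : ∀ x, f x ^ 2 ≤ g x)
    (h1 : ∀ x, f1 x ^ 2 ≤ g x) :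
    H1r (fun x => japPlus m x * f x) ^ 2 ≤ (3 + 2 * m ^ 2) * B := by
  rw [H1r_sq]
  simp only [mul_pow, japPlus_sq]
  have j0 : ∀ x, 0 ≤ jw m x := fun x => (jw_pos m x).le
  have a0 := fun x => mul_mono_l (h0 x) (j0 x)
  have a1 := fun x => mul_mono_l (h1 x) (j0 x)
  have k0 : ∫ x, jw m x * f x ^ 2 ≤ ∫ x, jw m x * g x := integral_mono_of_nonneg
    (.of_forall fun x => mul_nonneg (j0 x) (sq_nonneg _)) ig (.of_forall a0)
  have k1 : ∫ x, deriv (fun x => japPlus m x * f x) x ^ 2 ≤ ∫ x, (2 * m ^ 2 + 2) * (jw m x * g x) :=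
    integral_mono_of_nonneg (.of_forall fun x => sq_nonneg _) (ig.const_mul _)
      (.of_forall fun x => by
        have := (deriv_japPlus_mul hm hf x).2
        have := mul_mono_l (a0 x) (by positivity : 0 ≤ 2 * m ^ 2)
        have := a1 x
        show deriv (fun x => japPlus m x * f x) x ^ 2 ≤ (2 * m ^ 2 + 2) * (jw m x * g x)
        linarith)
  rw [integral_const_mul] at k1
  have := mul_mono_l hg (by positivity : 0 ≤ 3 + 2 * m ^ 2)
  linarith

lemma integrable_jw_schwartz {m : ℝ} (hm : 0 < m) (g : SchwartzMap ℝ ℝ) :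
    Integrable fun x => jw m x * g x ^ 2 := by
  obtain ⟨N, hN⟩ := exists_nat_ge (m + 1)
  obtain ⟨C, hC⟩ : ∃ C, ∀ x : ℝ, (1 + |x|) ^ N * |g x| ≤ C := ⟨_, fun x => by
    simpa using SchwartzMap.one_add_le_sup_seminorm_apply (𝕜 := ℝ) (m := (N, 0)) (k := N) (n := 0) le_rfl le_rfl g x⟩
  refine (integrable_of_abs_le (f := fun x => jw m x * g x ^ 2) ((continuous_jw m).mul (g.continuous.pow 2))
    (integrable_inv_one_add_sq.const_mul (C ^ 2)) fun x => ?_).1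
  rw [abs_of_nonneg (mul_nonneg (jw_pos _ _).le (sq_nonneg _)), ← div_eq_mul_inv, le_div_iff₀ (by positivity)]
  have h1 : jw m x * (1 + x ^ 2) ≤ ((1 + |x|) ^ N) ^ 2 := by
    have hx : 1 + x ^ 2 ≤ (1 + |x|) ^ 2 := by rw [← sq_abs]; nlinarith [abs_nonneg x]
    have hx1 : 1 ≤ 1 + x ^ 2 := by linarith [sq_nonneg x]
    calc jw m x * (1 + x ^ 2) ≤ (1 + x ^ 2) ^ m * (1 + x ^ 2) := by
          refine mul_mono_r ?_ (by positivity)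
          refine rpow_le_rpow (by positivity) ?_ hm.le
          have : max x 0 ≤ |x| := max_le (le_abs_self _) (abs_nonneg _)
          rw [← sq_abs x]
          linarith [pow_le_pow_left₀ (le_max_right x 0) this 2]
      _ = (1 + x ^ 2) ^ (m + 1) := by rw [rpow_add_one (by positivity)]
      _ ≤ (1 + x ^ 2) ^ (N : ℝ) := rpow_le_rpow_of_exponent_le hx1 hN
      _ = (1 + x ^ 2) ^ N := rpow_natCast _ _
      _ ≤ ((1 + |x|) ^ 2) ^ N := pow_le_pow_left₀ (by positivity) hx N
      _ = _ := by rw [← pow_mul, ← pow_mul, mul_comm]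
  have h2 := pow_le_pow_left₀ (by positivity) (hC x) 2
  rw [mul_pow, sq_abs] at h2
  have := mul_mono_r h1 (sq_nonneg (g x))
  linarith

lemma wgt_sq (δ x : ℝ) : wgt δ x ^ 2 = rho δ x := sq_sqrt (rho_pos δ x).le

lemma deriv_wgt_sq {δ : ℝ} (hδ : 0 < δ) (x : ℝ) :
    deriv (wgt δ) x ^ 2 ≤ δ * rho1 δ x ∧ deriv (wgt δ) x ^ 2 ≤ 2 * δ ^ 2 * rho δ x := by
  have hd : HasDerivAt (wgt δ) _ x := (hasDerivAt_rho δ x).sqrt (rho_pos δ x).ne'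
  have ρ := rho_pos δ x
  have e : rho1 δ x = δ * ((2 - rho δ x) * rho δ x) := by
    rw [rho1, rho]; linear_combination δ * sech_sq_add_tanh_sq (δ * x)
  have e2 : deriv (wgt δ) x ^ 2 = δ ^ 2 * (2 - rho δ x) ^ 2 * rho δ x / 4 := by
    rw [hd.deriv, div_pow, mul_pow, sq_sqrt ρ.le, e]; field_simp; ring
  have := rho_le_two δ x
  have p : 0 ≤ δ ^ 2 * ((2 - rho δ x) * rho δ x) := by
    have : 0 ≤ 2 - rho δ x := by linarith
    positivity
  have l1 : δ ^ 2 * (2 - rho δ x) ^ 2 * rho δ x / 4 ≤ δ ^ 2 * ((2 - rho δ x) * rho δ x) := by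
    have := mul_nonneg p ρ.le
    linarith
  have l2 : δ ^ 2 * ((2 - rho δ x) * rho δ x) ≤ 2 * δ ^ 2 * rho δ x := by
    have : 0 ≤ δ ^ 2 * rho δ x ^ 2 := by positivity
    linarith
  rw [e2, e]
  exact ⟨by linarith, by linarith⟩

set_option maxHeartbeats 1000000 in
/-- The soliton remainder `V = √2 (F₀ + a (sin φ - sech (a y)))` and its first two derivatives are
controlled by the transformed solution `F` and by the angle deviation `φ - ang a`. -/
lemma profile_bounds {a A : ℝ} (ha : 0 < a) (haA : a ≤ A) {F0 F1 F2 φ V : ℝ → ℝ}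
    (h0 : ∀ y, HasDerivAt F0 (F1 y) y) (h1 : ∀ y, HasDerivAt F1 (F2 y) y)
    (hφ : ∀ y, HasDerivAt φ (-2 * F0 y - a * sin (φ y)) y) (hF : ∀ y, |F0 y| ≤ 1)
    (hV : ∀ y, V y = √2 * (F0 y + a * (sin (φ y) - sech (a * y)))) :
    ∃ V1 V2 : ℝ → ℝ, (∀ y, HasDerivAt V (V1 y) y) ∧ (∀ y, HasDerivAt V1 (V2 y) y) ∧
      ∀ y, V y ^ 2 ≤ 8 * (1 + 4 * A + 8 * A ^ 2 + 7 * A ^ 3) ^ 2 * (F0 y ^ 2 + F1 y ^ 2 + (φ y - ang a y) ^ 2) ∧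
        V1 y ^ 2 ≤ 8 * (1 + 4 * A + 8 * A ^ 2 + 7 * A ^ 3) ^ 2 * (F0 y ^ 2 + F1 y ^ 2 + (φ y - ang a y) ^ 2) ∧
        V2 y ^ 2 ≤ 8 * (1 + 4 * A + 8 * A ^ 2 + 7 * A ^ 3) ^ 2 *
          (F0 y ^ 2 + F1 y ^ 2 + F2 y ^ 2 + (φ y - ang a y) ^ 2) := by
  have hs : ∀ y, HasDerivAt (fun y => sin (φ y)) (cos (φ y) * (-2 * F0 y - a * sin (φ y))) y :=
    fun y => (hφ y).sin
  have hc : ∀ y, HasDerivAt (fun y => cos (φ y)) (-sin (φ y) * (-2 * F0 y - a * sin (φ y))) y :=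
    fun y => (hφ y).cos
  have hψ : ∀ y, HasDerivAt (ang a) (-(a * sin (ang a y))) y := fun y => by
    rw [sin_ang]; exact hasDerivAt_ang a y
  have hs' : ∀ y, HasDerivAt (fun y => sin (ang a y)) (cos (ang a y) * (-(a * sin (ang a y)))) y :=
    fun y => (hψ y).sin
  have hc' : ∀ y, HasDerivAt (fun y => cos (ang a y)) (-sin (ang a y) * (-(a * sin (ang a y)))) y :=
    fun y => (hψ y).cos
  have hV' : V = fun y => √2 * (F0 y + a * (sin (φ y) - sin (ang a y))) := by
    funext y; rw [hV, sin_ang]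
  refine ⟨fun y => √2 * (F1 y - 2 * a * (F0 y * cos (φ y)) - a ^ 2 * (cos (φ y) * sin (φ y) - cos (ang a y) * sin (ang a y))),
    fun y => √2 * (F2 y - 2 * a * (F1 y * cos (φ y)) - 4 * a * (F0 y * F0 y * sin (φ y)) - 2 * a ^ 2 * (F0 y * sin (φ y) ^ 2)
      + 2 * a ^ 2 * (F0 y * (cos (φ y) ^ 2 - sin (φ y) ^ 2))
      + a ^ 3 * ((cos (φ y) ^ 2 - sin (φ y) ^ 2) * sin (φ y) - (cos (ang a y) ^ 2 - sin (ang a y) ^ 2) * sin (ang a y))),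
    fun y => ?_, fun y => ?_, fun y => ?_⟩
  · rw [hV']
    exact (((h0 y).fun_add (((hs y).fun_sub (hs' y)).const_mul a)).const_mul √2).congr_deriv (by ring)
  · exact (((((h1 y).fun_sub (((h0 y).fun_mul (hc y)).const_mul (2 * a))).fun_sub
      ((((hc y).fun_mul (hs y)).fun_sub ((hc' y).fun_mul (hs' y))).const_mul (a ^ 2)))).const_mul √2).congr_deriv (by ring)
  · have hA : 0 < A := ha.trans_le haA
    have a2 : a ^ 2 ≤ A ^ 2 := pow_le_pow_left₀ ha.le haA 2
    have a3 : a ^ 3 ≤ A ^ 3 := pow_le_pow_left₀ ha.le haA 3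
    rw [hV']
    have ds := abs_sin_sub_le (ang a y) (φ y)
    have dc := abs_cos_sub_le (ang a y) (φ y)
    have s1 := abs_sin_le_one (φ y)
    have c1 := abs_cos_le_one (φ y)
    have s1' := abs_sin_le_one (ang a y)
    have c1' := abs_cos_le_one (ang a y)
    have cs := sin_sq_add_cos_sq (φ y)
    have cs' := sin_sq_add_cos_sq (ang a y)
    have f1 := hF y
    beta_reduce
    generalize sin (φ y) = s at *
    generalize cos (φ y) = c at *
    generalize sin (ang a y) = s' at *
    generalize cos (ang a y) = c' at *
    obtain ⟨η, hη⟩ : ∃ η, η = φ y - ang a y := ⟨_, rfl⟩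
    rw [← hη] at ds dc ⊢
    generalize F0 y = x0 at *
    generalize F1 y = x1 at *
    generalize F2 y = x2 at *
    obtain ⟨Λ, hΛ⟩ : ∃ Λ, Λ = 1 + 4 * A + 8 * A ^ 2 + 7 * A ^ 3 := ⟨_, rfl⟩
    rw [← hΛ]
    have Λ1 : 1 ≤ Λ := by rw [hΛ]; have := pow_pos hA 2; have := pow_pos hA 3; linarith
    have p2 := pow_pos hA 2
    have p3 := pow_pos hA 3
    have nη := abs_nonneg η
    have n0 := abs_nonneg x0
    have n1 := abs_nonneg x1
    have n2 := abs_nonneg x2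
    -- three bounds of the form `|·| ≤ Λ (|x₀| + |x₁| + |x₂| + |η|)`
    have key : ∀ X S T : ℝ, |X| ≤ Λ * S → S ^ 2 ≤ 4 * T → (√2 * X) ^ 2 ≤ 8 * Λ ^ 2 * T := by
      intro X S T hX hS
      have := pow_le_pow_left₀ (abs_nonneg X) hX 2
      rw [sq_abs, mul_pow] at this
      rw [mul_pow, sq_sqrt (by norm_num)]
      have := mul_mono_l hS (sq_nonneg Λ)
      linarith
    have q3 : (|x0| + |x1| + |η|) ^ 2 ≤ 4 * (x0 ^ 2 + x1 ^ 2 + η ^ 2) := by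
      rw [← sq_abs x0, ← sq_abs x1, ← sq_abs η]
      linarith [sq_nonneg (|x0| - |x1|), sq_nonneg (|x0| - |η|), sq_nonneg (|x1| - |η|), sq_nonneg |x0|, sq_nonneg |x1|, sq_nonneg |η|]
    have q4 : (|x0| + |x1| + |x2| + |η|) ^ 2 ≤ 4 * (x0 ^ 2 + x1 ^ 2 + x2 ^ 2 + η ^ 2) := by
      rw [← sq_abs x0, ← sq_abs x1, ← sq_abs x2, ← sq_abs η]
      linarith [sq_nonneg (|x0| - |x1|), sq_nonneg (|x0| - |η|), sq_nonneg (|x1| - |η|), sq_nonneg (|x0| - |x2|), sq_nonneg (|x1| - |x2|), sq_nonneg (|x2| - |η|)]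
    have m1 : ∀ X Y : ℝ, |Y| ≤ 1 → |X * Y| ≤ |X| := by
      intro X Y hY; rw [abs_mul]; exact mul_le_of_le_one_right (abs_nonneg _) hY
    have tri : ∀ X Y : ℝ, |X + Y| ≤ |X| + |Y| := abs_add_le
    have trs : ∀ X Y : ℝ, |X - Y| ≤ |X| + |Y| := abs_sub
    have sc : ∀ k X : ℝ, 0 ≤ k → |k * X| = k * |X| := by
      intro k X hk; rw [abs_mul, abs_of_nonneg hk]
    have e1 : |s - s'| ≤ |η| := ds
    have e2 : |c - c'| ≤ |η| := dc
    have e3 : |c * s - c' * s'| ≤ 2 * |η| := by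
      have : c * s - c' * s' = (s - s') * c + (c - c') * s' := by ring
      rw [this]
      have := tri ((s - s') * c) ((c - c') * s')
      have := m1 (s - s') c c1
      have := m1 (c - c') s' s1'
      linarith
    have e4 : |(c ^ 2 - s ^ 2) * s - (c' ^ 2 - s' ^ 2) * s'| ≤ 7 * |η| := by
      have e : (c ^ 2 - s ^ 2) * s - (c' ^ 2 - s' ^ 2) * s' = (s - s') * (1 - 2 * (s * s + s * s' + s' * s')) := by
        rw [show c ^ 2 = 1 - s ^ 2 by linarith, show c' ^ 2 = 1 - s' ^ 2 by linarith]; ring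
      have b1 := (m1 s s s1).trans s1
      have b2 := (m1 s s' s1').trans s1
      have b3 := (m1 s' s' s1').trans s1'
      have : |1 - 2 * (s * s + s * s' + s' * s')| ≤ 7 := by
        rw [abs_le] at *
        constructor <;> linarith
      rw [e, abs_mul]
      have := mul_le_mul e1 this (abs_nonneg _) nη
      linarith
    have cc : |c ^ 2 - s ^ 2| ≤ 1 := by
      rw [abs_le]; constructor <;> linarith [sq_nonneg c, sq_nonneg s]
    have ss : |s ^ 2| ≤ 1 := by
      rw [abs_of_nonneg (sq_nonneg _)]; linarith [sq_nonneg c]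
    have lin : ∀ k X : ℝ, k ≤ Λ → 0 ≤ X → k * X ≤ Λ * X := fun k X hk hX => mul_mono_r hk hX
    refine ⟨key _ (|x0| + |x1| + |η|) _ ?_ q3, key _ (|x0| + |x1| + |η|) _ ?_ q3,
      key _ (|x0| + |x1| + |x2| + |η|) _ ?_ q4⟩
    · have t1 := tri x0 (a * (s - s'))
      rw [sc a _ ha.le] at t1
      have t2 := mul_le_mul haA e1 (abs_nonneg _) hA.le
      have l0 := lin 1 |x0| Λ1 n0
      have l1 := lin 0 |x1| (by linarith) n1
      have l2 := lin A |η| (by linarith) nη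
      linarith
    · have t1 := trs (x1 - 2 * a * (x0 * c)) (a ^ 2 * (c * s - c' * s'))
      have t2 := trs x1 (2 * a * (x0 * c))
      rw [sc (a ^ 2) _ (by positivity)] at t1
      rw [sc (2 * a) _ (by positivity)] at t2
      have t3 := mul_le_mul a2 e3 (abs_nonneg _) p2.le
      have t4 := mul_le_mul (by linarith : 2 * a ≤ 2 * A) (m1 x0 c c1) (abs_nonneg _) (by linarith)
      have l0 := lin (2 * A) |x0| (by linarith) n0
      have l1 := lin 1 |x1| Λ1 n1
      have l2 := lin (2 * A ^ 2) |η| (by linarith) nη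
      linarith
    · have t1 := tri (x2 - 2 * a * (x1 * c) - 4 * a * (x0 * x0 * s) - 2 * a ^ 2 * (x0 * s ^ 2) + 2 * a ^ 2 * (x0 * (c ^ 2 - s ^ 2)))
        (a ^ 3 * ((c ^ 2 - s ^ 2) * s - (c' ^ 2 - s' ^ 2) * s'))
      have t2 := tri (x2 - 2 * a * (x1 * c) - 4 * a * (x0 * x0 * s) - 2 * a ^ 2 * (x0 * s ^ 2)) (2 * a ^ 2 * (x0 * (c ^ 2 - s ^ 2)))
      have t3 := trs (x2 - 2 * a * (x1 * c) - 4 * a * (x0 * x0 * s)) (2 * a ^ 2 * (x0 * s ^ 2))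
      have t4 := trs (x2 - 2 * a * (x1 * c)) (4 * a * (x0 * x0 * s))
      have t5 := trs x2 (2 * a * (x1 * c))
      rw [sc (a ^ 3) _ (by positivity)] at t1
      rw [sc (2 * a ^ 2) _ (by positivity)] at t2 t3
      rw [sc (4 * a) _ (by positivity)] at t4
      rw [sc (2 * a) _ (by positivity)] at t5
      have u1 := mul_le_mul a3 e4 (abs_nonneg _) p3.le
      have u2 := mul_le_mul (by linarith : 2 * a ^ 2 ≤ 2 * A ^ 2) (m1 x0 _ cc) (abs_nonneg _) (by positivity)
      have u3 := mul_le_mul (by linarith : 2 * a ^ 2 ≤ 2 * A ^ 2) (m1 x0 _ ss) (abs_nonneg _) (by positivity)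
      have u4 := mul_le_mul (by linarith : 4 * a ≤ 4 * A) ((m1 (x0 * x0) s s1).trans (m1 x0 x0 f1)) (abs_nonneg _) (by positivity)
      have u5 := mul_le_mul (by linarith : 2 * a ≤ 2 * A) (m1 x1 c c1) (abs_nonneg _) (by positivity)
      have l0 := lin (4 * A + 4 * A ^ 2) |x0| (by linarith) n0
      have l1 := lin (2 * A) |x1| (by linarith) n1
      have l2 := lin 1 |x2| Λ1 n2
      have l3 := lin (7 * A ^ 3) |η| (by linarith) nη
      linarith
/-- A continuous nonnegative function with uniformly bounded integrals over the boxes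
`[0,n] × [-n,n]` has an integrable `x`-marginal on the half line `t > 0`. -/
lemma integral_marginal_le {F : ℝ → ℝ → ℝ} (cF : Cont₂ F) (F0 : ∀ t x, 0 ≤ F t x)
    {B : ℝ} (hB : ∀ n : ℕ, ∫ t in (0:ℝ)..n, ∫ x in (-(n:ℝ))..n, F t x ≤ B) :
    IntegrableOn (fun t => ∫ x, F t x) (Ioi 0) ∧ ∫ t in Ioi 0, ∫ x, F t x ≤ B := by
  obtain ⟨μ, hμ⟩ : ∃ μ : Measure (ℝ × ℝ), μ = ((volume : Measure ℝ).restrict (Ioi 0)).prod volume := ⟨_, rfl⟩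
  obtain ⟨S, hS⟩ : ∃ S : ℕ → Set (ℝ × ℝ), ∀ n, S n = Ioc (0:ℝ) n ×ˢ Ioc (-(n:ℝ)) n := ⟨_, fun n => rfl⟩
  have r : ∀ n : ℕ, μ.restrict (S n) = (volume.restrict (Ioc (0:ℝ) n)).prod (volume.restrict (Ioc (-(n:ℝ)) n)) := by
    intro n
    rw [hμ, hS, ← Measure.prod_restrict, Measure.restrict_restrict measurableSet_Ioc,
      Set.inter_eq_left.2 (fun x hx => hx.1)]
  have cov : AECover μ atTop S := by
    refine ⟨?_, fun n => by rw [hS]; exact measurableSet_Ioc.prod measurableSet_Ioc⟩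
    have : ∀ᵐ p ∂μ, 0 < p.1 := by
      rw [hμ]
      have h := (Measure.quasiMeasurePreserving_fst (μ := (volume : Measure ℝ).restrict (Ioi 0)) (ν := (volume : Measure ℝ))).ae
        (ae_restrict_mem measurableSet_Ioi)
      exact h
    filter_upwards [this] with p hp
    obtain ⟨n, hn⟩ := exists_nat_gt (max p.1 |p.2|)
    filter_upwards [eventually_ge_atTop n] with k hk
    have hk' : (n:ℝ) ≤ k := by exact_mod_cast hk
    have h1 := (le_max_left p.1 |p.2|)
    have h2 := (le_max_right p.1 |p.2|)
    rw [hS]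
    have h3 := abs_le.1 (le_refl |p.2|)
    exact ⟨⟨hp, by linarith⟩, by linarith, by linarith⟩
  have io : ∀ n, IntegrableOn (fun p : ℝ × ℝ => F p.1 p.2) (S n) μ := by
    intro n
    rw [IntegrableOn, r, Measure.prod_restrict]
    exact (cF.continuousOn.integrableOn_compact (isCompact_Icc.prod isCompact_Icc)).mono_set
      (Set.prod_mono Ioc_subset_Icc_self Ioc_subset_Icc_self)
  have val : ∀ n : ℕ, ∫ p in S n, F p.1 p.2 ∂μ ≤ B := by
    intro n
    have i := io n
    rw [IntegrableOn, r] at i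
    rw [r, integral_prod _ i]
    have := hB n
    rw [integral_of_le (Nat.cast_nonneg n)] at this
    simpa only [integral_of_le (show (-(n:ℝ)) ≤ n by linarith [Nat.cast_nonneg (α := ℝ) n])] using this
  have int : Integrable (fun p : ℝ × ℝ => F p.1 p.2) μ :=
    cov.integrable_of_integral_bounded_of_nonneg_ae B io (.of_forall fun p => F0 _ _)
      (.of_forall val)
  have lim := cov.integral_tendsto_of_countably_generated int
  have fin := le_of_tendsto' lim val
  rw [hμ] at int fin
  rw [integral_prod _ int] at fin
  exact ⟨int.integral_prod_left, fin⟩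

lemma integrable_jap_rpow {m : ℝ} (hm : 1 / 2 < m) : Integrable fun t : ℝ => (1 + t ^ 2) ^ (-m) := by
  have := integrable_rpow_neg_one_add_norm_sq (E := ℝ) (μ := volume) (r := 2 * m) (by simp; linarith)
  refine this.congr (.of_forall fun t => ?_)
  simp only [norm_eq_abs, sq_abs]
  congr 1; ring

lemma H1w_sq (ω g : ℝ → ℝ) : H1w ω g ^ 2 = (∫ x, (ω x * g x) ^ 2) + ∫ x, (ω x * deriv g x) ^ 2 := by
  have n : ∀ f : ℝ → ℝ, L2r f ^ 2 = ∫ x, f x ^ 2 := fun f => sq_sqrt (integral_nonneg fun x => sq_nonneg _)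
  rw [H1w, sq_sqrt (by positivity), n, n]

lemma H1w_wgt_le {δ B : ℝ} {f f1 g : ℝ → ℝ} (hf : ∀ x, HasDerivAt f (f1 x) x)
    (ig : Integrable fun x => rho δ x * g x) (hg : ∫ x, rho δ x * g x ≤ B) (h0 : ∀ x, f x ^ 2 ≤ g x)
    (h1 : ∀ x, f1 x ^ 2 ≤ g x) : H1w (wgt δ) f ^ 2 ≤ 2 * B := by
  have key : ∀ f : ℝ → ℝ, (∀ x, f x ^ 2 ≤ g x) → ∫ x, (wgt δ x * f x) ^ 2 ≤ B := by
    intro f h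
    refine (integral_mono_of_nonneg (.of_forall fun x => sq_nonneg _) ig
      (.of_forall fun x => ?_)).trans hg
    simp only [mul_pow, wgt_sq]
    exact mul_mono_l (h x) (rho_pos _ _).le
  have := key f h0
  have := key (deriv f) fun x => by rw [(hf x).deriv]; exact h1 x
  rw [H1w_sq]
  linarith

lemma H2wSq_le {δ : ℝ} (hδ : 0 < δ) {f f1 f2 g k : ℝ → ℝ} (hf : ∀ x, HasDerivAt f (f1 x) x)
    (hf1 : ∀ x, HasDerivAt f1 (f2 x) x) (ig : Integrable fun x => rho δ x * g x)
    (ik : Integrable fun x => rho1 δ x * k x) (g0 : ∀ x, 0 ≤ g x) (k0 : ∀ x, 0 ≤ k x)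
    (h0 : ∀ x, f x ^ 2 ≤ g x) (h1 : ∀ x, f1 x ^ 2 ≤ g x) (h2 : ∀ x, f2 x ^ 2 ≤ g x + k x) :
    H2wSq (deriv (wgt δ)) f ≤ 6 * δ ^ 2 * (∫ x, rho δ x * g x) + δ * ∫ x, rho1 δ x * k x := by
  have n : ∀ f : ℝ → ℝ, L2r f ^ 2 = ∫ x, f x ^ 2 := fun f => sq_sqrt (integral_nonneg fun x => sq_nonneg _)
  have key : ∀ f : ℝ → ℝ, (∀ x, f x ^ 2 ≤ g x) →
      ∫ x, (deriv (wgt δ) x * f x) ^ 2 ≤ 2 * δ ^ 2 * ∫ x, rho δ x * g x := by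
    intro f h
    rw [← integral_const_mul]
    refine integral_mono_of_nonneg (.of_forall fun x => sq_nonneg _) (ig.const_mul _)
      (.of_forall fun x => ?_)
    simp only [mul_pow]
    have := mul_le_mul (deriv_wgt_sq hδ x).2 (h x) (sq_nonneg _) (mul_nonneg (by positivity) (rho_pos δ x).le)
    linarith
  have e1 : deriv f = f1 := funext fun x => (hf x).deriv
  have e2 : deriv f1 = f2 := funext fun x => (hf1 x).deriv
  have l2 : ∫ x, (deriv (wgt δ) x * f2 x) ^ 2 ≤
      2 * δ ^ 2 * (∫ x, rho δ x * g x) + δ * ∫ x, rho1 δ x * k x := by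
    rw [← integral_const_mul, ← integral_const_mul, ← integral_add (ig.const_mul _) (ik.const_mul _)]
    refine integral_mono_of_nonneg (.of_forall fun x => sq_nonneg _) ((ig.const_mul _).add (ik.const_mul _))
      (.of_forall fun x => ?_)
    simp only [mul_pow]
    have b1 := mul_mono_r (deriv_wgt_sq hδ x).2 (g0 x)
    have b2 := mul_mono_r (deriv_wgt_sq hδ x).1 (k0 x)
    have b3 := mul_mono_l (h2 x) (sq_nonneg (deriv (wgt δ) x))
    show _ ≤ 2 * δ ^ 2 * (rho δ x * g x) + δ * (rho1 δ x * k x)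
    linarith
  have l0 := key f h0
  have l1 := key f1 h1
  rw [H2wSq, Finset.sum_range_succ, Finset.sum_range_succ, Finset.sum_range_one, n, n, n]
  simp only [iteratedDeriv_zero, iteratedDeriv_succ, e1, e2]
  linarith

/-- Estimates for the remainder `V` in terms of the control of the transformed solution at all times. -/
theorem remainder_bounds {m δ γ r B a A E ε : ℝ} {q : Jet} {θ : ℝ → ℝ → ℝ} {P : ℝ → ℝ}
    {V : ℝ → ℝ → ℝ} (hm : 1 / 2 < m) (hδ : 0 < δ) (hδγ : 8 * δ ^ 2 ≤ γ) (ha : 0 < a) (haA : a ≤ A)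
    (h : Track a E q θ) (E8 : 8 * E ≤ 1) (hEγ : 384 * E ≤ γ)
    (i0 : Integrable fun x => jw m x * dens q 0 x) (v0 : ∫ x, jw m x * dens q 0 x ≤ ε ^ 2)
    (cm : Continuous fun t => mom a θ t (P t)) (hP : ∀ t, HasDerivAt P (a ^ 2 + mom a θ t (P t)) t)
    (near : ∀ t, 0 ≤ t → Near m δ γ r B a q θ P t)
    (hV : ∀ t, 0 ≤ t → ∀ y, V t y = √2 * (q 0 t (y + P t) + a * (sin (θ t (y + P t)) - sech (a * y)))) :
    (∀ t, 0 ≤ t →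
      H1r (fun y => japPlus m y * V t y) ^ 2 ≤
          (3 + 2 * m ^ 2) * (8 * (1 + 4 * A + 8 * A ^ 2 + 7 * A ^ 3) ^ 2 * (2 * B ^ 2)) ∧
        (1 + t ^ 2) ^ m * H1w (wgt δ) (V t) ^ 2 ≤
          2 * (8 * (1 + 4 * A + 8 * A ^ 2 + 7 * A ^ 3) ^ 2 * (2 * B ^ 2))) ∧
      ∫ t in Ioi 0, H2wSq (deriv (wgt δ)) (V t) ≤
        6 * δ ^ 2 * (8 * (1 + 4 * A + 8 * A ^ 2 + 7 * A ^ 3) ^ 2 * (2 * B ^ 2)) *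
            (∫ t in Ioi (0:ℝ), (1 + t ^ 2) ^ (-m))
          + δ * (8 * (1 + 4 * A + 8 * A ^ 2 + 7 * A ^ 3) ^ 2 * (2 * ε ^ 2)) := by
  have m0 : 0 < m := by linarith
  obtain ⟨L, hL⟩ : ∃ L, L = 8 * (1 + 4 * A + 8 * A ^ 2 + 7 * A ^ 3) ^ 2 := ⟨_, rfl⟩
  have L0 : 0 ≤ L := by rw [hL]; positivity
  have cP : Continuous P := cont_of_deriv hP
  have q01 : ∀ t, 0 ≤ t → ∀ x, |q 0 t x| ≤ 1 := by
    intro t ht x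
    rw [← sq_le_one_iff_abs_le_one]
    linarith [h.sol.sup t ht x]
  have prof : ∀ t, 0 ≤ t → ∃ V1 V2 : ℝ → ℝ, (∀ y, HasDerivAt (V t) (V1 y) y) ∧ (∀ y, HasDerivAt V1 (V2 y) y) ∧
      ∀ y, V t y ^ 2 ≤ L * (dens q t (y + P t) + (θ t (y + P t) - ang a y) ^ 2) ∧
        V1 y ^ 2 ≤ L * (dens q t (y + P t) + (θ t (y + P t) - ang a y) ^ 2) ∧
        V2 y ^ 2 ≤ L * (dens q t (y + P t) + (θ t (y + P t) - ang a y) ^ 2) + L * q 2 t (y + P t) ^ 2 := by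
    intro t ht
    obtain ⟨V1, V2, d1, d2, b⟩ := profile_bounds ha haA (F0 := fun y => q 0 t (y + P t))
      (F1 := fun y => q 1 t (y + P t)) (F2 := fun y => q 2 t (y + P t)) (φ := fun y => θ t (y + P t)) (V := V t)
      (fun y => (h.sol.jet.hx 0 (by norm_num) t (y + P t)).comp_add_const y (P t))
      (fun y => (h.sol.jet.hx 1 (by norm_num) t (y + P t)).comp_add_const y (P t))
      (fun y => (h.hx t (y + P t)).comp_add_const y (P t)) (fun y => q01 t ht _) (hV t ht)
    rw [← hL] at b
    refine ⟨V1, V2, d1, d2, fun y => ⟨(b y).1, (b y).2.1, (b y).2.2.trans (le_of_eq ?_)⟩⟩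
    unfold dens; ring
  have T0 : ∀ t : ℝ, 0 < (1 + t ^ 2) ^ m := fun t => rpow_pos_of_pos (by positivity) m
  rw [← hL]
  have intρ : ∀ t, 0 ≤ t →
      (Integrable fun y => rho δ y * (L * (dens q t (y + P t) + (θ t (y + P t) - ang a y) ^ 2))) ∧
      ∫ y, rho δ y * (L * (dens q t (y + P t) + (θ t (y + P t) - ang a y) ^ 2)) ≤ L * (2 * B ^ 2) * (1 + t ^ 2) ^ (-m) := by
    intro t ht
    have nt := near t ht
    have e : (fun y => rho δ y * (L * (dens q t (y + P t) + (θ t (y + P t) - ang a y) ^ 2))) =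
        fun y => L * (rho δ y * dens q t (y + P t) + rho δ y * (θ t (y + P t) - ang a y) ^ 2) := by
      funext y; ring
    rw [e, integral_const_mul, integral_add nt.int_rho nt.int_rho', mul_assoc]
    refine ⟨(nt.int_rho.add nt.int_rho').const_mul L, mul_mono_l ?_ L0⟩
    rw [rpow_neg (by positivity), ← div_eq_mul_inv, le_div_iff₀ (T0 t)]
    linarith [nt.rho_le, nt.rho_le']
  constructor
  · intro t ht
    have nt := near t ht
    obtain ⟨V1, V2, d1, d2, b⟩ := prof t ht
    constructor
    · refine H1r_le m0 d1 (g := fun y => L * (dens q t (y + P t) + (θ t (y + P t) - ang a y) ^ 2)) ?_ ?_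
        (fun y => (b y).1) (fun y => (b y).2.1)
      · refine ((nt.int_jw.add nt.int_jw').const_mul L).congr (.of_forall fun y => ?_)
        show L * (jw m y * dens q t (y + P t) + jw m y * (θ t (y + P t) - ang a y) ^ 2) = _
        ring
      · have e : (fun y => jw m y * (L * (dens q t (y + P t) + (θ t (y + P t) - ang a y) ^ 2))) =
            fun y => L * (jw m y * dens q t (y + P t) + jw m y * (θ t (y + P t) - ang a y) ^ 2) := by
          funext y; ring
        rw [e, integral_const_mul, integral_add nt.int_jw nt.int_jw']
        exact mul_mono_l (by linarith [nt.jw_le, nt.jw_le']) L0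
    · have := mul_mono_l (H1w_wgt_le d1 (intρ t ht).1 (intρ t ht).2 (fun y => (b y).1)
        (fun y => (b y).2.1)) (T0 t).le
      refine this.trans (le_of_eq ?_)
      rw [rpow_neg (by positivity)]
      have := (T0 t).ne'
      field_simp
  -- the dissipation controlled by the monotonicity of the weighted energy along the centre
  have boxes : ∀ n : ℕ, ∫ t in (0:ℝ)..n, ∫ x in (-(n:ℝ))..n, rho1 δ (x - P t) * q 2 t x ^ 2 ≤ 2 * ε ^ 2 := by
    intro n
    have hn : (0:ℝ) ≤ n := Nat.cast_nonneg n
    obtain ⟨N, hN⟩ := h.sol.bdd n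
    have em := energy_monotone h.sol.jet le_rfl hn hN (fun τ hτ => h.sol.sup τ hτ.1) E8 hEγ hδ hδγ (a := P)
      (a1 := fun t => a ^ 2 + mom a θ t (P t)) cP (continuous_const.add cm) (fun τ _ => hP τ)
      (fun τ hτ => (near τ hτ.1.le).speed) n hn
    have p : 0 ≤ ∫ x, rho δ (x - P n) * (q 0 n x ^ 2 + q 1 n x ^ 2) :=
      integral_nonneg fun x => mul_nonneg (rho_pos _ _).le (by positivity)
    have u : ∫ x, rho δ (x - P 0) * (q 0 0 x ^ 2 + q 1 0 x ^ 2) ≤ ∫ x, 2 * (jw m x * dens q 0 x) :=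
      integral_mono_of_nonneg (.of_forall fun x => mul_nonneg (rho_pos _ _).le (by positivity))
        (i0.const_mul 2) (.of_forall fun x => by
          have := mul_le_mul (rho_le_two δ (x - P 0)) (le_mul_of_one_le_left (dens_nonneg q 0 x) (one_le_jw m0.le x))
            (dens_nonneg q 0 x) (by norm_num)
          exact this)
    rw [integral_const_mul] at u
    linarith
  have marg := integral_marginal_le (F := fun t x => rho1 δ (x - P t) * q 2 t x ^ 2)
    (((continuous_rho1 δ).comp (by fun_prop)).mul ((h.sol.jet.cont 2 (by norm_num)).pow 2))
    (fun t x => mul_nonneg (rho1_nonneg hδ _) (sq_nonneg _)) boxes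
  have bound : ∀ t, 0 ≤ t → H2wSq (deriv (wgt δ)) (V t) ≤
      6 * δ ^ 2 * (L * (2 * B ^ 2)) * (1 + t ^ 2) ^ (-m) + δ * L * ∫ x, rho1 δ (x - P t) * q 2 t x ^ 2 := by
    intro t ht
    obtain ⟨V1, V2, d1, d2, b⟩ := prof t ht
    obtain ⟨N, hN⟩ := h.sol.bdd t
    have ir : Integrable fun x => rho1 δ (x - P t) * q 2 t x ^ 2 := by
      refine (integrable_of_abs_le (f := fun x => rho1 δ (x - P t) * q 2 t x ^ 2)
        (((continuous_rho1 δ).comp (by fun_prop)).mul ((cont_slice (h.sol.jet.cont 2 (by norm_num)) t).pow 2))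
        ((hN t ⟨ht, le_rfl⟩ 2 le_rfl).1.const_mul δ) fun x => ?_).1
      rw [abs_of_nonneg (mul_nonneg (rho1_nonneg hδ _) (sq_nonneg _))]
      refine mul_mono_r ?_ (sq_nonneg _)
      have := pow_le_one₀ (sech_pos (δ * (x - P t))).le (sech_le_one (δ * (x - P t))) (n := 2)
      exact mul_le_of_le_one_right hδ.le this
    have ik : Integrable fun y => rho1 δ y * (L * q 2 t (y + P t) ^ 2) := by
      refine ((ir.comp_add_right (P t)).const_mul L).congr (.of_forall fun y => ?_)
      simp only [add_sub_cancel_right]; ring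
    have ek : ∫ y, rho1 δ y * (L * q 2 t (y + P t) ^ 2) = L * ∫ x, rho1 δ (x - P t) * q 2 t x ^ 2 := by
      rw [← integral_add_right_eq_self (fun x => rho1 δ (x - P t) * q 2 t x ^ 2) (P t), ← integral_const_mul]
      refine integral_congr_ae (.of_forall fun y => ?_)
      simp only [add_sub_cancel_right]; ring
    have hh := H2wSq_le hδ d1 d2 (intρ t ht).1 ik
      (fun y => mul_nonneg L0 (add_nonneg (dens_nonneg _ _ _) (sq_nonneg _))) (fun y => mul_nonneg L0 (sq_nonneg _))
      (fun y => (b y).1) (fun y => (b y).2.1) (fun y => (b y).2.2)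
    rw [ek] at hh
    have := mul_mono_l (intρ t ht).2 (by positivity : 0 ≤ 6 * δ ^ 2)
    linarith
  have ij := (integrable_jap_rpow hm).integrableOn (s := Ioi (0:ℝ))
  refine (integral_mono_of_nonneg (g := fun t => 6 * δ ^ 2 * (L * (2 * B ^ 2)) * (1 + t ^ 2) ^ (-m)
      + δ * L * ∫ x, rho1 δ (x - P t) * q 2 t x ^ 2)
    (.of_forall fun t => ?_)
    ((ij.const_mul _).add (marg.1.const_mul (δ * L))) ?_).trans ?_
  · exact Finset.sum_nonneg fun k _ => sq_nonneg _
  · filter_upwards [ae_restrict_mem measurableSet_Ioi] with t ht using bound t (le_of_lt ht)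
  · rw [integral_add (ij.const_mul _) (marg.1.const_mul (δ * L)), integral_const_mul, integral_const_mul]
    have := mul_mono_l marg.2 (by positivity : 0 ≤ δ * L)
    linarith

lemma solQ_eq {a : ℝ} (ha : 0 < a) (y : ℝ) : solQ (a ^ 2) y = √2 * (a * sech (a * y)) := by
  rw [solQ, sqrt_mul (by norm_num), sqrt_sq ha.le, div_eq_iff (cosh_pos _).ne']
  linear_combination (-(√2 * a)) * sech_mul_cosh (a * y)

set_option maxHeartbeats 1000000 in
/-- Removal of the soliton from a global solution: the transform of `u` is a small solution `q`
together with an angle `θ`, and `u = √2 (q + b sin θ)` for a parameter `b` close to `a`. -/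
theorem exists_track {a m : ℝ} (ha : 0 < a) (hm : 0 < m) : ∃ K : ℝ, 1 ≤ K ∧
    ∀ (u : ℝ → ℝ → ℝ) (v₀ : ℝ → ℝ) (ε : ℝ), IsMKdVGlobal u →
      (∀ x, u 0 x = √2 * (a * sech (a * x)) + v₀ x) → 0 ≤ ε → H1r (fun x => japPlus m x * v₀ x) ≤ ε → K * ε ≤ 1 →
      ∃ (b E : ℝ) (q : Jet) (θ : ℝ → ℝ → ℝ), Track b E q θ ∧ a / 2 ≤ b ∧ b ≤ 2 * a ∧ E ≤ (K * ε) ^ 2 ∧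
        (Integrable fun x => jw m x * dens q 0 x) ∧ ∫ x, jw m x * dens q 0 x ≤ (K * ε) ^ 2 ∧
        (∀ x, |θ 0 x - ang b x| ≤ K * ε) ∧ ∀ t, 0 ≤ t → ∀ x, u t x = √2 * (q 0 t x + b * sin (θ t x)) := by
  obtain ⟨K, K1, hK⟩ := initial_data ha hm
  have K2 : 1 ≤ 2 * K * (1 + m) := by
    have := mul_mono_l (by linarith : 1 ≤ 1 + m) (by linarith : 0 ≤ 2 * K)
    linarith
  refine ⟨2 * K * (1 + m), K2, fun u v₀ ε hu hu0 ε0 hv hε => ?_⟩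
  obtain ⟨e, he⟩ : ∃ e, e = (1 + m) * ε := ⟨_, rfl⟩
  have e0 : 0 ≤ e := by rw [he]; positivity
  have ee : 2 * K * (1 + m) * ε = 2 * (K * e) := by rw [he]; ring
  rw [ee] at hε ⊢
  have Ke : e ≤ K * e := le_mul_of_one_le_left e0 K1
  obtain ⟨U, hU⟩ : ∃ U, U = jetOf u := ⟨_, rfl⟩
  have fj : FullJet U := hU ▸ jetOf_fullJet hu
  have mj := fj.toMJet
  have hx0 : ∀ x, HasDerivAt (U 0 0) (U 1 0 x) x := fj.hx 0 0
  obtain ⟨g0, hg0⟩ := jetOf_schwartz hu 0 0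
  obtain ⟨g1, hg1⟩ := jetOf_schwartz hu 1 0
  rw [← hU] at hg0 hg1
  have hs : ∀ x, HasDerivAt (fun x => sech (a * x)) (-(a * (sech (a * x) * tanh (a * x)))) x := fun x =>
    ((hasDerivAt_sech (a * x)).comp x ((hasDerivAt_id x).const_mul a)).congr_deriv (by simp; ring)
  obtain ⟨v, hvd⟩ : ∃ v : ℝ → ℝ, v = fun x => U 0 0 x - a * sech (a * x) := ⟨_, rfl⟩
  obtain ⟨v1, hv1⟩ : ∃ v1 : ℝ → ℝ, v1 = fun x => U 1 0 x + a ^ 2 * (sech (a * x) * tanh (a * x)) := ⟨_, rfl⟩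
  have dv : ∀ x, HasDerivAt v (v1 x) x := fun x => by
    rw [hvd, hv1]
    exact ((hx0 x).fun_sub ((hs x).const_mul a)).congr_deriv (by ring)
  have c1 : Continuous v1 := by
    rw [hv1]
    exact (cont_slice (fj.cont 1) 0).add (continuous_const.mul ((continuous_sech_mul a).mul
      (continuous_tanh'.comp (by fun_prop))))
  have is := integrable_jw_sech hm ha
  have ig : ∀ k (g : SchwartzMap ℝ ℝ), (∀ x, U k 0 x = g x) → Integrable fun x => jw m x * U k 0 x ^ 2 := by
    intro k g hg
    simp only [hg]
    exact integrable_jw_schwartz hm g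
  have iv : Integrable fun x => jw m x * v x ^ 2 := by
    refine (integrable_of_abs_le (f := fun x => jw m x * v x ^ 2)
      ((continuous_jw m).mul ((cont_of_deriv dv).pow 2))
      (((ig 0 g0 hg0).const_mul 2).add (is.const_mul (2 * a ^ 2))) fun x => ?_).1
    have j := jw_pos m x
    rw [abs_of_nonneg (by positivity), hvd]
    have := mul_nonneg j.le (sq_nonneg (U 0 0 x + a * sech (a * x)))
    show _ ≤ 2 * (jw m x * U 0 0 x ^ 2) + 2 * a ^ 2 * (jw m x * sech (a * x) ^ 2)
    linarith
  have iv1 : Integrable fun x => jw m x * v1 x ^ 2 := by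
    refine (integrable_of_abs_le (f := fun x => jw m x * v1 x ^ 2)
      ((continuous_jw m).mul (c1.pow 2))
      (((ig 1 g1 hg1).const_mul 2).add (is.const_mul (2 * a ^ 4))) fun x => ?_).1
    have j := jw_pos m x
    rw [abs_of_nonneg (by positivity), hv1]
    have := mul_nonneg j.le (sq_nonneg (U 1 0 x - a ^ 2 * (sech (a * x) * tanh (a * x))))
    have t1 : tanh (a * x) ^ 2 ≤ 1 := by
      have := sech_sq_add_tanh_sq (a * x)
      linarith [sq_nonneg (sech (a * x))]
    have := mul_mono_l t1 (by positivity : 0 ≤ 2 * a ^ 4 * (jw m x * sech (a * x) ^ 2))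
    show _ ≤ 2 * (jw m x * U 1 0 x ^ 2) + 2 * a ^ 4 * (jw m x * sech (a * x) ^ 2)
    linarith
  have r2 : √2 ^ 2 = (2:ℝ) := sq_sqrt (by norm_num)
  have r0 : (0:ℝ) < √2 := sqrt_pos.2 (by norm_num)
  have uU : ∀ t, 0 ≤ t → ∀ x, u t x = √2 * U 0 t x := fun t ht x => by
    rw [hU, jetOf_zero ht]; field_simp
  have ev : v₀ = fun x => √2 * v x := by
    funext x
    have h1 := hu0 x
    rw [uU 0 le_rfl] at h1
    rw [hvd]
    linarith
  have sm : ∀ f : ℝ → ℝ, (fun x => jw m x * (√2 * f x) ^ 2) = fun x => 2 * (jw m x * f x ^ 2) := by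
    intro f; funext x; rw [mul_pow, r2]; ring
  have wH := weighted_of_H1r (m := m) (ε := ε) hm (f := fun x => √2 * v x) (f1 := fun x => √2 * v1 x)
    (fun x => (dv x).const_mul √2) (by rw [sm]; exact iv.const_mul 2) (by rw [sm]; exact iv1.const_mul 2)
    (by rw [ev] at hv; exact hv)
  rw [sm, sm, integral_const_mul, integral_const_mul] at wH
  have e2 : e ^ 2 = (1 + 2 * m + m ^ 2) * ε ^ 2 := by rw [he]; ring
  have pm : 0 ≤ m * ε ^ 2 := by positivity
  have pm2 : 0 ≤ m ^ 2 * ε ^ 2 := by positivity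
  obtain ⟨θ0, κ, -, hb1, hb2, hθ0, dθ0, hq0⟩ := hK v v1 e e0 dv c1 iv iv1 (by linarith [wH.1, sq_nonneg ε])
    (by linarith [wH.2]) (by linarith)
  have κ0 : 0 < κ := by linarith
  have sv : ∀ x, a * sech (a * x) + v x = U 0 0 x := fun x => by rw [hvd]; ring
  have hmax : ∀ k t, U k (max t 0) = U k t := fun k t => by
    rw [hU]; funext x; simp [jetOf]
  obtain ⟨θ, h0, tm, ct, hx, ht⟩ := backlund_flow mj hmax κ θ0 (fun x => by
    have := dθ0 x
    rwa [sv] at this)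
  have an : IsAngle κ U θ := ⟨ct, hx, ht⟩
  have qm := qJet_mjet mj an
  obtain ⟨q, hq⟩ : ∃ q, q = qJet κ U θ := ⟨_, rfl⟩
  rw [← hq] at qm
  have q0 : ∀ t x, q 0 t x = U 0 t x - 2 * κ * sin (θ t x) := fun t x => by rw [hq]; rfl
  obtain ⟨j0, j1, b0, b1⟩ := hq0 (q 0 0) (q 1 0) (fun x => by rw [q0, sv, h0]) (qm.hx 0 (by norm_num) 0)
    (cont_slice (qm.cont 1 (by norm_num)) 0)
  have bd : ∀ T, ∃ N, BddOn q 2 N 0 T := by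
    intro T
    obtain ⟨N, hN⟩ := h3_locally_bounded fj T
    rw [hq]
    exact qJet_bdd κ0 mj an (hN.mono (by norm_num) le_rfl le_rfl)
  have unw : ∀ f : ℝ → ℝ, (Integrable fun x => jw m x * f x ^ 2) → ∫ x, f x ^ 2 ≤ ∫ x, jw m x * f x ^ 2 := by
    intro f hf
    exact integral_mono_of_nonneg (.of_forall fun x => sq_nonneg _) hf
      (.of_forall fun x => le_mul_of_one_le_left (sq_nonneg _) (one_le_jw hm.le x))
  have Kee : 2 * (K * e ^ 2) ≤ 1 := by
    have := mul_mono_r hε e0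
    linarith
  have sol : SmallSol q (K * e ^ 2) := by
    refine ⟨qm, bd, fun t ht => ?_⟩
    obtain ⟨N, hN⟩ := bd t
    exact (h1_small qm ht hN Kee ((unw _ j0).trans b0) ((unw _ j1).trans b1)).2.2
  have qb : ∀ T, ∃ L, ∀ t, 0 ≤ t → t ≤ T → ∀ x, |q 1 t x| ≤ L ∧ |q 2 t x| ≤ L := by
    intro T
    obtain ⟨N, hN⟩ := h3_locally_bounded fj T
    obtain ⟨D, D0, hD⟩ := qJet_pointwise κ (2 * N)
    refine ⟨√(D * (6 * N + 1)), fun t ht htT x => ?_⟩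
    have s0 := hN.sup mj ⟨ht, htT⟩ (k := 0) (by norm_num) (by norm_num) x
    have s1 := hN.sup mj ⟨ht, htT⟩ (k := 1) (by norm_num) (by norm_num) x
    have s2 := hN.sup mj ⟨ht, htT⟩ (k := 2) (by norm_num) (by norm_num) x
    have sn := sin_sq_le_one (θ t x)
    have tot : (U 0 t x ^ 2 + U 1 t x ^ 2 + U 2 t x ^ 2) + sin (θ t x) ^ 2 ≤ 6 * N + 1 := by linarith
    have l := fun k hk => abs_le_sqrt ((hD U θ t x s0 k hk).trans (mul_mono_l tot D0))
    rw [← hq] at l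
    exact ⟨l 1 (by norm_num), l 2 le_rfl⟩
  refine ⟨2 * κ, K * e ^ 2, q, θ, ⟨sol, tm, ct, fun t x => ?_, fun t ht x => ?_, qb, ?_⟩, hb1, hb2, ?_, ?_, ?_, fun x => ?_,
    fun t ht x => ?_⟩
  · have := an.hx' t x
    rwa [← hq] at this
  · have := an.ht' ht x
    rw [← hq] at this
    exact this.congr_deriv (by unfold angVel; ring)
  · refine ⟨K * e + π, fun x => ?_⟩
    have h1 := hθ0 x
    have h2 := ang_bounds (2 * κ) x
    rw [h0]
    rw [abs_le] at h1 ⊢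
    constructor <;> linarith [pi_pos]
  · have := mul_mono_r K1 (mul_nonneg (by linarith : 0 ≤ K) (sq_nonneg e))
    have := mul_nonneg (by linarith : 0 ≤ K) (sq_nonneg e)
    linarith
  · refine (j0.add j1).congr (.of_forall fun x => ?_)
    show jw m x * q 0 0 x ^ 2 + jw m x * q 1 0 x ^ 2 = _
    unfold dens; ring
  · have split : (fun x => jw m x * dens q 0 x) = fun x => jw m x * q 0 0 x ^ 2 + jw m x * q 1 0 x ^ 2 := by
      funext x; unfold dens; ring
    rw [split, integral_add j0 j1]
    have := mul_mono_r K1 (mul_nonneg (by linarith : 0 ≤ K) (sq_nonneg e))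
    have := mul_nonneg (by linarith : 0 ≤ K) (sq_nonneg e)
    linarith
  · rw [h0]
    linarith [hθ0 x]
  · rw [uU t ht, q0]; ring

set_option maxHeartbeats 1000000 in
/-- Theorem 3.1: asymptotic stability of the mKdV soliton in weighted spaces. -/
theorem soliton_asymptotic_stability :
    ∃ C : ℝ, 0 < C ∧
      ∀ c₀ m : ℝ, 0 < c₀ → 1/2 < m →
        ∀ ε₁ : ℝ, 0 < ε₁ →
          ∃ ε₀ δ : ℝ, 0 < ε₀ ∧ 0 < δ ∧
            ∀ v₀ : ℝ → ℝ,
              H1r v₀ + H1r (fun x => japPlus m x * v₀ x) ≤ ε₀ →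
              ∀ u : ℝ → ℝ → ℝ, IsMKdVGlobal u →
                (∀ x : ℝ, u 0 x = solQ c₀ x + v₀ x) →
                ∃ h c : ℝ → ℝ, ContDiff ℝ 1 h ∧ ContDiff ℝ 1 c ∧
                  ∀ v : ℝ → ℝ → ℝ,
                    (∀ t y : ℝ,
                      v t y = u t (y + (∫ s in (0:ℝ)..t, c s) - h t) - solQ (c t) y) →
                    (∀ t : ℝ, 0 ≤ t →
                        H1r (fun y => japPlus m y * v t y)
                          + jap t ^ m * H1w (wgt δ) (v t)
                          + jap t ^ (2*m) * (|deriv c t| + |deriv h t|) ≤ C * ε₁) ∧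
                    (∫ t in Set.Ioi (0:ℝ), H2wSq (deriv (wgt δ)) (v t)) ≤ C * ε₁ ^ 2 := by
  refine ⟨1, one_pos, fun c₀ m hc₀ hm ε₁ ε₁p => ?_⟩
  have m0 : 0 < m := by linarith
  obtain ⟨a, ap, rfl⟩ : ∃ a : ℝ, 0 < a ∧ c₀ = a ^ 2 := ⟨√c₀, sqrt_pos.2 hc₀, (sq_sqrt hc₀.le).symm⟩
  obtain ⟨δ, hδd⟩ : ∃ δ : ℝ, δ = a / 32 := ⟨_, rfl⟩
  obtain ⟨γ, hγd⟩ : ∃ γ : ℝ, γ = a ^ 2 / 16 := ⟨_, rfl⟩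
  have δp : 0 < δ := by rw [hδd]; positivity
  have γp : 0 < γ := by rw [hγd]; positivity
  have δγ : 8 * δ ^ 2 ≤ γ := by rw [hδd, hγd]; linarith [sq_nonneg a]
  obtain ⟨K0, K01, hK0⟩ := exists_track ap m0
  obtain ⟨r, K, rp, K1, hK⟩ := track_global (A0 := a / 2) (A1 := 2 * a) (m := m) (δ := δ) (γ := γ) (by positivity)
    (by linarith) m0 δp (by rw [hδd]; linarith) γp (by rw [hγd]; linarith) δγ
  obtain ⟨L, hL⟩ : ∃ L : ℝ, L = 8 * (1 + 4 * (2 * a) + 8 * (2 * a) ^ 2 + 7 * (2 * a) ^ 3) ^ 2 := ⟨_, rfl⟩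
  have L0 : 0 ≤ L := by rw [hL]; positivity
  obtain ⟨I, hI⟩ : ∃ I : ℝ, I = ∫ t in Ioi (0:ℝ), (1 + t ^ 2) ^ (-m) := ⟨_, rfl⟩
  have I0 : 0 ≤ I := by
    rw [hI]; exact integral_nonneg fun t => (rpow_pos_of_pos (by positivity) _).le
  have K0p : 0 < K0 := by linarith
  have Kp : 0 < K := by linarith
  obtain ⟨S1, hS1⟩ : ∃ S1, S1 = 9 * ((3 + 2 * m ^ 2) * (L * (2 * K ^ 2))) := ⟨_, rfl⟩
  obtain ⟨S2, hS2⟩ : ∃ S2, S2 = 9 * (2 * (L * (2 * K ^ 2))) := ⟨_, rfl⟩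
  obtain ⟨S3, hS3⟩ : ∃ S3, S3 = 6 * δ ^ 2 * (L * (2 * K ^ 2)) * I + δ * (L * 2) := ⟨_, rfl⟩
  have S10 : 0 ≤ S1 := by rw [hS1]; positivity
  have S20 : 0 ≤ S2 := by rw [hS2]; positivity
  have S30 : 0 ≤ S3 := by rw [hS3]; positivity
  -- `M` dominates all smallness requirements; `ε` is the size of the transformed data
  obtain ⟨M, hM⟩ : ∃ M, M = 8 + 3 * K + S1 + S2 + S3 + 384 / γ := ⟨_, rfl⟩
  have G0 : 0 ≤ 384 / γ := by positivity
  have Mp : 0 < M := by rw [hM]; linarith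
  obtain ⟨ε, hε⟩ : ∃ ε, ε = min 1 ε₁ / M := ⟨_, rfl⟩
  have εp : 0 < ε := by rw [hε]; exact div_pos (lt_min one_pos ε₁p) Mp
  have Mε : M * ε = min 1 ε₁ := by rw [hε]; field_simp
  have Mε1 : M * ε ≤ 1 := Mε.le.trans (min_le_left _ _)
  have Mε2 : M * ε ≤ ε₁ := Mε.le.trans (min_le_right _ _)
  have part : ∀ S, S ≤ M → S * ε ≤ 1 ∧ S * ε ≤ ε₁ := fun S hS =>
    ⟨(mul_mono_r hS εp.le).trans Mε1, (mul_mono_r hS εp.le).trans Mε2⟩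
  have partsq : ∀ S, S ≤ M → S * ε ^ 2 ≤ ε₁ ^ 2 := by
    intro S hS
    have h1 : S ≤ M ^ 2 := hS.trans (by nlinarith)
    have h2 := mul_mono_r h1 (sq_nonneg ε)
    have h3 := pow_le_pow_left₀ (mul_nonneg Mp.le εp.le) Mε2 2
    linarith [mul_pow M ε 2]
  have e8 := (part 8 (by linarith)).1
  have eK := part (3 * K) (by linarith)
  have eG := (part (384 / γ) (by linarith)).1
  have εsq : ε ^ 2 ≤ ε / 8 := by
    have := mul_mono_r e8 εp.le
    linarith
  refine ⟨ε / K0, δ, div_pos εp K0p, δp, fun v₀ hv u hu hu0 => ?_⟩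
  have hKε : K0 * (ε / K0) = ε := by field_simp
  have nv : 0 ≤ H1r v₀ := sqrt_nonneg _
  obtain ⟨b, E, q, θ, tr, hb1, hb2, hE, i0, v0, hθ, hut⟩ := hK0 u v₀ (ε / K0) hu
    (fun x => by rw [hu0, solQ_eq ap]) (div_pos εp K0p).le (by linarith) (by rw [hKε]; linarith)
  rw [hKε] at hE v0 hθ
  have bp : 0 < b := by linarith
  obtain ⟨P, P0, cm, hP⟩ := tr.exists_center bp
  have near := hK b E q θ ε P tr hb1 hb2 εp (by linarith [eK.1]) hE i0 v0 hθ P0 cm hP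
  have dh : ∀ t, HasDerivAt (fun t => b ^ 2 * t - P t) (-mom b θ t (P t)) t := fun t =>
    (((hasDerivAt_id t).const_mul (b ^ 2)).fun_sub (hP t)).congr_deriv (by simp)
  refine ⟨fun t => b ^ 2 * t - P t, fun _ => b ^ 2, ?_, contDiff_const, fun v hvv => ?_⟩
  · rw [contDiff_one_iff_deriv]
    refine ⟨fun t => (dh t).differentiableAt, ?_⟩
    rw [show deriv (fun t => b ^ 2 * t - P t) = fun t => -mom b θ t (P t) from funext fun t => (dh t).deriv]
    exact cm.neg
  have hV : ∀ t, 0 ≤ t → ∀ y, v t y = √2 * (q 0 t (y + P t) + b * (sin (θ t (y + P t)) - sech (b * y))) := by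
    intro t ht y
    rw [hvv, solQ_eq bp, intervalIntegral.integral_const, smul_eq_mul,
      show y + (t - 0) * b ^ 2 - (b ^ 2 * t - P t) = y + P t by ring, hut t ht]
    ring
  have E8 : 8 * E ≤ 1 := by linarith
  have Eγ : 384 * E ≤ γ := by
    rw [div_mul_eq_mul_div, div_le_one γp] at eG
    linarith
  obtain ⟨hA, hB⟩ := remainder_bounds (V := v) (ε := ε) hm δp δγ bp hb2 tr E8 Eγ i0 v0 cm hP near hV
  rw [← hL] at hA hB
  rw [← hI] at hB
  constructor
  · intro t ht
    have nt := near t ht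
    have hAt := hA t ht
    have third : ∀ X S : ℝ, S ≤ M → 9 * X ^ 2 ≤ S * ε ^ 2 → X ≤ ε₁ / 3 := by
      intro X S hS h
      refine abs_le_of_sq_le_sq' (by linarith [partsq S hS] : X ^ 2 ≤ (ε₁ / 3) ^ 2) (by positivity) |>.2
    have j2 : jap t ^ (2 * m) = (1 + t ^ 2) ^ m := by
      rw [jap, rpow_mul (sqrt_nonneg _), rpow_two, sq_sqrt (by positivity)]
    have j1 : (jap t ^ m) ^ 2 = (1 + t ^ 2) ^ m := by
      rw [← j2, mul_comm 2 m, rpow_mul (x := jap t) (sqrt_nonneg _), rpow_two]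
    have x1 := third (H1r fun y => japPlus m y * v t y) S1 (by linarith) (by rw [hS1]; linarith [hAt.1])
    have x2 := third (jap t ^ m * H1w (wgt δ) (v t)) S2 (by linarith) (by
      rw [hS2, mul_pow, j1]
      linarith [hAt.2])
    have x3 : jap t ^ (2 * m) * (|deriv (fun _ : ℝ => b ^ 2) t| + |deriv (fun t => b ^ 2 * t - P t) t|) ≤ ε₁ / 3 := by
      rw [deriv_const, (dh t).deriv, abs_neg, abs_zero, zero_add, j2]
      linarith [nt.mom_le, eK.2]
    linarith
  · refine hB.trans ?_
    have := partsq S3 (by linarith)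
    rw [hS3] at this
    linarith
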